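/- Assume E + D ≪ 1. Then there exists R ∈ (1/2, 3/2) such that the conclusions of the good-radius lemma hold for R and, in addition, W₂²(ρ_{1−τ}⌞B_R, (ρ_{1−τ}(B_R)/|B_R|)χ_{B_R}) + W₂²(μ'_R, (μ'_R(B_R)/|B_R|)χ_{B_R}) ≲ τ² E + D. -/

import Mathlib

/-!
Cyclical monotonicity is only needed for pairs of points: exchanging the images of a set and of a
translate of it shows that the optimal map `T` is monotone on a set `Gm` of full measure in `Ω`
(`exists_monotone_set`). Monotonicity and smallness of `E` imply that every trajectory meeting
`B̄_{3/2}` starts in `B_{7/4}` and has length at most `δ = C₀ E^{1/(d+2)}` (`displacement_bound`). They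
also imply that `T_t` contracts distances at most by the factor `1 - t`.

*Flux.* Tested against a function, the flux through `∂B_R` integrated over `R` is at most a kinetic
energy plus the square integral of the test function along the trajectories; the change of variables
`z = T_t x` costs a factor `τ^{-d}` up to time `1 - τ`. By duality the flux has a square integrable
density for almost every `R` (`flux_density`). It is first obtained with respect to the surface measure
from polar coordinates, which has a bounded density with respect to Hausdorff measure because spherical
caps of radius `r` have measure at most of order `r^{d-1}` (`exists_sig_density`).

*Boundary densities.* Particles crossing `∂B_R` start within a layer of width `|Tx - x|` around it. The
radial projection to `∂B_R` of their starting points is the density `ρ̄^R_±`: a bathtub argument along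
each ray bounds its square integral by the mean distance of the starting points from the sphere
(`exists_projected_density`), and the geodesic transport cost to the crossing points is a multiple of
`∫ |Tx - x|²` over the layer (`exists_boundary_density`). In the terminal layer, the starting points are
replaced by the partners `y` of `T x` under a nearly optimal coupling of `μ⌞O` with the uniform density,
lifted to a plan `γ` for pairs `(x, y)` (`exists_plan`).

*Data distance.* Projecting the partners `y` to `B_R` gives a measure at distance of order `τ²E + D` from
`ρ_{1-τ}⌞B_R` (respectively from `μ'_R`). Its density is bounded and differs from the constant `κ` only
by the effect of particles close to `∂B_R`, counted with their distance to the boundary. Such a density is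
close to uniform (`W2sq_ball_le`): averaging along rays moves it at a cost controlled by the weighted defect,
again by the bathtub argument, and the result is close to uniform in `L²`. For a density
that is `L²` close to a constant, the distance is bounded by writing the ball as the image of a cube under
a Lipschitz folding map and rearranging monotonically along one coordinate direction after the other
(`W2sq_cube_le`). Mixing with the target (`W2sq_le_of_mix`) makes all densities bounded below.

*Choice of `R`.* All these bounds are integrals over a layer of half-width `ℓ` around `∂B_R`, where `ℓ` is
the displacement of the particle; averaging over `R` gains a factor `2ℓ`, so that a Chebyshev argument
gives one radius at which all of them hold (`lintegral_layer_le`, `exists_radius`, `main_with_plan`).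
-/

open MeasureTheory Measure Set Metric
open scoped ENNReal NNReal Topology RealInnerProductSpace

noncomputable section

abbrev Ed (d : ℕ) : Type := EuclideanSpace ℝ (Fin d)

/-- Squared Euclidean `L²`-Wasserstein distance, as an infimum over couplings. -/
def W2sq {d : ℕ} (μ ν : Measure (Ed d)) : ℝ≥0∞ :=
  sInf { c | ∃ π : Measure (Ed d × Ed d), π.map Prod.fst = μ ∧ π.map Prod.snd = ν ∧
      c = ∫⁻ p, ENNReal.ofReal (‖p.1 - p.2‖ ^ 2) ∂π }

/-- Geodesic distance on the sphere `∂B_R` (for points on the sphere). -/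
def geoDist {d : ℕ} (R : ℝ) (x y : Ed d) : ℝ := R * Real.arccos (⟪x, y⟫ / R ^ 2)

/-- Squared Wasserstein distance on the sphere `∂B_R` with respect to the geodesic distance. -/
def W2geoSq {d : ℕ} (R : ℝ) (μ ν : Measure (Ed d)) : ℝ≥0∞ :=
  sInf { c | ∃ π : Measure (Ed d × Ed d), π.map Prod.fst = μ ∧ π.map Prod.snd = ν ∧
      c = ∫⁻ p, ENNReal.ofReal ((geoDist R p.1 p.2) ^ 2) ∂π }

/-- `T` is the optimal transport map from `χ_Ω dx` to `μ`. -/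
def IsOptMap {d : ℕ} (Ω : Set (Ed d)) (μ : Measure (Ed d)) (T : Ed d → Ed d) : Prop :=
  Measurable T ∧ Measure.map T (volume.restrict Ω) = μ ∧
  ∀ S : Ed d → Ed d, Measurable S → Measure.map S (volume.restrict Ω) = μ →
    ∫⁻ x in Ω, ENNReal.ofReal (‖T x - x‖ ^ 2) ≤ ∫⁻ x in Ω, ENNReal.ofReal (‖S x - x‖ ^ 2)

/-- McCann interpolation `T_t = (1−t)id + tT`, i.e. the trajectory `X(x,t)`. -/
def Tt {d : ℕ} (T : Ed d → Ed d) (t : ℝ) (x : Ed d) : Ed d := (1 - t) • x + t • T x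

/-- Entrance time `t^R_−` of the trajectory through `x` into `B̄_R` (`= 1` if it misses). -/
def tmin {d : ℕ} (T : Ed d → Ed d) (R : ℝ) (x : Ed d) : ℝ :=
  sInf ({t ∈ Icc (0:ℝ) 1 | Tt T t x ∈ closedBall (0 : Ed d) R} ∪ {1})

/-- Exit time `t^R_+` of the trajectory through `x` from `B̄_R` (`= 0` if it misses). -/
def tmax {d : ℕ} (T : Ed d → Ed d) (R : ℝ) (x : Ed d) : ℝ :=
  sSup ({t ∈ Icc (0:ℝ) 1 | Tt T t x ∈ closedBall (0 : Ed d) R} ∪ {0})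

/-- Cumulated outgoing flux `f̄^R_+` through `∂B_R` up to time `1−τ`. -/
def Fbarplus {d : ℕ} (Ω : Set (Ed d)) (T : Ed d → Ed d) (R τ : ℝ) : Measure (Ed d) :=
  Measure.map (fun x => Tt T (tmax T R x) x)
    (volume.restrict {x ∈ Ω | 0 ≤ tmin T R x ∧ tmin T R x < tmax T R x ∧ tmax T R x < 1 - τ})

/-- Cumulated incoming flux `f̄^R_−` through `∂B_R` up to time `1−τ`. -/
def Fbarminus {d : ℕ} (Ω : Set (Ed d)) (T : Ed d → Ed d) (R τ : ℝ) : Measure (Ed d) :=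
  Measure.map (fun x => Tt T (tmin T R x) x)
    (volume.restrict {x ∈ Ω | tmin T R x < tmax T R x ∧ 0 < tmin T R x ∧ tmin T R x < 1 - τ})

/-- Terminal-layer outgoing flux `f̄^{R,lay}_+` through `∂B_R` in `(1−τ,1)`. -/
def Fbarlay {d : ℕ} (Ω : Set (Ed d)) (T : Ed d → Ed d) (R τ : ℝ) : Measure (Ed d) :=
  Measure.map (fun x => Tt T (tmax T R x) x)
    (volume.restrict {x ∈ Ω | tmin T R x < 1 - τ ∧ 1 - τ < tmax T R x ∧ tmax T R x < 1})

/-- The surface measure on the sphere `∂B_R ⊂ ℝ^d`. -/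
def sphMeas (d : ℕ) (R : ℝ) : Measure (Ed d) :=
  (μH[(d:ℝ) - 1]).restrict (sphere (0 : Ed d) R)

/-- The part `μ'_R` of `μ⌞B_R` coming from trajectories inside `B_R` before time `1−τ`. -/
def muPrime {d : ℕ} (Ω : Set (Ed d)) (T : Ed d → Ed d) (R τ : ℝ) : Measure (Ed d) :=
  Measure.map T
    (volume.restrict {x ∈ Ω | tmin T R x ≤ 1 - τ ∧ tmax T R x = 1})

/-! ### Couplings and the squared Wasserstein distance -/

lemma W2sq_le {d : ℕ} {μ ν : Measure (Ed d)} (π : Measure (Ed d × Ed d))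
    (h1 : π.map Prod.fst = μ) (h2 : π.map Prod.snd = ν) :
    W2sq μ ν ≤ ∫⁻ p, ENNReal.ofReal (‖p.1 - p.2‖ ^ 2) ∂π :=
  sInf_le ⟨π, h1, h2, rfl⟩

lemma W2sq_map_map {d : ℕ} {Z : Type*} [MeasurableSpace Z] (γ : Measure Z) {f g : Z → Ed d}
    (hf : Measurable f) (hg : Measurable g) :
    W2sq (γ.map f) (γ.map g) ≤ ∫⁻ z, ENNReal.ofReal (‖f z - g z‖ ^ 2) ∂γ := by
  have hfg : Measurable fun z => (f z, g z) := hf.prodMk hg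
  refine (W2sq_le (γ.map fun z => (f z, g z)) ?_ ?_).trans ?_
  · rw [Measure.map_map measurable_fst hfg]; rfl
  · rw [Measure.map_map measurable_snd hfg]; rfl
  · rw [lintegral_map (by fun_prop) hfg]

lemma W2sq_self {d : ℕ} (μ : Measure (Ed d)) : W2sq μ μ = 0 := by
  have := W2sq_map_map μ (f := id) (g := id) measurable_id measurable_id
  simpa using this

/-- An affine bound valid for every coupling passes to the infimum. -/
lemma le_mul_W2sq_add {d : ℕ} {μ ν : Measure (Ed d)} {X a b : ℝ≥0∞} (ha : a ≠ 0) (ha' : a ≠ ∞)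
    (h : ∀ π : Measure (Ed d × Ed d), π.map Prod.fst = μ → π.map Prod.snd = ν →
      X ≤ a * ∫⁻ p, ENNReal.ofReal (‖p.1 - p.2‖ ^ 2) ∂π + b) :
    X ≤ a * W2sq μ ν + b := by
  by_cases hb : b = ∞
  · simp [hb]
  have h1 : (X - b) / a ≤ W2sq μ ν := by
    refine le_sInf ?_
    rintro _ ⟨π, h1, h2, rfl⟩
    rw [ENNReal.div_le_iff' ha ha', tsub_le_iff_right]
    exact h π h1 h2
  rwa [ENNReal.div_le_iff' ha ha', tsub_le_iff_right] at h1

lemma W2sq_add {d : ℕ} (μ₁ μ₂ ν₁ ν₂ : Measure (Ed d)) :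
    W2sq (μ₁ + μ₂) (ν₁ + ν₂) ≤ W2sq μ₁ ν₁ + W2sq μ₂ ν₂ := by
  rw [← one_mul (W2sq μ₁ ν₁)]
  refine le_mul_W2sq_add one_ne_zero ENNReal.one_ne_top fun π₁ h11 h12 => ?_
  rw [add_comm (1 * _), ← one_mul (W2sq μ₂ ν₂)]
  refine le_mul_W2sq_add one_ne_zero ENNReal.one_ne_top fun π₂ h21 h22 => ?_
  rw [one_mul, one_mul, ← lintegral_add_measure]
  refine W2sq_le _ ?_ ?_
  · rw [Measure.map_add _ _ measurable_fst, h11, h21, add_comm]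
  · rw [Measure.map_add _ _ measurable_snd, h12, h22, add_comm]

lemma W2sq_finset_sum {d : ℕ} {ι : Type*} (s : Finset ι) (μ ν : ι → Measure (Ed d)) :
    W2sq (∑ i ∈ s, μ i) (∑ i ∈ s, ν i) ≤ ∑ i ∈ s, W2sq (μ i) (ν i) := by
  classical
  induction s using Finset.induction_on with
  | empty => simp [W2sq_self]
  | insert a s ha ih =>
    rw [Finset.sum_insert ha, Finset.sum_insert ha, Finset.sum_insert ha]
    exact (W2sq_add _ _ _ _).trans (by gcongr)

/-- Gluing: a coupling `β` whose first marginal is the image of `α` under `T` lifts to a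
coupling of `α` with the second marginal of `β`. -/
lemma exists_glue {A B C : Type*} [MeasurableSpace A] [MeasurableSpace B] [MeasurableSpace C]
    [StandardBorelSpace C] [Nonempty C] (α : Measure A) [IsFiniteMeasure α] {T : A → B}
    (hT : Measurable T) (β : Measure (B × C)) [IsFiniteMeasure β] (h : β.fst = α.map T) :
    ∃ γ : Measure (A × C), γ.fst = α ∧ γ.map (fun p => (T p.1, p.2)) = β := by
  refine ⟨α.compProd (β.condKernel.comap T hT), by simp, ?_⟩
  conv_rhs => rw [← β.disintegrate β.condKernel, h]
  ext s hs
  have hm : Measurable fun p : A × C => (T p.1, p.2) := by fun_prop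
  rw [Measure.map_apply hm hs, Measure.compProd_apply (hm hs), Measure.compProd_apply hs,
    lintegral_map (ProbabilityTheory.Kernel.measurable_kernel_prodMk_left hs) hT]
  rfl

lemma measure_univ_of_map {A B : Type*} [MeasurableSpace A] [MeasurableSpace B] {α : Measure A}
    {f : A → B} (hf : Measurable f) {β : Measure B} (h : α.map f = β) : α univ = β univ := by
  rw [← h, Measure.map_apply hf MeasurableSet.univ, preimage_univ]

lemma sq_norm_sub_le_weighted {d : ℕ} {s : ℝ} (hs : 0 < s) (x y z : Ed d) :
    ENNReal.ofReal (‖x - z‖ ^ 2) ≤ ENNReal.ofReal (1 + s) * ENNReal.ofReal (‖x - y‖ ^ 2) +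
      ENNReal.ofReal (1 + s⁻¹) * ENNReal.ofReal (‖y - z‖ ^ 2) := by
  have h : ‖x - z‖ ^ 2 ≤ (1 + s) * ‖x - y‖ ^ 2 + (1 + s⁻¹) * ‖y - z‖ ^ 2 := by
    have h1 : ‖x - z‖ ≤ ‖x - y‖ + ‖y - z‖ := norm_sub_le_norm_sub_add_norm_sub x y z
    have h2 : 0 ≤ s⁻¹ * (s * ‖x - y‖ - ‖y - z‖) ^ 2 := by positivity
    have h3 : s⁻¹ * (s * ‖x - y‖ - ‖y - z‖) ^ 2 =
        s * ‖x - y‖ ^ 2 - 2 * (‖x - y‖ * ‖y - z‖) + s⁻¹ * ‖y - z‖ ^ 2 := by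
      field_simp
      ring
    nlinarith [norm_nonneg (x - z)]
  refine (ENNReal.ofReal_le_ofReal h).trans ?_
  rw [ENNReal.ofReal_add (by positivity) (by positivity), ENNReal.ofReal_mul (by positivity),
    ENNReal.ofReal_mul (by positivity)]

/-- The triangle inequality for the distance, in the form obtained from Young's inequality. -/
lemma W2sq_triangle_weighted {d : ℕ} {s : ℝ} (hs : 0 < s) (μ lam ν : Measure (Ed d))
    [IsFiniteMeasure lam] :
    W2sq μ ν ≤ ENNReal.ofReal (1 + s) * W2sq μ lam + ENNReal.ofReal (1 + s⁻¹) * W2sq lam ν := by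
  have hs1 : ENNReal.ofReal (1 + s) ≠ 0 := (ENNReal.ofReal_pos.2 (by positivity)).ne'
  have hs2 : ENNReal.ofReal (1 + s⁻¹) ≠ 0 := (ENNReal.ofReal_pos.2 (by positivity)).ne'
  refine le_mul_W2sq_add hs1 ENNReal.ofReal_ne_top fun π₁ h11 h12 => ?_
  rw [add_comm]
  refine le_mul_W2sq_add hs2 ENNReal.ofReal_ne_top fun π₂ h21 h22 => ?_
  rw [add_comm]
  have : IsFiniteMeasure π₁ := ⟨by
    rw [measure_univ_of_map measurable_snd h12]; exact measure_lt_top _ _⟩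
  have : IsFiniteMeasure π₂ := ⟨by
    rw [measure_univ_of_map measurable_fst h21]; exact measure_lt_top _ _⟩
  obtain ⟨γ, hγ1, hγ2⟩ := exists_glue π₁ measurable_snd π₂ (h21.trans h12.symm)
  have hm : Measurable fun p : (Ed d × Ed d) × Ed d => (p.1.2, p.2) := by fun_prop
  have hm1 : Measurable fun p : (Ed d × Ed d) × Ed d => p.1.1 := by fun_prop
  have e1 : γ.map (fun p => p.1.1) = μ := by
    rw [← h11, ← hγ1, Measure.fst, Measure.map_map measurable_fst measurable_fst]; rfl
  have e2 : γ.map (fun p => p.2) = ν := by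
    rw [← h22, ← hγ2, Measure.map_map measurable_snd hm]; rfl
  have key := W2sq_map_map γ hm1 (measurable_snd (α := Ed d × Ed d) (β := Ed d))
  rw [e1, e2] at key
  refine key.trans ?_
  calc ∫⁻ z, ENNReal.ofReal (‖z.1.1 - z.2‖ ^ 2) ∂γ
      ≤ ∫⁻ z, (ENNReal.ofReal (1 + s) * ENNReal.ofReal (‖z.1.1 - z.1.2‖ ^ 2) +
          ENNReal.ofReal (1 + s⁻¹) * ENNReal.ofReal (‖z.1.2 - z.2‖ ^ 2)) ∂γ :=
        lintegral_mono fun z => sq_norm_sub_le_weighted hs _ _ _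
    _ = ENNReal.ofReal (1 + s) * ∫⁻ p, ENNReal.ofReal (‖p.1 - p.2‖ ^ 2) ∂π₁ +
          ENNReal.ofReal (1 + s⁻¹) * ∫⁻ p, ENNReal.ofReal (‖p.1 - p.2‖ ^ 2) ∂π₂ := by
        rw [lintegral_add_left (by fun_prop), lintegral_const_mul _ (by fun_prop),
          lintegral_const_mul _ (by fun_prop), ← hγ1, ← hγ2, Measure.fst,
          lintegral_map (by fun_prop) measurable_fst, lintegral_map (by fun_prop) hm]

lemma W2sq_triangle {d : ℕ} (μ lam ν : Measure (Ed d)) [IsFiniteMeasure lam] :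
    W2sq μ ν ≤ 2 * W2sq μ lam + 2 * W2sq lam ν := by
  have h2 : ENNReal.ofReal (1 + 1) = 2 := by norm_num
  have := W2sq_triangle_weighted one_pos μ lam ν
  rwa [inv_one, h2] at this

lemma W2sq_smul_le {d : ℕ} {b : ℝ} (hb : 0 < b) (μ ν : Measure (Ed d)) :
    W2sq (ENNReal.ofReal b • μ) (ENNReal.ofReal b • ν) ≤ ENNReal.ofReal b * W2sq μ ν := by
  rw [← add_zero (_ * _)]
  refine le_mul_W2sq_add (ENNReal.ofReal_pos.2 hb).ne' ENNReal.ofReal_ne_top fun π h1 h2 => ?_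
  rw [add_zero, ← smul_eq_mul, ← lintegral_smul_measure]
  exact W2sq_le _ (by rw [Measure.map_smul, h1]) (by rw [Measure.map_smul, h2])

/-- Mixing a measure with its target: the distance to the target is controlled by that of
any nontrivial convex combination.  This allows one to assume that a density is as close to the
target density as desired. -/
lemma W2sq_le_of_mix {d : ℕ} {a : ℝ} (ha : 0 < a) (ha1 : a < 1) (α β : Measure (Ed d))
    [IsFiniteMeasure α] [IsFiniteMeasure β] (hW : W2sq α β ≠ ∞) :
    W2sq α β ≤ ENNReal.ofReal (2 / a ^ 3) *
      W2sq (ENNReal.ofReal a • α + ENNReal.ofReal (1 - a) • β) β := by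
  have hfa : IsFiniteMeasure (ENNReal.ofReal a • α) := Measure.smul_finite _ ENNReal.ofReal_ne_top
  have hfb : IsFiniteMeasure (ENNReal.ofReal (1 - a) • β) :=
    Measure.smul_finite _ ENNReal.ofReal_ne_top
  have hsplit : α = ENNReal.ofReal a • α + ENNReal.ofReal (1 - a) • α := by
    rw [← add_smul, ← ENNReal.ofReal_add ha.le (by linarith)]
    simp
  have h1 : W2sq α (ENNReal.ofReal a • α + ENNReal.ofReal (1 - a) • β) ≤
      ENNReal.ofReal (1 - a) * W2sq α β := by
    conv_lhs => enter [1]; rw [hsplit]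
    refine (W2sq_add _ _ _ _).trans ?_
    rw [W2sq_self, zero_add]
    exact W2sq_smul_le (by linarith) _ _
  have h2 := W2sq_triangle_weighted ha α (ENNReal.ofReal a • α + ENNReal.ofReal (1 - a) • β) β
  set Y := W2sq (ENNReal.ofReal a • α + ENNReal.ofReal (1 - a) • β) β
  by_cases hY : Y = ∞
  · rw [hY, ENNReal.mul_top (ENNReal.ofReal_pos.2 (by positivity)).ne']
    exact le_top
  have h3 : W2sq α β ≤ ENNReal.ofReal (1 + a) * (ENNReal.ofReal (1 - a) * W2sq α β) +
      ENNReal.ofReal (1 + a⁻¹) * Y := h2.trans (by gcongr)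
  rw [← ENNReal.ofReal_toReal hW, ← ENNReal.ofReal_toReal hY] at h3 ⊢
  have hw := ENNReal.toReal_nonneg (a := W2sq α β)
  have hy := ENNReal.toReal_nonneg (a := Y)
  set w := (W2sq α β).toReal
  set y := Y.toReal
  have ha' : 0 < 1 - a := by linarith
  rw [← ENNReal.ofReal_mul (by positivity), ← ENNReal.ofReal_mul (by positivity),
    ← ENNReal.ofReal_mul (by positivity), ← ENNReal.ofReal_add (by positivity) (by positivity),
    ENNReal.ofReal_le_ofReal_iff (by positivity)] at h3
  rw [← ENNReal.ofReal_mul (by positivity)]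
  refine ENNReal.ofReal_le_ofReal ?_
  have h4 : a ^ 2 * w ≤ (1 + a⁻¹) * y := by nlinarith
  have h5 : 1 + a⁻¹ ≤ 2 / a := by
    rw [div_eq_mul_inv, two_mul]
    linarith [(one_le_inv₀ ha).2 ha1.le]
  have h6 : a ^ 2 * w ≤ 2 / a * y := h4.trans (mul_le_mul_of_nonneg_right h5 hy)
  have h7 : w = (a ^ 2 * w) / a ^ 2 := by field_simp
  rw [h7]
  refine (div_le_div_of_nonneg_right h6 (by positivity)).trans (le_of_eq ?_)
  field_simp

/-- Moving a finite mass inside a bounded set costs at most the mass times the squared diameter. -/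
lemma W2sq_le_mass {d : ℕ} {r : ℝ} (α β : Measure (Ed d)) [IsFiniteMeasure α]
    (hmass : α univ = β univ) (hα : ∀ᵐ x ∂α, ‖x‖ ≤ r) (hβ : ∀ᵐ x ∂β, ‖x‖ ≤ r) :
    W2sq α β ≤ ENNReal.ofReal ((2 * r) ^ 2) * α univ := by
  by_cases h0 : α univ = 0
  · have ha : α = 0 := Measure.measure_univ_eq_zero.1 h0
    have hb : β = 0 := Measure.measure_univ_eq_zero.1 (hmass ▸ h0)
    simp [ha, hb, W2sq_self]
  have hfin : α univ ≠ ∞ := measure_ne_top _ _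
  have : IsFiniteMeasure β := ⟨by rw [← hmass]; exact measure_lt_top _ _⟩
  set π := (α univ)⁻¹ • α.prod β with hπ
  have h1 : π.map Prod.fst = α := by
    rw [hπ, Measure.map_smul, Measure.map_fst_prod, ← hmass, smul_smul,
      ENNReal.inv_mul_cancel h0 hfin, one_smul]
  have h2 : π.map Prod.snd = β := by
    rw [hπ, Measure.map_smul, Measure.map_snd_prod, smul_smul,
      ENNReal.inv_mul_cancel h0 hfin, one_smul]
  refine (W2sq_le π h1 h2).trans ?_
  have hb : ∀ᵐ p ∂π, ENNReal.ofReal (‖p.1 - p.2‖ ^ 2) ≤ ENNReal.ofReal ((2 * r) ^ 2) := by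
    have ha1 : ∀ᵐ p ∂π, ‖p.1‖ ≤ r :=
      ae_of_ae_map (p := fun x => ‖x‖ ≤ r) measurable_fst.aemeasurable (by rw [h1]; exact hα)
    have hb1 : ∀ᵐ p ∂π, ‖p.2‖ ≤ r :=
      ae_of_ae_map (p := fun x => ‖x‖ ≤ r) measurable_snd.aemeasurable (by rw [h2]; exact hβ)
    filter_upwards [ha1, hb1] with p hp1 hp2
    refine ENNReal.ofReal_le_ofReal ?_
    have : ‖p.1 - p.2‖ ≤ 2 * r := (norm_sub_le _ _).trans (by linarith)
    gcongr
  calc _ ≤ ∫⁻ _, ENNReal.ofReal ((2 * r) ^ 2) ∂π := lintegral_mono_ae hb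
    _ = _ := by rw [lintegral_const, measure_univ_of_map measurable_fst h1]

/-! ### Monotone rearrangement along a family of intervals -/

section OneDim

variable {a b c K : ℝ}

lemma integrableOn_of_bdd {p : ℝ → ℝ} (hp : Measurable p) (hb : ∀ s, |p s| ≤ K) (s : Set ℝ)
    (hs : volume s ≠ ∞) : IntegrableOn p s := by
  refine Measure.integrableOn_of_bounded (M := K) hs hp.aestronglyMeasurable ?_
  exact Filter.Eventually.of_forall fun x => by simpa using hb x

/-- Primitive on `[a, r]`. -/
def prim (a : ℝ) (p : ℝ → ℝ) (r : ℝ) : ℝ := ∫ s in Ioc a r, p s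

lemma prim_eq {p : ℝ → ℝ} {r : ℝ} (h : a ≤ r) : prim a p r = ∫ s in a..r, p s := by
  rw [prim, intervalIntegral.integral_of_le h]

lemma prim_sub {p : ℝ → ℝ} (hp : Measurable p) (hb : ∀ s, |p s| ≤ K) {r s : ℝ} (h : a ≤ r)
    (h' : r ≤ s) : prim a p s - prim a p r = ∫ x in Ioc r s, p x := by
  have hi : ∀ u v : ℝ, IntervalIntegrable p volume u v := fun u v =>
    ⟨integrableOn_of_bdd hp hb _ (by simp), integrableOn_of_bdd hp hb _ (by simp)⟩
  rw [prim_eq h, prim_eq (h.trans h'), intervalIntegral.integral_interval_sub_left (hi _ _) (hi _ _),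
    intervalIntegral.integral_of_le h']

lemma continuousOn_prim {p : ℝ → ℝ} (hp : Measurable p) (hb : ∀ s, |p s| ≤ K) :
    ContinuousOn (prim a p) (Icc a b) := by
  have h : ContinuousOn (fun r => ∫ s in a..r, p s) (Icc a b) :=
    (intervalIntegral.continuous_primitive (fun u v =>
    ⟨integrableOn_of_bdd hp hb _ (by simp), integrableOn_of_bdd hp hb _ (by simp)⟩) a).continuousOn
  exact h.congr fun r hr => prim_eq hr.1

lemma prim_mono {p : ℝ → ℝ} (hp : Measurable p) (hb : ∀ s, |p s| ≤ K) (h0 : ∀ s, 0 ≤ p s)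
    {r s : ℝ} (h : a ≤ r) (h' : r ≤ s) : prim a p r ≤ prim a p s := by
  have := prim_sub hp hb h h'
  have h2 : 0 ≤ ∫ x in Ioc r s, p x := setIntegral_nonneg measurableSet_Ioc fun x _ => h0 x
  linarith

lemma prim_slope {q : ℝ → ℝ} (hq : Measurable q) (hb : ∀ s, |q s| ≤ K) (h0 : ∀ s, c ≤ q s)
    {r s : ℝ} (h : a ≤ r) (h' : r ≤ s) : c * (s - r) ≤ prim a q s - prim a q r := by
  rw [prim_sub hq hb h h']
  have h1 : ∫ x in Ioc r s, c ≤ ∫ x in Ioc r s, q x :=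
    setIntegral_mono (by simp) (integrableOn_of_bdd hq hb _ (by simp)) h0
  have h2 : ∫ x in Ioc r s, c = c * (s - r) := by
    rw [setIntegral_const]
    simp [measureReal_def, ENNReal.toReal_ofReal (sub_nonneg.2 h'), mul_comm]
  linarith

/-- The density `p` on `[a,b]` gives mass `t` to the sublevel set of its primitive at level `t`. -/
lemma lintegral_sublevel_prim {p : ℝ → ℝ} (hp : Measurable p) (hb : ∀ s, |p s| ≤ K)
    (h0 : ∀ s, 0 ≤ p s) (hab : a ≤ b) {t : ℝ} (ht : t ∈ Icc 0 (prim a p b)) :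
    ∫⁻ r in {r ∈ Icc a b | prim a p r ≤ t}, ENNReal.ofReal (p r) = ENNReal.ofReal t := by
  have hcont := continuousOn_prim (a := a) (b := b) hp hb
  have hclosed : IsClosed {r ∈ Icc a b | prim a p r ≤ t} :=
    hcont.preimage_isClosed_of_isClosed isClosed_Icc isClosed_Iic
  have hcomp : IsCompact {r ∈ Icc a b | prim a p r ≤ t} :=
    isCompact_Icc.of_isClosed_subset hclosed (sep_subset _ _)
  have hpa : prim a p a = 0 := by simp [prim]
  obtain ⟨r₁, hr₁, hr₁t⟩ : t ∈ prim a p '' Icc a b :=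
    intermediate_value_Icc hab hcont (by rw [hpa]; exact ht)
  obtain ⟨m, ⟨hm1, hm2⟩, hm3⟩ := hcomp.exists_isGreatest ⟨r₁, hr₁, hr₁t.le⟩
  have hset : {r ∈ Icc a b | prim a p r ≤ t} = Icc a m := by
    ext r
    refine ⟨fun h => ⟨h.1.1, hm3 h⟩, fun h => ⟨⟨h.1, h.2.trans hm1.2⟩, ?_⟩⟩
    exact (prim_mono hp hb h0 h.1 h.2).trans hm2
  have hmt : prim a p m = t := le_antisymm hm2 (by
    rw [← hr₁t]; exact prim_mono hp hb h0 hr₁.1 (hm3 ⟨hr₁, hr₁t.le⟩))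
  rw [hset, ← hmt, prim, ofReal_integral_eq_lintegral_ofReal
    (integrableOn_of_bdd hp hb _ (by simp)) (Filter.Eventually.of_forall h0)]
  exact setLIntegral_congr Ioc_ae_eq_Icc.symm

lemma measurable_prim {Y : Type*} [MeasurableSpace Y] {p : Y → ℝ → ℝ}
    (hp : Measurable (Function.uncurry p)) :
    Measurable fun z : Y × ℝ => prim a (p z.1) z.2 := by
  have h : ∀ z : Y × ℝ, prim a (p z.1) z.2 =
      ∫ s, ({w : (Y × ℝ) × ℝ | w.2 ∈ Ioc a w.1.2}.indicator fun w => p w.1.1 w.2) (z, s) := by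
    intro z
    rw [prim, ← integral_indicator measurableSet_Ioc]
    rfl
  simp_rw [h]
  refine (StronglyMeasurable.integral_prod_right' ?_).measurable
  refine (Measurable.indicator ?_ ?_).stronglyMeasurable
  · exact hp.comp (f := fun w : (Y × ℝ) × ℝ => (w.1.1, w.2)) (by fun_prop)
  · exact (measurableSet_lt measurable_const measurable_snd).inter
      (measurableSet_le measurable_snd (by fun_prop))

lemma abs_prim_sub_le {p q : ℝ → ℝ} (hp : Measurable p) (hpb : ∀ s, |p s| ≤ K)
    (hq : Measurable q) (hqb : ∀ s, |q s| ≤ K) {r : ℝ} (hr : r ≤ b) :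
    |prim a p r - prim a q r| ≤ ∫ s in Icc a b, |p s - q s| := by
  have ip := fun s hs => integrableOn_of_bdd hp hpb s hs
  have iq := fun s hs => integrableOn_of_bdd hq hqb s hs
  rw [prim, prim, ← integral_sub (ip _ (by simp)) (iq _ (by simp))]
  refine abs_integral_le_integral_abs.trans ?_
  refine setIntegral_mono_set (((ip _ (by simp)).sub (iq _ (by simp))).abs)
    (Filter.Eventually.of_forall fun x => abs_nonneg _) ?_
  exact (Ioc_subset_Icc_self.trans (Icc_subset_Icc_right hr)).eventuallyLE

/-- Parametrized monotone rearrangement: densities `p y` are carried to densities `q y ≥ c > 0`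
of the same mass on `[a,b]`, jointly measurably in the parameter `y`, every point moving by at
most `c⁻¹` times the `L¹` distance of the densities. -/
lemma exists_rearrangement {Y : Type*} [MeasurableSpace Y] (ν : Measure Y) [SFinite ν]
    (hab : a ≤ b) (hc : 0 < c) {p q : Y → ℝ → ℝ} (hp : Measurable (Function.uncurry p))
    (hq : Measurable (Function.uncurry q)) (hpK : ∀ y s, |p y s| ≤ K) (hqK : ∀ y s, |q y s| ≤ K)
    (hp0 : ∀ y s, 0 ≤ p y s) (hqc : ∀ y s, c ≤ q y s)
    (hmass : ∀ y, ∫ s in Icc a b, p y s = ∫ s in Icc a b, q y s) :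
    ∃ S : Y × ℝ → ℝ, Measurable S ∧
      ((ν.prod (volume.restrict (Icc a b))).withDensity
        (fun z => ENNReal.ofReal (p z.1 z.2))).map (fun z => (z.1, S z)) =
      (ν.prod (volume.restrict (Icc a b))).withDensity (fun z => ENNReal.ofReal (q z.1 z.2)) ∧
      ∀ y, ∀ r ∈ Icc a b, S (y, r) ∈ Icc a b ∧
        |S (y, r) - r| ≤ c⁻¹ * ∫ s in Icc a b, |p y s - q y s| := by
  have hp1 : ∀ y, Measurable (p y) := fun y => hp.comp measurable_prodMk_left
  have hq1 : ∀ y, Measurable (q y) := fun y => hq.comp measurable_prodMk_left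
  have hq0 : ∀ y s, 0 ≤ q y s := fun y s => hc.le.trans (hqc y s)
  have hmass' : ∀ y, prim a (p y) b = prim a (q y) b := fun y => by
    rw [prim, prim, ← integral_Icc_eq_integral_Ioc, ← integral_Icc_eq_integral_Ioc, hmass]
  -- clamping the argument to `[a,b]` makes the implicit equation solvable everywhere
  let cl : ℝ → ℝ := fun r => max a (min b r)
  have hcl : ∀ r, cl r ∈ Icc a b := fun r => ⟨le_max_left _ _, max_le hab (min_le_left _ _)⟩
  have hclid : ∀ r ∈ Icc a b, cl r = r := fun r hr => by
    simp only [cl]; rw [min_eq_right hr.2, max_eq_right hr.1]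
  have hex : ∀ z : Y × ℝ, ∃ s ∈ Icc a b, prim a (q z.1) s = prim a (p z.1) (cl z.2) := by
    intro z
    refine intermediate_value_Icc hab (continuousOn_prim (hq1 z.1) (hqK z.1)) ⟨?_, ?_⟩
    · have : prim a (q z.1) a = prim a (p z.1) a := by simp [prim]
      rw [this]
      exact prim_mono (hp1 _) (hpK _) (hp0 _) le_rfl (hcl _).1
    · rw [← hmass']
      exact prim_mono (hp1 _) (hpK _) (hp0 _) (hcl _).1 (hcl _).2
  choose S hS1 hS2 using hex
  have hstrict : ∀ y, ∀ s ∈ Icc a b, ∀ t ∈ Icc a b, (s ≤ t ↔ prim a (q y) s ≤ prim a (q y) t) := by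
    intro y s hs t ht
    refine ⟨fun h => prim_mono (hq1 _) (hqK _) (hq0 _) hs.1 h, fun h => ?_⟩
    by_contra! hlt
    have := prim_slope (hq1 y) (hqK y) (hqc y) ht.1 hlt.le
    nlinarith
  have hSle : ∀ z, ∀ s ∈ Icc a b, (S z ≤ s ↔ prim a (p z.1) (cl z.2) ≤ prim a (q z.1) s) := by
    intro z s hs
    rw [hstrict z.1 _ (hS1 z) s hs, hS2]
  have hSm : Measurable S := by
    refine measurable_of_Iic fun s => ?_
    rcases lt_or_ge s a with h | h
    · convert MeasurableSet.empty
      ext z; simp only [mem_preimage, mem_Iic, mem_empty_iff_false, iff_false, not_le]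
      exact h.trans_le (hS1 z).1
    rcases lt_or_ge b s with h' | h'
    · convert MeasurableSet.univ
      ext z; simp only [mem_preimage, mem_Iic, mem_univ, iff_true]
      exact (hS1 z).2.trans h'.le
    have : S ⁻¹' Iic s = {z | prim a (p z.1) (cl z.2) ≤ prim a (q z.1) s} := by
      ext z; exact hSle z s ⟨h, h'⟩
    rw [this]
    refine measurableSet_le ?_ ?_
    · exact (measurable_prim hp).comp (f := fun z : Y × ℝ => (z.1, cl z.2))
        (measurable_fst.prodMk (by fun_prop))
    · exact (measurable_prim hq).comp (f := fun z : Y × ℝ => (z.1, s)) (by fun_prop)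
  have hone : ∀ y, ((volume.restrict (Icc a b)).withDensity
      (fun s => ENNReal.ofReal (p y s))).map (fun r => S (y, r)) =
      (volume.restrict (Icc a b)).withDensity (fun s => ENNReal.ofReal (q y s)) := by
    intro y
    have hSy : Measurable fun r => S (y, r) := hSm.comp measurable_prodMk_left
    have fin : ∀ f : ℝ → ℝ, Measurable f → (∀ s, |f s| ≤ K) → IsFiniteMeasure
        ((volume.restrict (Icc a b)).withDensity (fun s => ENNReal.ofReal (f s))) := by
      intro f hf hfK
      refine isFiniteMeasure_withDensity_ofReal ?_
      exact (integrableOn_of_bdd hf hfK _ (by simp)).2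
    have := fin _ (hp1 y) (hpK y)
    have := fin _ (hq1 y) (hqK y)
    have hpos : 0 ≤ prim a (p y) b := setIntegral_nonneg measurableSet_Ioc fun x _ => hp0 y x
    have hfull : ∀ f : ℝ → ℝ, Measurable f → (∀ s, |f s| ≤ K) → (∀ s, 0 ≤ f s) → ∀ s ∈ Icc a b,
        ((volume.restrict (Icc a b)).withDensity (fun s => ENNReal.ofReal (f s))) (Iic s) =
          ENNReal.ofReal (prim a f s) := by
      intro f hf hfK hf0 s hs
      rw [withDensity_apply _ measurableSet_Iic, Measure.restrict_restrict measurableSet_Iic, prim,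
        ofReal_integral_eq_lintegral_ofReal (integrableOn_of_bdd hf hfK _ (by simp))
        (Filter.Eventually.of_forall hf0)]
      have : Iic s ∩ Icc a b = Icc a s := by
        ext x; simp only [mem_inter_iff, mem_Iic, mem_Icc]
        exact ⟨fun h => ⟨h.2.1, h.1⟩, fun h => ⟨h.2, h.1, h.2.trans hs.2⟩⟩
      rw [this]
      exact setLIntegral_congr Ioc_ae_eq_Icc.symm
    have hmid : ∀ s ∈ Icc a b, (((volume.restrict (Icc a b)).withDensity
      (fun s => ENNReal.ofReal (p y s))).map (fun r => S (y, r))) (Iic s) =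
      ((volume.restrict (Icc a b)).withDensity (fun s => ENNReal.ofReal (q y s))) (Iic s) := by
      intro s hs
      rw [hfull _ (hq1 y) (hqK y) (hq0 y) s hs, Measure.map_apply hSy measurableSet_Iic,
        withDensity_apply _ (hSy measurableSet_Iic),
        Measure.restrict_restrict (hSy measurableSet_Iic),
        ← lintegral_sublevel_prim (hp1 y) (hpK y) (hp0 y) hab (t := prim a (q y) s)]
      · congr 2
        ext r
        simp only [mem_inter_iff, mem_preimage, mem_Iic, mem_ofPred_eq]
        constructor
        · rintro ⟨h1, h2⟩
          refine ⟨h2, ?_⟩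
          have := (hSle (y, r) s hs).1 h1
          rwa [hclid r h2] at this
        · rintro ⟨h1, h2⟩
          refine ⟨(hSle (y, r) s hs).2 ?_, h1⟩
          rwa [hclid r h1]
      · refine ⟨setIntegral_nonneg measurableSet_Ioc fun x _ => hq0 y x, ?_⟩
        rw [hmass']
        exact prim_mono (hq1 _) (hqK _) (hq0 _) hs.1 hs.2
    refine Measure.ext_of_Iic _ _ fun s => ?_
    rcases lt_or_ge s a with h | h
    · rw [Measure.map_apply hSy measurableSet_Iic]
      have e1 : (fun r => S (y, r)) ⁻¹' Iic s = ∅ := by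
        ext z; simp only [mem_preimage, mem_Iic, mem_empty_iff_false, iff_false, not_le]
        exact h.trans_le (hS1 _).1
      rw [e1, measure_empty, withDensity_apply _ measurableSet_Iic,
        Measure.restrict_restrict measurableSet_Iic]
      have : Iic s ∩ Icc a b = ∅ := by
        ext x; simp only [mem_inter_iff, mem_Iic, mem_Icc, mem_empty_iff_false, iff_false]
        rintro ⟨h1, h2, _⟩; linarith
      simp [this]
    rcases lt_or_ge b s with h' | h'
    · have hb := hmid b ⟨hab, le_rfl⟩
      have e2 : ((volume.restrict (Icc a b)).withDensity (fun s => ENNReal.ofReal (q y s))) (Iic s)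
          = ((volume.restrict (Icc a b)).withDensity (fun s => ENNReal.ofReal (q y s))) (Iic b) := by
        rw [withDensity_apply _ measurableSet_Iic, Measure.restrict_restrict measurableSet_Iic,
          withDensity_apply _ measurableSet_Iic, Measure.restrict_restrict measurableSet_Iic]
        congr 2
        ext x; simp only [mem_inter_iff, mem_Iic, mem_Icc]
        exact ⟨fun h => ⟨h.2.2, h.2⟩, fun h => ⟨h.1.trans h'.le, h.2⟩⟩
      rw [e2, ← hb, Measure.map_apply hSy measurableSet_Iic, Measure.map_apply hSy measurableSet_Iic]
      congr 1
      ext z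
      simp only [mem_preimage, mem_Iic]
      exact ⟨fun _ => (hS1 _).2, fun h => h.trans h'.le⟩
    · exact hmid s ⟨h, h'⟩
  refine ⟨S, hSm, ?_, fun y r hr => ⟨hS1 _, ?_⟩⟩
  · have hm : Measurable fun z : Y × ℝ => (z.1, S z) := measurable_fst.prodMk hSm
    have hpm : Measurable fun z : Y × ℝ => ENNReal.ofReal (p z.1 z.2) := hp.ennreal_ofReal
    have hqm : Measurable fun z : Y × ℝ => ENNReal.ofReal (q z.1 z.2) := hq.ennreal_ofReal
    ext A hA
    rw [Measure.map_apply hm hA, withDensity_apply _ (hm hA), withDensity_apply _ hA,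
      ← lintegral_indicator (hm hA), ← lintegral_indicator hA,
      lintegral_prod _ (hpm.indicator (hm hA)).aemeasurable,
      lintegral_prod _ (hqm.indicator hA).aemeasurable]
    refine lintegral_congr fun y => ?_
    have hAy : MeasurableSet (Prod.mk y ⁻¹' A) := measurable_prodMk_left hA
    have hSy : Measurable fun r => S (y, r) := hSm.comp measurable_prodMk_left
    have h1 := congrArg (fun m : Measure ℝ => m (Prod.mk y ⁻¹' A)) (hone y)
    rw [Measure.map_apply hSy hAy, withDensity_apply _ (hSy hAy), withDensity_apply _ hAy,
      ← lintegral_indicator (hSy hAy), ← lintegral_indicator hAy] at h1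
    exact h1
  · have h1 := hS2 (y, r)
    simp only [hclid r hr] at h1
    have h2 := abs_prim_sub_le (a := a) (b := b) (hp1 y) (hpK y) (hq1 y) (hqK y) hr.2
    rw [← h1] at h2
    rw [le_inv_mul_iff₀ hc]
    refine le_trans ?_ h2
    rcases le_total r (S (y, r)) with h | h
    · rw [abs_of_nonneg (sub_nonneg.2 h)]
      exact (prim_slope (hq1 y) (hqK y) (hqc y) hr.1 h).trans (le_abs_self _)
    · rw [abs_of_nonpos (sub_nonpos.2 h), neg_sub, abs_sub_comm]
      exact (prim_slope (hq1 y) (hqK y) (hqc y) (hS1 (y, r)).1 h).trans (le_abs_self _)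

end OneDim

/-! ### Monotonicity of the optimal map -/

section Monotone

variable {d : ℕ}

lemma ae_norm_le_of_opt {Ω : Set (Ed d)} {μ : Measure (Ed d)} {T : Ed d → Ed d}
    (hK : ∃ K : Set (Ed d), IsCompact K ∧ μ Kᶜ = 0) (hT : IsOptMap Ω μ T) :
    ∃ M : ℝ, ∀ᵐ x ∂(volume.restrict Ω), ‖T x‖ ≤ M := by
  obtain ⟨K, hK, hμ⟩ := hK
  obtain ⟨M, hM⟩ := hK.isBounded.exists_norm_le
  refine ⟨M, ?_⟩
  rw [← hT.2.1, Measure.map_apply hT.1 hK.measurableSet.compl] at hμ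
  have : ∀ᵐ x ∂(volume.restrict Ω), T x ∈ K := by
    rw [ae_iff]; exact hμ
  exact this.mono fun x hx => hM _ hx

lemma cost_ne_top {Ω : Set (Ed d)} (hΩ : Bornology.IsBounded Ω) (hΩm : MeasurableSet Ω)
    {T : Ed d → Ed d} {M : ℝ} (hM : ∀ᵐ x ∂(volume.restrict Ω), ‖T x‖ ≤ M) :
    ∫⁻ x in Ω, ENNReal.ofReal (‖T x - x‖ ^ 2) ≠ ∞ := by
  obtain ⟨r, hr⟩ := hΩ.exists_norm_le
  have : ∫⁻ x in Ω, ENNReal.ofReal (‖T x - x‖ ^ 2) ≤ ∫⁻ _x in Ω, ENNReal.ofReal ((M + r) ^ 2) := by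
    refine lintegral_mono_ae ?_
    filter_upwards [hM, ae_restrict_mem hΩm] with x hx hxΩ
    have := hr x hxΩ
    have h2 := norm_sub_le (T x) x
    have := norm_nonneg (T x - x)
    gcongr
    linarith
  refine (this.trans_lt ?_).ne
  rw [setLIntegral_const]
  exact ENNReal.mul_lt_top ENNReal.ofReal_lt_top hΩ.measure_lt_top

/-- Splitting an integral over `Ω` along a set `A` and its disjoint translate `A + v`. -/
lemma lintegral_split_shift {Ω A : Set (Ed d)} (v : Ed d) (hA : MeasurableSet A)
    (hAΩ : A ⊆ Ω) (hAv : ∀ x ∈ A, x + v ∈ Ω) (hdisj : ∀ x ∈ A, x + v ∉ A)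
    (h : Ed d → ℝ≥0∞) :
    ∫⁻ x in Ω, h x = (∫⁻ x in A, h x) + (∫⁻ x in A, h (x + v)) +
      ∫⁻ x in Ω \ (A ∪ (fun x => x - v) ⁻¹' A), h x := by
  have hA' : MeasurableSet ((fun x : Ed d => x - v) ⁻¹' A) := (measurable_sub_const v) hA
  have hsub : A ∪ (fun x => x - v) ⁻¹' A ⊆ Ω := by
    rintro x (hx | hx)
    · exact hAΩ hx
    · have := hAv _ hx
      simpa using this
  have hd : Disjoint A ((fun x => x - v) ⁻¹' A) := by
    rw [Set.disjoint_left]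
    intro x hx hx'
    exact hdisj _ hx' (by simpa using hx)
  rw [← lintegral_inter_add_sdiff h Ω (hA.union hA'), inter_eq_self_of_subset_right hsub,
    lintegral_union hA' hd]
  congr 2
  have hmp := measurePreserving_add_right (volume : Measure (Ed d)) v
  have := hmp.setLIntegral_comp_preimage_emb (MeasurableEquiv.addRight v).measurableEmbedding h
    ((fun x => x - v) ⁻¹' A)
  rw [← this]
  congr 2
  ext x
  simp

/-- Exchanging the images of `A` and `A + v` cannot lower the cost, so `T` is monotone along
every fixed shift. -/
lemma ae_shift_monotone {Ω : Set (Ed d)} {μ : Measure (Ed d)} {T : Ed d → Ed d}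
    (hΩ : Bornology.IsBounded Ω) (hΩm : MeasurableSet Ω)
    (hK : ∃ K : Set (Ed d), IsCompact K ∧ μ Kᶜ = 0) (hT : IsOptMap Ω μ T) (v : Ed d) :
    ∀ᵐ x : Ed d, x ∈ Ω → x + v ∈ Ω → 0 ≤ ⟪T (x + v) - T x, v⟫ := by
  by_cases hv : v = 0
  · simp [hv]
  obtain ⟨M, hM⟩ := ae_norm_le_of_opt hK hT
  have hcost := cost_ne_top hΩ hΩm hM
  obtain ⟨hTm, hTμ, hopt⟩ := hT
  set A₀ : Set (Ed d) := {x | x ∈ Ω ∧ x + v ∈ Ω ∧ ⟪T (x + v) - T x, v⟫ < 0} with hA₀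
  have hA₀m : MeasurableSet A₀ := by
    refine hΩm.inter (((measurable_add_const v) hΩm).inter ?_)
    exact measurableSet_lt
      (Measurable.inner (𝕜 := ℝ) ((hTm.comp (measurable_add_const v)).sub hTm) measurable_const)
      measurable_const
  by_contra hcon
  have hA₀pos : volume A₀ ≠ 0 := by
    intro h0
    apply hcon
    rw [ae_iff]
    convert h0 using 2
    ext x
    simp [hA₀]
  obtain ⟨z, hz, hpos⟩ := exists_mem_forall_mem_nhdsWithin_pos_measure hA₀pos
  have hvpos : 0 < ‖v‖ := norm_pos_iff.2 hv
  set A : Set (Ed d) := A₀ ∩ ball z (‖v‖ / 2) with hA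
  have hAm : MeasurableSet A := hA₀m.inter measurableSet_ball
  have hApos : 0 < volume A := by
    apply hpos
    exact inter_mem_nhdsWithin _ (ball_mem_nhds z (by positivity))
  have hdisj : ∀ x ∈ A, x + v ∉ A := by
    intro x hx hx'
    have h1 : dist x z < ‖v‖ / 2 := hx.2
    have h2 : dist (x + v) z < ‖v‖ / 2 := hx'.2
    have h3 : dist (x + v) x ≤ dist (x + v) z + dist x z := dist_triangle_right _ _ _
    rw [dist_eq_norm, add_sub_cancel_left] at h3
    linarith
  have hdisj' : ∀ x ∈ A, x - v ∉ A := by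
    intro x hx hx'
    exact hdisj _ hx' (by simpa using hx)
  have hAΩ : A ⊆ Ω := fun x hx => hx.1.1
  have hAv : ∀ x ∈ A, x + v ∈ Ω := fun x hx => hx.1.2.1
  have hA'm : MeasurableSet ((fun x : Ed d => x - v) ⁻¹' A) := (measurable_sub_const v) hAm
  classical
  set S : Ed d → Ed d := fun x => if x ∈ A then T (x + v) else if x - v ∈ A then T (x - v) else T x
    with hS
  have hSm : Measurable S :=
    Measurable.ite hAm (by fun_prop) (Measurable.ite hA'm (by fun_prop) hTm)
  have hS1 : ∀ x ∈ A, S x = T (x + v) := fun x hx => by simp [hS, hx]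
  have hS2 : ∀ x ∈ A, S (x + v) = T x := fun x hx => by simp [hS, hx, hdisj x hx]
  set Q := Ω \ (A ∪ (fun x => x - v) ⁻¹' A) with hQ
  have hQm : MeasurableSet Q := hΩm.diff (hAm.union hA'm)
  have hS3 : ∀ x ∈ Q, S x = T x := by
    intro x hx
    have hx1 : x ∉ A := fun h => hx.2 (Or.inl h)
    have hx2 : x - v ∉ A := fun h => hx.2 (Or.inr h)
    simp [hS, hx1, hx2]
  have hSμ : Measure.map S (volume.restrict Ω) = μ := by
    rw [← hTμ]
    refine Measure.ext_of_lintegral _ fun g hg => ?_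
    rw [lintegral_map hg hSm, lintegral_map hg hTm,
      lintegral_split_shift v hAm hAΩ hAv hdisj,
      lintegral_split_shift v hAm hAΩ hAv hdisj (fun x => g (T x)),
      setLIntegral_congr_fun hAm (g := fun x => g (T (x + v))) (fun x hx => by simp [hS1 x hx]),
      setLIntegral_congr_fun hAm (f := fun x => g (S (x + v))) (g := fun x => g (T x))
        (fun x hx => by simp [hS2 x hx]),
      setLIntegral_congr_fun hQm (f := fun x => g (S x)) (g := fun x => g (T x))
        (fun x hx => by simp [hS3 x hx]), add_comm (∫⁻ x in A, g (T x))]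
  have hle := hopt S hSm hSμ
  rw [lintegral_split_shift v hAm hAΩ hAv hdisj] at hcost
  rw [lintegral_split_shift v hAm hAΩ hAv hdisj,
    lintegral_split_shift v hAm hAΩ hAv hdisj (fun x => ENNReal.ofReal (‖S x - x‖ ^ 2)),
    setLIntegral_congr_fun hQm (f := fun x => ENNReal.ofReal (‖S x - x‖ ^ 2))
      (g := fun x => ENNReal.ofReal (‖T x - x‖ ^ 2)) (fun x hx => by simp [hS3 x hx]),
    ENNReal.add_le_add_iff_right (fun h => hcost (by rw [h, _root_.add_top])),
    ← lintegral_add_left (by fun_prop), ← lintegral_add_left (by fun_prop)] at hle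
  refine absurd hle (not_le.2 ?_)
  have hlt : ∀ x ∈ A, ENNReal.ofReal (‖S x - x‖ ^ 2) + ENNReal.ofReal (‖S (x + v) - (x + v)‖ ^ 2) <
      ENNReal.ofReal (‖T x - x‖ ^ 2) + ENNReal.ofReal (‖T (x + v) - (x + v)‖ ^ 2) := by
    intro x hx
    rw [hS1 x hx, hS2 x hx, ← ENNReal.ofReal_add (by positivity) (by positivity),
      ← ENNReal.ofReal_add (by positivity) (by positivity)]
    have hneg : ⟪T (x + v) - T x, v⟫ < 0 := hx.1.2.2
    have e1 : ‖T (x + v) - x‖ ^ 2 = ‖T (x + v) - (x + v)‖ ^ 2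
        + 2 * ⟪T (x + v) - (x + v), v⟫ + ‖v‖ ^ 2 := by
      rw [← norm_add_sq_real]; congr 2; abel
    have e2 : ‖T x - (x + v)‖ ^ 2 = ‖T x - x‖ ^ 2 - 2 * ⟪T x - x, v⟫ + ‖v‖ ^ 2 := by
      rw [← norm_sub_sq_real]; congr 2; abel
    have e3 : ⟪T (x + v) - (x + v), v⟫ = ⟪T (x + v) - T x, v⟫ + ⟪T x - x, v⟫ - ⟪v, v⟫ := by
      rw [← inner_add_left, ← inner_sub_left]; congr 1; abel
    rw [real_inner_self_eq_norm_sq] at e3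
    have hlt : ‖T (x + v) - x‖ ^ 2 + ‖T x - (x + v)‖ ^ 2 <
        ‖T x - x‖ ^ 2 + ‖T (x + v) - (x + v)‖ ^ 2 := by
      rw [e1, e2]; nlinarith
    exact (ENNReal.ofReal_lt_ofReal_iff (lt_of_le_of_lt (by positivity) hlt)).2 hlt
  refine setLIntegral_strict_mono hAm hApos.ne' (by fun_prop) ?_ (ae_of_all _ hlt)
  refine ((setLIntegral_mono' hAm fun x hx => (hlt x hx).le).trans_lt ?_).ne
  rw [lintegral_add_left (by fun_prop)]
  exact (lt_of_le_of_lt le_self_add (Ne.lt_top hcost))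

/-- Up to a null set of `Ω`, the optimal map is monotone for all pairs of points. -/
lemma exists_monotone_set {Ω : Set (Ed d)} {μ : Measure (Ed d)} {T : Ed d → Ed d}
    (hΩ : Bornology.IsBounded Ω) (hΩm : MeasurableSet Ω)
    (hK : ∃ K : Set (Ed d), IsCompact K ∧ μ Kᶜ = 0) (hT : IsOptMap Ω μ T) :
    ∃ G : Set (Ed d), MeasurableSet G ∧ G ⊆ Ω ∧ volume (Ω \ G) = 0 ∧
      Bornology.IsBounded (T '' G) ∧
      ∀ x ∈ G, ∀ y ∈ G, 0 ≤ ⟪T x - T y, x - y⟫ := by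
  have hTm := hT.1
  have h1 : ∀ᵐ x : Ed d, ∀ᵐ v : Ed d, x ∈ Ω → x + v ∈ Ω → 0 ≤ ⟪T (x + v) - T x, v⟫ := by
    rw [ae_ae_comm]
    · exact ae_of_all _ fun v => ae_shift_monotone hΩ hΩm hK hT v
    · refine MeasurableSet.imp (measurable_fst hΩm) (MeasurableSet.imp ?_ ?_)
      · exact (measurable_fst.add measurable_snd) hΩm
      · exact measurableSet_le measurable_const (by fun_prop)
  have h2 : ∀ᵐ x : Ed d, ∀ᵐ y : Ed d, x ∈ Ω → y ∈ Ω → 0 ≤ ⟪T x - T y, x - y⟫ := by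
    filter_upwards [h1] with x hx
    have := (measurePreserving_add_right (volume : Measure (Ed d)) (-x)).quasiMeasurePreserving.ae hx
    filter_upwards [this] with y hy hxΩ hyΩ
    have := hy hxΩ (by simpa using hyΩ)
    rw [show x + (y + -x) = y by abel, show y + -x = -(x - y) by abel, inner_neg_right,
      ← inner_neg_left, neg_sub] at this
    exact this
  set F : Ed d → Ed d × Ed d := fun x => (x, T x) with hF
  have hFm : Measurable F := measurable_id.prodMk hTm
  set γ := (volume.restrict Ω).map F with hγ
  obtain ⟨M, hM⟩ := ae_norm_le_of_opt hK hT
  have hΩfin : IsFiniteMeasure (volume.restrict Ω) :=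
    ⟨by rw [Measure.restrict_apply_univ]; exact hΩ.measure_lt_top⟩
  have : IsFiniteMeasure γ := by rw [hγ]; infer_instance
  have hmono : ∀ p ∈ γ.support, ∀ q ∈ γ.support, 0 ≤ ⟪p.2 - q.2, p.1 - q.1⟫ := by
    intro p hp q hq
    by_contra hneg
    push Not at hneg
    set N : Set ((Ed d × Ed d) × (Ed d × Ed d)) :=
      {w | ⟪w.1.2 - w.2.2, w.1.1 - w.2.1⟫ < 0} with hN
    have hNo : IsOpen N := isOpen_lt (by fun_prop) continuous_const
    have hmem : N ∈ 𝓝 (p, q) := hNo.mem_nhds hneg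
    obtain ⟨U, hU, V, hV, hUV⟩ := mem_nhds_prod_iff.1 hmem
    rw [Measure.mem_support_iff_forall] at hp hq
    obtain ⟨U', hU', hU'o, hpU'⟩ := _root_.mem_nhds_iff.1 hU
    obtain ⟨V', hV', hV'o, hqV'⟩ := _root_.mem_nhds_iff.1 hV
    have hU0 := hp U' (hU'o.mem_nhds hpU')
    have hV0 := hq V' (hV'o.mem_nhds hqV')
    rw [hγ, Measure.map_apply hFm hU'o.measurableSet,
      Measure.restrict_apply (hFm hU'o.measurableSet)] at hU0
    rw [hγ, Measure.map_apply hFm hV'o.measurableSet,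
      Measure.restrict_apply (hFm hV'o.measurableSet)] at hV0
    have hf1 : ∃ᵐ x : Ed d, x ∈ F ⁻¹' U' ∩ Ω := frequently_ae_mem_iff.2 hU0.ne'
    obtain ⟨x, hx, hx'⟩ := (hf1.and_eventually h2).exists
    have hf2 : ∃ᵐ x : Ed d, x ∈ F ⁻¹' V' ∩ Ω := frequently_ae_mem_iff.2 hV0.ne'
    obtain ⟨y, hy, hy'⟩ := (hf2.and_eventually hx').exists
    have hlt : (F x, F y) ∈ N := hUV ⟨hU' hx.1, hV' hy.1⟩
    have hlt' : ⟪T x - T y, x - y⟫ < 0 := hlt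
    exact absurd (hy' hx.2 hy.2) (not_le.2 hlt')
  refine ⟨Ω ∩ (F ⁻¹' γ.support ∩ {x | ‖T x‖ ≤ M}), ?_, inter_subset_left, ?_, ?_, ?_⟩
  · refine hΩm.inter ((hFm Measure.isClosed_support.measurableSet).inter ?_)
    exact measurableSet_le hTm.norm measurable_const
  · have h3 : ∀ᵐ p ∂γ, p ∈ γ.support := Measure.support_mem_ae
    have h4 := (ae_map_iff hFm.aemeasurable Measure.isClosed_support.measurableSet).1 h3
    have h5 : ∀ᵐ x : Ed d, x ∈ Ω → F x ∈ γ.support ∧ ‖T x‖ ≤ M := by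
      rw [← ae_restrict_iff' hΩm]; exact h4.and hM
    rw [ae_iff] at h5
    refine measure_mono_null ?_ h5
    rintro x ⟨hx, hx'⟩ h
    exact hx' ⟨hx, h hx⟩
  · refine (isBounded_iff_forall_norm_le).2 ⟨M, ?_⟩
    rintro _ ⟨x, hx, rfl⟩
    exact hx.2.2
  · intro x hx y hy
    exact hmono _ hx.2.1 _ hy.2.1

end Monotone

/-! ### The uniform displacement bound -/

section Linfty

variable {d : ℕ}

/-- The Dirichlet-type energy `E = ∫_{B₂} |T - x|²`. -/
def enE (T : Ed d → Ed d) : ℝ≥0∞ :=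
  ∫⁻ x in ball (0 : Ed d) 2, ENNReal.ofReal (‖T x - x‖ ^ 2)

/-- The volume of the unit ball. -/
def ubv (d : ℕ) : ℝ := (volume (ball (0 : Ed d) 1)).toReal

lemma ubv_pos (d : ℕ) : 0 < ubv d :=
  ENNReal.toReal_pos (measure_ball_pos _ _ one_pos).ne' measure_ball_lt_top.ne

lemma volume_ball_eq {c : Ed d} {ρ : ℝ} (hρ : 0 < ρ) :
    volume (ball c ρ) = ENNReal.ofReal (ρ ^ d * ubv d) := by
  rw [Measure.addHaar_ball_of_pos _ _ hρ, finrank_euclideanSpace_fin, ENNReal.ofReal_mul (by positivity),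
    ubv, ENNReal.ofReal_toReal measure_ball_lt_top.ne]

/-- Every ball in `B₂` contains a point of `G` whose displacement is at most the average. -/
lemma exists_small_displacement {G : Set (Ed d)} {T : Ed d → Ed d}
    (hTm : Measurable T) (hG : volume (ball (0 : Ed d) 2 \ G) = 0) (hE : enE T ≠ ∞)
    {c : Ed d} {ρ : ℝ} (hρ : 0 < ρ) (hc : ball c ρ ⊆ ball 0 2) :
    ∃ y ∈ G, y ∈ ball c ρ ∧ ‖y - T y‖ ^ 2 ≤ (enE T).toReal / (ρ ^ d * ubv d) := by
  have hpos : 0 < ρ ^ d * ubv d := mul_pos (by positivity) (ubv_pos d)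
  have hvol : volume (ball c ρ) ≠ 0 := (measure_ball_pos _ _ hρ).ne'
  have hne : (volume.restrict (ball c ρ)) ≠ 0 := by
    rwa [Ne, Measure.restrict_eq_zero]
  have hN : (volume.restrict (ball c ρ)) (G ∩ ball c ρ)ᶜ = 0 := by
    have h1 : ∀ᵐ y : Ed d, y ∉ ball (0 : Ed d) 2 \ G := measure_eq_zero_iff_ae_notMem.1 hG
    have h2 : ∀ᵐ y ∂(volume.restrict (ball c ρ)), y ∈ G ∩ ball c ρ := by
      filter_upwards [ae_restrict_of_ae h1, ae_restrict_mem measurableSet_ball] with y hy hyc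
      refine ⟨?_, hyc⟩
      by_contra h
      exact hy ⟨hc hyc, h⟩
    exact h2
  have : IsFiniteMeasure (volume.restrict (ball c ρ)) :=
    ⟨by rw [Measure.restrict_apply_univ]; exact measure_ball_lt_top⟩
  obtain ⟨y, hy, hle⟩ := exists_notMem_null_le_laverage hne
    (f := fun y => ENNReal.ofReal (‖T y - y‖ ^ 2)) (by fun_prop) hN
  rw [notMem_compl_iff] at hy
  refine ⟨y, hy.1, hy.2, ?_⟩
  rw [setLAverage_eq] at hle
  have h3 : ENNReal.ofReal (‖T y - y‖ ^ 2) ≤ enE T / volume (ball c ρ) :=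
    hle.trans (ENNReal.div_le_div_right (lintegral_mono_set hc) _)
  rw [volume_ball_eq hρ, ← ENNReal.ofReal_toReal hE, ← ENNReal.ofReal_div_of_pos hpos,
    ENNReal.ofReal_le_ofReal_iff (by positivity)] at h3
  rwa [norm_sub_rev]

lemma Tt_eq (T : Ed d → Ed d) (t : ℝ) (x : Ed d) : Tt T t x = x + t • (T x - x) := by
  rw [Tt, smul_sub, sub_smul, one_smul]; abel

/-- Monotonicity against a point slightly ahead of `x` bounds the displacement of `x` by the
displacement of that point. -/
lemma displacement_le_ahead {T : Ed d → Ed d} {x y e : Ed d} {r : ℝ} (hr : 0 < r) (he : ‖e‖ = 1)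
    (hTe : T x - x = ‖T x - x‖ • e) (hmono : 0 ≤ ⟪T x - T y, x - y⟫)
    (hy : y ∈ ball (x + r • e) (r / 2)) :
    ‖T x - x‖ ≤ 9 / 2 * r + 3 * ‖y - T y‖ := by
  set l := ‖T x - x‖ with hl
  set η := y - (x + r • e) with hη
  have hηn : ‖η‖ < r / 2 := by rw [hη, ← dist_eq_norm]; exact hy
  have hyx : y - x = r • e + η := by rw [hη]; abel
  have hee : ⟪e, e⟫ = 1 := by rw [real_inner_self_eq_norm_sq, he]; norm_num
  have h1 : r / 2 ≤ ⟪e, y - x⟫ := by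
    rw [hyx, inner_add_right, inner_smul_right, hee]
    have := abs_real_inner_le_norm e η
    rw [he, one_mul] at this
    have := (abs_le.1 this).1
    linarith
  have h2 : ‖y - x‖ ≤ 3 / 2 * r := by
    rw [hyx]
    refine (norm_add_le _ _).trans ?_
    rw [norm_smul, he, Real.norm_eq_abs, abs_of_pos hr]
    linarith
  have h3 : ⟪T x - T y, x - y⟫ = -(l * ⟪e, y - x⟫) + ‖y - x‖ ^ 2 - ⟪y - T y, y - x⟫ := by
    have : T x - T y = l • e - (y - x) + (y - T y) := by rw [← hTe]; abel
    rw [this, ← neg_sub y x, inner_neg_right, inner_add_left, inner_sub_left, real_inner_smul_left,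
      real_inner_self_eq_norm_sq]
    ring
  have h4 := (abs_le.1 (abs_real_inner_le_norm (y - T y) (y - x))).1
  have hl0 : 0 ≤ l := norm_nonneg _
  have h5 : ‖y - T y‖ * ‖y - x‖ ≤ ‖y - T y‖ * (3 / 2 * r) := by gcongr
  have h6 : ‖y - x‖ ^ 2 ≤ (3 / 2 * r) ^ 2 := by gcongr
  have h7 : l * (r / 2) ≤ l * ⟪e, y - x⟫ := by gcongr
  have h8 : l * r ≤ (9 / 2 * r + 3 * ‖y - T y‖) * r := by nlinarith
  exact le_of_mul_le_mul_right h8 hr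

/-- A trajectory travelling at least distance `1/4` before reaching `x + s(Tx - x)` forces a
definite displacement of the points slightly behind. -/
lemma displacement_ge_behind {T : Ed d → Ed d} {x y e : Ed d} {r s : ℝ} (hr : 0 < r)
    (hr' : r ≤ 1 / 36) (he : ‖e‖ = 1) (hs1 : s ≤ 1) (hTe : T x - x = ‖T x - x‖ • e)
    (hfar : 1 / 4 ≤ s * ‖T x - x‖)
    (hmono : 0 ≤ ⟪T x - T y, x - y⟫)
    (hy : y ∈ ball (x + (s * ‖T x - x‖) • e - r • e) (r / 2)) :
    r / 8 ≤ ‖y - T y‖ := by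
  set l := ‖T x - x‖ with hl
  set a := s * l with ha
  set w := y - T y with hw
  set ξ := y - (x + a • e - r • e) with hξ
  have hξn : ‖ξ‖ < r / 2 := by rw [hξ, ← dist_eq_norm]; exact hy
  have hl0 : 0 ≤ l := norm_nonneg _
  have hal : a ≤ l := by rw [ha]; nlinarith
  have hee : ⟪e, e⟫ = 1 := by rw [real_inner_self_eq_norm_sq, he]; norm_num
  have hyx : y - x = (a - r) • e + ξ := by rw [hξ, sub_smul]; abel
  have hTT : T x - T y = (l - a) • e - (ξ - r • e) + w := by
    have : T x - T y = l • e - (y - x) + w := by rw [← hTe, hw]; abel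
    rw [this, hyx, sub_smul, sub_smul]; abel
  have he1 : |⟪e, ξ⟫| ≤ r / 2 := by
    have := abs_real_inner_le_norm e ξ
    rw [he, one_mul] at this
    linarith
  have h3 : ⟪T x - T y, x - y⟫ = -((l - a) * ⟪e, y - x⟫) + ⟪ξ - r • e, y - x⟫ - ⟪w, y - x⟫ := by
    rw [hTT, ← neg_sub y x, inner_neg_right, inner_add_left, inner_sub_left, real_inner_smul_left]
    ring
  have h4 : 0 ≤ ⟪e, y - x⟫ := by
    rw [hyx, inner_add_right, inner_smul_right, hee]
    have := (abs_le.1 he1).1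
    linarith
  have h5 : ⟪ξ - r • e, y - x⟫ ≤ - (a * r / 2) + 9 / 4 * r ^ 2 := by
    have e1 : y - x = a • e + (ξ - r • e) := by rw [hyx, sub_smul]; abel
    have e2 : ‖ξ - r • e‖ ≤ 3 / 2 * r := by
      refine (norm_sub_le _ _).trans ?_
      rw [norm_smul, he, Real.norm_eq_abs, abs_of_pos hr]
      linarith
    have e3 : ‖ξ - r • e‖ ^ 2 ≤ (3 / 2 * r) ^ 2 := by gcongr
    have e4 : ⟪ξ - r • e, e⟫ ≤ - (r / 2) := by
      rw [inner_sub_left, real_inner_smul_left, hee, real_inner_comm]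
      have := (abs_le.1 he1).2
      linarith
    rw [e1, inner_add_right, inner_smul_right, real_inner_self_eq_norm_sq]
    have : a * ⟪ξ - r • e, e⟫ ≤ a * (- (r / 2)) := by gcongr
    nlinarith
  have h6 : ‖y - x‖ ≤ 2 * a := by
    rw [hyx]
    refine (norm_add_le _ _).trans ?_
    rw [norm_smul, he, Real.norm_eq_abs, abs_of_pos (by linarith)]
    linarith
  have h7 := (abs_le.1 (abs_real_inner_le_norm w (y - x))).1
  have h8 : ‖w‖ * ‖y - x‖ ≤ ‖w‖ * (2 * a) := by gcongr
  have h9 : 0 ≤ (l - a) * ⟪e, y - x⟫ := mul_nonneg (by linarith) h4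
  have h10 : 9 / 4 * r ^ 2 ≤ a * r / 4 := by nlinarith
  have h11 : (r / 8) * (2 * a) ≤ ‖w‖ * (2 * a) := by nlinarith
  exact le_of_mul_le_mul_right h11 (by linarith)

/-- If `E` is small, every trajectory meeting `B̄_{3/2}` starts in `B_{7/4}` and is displaced by
at most a multiple of `E^{1/(d+2)}`. -/
lemma displacement_bound (d : ℕ) : ∃ ε C : ℝ, 0 < ε ∧ 0 < C ∧
    ∀ (G : Set (Ed d)) (T : Ed d → Ed d), Measurable T → volume (ball (0 : Ed d) 2 \ G) = 0 →
      (∀ x ∈ G, ∀ y ∈ G, 0 ≤ ⟪T x - T y, x - y⟫) → enE T ≤ ENNReal.ofReal ε →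
      ∀ x ∈ G, (∃ t ∈ Icc (0:ℝ) 1, ‖Tt T t x‖ ≤ 3 / 2) →
        ‖x‖ < 7 / 4 ∧ ‖T x - x‖ ≤ C * (enE T).toReal ^ ((1:ℝ) / (d + 2)) := by
  have hω := ubv_pos d
  set ε : ℝ := min ((1 / 12) ^ (d + 2)) ((1 / 72) ^ d * ubv d * (1 / 289) ^ 2) with hε
  have hε0 : 0 < ε := lt_min (by positivity) (by positivity)
  refine ⟨ε, 9 / 2 + 3 * Real.sqrt (2 ^ d / ubv d), hε0, by positivity, ?_⟩
  intro G T hTm hG hmono hE x hx ⟨s, hs, hsx⟩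
  have hEt : enE T ≠ ∞ := (hE.trans_lt ENNReal.ofReal_lt_top).ne
  have hEr : (enE T).toReal ≤ ε := ENNReal.toReal_le_of_le_ofReal hε0.le hE
  have hE0 : 0 ≤ (enE T).toReal := ENNReal.toReal_nonneg
  have hnear : ‖x‖ < 7 / 4 := by
    by_contra hfar
    push Not at hfar
    have hdist : 1 / 4 ≤ s * ‖T x - x‖ := by
      have h1 : ‖x‖ - ‖Tt T s x‖ ≤ ‖x - Tt T s x‖ := norm_sub_norm_le _ _
      have h2 : ‖x - Tt T s x‖ = s * ‖T x - x‖ := by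
        rw [Tt_eq, sub_add_cancel_left, norm_neg, norm_smul, Real.norm_eq_abs, abs_of_nonneg hs.1]
      linarith
    have hl0 : 0 < ‖T x - x‖ := by
      rcases (norm_nonneg (T x - x)).eq_or_lt with h | h
      · rw [← h] at hdist; norm_num at hdist
      · exact h
    set e := ‖T x - x‖⁻¹ • (T x - x) with he
    have hen : ‖e‖ = 1 := by
      rw [he, norm_smul, norm_inv, norm_norm, inv_mul_cancel₀ hl0.ne']
    have hTe : T x - x = ‖T x - x‖ • e := by rw [he, smul_inv_smul₀ hl0.ne']
    have hpt : x + (s * ‖T x - x‖) • e = Tt T s x := by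
      rw [Tt_eq, mul_smul, ← hTe]
    have hsub : ball (x + (s * ‖T x - x‖) • e - (1 / 36 : ℝ) • e) (1 / 36 / 2) ⊆ ball (0 : Ed d) 2 := by
      intro z hz
      rw [mem_ball_zero_iff]
      rw [mem_ball, dist_eq_norm, hpt] at hz
      have h1 : ‖z‖ ≤ ‖z - (Tt T s x - (1 / 36 : ℝ) • e)‖ + ‖Tt T s x - (1 / 36 : ℝ) • e‖ := by
        simpa using norm_add_le (z - (Tt T s x - (1 / 36 : ℝ) • e)) (Tt T s x - (1 / 36 : ℝ) • e)
      have h2 := norm_sub_le (Tt T s x) ((1 / 36 : ℝ) • e)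
      rw [norm_smul, hen] at h2
      norm_num at h2 hz
      linarith
    obtain ⟨y, hyG, hyb, hyd⟩ := exists_small_displacement hTm hG hEt (by norm_num) hsub
    have h1 := displacement_ge_behind (by norm_num) le_rfl hen hs.2 hTe hdist (hmono x hx y hyG) hyb
    have h2 : (enE T).toReal / ((1 / 36 / 2) ^ d * ubv d) ≤ (1 / 289) ^ 2 := by
      rw [div_le_iff₀ (by positivity)]
      refine hEr.trans ((min_le_right _ _).trans (le_of_eq ?_))
      norm_num; ring
    have h3 : (1 / 36 / 8 : ℝ) ^ 2 ≤ ‖y - T y‖ ^ 2 := by gcongr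
    norm_num at h2 h3
    linarith
  refine ⟨hnear, ?_⟩
  have hd2 : (0:ℝ) < d + 2 := by positivity
  set r₀ := (enE T).toReal ^ ((1:ℝ) / (d + 2)) with hr₀
  have hr₀0 : 0 ≤ r₀ := by positivity
  have hr₀E : r₀ ^ (d + 2) = (enE T).toReal := by
    rw [hr₀, ← Real.rpow_natCast, ← Real.rpow_mul hE0]
    push_cast
    rw [one_div_mul_cancel hd2.ne', Real.rpow_one]
  have hr₀s : r₀ ≤ 1 / 12 := by
    refine le_of_pow_le_pow_left₀ (n := d + 2) (by omega) (by norm_num) ?_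
    rw [hr₀E]
    exact hEr.trans (min_le_left _ _)
  have key : ∀ r, r₀ < r → r ≤ 1 / 6 → ‖T x - x‖ ≤ (9 / 2 + 3 * Real.sqrt (2 ^ d / ubv d)) * r := by
    intro r hr hr6
    have hr0 : 0 < r := lt_of_le_of_lt hr₀0 hr
    rcases (norm_nonneg (T x - x)).eq_or_lt with h | hl0
    · rw [← h]; positivity
    set e := ‖T x - x‖⁻¹ • (T x - x) with he
    have hen : ‖e‖ = 1 := by
      rw [he, norm_smul, norm_inv, norm_norm, inv_mul_cancel₀ hl0.ne']
    have hTe : T x - x = ‖T x - x‖ • e := by rw [he, smul_inv_smul₀ hl0.ne']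
    have hsub : ball (x + r • e) (r / 2) ⊆ ball (0 : Ed d) 2 := by
      intro z hz
      rw [mem_ball_zero_iff]
      rw [mem_ball, dist_eq_norm] at hz
      have h1 : ‖z‖ ≤ ‖z - (x + r • e)‖ + ‖x + r • e‖ := by
        simpa using norm_add_le (z - (x + r • e)) (x + r • e)
      have h2 := norm_add_le x (r • e)
      rw [norm_smul, hen, Real.norm_eq_abs, abs_of_pos hr0] at h2
      linarith
    obtain ⟨y, hyG, hyb, hyd⟩ := exists_small_displacement hTm hG hEt (by positivity) hsub
    have h1 := displacement_le_ahead hr0 hen hTe (hmono x hx y hyG) hyb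
    have h2 : ‖y - T y‖ ≤ Real.sqrt (2 ^ d / ubv d) * r := by
      refine abs_le_of_sq_le_sq' ?_ (by positivity) |>.2
      rw [mul_pow, Real.sq_sqrt (by positivity)]
      refine hyd.trans ?_
      rw [div_le_iff₀ (by positivity)]
      have : (enE T).toReal ≤ r ^ (d + 2) := by rw [← hr₀E]; gcongr
      refine this.trans (le_of_eq ?_)
      rw [div_pow]
      field_simp
      ring
    linarith
  have hC : 0 ≤ 9 / 2 + 3 * Real.sqrt (2 ^ d / ubv d) := by positivity
  by_contra hlt
  push Not at hlt
  have hC' : 0 < 9 / 2 + 3 * Real.sqrt (2 ^ d / ubv d) := by positivity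
  rw [← lt_div_iff₀' hC'] at hlt
  obtain ⟨r, h1, h2⟩ := exists_between (lt_min hlt (show r₀ < 1 / 6 by linarith))
  have := key r h1 (h2.le.trans (min_le_right _ _))
  have h3 := h2.trans_le (min_le_left _ _)
  rw [lt_div_iff₀' hC'] at h3
  linarith

end Linfty

/-! ### Polar coordinates and surface measures -/

section Polar

variable {d : ℕ}

/-- The standard surface measure on the unit sphere, as used in polar coordinates. -/
abbrev om (d : ℕ) : Measure (sphere (0 : Ed d) 1) := (volume : Measure (Ed d)).toSphere

lemma lintegral_polar (hd : 1 ≤ d) {f : Ed d → ℝ≥0∞} (hf : Measurable f) :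
    ∫⁻ x, f x = ∫⁻ u, (∫⁻ r in Ioi (0:ℝ), ENNReal.ofReal (r ^ (d - 1)) * f (r • (u : Ed d))) ∂(om d) := by
  have : Nontrivial (Ed d) := by
    have : Nonempty (Fin d) := ⟨⟨0, hd⟩⟩
    infer_instance
  have hmp := (volume : Measure (Ed d)).measurePreserving_homeomorphUnitSphereProd
  have hsm : Measurable fun z : sphere (0 : Ed d) 1 × Ioi (0:ℝ) => (z.2 : ℝ) • (z.1 : Ed d) := by
    fun_prop
  have h1 : ∫⁻ x, f x = ∫⁻ x : ({(0 : Ed d)}ᶜ : Set (Ed d)), f x.1 ∂((volume : Measure (Ed d)).comap (↑)) := by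
    rw [lintegral_subtype_comap (measurableSet_singleton _).compl, restrict_compl_singleton]
  have h2 : ∀ x : ({(0 : Ed d)}ᶜ : Set (Ed d)), f x.1 =
      (fun z : sphere (0 : Ed d) 1 × Ioi (0:ℝ) => f ((z.2 : ℝ) • (z.1 : Ed d)))
        (homeomorphUnitSphereProd (Ed d) x) := by
    intro x
    have := congrArg Subtype.val ((homeomorphUnitSphereProd (Ed d)).symm_apply_apply x)
    rw [homeomorphUnitSphereProd_symm_apply_coe] at this
    simp only [this]
  have hfs : Measurable fun z : sphere (0 : Ed d) 1 × Ioi (0:ℝ) => f ((z.2 : ℝ) • (z.1 : Ed d)) :=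
    hf.comp hsm
  rw [h1, lintegral_congr h2, hmp.lintegral_comp hfs, lintegral_prod _ hfs.aemeasurable]
  refine lintegral_congr fun u => ?_
  have hfu : Measurable fun r : ℝ => f (r • (u : Ed d)) := hf.comp (by fun_prop)
  rw [Measure.volumeIoiPow, lintegral_withDensity_eq_lintegral_mul _ (by fun_prop)
    (g := fun r : Ioi (0:ℝ) => f ((r : ℝ) • (u : Ed d))) (hfu.comp measurable_subtype_coe), finrank_euclideanSpace_fin,
    ← lintegral_subtype_comap measurableSet_Ioi]
  rfl

/-- The surface measure on `∂B_R` coming from polar coordinates. -/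
def sig (d : ℕ) (R : ℝ) : Measure (Ed d) :=
  ENNReal.ofReal (R ^ (d - 1)) • (om d).map (fun u : sphere (0 : Ed d) 1 => R • (u : Ed d))

instance (d : ℕ) (R : ℝ) : IsFiniteMeasure (sig d R) := by
  have : IsFiniteMeasure ((om d).map (fun u : sphere (0 : Ed d) 1 => R • (u : Ed d))) := inferInstance
  rw [sig]
  exact Measure.smul_finite _ ENNReal.ofReal_ne_top

lemma lintegral_sig (R : ℝ) {f : Ed d → ℝ≥0∞} (hf : Measurable f) :
    ∫⁻ x, f x ∂(sig d R) = ENNReal.ofReal (R ^ (d - 1)) * ∫⁻ u, f (R • (u : Ed d)) ∂(om d) := by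
  rw [sig, lintegral_smul_measure, lintegral_map hf (by fun_prop), smul_eq_mul]

lemma measurable_lintegral_sig {f : ℝ → Ed d → ℝ≥0∞} (hf : Measurable (Function.uncurry f)) :
    Measurable fun R => ∫⁻ x, f R x ∂(sig d R) := by
  have h : (fun R => ∫⁻ x, f R x ∂(sig d R)) =
      fun R => ENNReal.ofReal (R ^ (d - 1)) * ∫⁻ u, f R (R • (u : Ed d)) ∂(om d) := by
    funext R
    exact lintegral_sig R (hf.comp measurable_prodMk_left)
  rw [h]
  refine Measurable.mul (by fun_prop) (Measurable.lintegral_prod_right' (f := fun z : ℝ × sphere (0 : Ed d) 1 => f z.1 (z.1 • (z.2 : Ed d))) ?_)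
  exact hf.comp (measurable_fst.prodMk (by fun_prop))

lemma lintegral_polar_sig (hd : 1 ≤ d) {f : Ed d → ℝ≥0∞} (hf : Measurable f) :
    ∫⁻ x, f x = ∫⁻ R in Ioi (0:ℝ), ∫⁻ x, f x ∂(sig d R) := by
  rw [lintegral_polar hd hf, lintegral_lintegral_swap]
  · refine lintegral_congr fun R => ?_
    rw [lintegral_sig R hf, lintegral_const_mul]
    exact hf.comp (by fun_prop)
  · refine Measurable.aemeasurable ?_
    exact Measurable.mul (by fun_prop) (hf.comp (by fun_prop))

lemma sig_compl_sphere {R : ℝ} (hR : 0 ≤ R) : sig d R (sphere 0 R)ᶜ = 0 := by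
  rw [sig, Measure.smul_apply, Measure.map_apply (by fun_prop) isClosed_sphere.measurableSet.compl]
  have : (fun u : sphere (0 : Ed d) 1 => R • (u : Ed d)) ⁻¹' (sphere 0 R)ᶜ = ∅ := by
    ext u
    simp [norm_smul, abs_of_nonneg hR]
  simp [this]

/-- The shell of thickness `δ` above the spherical cap of radius `δ` fits into a ball of radius
`2δ`, which bounds the measure of caps. -/
lemma sig_closedBall_le (hd : 1 ≤ d) {R δ : ℝ} (hR : 0 < R) (hδ : 0 < δ) {a : Ed d}  :
    sig d R (closedBall a δ) ≤ ENNReal.ofReal (3 ^ d * ubv d * δ ^ (d - 1)) := by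
  have hcap : MeasurableSet (closedBall a δ) := isClosed_closedBall.measurableSet
  set A : Set (Ed d) := {x | (R / ‖x‖) • x ∈ closedBall a δ ∧ ‖x‖ ∈ Ioo R (R + δ)} with hA
  have hAm : MeasurableSet A := by
    refine MeasurableSet.inter ?_ ?_
    · exact (show Measurable fun x : Ed d => (R / ‖x‖) • x by fun_prop) hcap
    · exact measurable_norm measurableSet_Ioo
  have hAsub : A ⊆ ball a (3 * δ) := by
    intro x hx
    have hx0 : 0 < ‖x‖ := hR.trans hx.2.1
    have h1 : dist ((R / ‖x‖) • x) a ≤ δ := hx.1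
    have h2 : dist x ((R / ‖x‖) • x) < δ := by
      have : x - (R / ‖x‖) • x = (1 - R / ‖x‖) • x := by rw [sub_smul, one_smul]
      rw [dist_eq_norm, this, norm_smul, Real.norm_eq_abs, abs_of_nonneg, sub_mul,
        div_mul_cancel₀ _ hx0.ne']
      · linarith [hx.2.2]
      · rw [sub_nonneg, div_le_one hx0]; exact hx.2.1.le
    have := dist_triangle x ((R / ‖x‖) • x) a
    rw [mem_ball]
    linarith
  have h1 : volume A ≤ ENNReal.ofReal ((3 * δ) ^ d * ubv d) := by
    rw [← volume_ball_eq (c := a) (by positivity)]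
    exact measure_mono hAsub
  have h2 : ENNReal.ofReal δ * sig d R (closedBall a δ) ≤ volume A := by
    rw [← lintegral_indicator_one hAm, lintegral_polar_sig hd (measurable_one.indicator hAm)]
    calc ENNReal.ofReal δ * sig d R (closedBall a δ)
        = ∫⁻ r in Ioo R (R + δ), sig d R (closedBall a δ) := by
          rw [setLIntegral_const, Real.volume_Ioo, mul_comm]; congr 2; ring
      _ ≤ ∫⁻ r in Ioo R (R + δ), ∫⁻ x, A.indicator 1 x ∂(sig d r) := by
          refine setLIntegral_mono' measurableSet_Ioo fun r hr => ?_
          rw [← lintegral_indicator_one hcap, lintegral_sig R (measurable_one.indicator hcap),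
            lintegral_sig r (measurable_one.indicator hAm)]
          have hr0 : 0 < r := hR.trans hr.1
          have : R ≤ r := hr.1.le
          gcongr with u
          have hu : ‖(u : Ed d)‖ = 1 := by simp
          by_cases hu' : R • (u : Ed d) ∈ closedBall a δ
          · have : r • (u : Ed d) ∈ A := by
              refine ⟨?_, ?_⟩
              · rw [norm_smul, hu, Real.norm_eq_abs, abs_of_pos hr0, mul_one, smul_smul,
                  div_mul_cancel₀ _ hr0.ne']
                exact hu'
              · rw [norm_smul, hu, Real.norm_eq_abs, abs_of_pos hr0, mul_one]
                exact hr
            simp [hu', this]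
          · simp [hu']
      _ ≤ _ := lintegral_mono_set fun r hr => hR.trans hr.1
  have h3 := h2.trans h1
  have e : (3 * δ) ^ d * ubv d = δ * (3 ^ d * ubv d * δ ^ (d - 1)) := by
    obtain ⟨k, rfl⟩ : ∃ k, d = k + 1 := ⟨d - 1, by omega⟩
    simp only [Nat.add_sub_cancel]
    ring
  rw [e, ENNReal.ofReal_mul hδ.le] at h3
  exact (ENNReal.mul_le_mul_iff_right (ENNReal.ofReal_pos.2 hδ).ne' ENNReal.ofReal_ne_top).1 h3

/-- The polar surface measure is dominated by the Hausdorff surface measure. -/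
lemma sig_le_sphMeas (hd : 2 ≤ d) {R : ℝ} (hR : 0 < R) :
    sig d R ≤ ENNReal.ofReal (3 ^ d * ubv d) • sphMeas d R := by
  have hc : 0 < 3 ^ d * ubv d := mul_pos (by positivity) (ubv_pos d)
  set c := ENNReal.ofReal (3 ^ d * ubv d) with hcdef
  have hc0 : c ≠ 0 := (ENNReal.ofReal_pos.2 hc).ne'
  have hct : c ≠ ∞ := ENNReal.ofReal_ne_top
  have h1 : c⁻¹ • sig d R ≤ μH[(d:ℝ) - 1] := by
    refine Measure.le_hausdorffMeasure _ _ 1 one_pos fun s hs => ?_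
    rw [Measure.smul_apply, smul_eq_mul]
    rw [ENNReal.inv_mul_le_iff hc0 hct]
    by_cases hne : (s ∩ sphere 0 R).Nonempty
    · obtain ⟨a, ha, -⟩ := hne
      have hst : ediam s ≠ ∞ := (hs.trans_lt ENNReal.one_lt_top).ne
      -- the bound for every radius exceeding the diameter passes to the limit
      have h2 : ∀ δ : ℝ, (ediam s).toReal < δ → sig d R s ≤ c * ENNReal.ofReal (δ ^ (d - 1)) := by
        intro δ hδ
        have hδ0 : 0 < δ := lt_of_le_of_lt ENNReal.toReal_nonneg hδ
        have hsub : s ⊆ closedBall a δ := by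
          intro x hx
          rw [mem_closedBall, dist_edist]
          exact (ENNReal.toReal_mono hst (edist_le_ediam_of_mem hx ha)).trans hδ.le
        refine (measure_mono hsub).trans ((sig_closedBall_le (by omega) hR hδ0).trans ?_)
        rw [ENNReal.ofReal_mul hc.le]
      have h3 : sig d R s ≤ c * ENNReal.ofReal ((ediam s).toReal ^ (d - 1)) := by
        have hcont : Filter.Tendsto (fun δ : ℝ => c * ENNReal.ofReal (δ ^ (d - 1)))
            (𝓝[>] (ediam s).toReal) (𝓝 (c * ENNReal.ofReal ((ediam s).toReal ^ (d - 1)))) := by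
          refine Filter.Tendsto.mono_left ?_ nhdsWithin_le_nhds
          refine ENNReal.Tendsto.const_mul ?_ (Or.inr hct)
          exact (ENNReal.continuous_ofReal.comp (continuous_pow (d - 1))).tendsto _
        refine ge_of_tendsto hcont ?_
        filter_upwards [self_mem_nhdsWithin] with δ hδ
        exact h2 δ hδ
      refine h3.trans (le_of_eq ?_)
      congr 1
      rw [ENNReal.ofReal_pow ENNReal.toReal_nonneg, ENNReal.ofReal_toReal hst,
        ← ENNReal.rpow_natCast]
      congr 1
      rw [Nat.cast_sub (by omega)]
      simp
    · have : sig d R s = 0 := by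
        refine measure_mono_null (fun x hx hx' => hne ⟨x, hx, hx'⟩) (sig_compl_sphere hR.le)
      rw [this]; exact zero_le
  have h4 : sig d R ≤ c • μH[(d:ℝ) - 1] := by
    have : c • (c⁻¹ • sig d R) = sig d R := by
      rw [smul_smul, ENNReal.mul_inv_cancel hc0 hct, one_smul]
    rw [← this]
    gcongr
  have h5 : sig d R = (sig d R).restrict (sphere 0 R) := by
    refine (Measure.restrict_eq_self_of_ae_mem ?_).symm
    exact sig_compl_sphere hR.le
  rw [h5, sphMeas, ← Measure.restrict_smul]
  exact Measure.restrict_mono le_rfl h4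

end Polar

/-! ### Finiteness of the Hausdorff measure of spheres -/

section SphereFinite

/-- The face `{x_i = s}` of a cube, parametrised by the remaining coordinates. -/
def cubeFace {n : ℕ} (i : Fin (n + 1)) (s : ℝ) (w : Fin n → ℝ) : Ed (n + 1) :=
  WithLp.toLp 2 (Fin.insertNth (α := fun _ => ℝ) i s w)

lemma norm_normalize_sub_le {d : ℕ} {a b : Ed d} (ha : 1 ≤ ‖a‖) (hb : 1 ≤ ‖b‖) (R : ℝ) (hR : 0 ≤ R) :
    ‖(R / ‖a‖) • a - (R / ‖b‖) • b‖ ≤ 2 * R * ‖a - b‖ := by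
  have ha0 : 0 < ‖a‖ := by linarith
  have hb0 : 0 < ‖b‖ := by linarith
  have h1 : (R / ‖a‖) • a - (R / ‖b‖) • b =
      (R / ‖a‖) • (a - b) + (R / ‖a‖ * ((‖b‖ - ‖a‖) / ‖b‖)) • b := by
    rw [smul_sub, sub_add, ← sub_smul]
    congr 2
    field_simp
    ring
  have h2 : R / ‖a‖ ≤ R := div_le_self hR ha
  have h3 : |‖b‖ - ‖a‖| ≤ ‖a - b‖ := by rw [norm_sub_rev]; exact abs_norm_sub_norm_le _ _
  rw [h1]
  refine (norm_add_le _ _).trans ?_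
  rw [norm_smul, norm_smul, Real.norm_eq_abs, Real.norm_eq_abs, abs_mul, abs_div (‖b‖ - ‖a‖),
    abs_of_nonneg (show 0 ≤ R / ‖a‖ by positivity), abs_of_pos hb0, mul_assoc,
    div_mul_cancel₀ _ hb0.ne']
  have h4 : R / ‖a‖ * ‖a - b‖ ≤ R * ‖a - b‖ := by gcongr
  have h5 : R / ‖a‖ * |‖b‖ - ‖a‖| ≤ R * ‖a - b‖ := by gcongr
  linarith

lemma norm_cubeFace_sub_le {n : ℕ} (i : Fin (n + 1)) (s : ℝ) (w w' : Fin n → ℝ) :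
    ‖cubeFace i s w - cubeFace i s w'‖ ≤ (n + 1 : ℝ) * ‖w - w'‖ := by
  rw [EuclideanSpace.norm_eq]
  refine Real.sqrt_le_iff.2 ⟨by positivity, ?_⟩
  have h : ∀ j, ‖(cubeFace i s w - cubeFace i s w') j‖ ^ 2 ≤ ‖w - w'‖ ^ 2 := by
    intro j
    refine pow_le_pow_left₀ (norm_nonneg _) ?_ 2
    simp only [cubeFace, PiLp.sub_apply]
    refine Fin.succAboveCases i ?_ (fun k => ?_) j
    · simp
    · simpa using norm_le_pi_norm (w - w') k
  refine (Finset.sum_le_sum fun j _ => h j).trans ?_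
  simp only [Finset.sum_const, Finset.card_univ, Fintype.card_fin, nsmul_eq_mul]
  push_cast
  rw [mul_pow]
  have : (0:ℝ) ≤ n := by positivity
  have h2 : (n + 1 : ℝ) ≤ (n + 1 : ℝ) ^ 2 := by nlinarith
  gcongr

lemma one_le_norm_cubeFace {n : ℕ} (i : Fin (n + 1)) {s : ℝ} (hs : |s| = 1) (w : Fin n → ℝ) :
    1 ≤ ‖cubeFace i s w‖ := by
  have := PiLp.norm_apply_le (cubeFace i s w) i
  simpa [cubeFace, hs] using this

lemma sphMeas_univ_lt_top {d : ℕ} (hd : 1 ≤ d) {R : ℝ} (hR : 0 < R) :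
    sphMeas d R univ < ∞ := by
  obtain ⟨n, rfl⟩ : ∃ n, d = n + 1 := ⟨d - 1, by omega⟩
  have hn : ((n + 1 : ℕ) : ℝ) - 1 = n := by push_cast; ring
  rw [sphMeas, Measure.restrict_apply_univ, hn]
  set F : Fin (n + 1) → Bool → (Fin n → ℝ) → Ed (n + 1) := fun i s w =>
    (R / ‖cubeFace i (cond s 1 (-1)) w‖) • cubeFace i (cond s 1 (-1)) w with hF
  have hs1 : ∀ s : Bool, |(cond s 1 (-1) : ℝ)| = 1 := by intro s; cases s <;> simp
  have hsub : sphere (0 : Ed (n + 1)) R ⊆ ⋃ i, ⋃ s, F i s '' Icc (-1) 1 := by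
    intro x hx
    have hxn : ‖x‖ = R := by simpa using hx
    obtain ⟨i, -, hi⟩ := Finset.exists_max_image Finset.univ (fun i => |x i|) Finset.univ_nonempty
    have hi0 : 0 < |x i| := by
      by_contra h0
      have hz : ∀ j, x j = 0 := fun j => by
        have := hi j (Finset.mem_univ _)
        have h3 : |x j| ≤ 0 := by linarith
        exact abs_nonpos_iff.1 h3
      have : x = 0 := by ext j; simpa using hz j
      rw [this, norm_zero] at hxn
      exact hR.ne hxn
    set s : Bool := decide (0 < x i) with hs
    have hsx : (cond s 1 (-1) : ℝ) * |x i| = x i := by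
      by_cases h : 0 < x i
      · simp [hs, h, abs_of_pos h]
      · have h' : x i ≤ 0 := not_lt.1 h
        simp [hs, h, abs_of_nonpos h']
    have hface : cubeFace i (cond s 1 (-1)) (fun j => x (i.succAbove j) / |x i|) = |x i|⁻¹ • x := by
      ext j
      simp only [cubeFace, PiLp.smul_apply, smul_eq_mul]
      refine Fin.succAboveCases i ?_ (fun k => ?_) j
      · simp only [Fin.insertNth_apply_same]
        rw [eq_inv_mul_iff_mul_eq₀ hi0.ne', mul_comm]
        exact hsx
      · simp only [Fin.insertNth_apply_succAbove]
        rw [div_eq_inv_mul]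
    refine mem_iUnion.2 ⟨i, mem_iUnion.2 ⟨s, fun j => x (i.succAbove j) / |x i|, ?_, ?_⟩⟩
    · constructor <;> intro j
      · have := hi (i.succAbove j) (Finset.mem_univ _)
        simp only [Pi.neg_apply, Pi.one_apply]
        rw [le_div_iff₀ hi0]
        linarith [neg_abs_le (x (i.succAbove j))]
      · have := hi (i.succAbove j) (Finset.mem_univ _)
        simp only [Pi.one_apply]
        rw [div_le_one hi0]
        exact (le_abs_self _).trans this
    · simp only [hF]
      rw [hface, norm_smul, hxn, smul_smul, norm_inv, norm_abs_eq_norm, Real.norm_eq_abs]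
      rw [show R / (|x i|⁻¹ * R) * |x i|⁻¹ = 1 by field_simp, one_smul]
  have hlip : ∀ i s, LipschitzWith (Real.toNNReal (2 * R * (n + 1))) (F i s) := by
    intro i s
    refine LipschitzWith.of_dist_le_mul fun w w' => ?_
    rw [dist_eq_norm, dist_eq_norm, Real.coe_toNNReal _ (by positivity)]
    refine (norm_normalize_sub_le (one_le_norm_cubeFace i (hs1 s) w)
      (one_le_norm_cubeFace i (hs1 s) w') R hR.le).trans ?_
    rw [mul_assoc (2 * R)]
    gcongr
    exact norm_cubeFace_sub_le _ _ _ _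
  refine (measure_mono hsub).trans_lt ?_
  refine (measure_iUnion_le _).trans_lt ?_
  rw [tsum_fintype]
  refine ENNReal.sum_lt_top.2 fun i _ => ?_
  refine (measure_iUnion_le _).trans_lt ?_
  rw [tsum_fintype]
  refine ENNReal.sum_lt_top.2 fun s _ => ?_
  refine ((hlip i s).hausdorffMeasure_image_le (by positivity) _).trans_lt ?_
  refine ENNReal.mul_lt_top (ENNReal.rpow_lt_top_of_nonneg (by positivity) ENNReal.coe_ne_top) ?_
  have hpi := MeasureTheory.hausdorffMeasure_pi_real (ι := Fin n)
  rw [Fintype.card_fin] at hpi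
  rw [hpi]
  exact isCompact_Icc.measure_lt_top

lemma sphMeas_finite {d : ℕ} (hd : 1 ≤ d) {R : ℝ} (hR : 0 < R) : IsFiniteMeasure (sphMeas d R) :=
  ⟨sphMeas_univ_lt_top hd hR⟩

/-- A measure dominated by a multiple of `m` has a bounded density. -/
lemma exists_bdd_density {α : Type*} [MeasurableSpace α] {m ν : Measure α} [SigmaFinite m]
    [SigmaFinite ν] {c : ℝ} (hc : 0 ≤ c) (hle : ν ≤ ENNReal.ofReal c • m) :
    ∃ θ : α → ℝ, Measurable θ ∧ (∀ x, 0 ≤ θ x) ∧ (∀ x, θ x ≤ c) ∧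
      ν = m.withDensity (fun x => ENNReal.ofReal (θ x)) := by
  have : ν.HaveLebesgueDecomposition m := Measure.haveLebesgueDecomposition_of_sigmaFinite _ _
  have hac : ν ≪ m :=
    (Measure.absolutelyContinuous_of_le hle).trans (Measure.smul_absolutelyContinuous)
  have hrn := Measure.withDensity_rnDeriv_eq _ _ hac
  have hbd : ν.rnDeriv m ≤ᵐ[m] fun _ => ENNReal.ofReal c := by
    refine ae_le_of_forall_setLIntegral_le_of_sigmaFinite (Measure.measurable_rnDeriv _ _) ?_
    intro s hs _
    rw [Measure.setLIntegral_rnDeriv hac, setLIntegral_const]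
    exact hle s
  refine ⟨fun x => min ((ν.rnDeriv m x).toReal) c, by fun_prop,
    fun x => le_min ENNReal.toReal_nonneg hc, fun x => min_le_right _ _, ?_⟩
  conv_lhs => rw [← hrn]
  refine withDensity_congr_ae ?_
  filter_upwards [hbd] with x hx
  rw [min_eq_left (ENNReal.toReal_le_of_le_ofReal hc hx), ENNReal.ofReal_toReal]
  exact (hx.trans_lt ENNReal.ofReal_lt_top).ne

/-- The polar surface measure has a bounded density with respect to the Hausdorff one. -/
lemma exists_sig_density {d : ℕ} (hd : 2 ≤ d) {R : ℝ} (hR : 0 < R) :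
    ∃ θ : Ed d → ℝ, Measurable θ ∧ (∀ x, 0 ≤ θ x) ∧ (∀ x, θ x ≤ 3 ^ d * ubv d) ∧
      sig d R = (sphMeas d R).withDensity (fun x => ENNReal.ofReal (θ x)) := by
  have := sphMeas_finite (d := d) (by omega) hR
  exact exists_bdd_density (mul_pos (by positivity) (ubv_pos d)).le (sig_le_sphMeas hd hR)

end SphereFinite

/-! ### Projecting a measure with bounded density onto a sphere -/

section Projection

variable {d : ℕ}

/-- A map that is expanding up to the factor `K⁻¹` on `S` has pushforward density at most `K ^ d`. -/
lemma volume_inter_preimage_le {S : Set (Ed d)} {f : Ed d → Ed d} {K : ℝ≥0}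
    (h : ∀ x ∈ S, ∀ y ∈ S, dist x y ≤ K * dist (f x) (f y)) (A : Set (Ed d)) :
    volume (S ∩ f ⁻¹' A) ≤ (K : ℝ≥0∞) ^ d * volume A := by
  have hH : IsAddHaarMeasure (μH[(d : ℝ)] : Measure (Ed d)) := by
    simpa using MeasureTheory.isAddHaarMeasure_hausdorffMeasure (E := EuclideanSpace ℝ (Fin d))
  have hvol := Measure.isAddLeftInvariant_eq_smul (volume : Measure (Ed d)) (μH[(d : ℝ)])
  have hanti : AntilipschitzWith K (fun x : S => f x) :=
    AntilipschitzWith.of_le_mul_dist fun x y => h x x.2 y y.2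
  have h1 := hanti.hausdorffMeasure_preimage_le (d := d) (by positivity) A
  have h2 := (isometry_subtype_coe (s := S)).hausdorffMeasure_image (d := d)
    (Or.inl (by positivity)) ((fun x : S => f x) ⁻¹' A)
  have h3 : ((↑) : S → Ed d) '' ((fun x : S => f x) ⁻¹' A) = S ∩ f ⁻¹' A := by
    ext x
    simp [and_comm]
  rw [h3] at h2
  rw [← h2, ENNReal.rpow_natCast] at h1
  rw [hvol, Measure.smul_apply, Measure.smul_apply, ENNReal.smul_def, ENNReal.smul_def,
    smul_eq_mul, smul_eq_mul, mul_left_comm]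
  gcongr

/-- Bathtub estimate: a bounded density with little first moment has little mass. -/
lemma sq_integral_le_moment {n : ℝ → ℝ} {K a b R : ℝ} (hK : 0 < K) (hn : Measurable n)
    (hn0 : ∀ r, 0 ≤ n r) (hnK : ∀ r, n r ≤ K) :
    (∫ r in Icc a b, n r) ^ 2 ≤ 8 * K * ∫ r in Icc a b, n r * |r - R| := by
  set M := ∫ r in Icc a b, n r with hM
  set W := ∫ r in Icc a b, n r * |r - R| with hW
  have hInt : IntegrableOn n (Icc a b) := by
    refine Measure.integrableOn_of_bounded (M := K) (by simp) hn.aestronglyMeasurable ?_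
    exact Filter.Eventually.of_forall fun r => by
      rw [Real.norm_eq_abs, abs_of_nonneg (hn0 r)]; exact hnK r
  have hint2 : IntegrableOn (fun r => n r * |r - R|) (Icc a b) := by
    have hc : ContinuousOn (fun r => |r - R|) (Icc a b) := by fun_prop
    exact (IntegrableOn.mul_continuousOn hInt hc isCompact_Icc)
  have hM0 : 0 ≤ M := setIntegral_nonneg measurableSet_Icc fun r _ => hn0 r
  have hW0 : 0 ≤ W := setIntegral_nonneg measurableSet_Icc fun r _ => mul_nonneg (hn0 r) (abs_nonneg _)
  rcases hM0.eq_or_lt with h0 | hMpos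
  · rw [← h0]; nlinarith [mul_nonneg hK.le hW0]
  set e := M / (4 * K) with he
  have hepos : 0 < e := by positivity
  have key : M ≤ 2 * e * K + W / e := by
    have h1 : ∀ r, n r ≤ (Ioo (R - e) (R + e)).indicator (fun _ => K) r + n r * |r - R| / e := by
      intro r
      by_cases hr : r ∈ Ioo (R - e) (R + e)
      · rw [indicator_of_mem hr]
        have : 0 ≤ n r * |r - R| / e := div_nonneg (mul_nonneg (hn0 r) (abs_nonneg _)) hepos.le
        linarith [hnK r]
      · rw [indicator_of_notMem hr, zero_add, le_div_iff₀ hepos]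
        refine mul_le_mul_of_nonneg_left ?_ (hn0 r)
        by_contra hc
        push Not at hc
        rw [abs_lt] at hc
        exact hr ⟨by linarith, by linarith⟩
    have hi1 : IntegrableOn ((Ioo (R - e) (R + e)).indicator (fun _ => K)) (Icc a b) := by
      refine Integrable.integrableOn ?_
      rw [integrable_indicator_iff measurableSet_Ioo]
      simp
    have h2 : M ≤ ∫ r in Icc a b, ((Ioo (R - e) (R + e)).indicator (fun _ => K) r + n r * |r - R| / e) :=
      integral_mono hInt (hi1.add (hint2.div_const e)) h1
    rw [integral_add hi1 (hint2.div_const e), integral_div] at h2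
    have h3 : ∫ r in Icc a b, (Ioo (R - e) (R + e)).indicator (fun _ => K) r ≤ 2 * e * K := by
      refine (setIntegral_le_integral ?_ (Filter.Eventually.of_forall fun r => ?_)).trans ?_
      · rw [integrable_indicator_iff measurableSet_Ioo]; simp
      · exact indicator_nonneg (fun _ _ => hK.le) r
      · rw [integral_indicator measurableSet_Ioo, setIntegral_const, Real.volume_real_Ioo_of_le (by linarith),
          smul_eq_mul]
        linarith
    linarith
  have h4 : 2 * e * K = M / 2 := by rw [he]; field_simp; norm_num
  have h5 : W / e = 4 * K * W / M := by rw [he]; field_simp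
  rw [h4, h5] at key
  have h6 : M / 2 ≤ 4 * K * W / M := by linarith
  rw [le_div_iff₀ hMpos] at h6
  nlinarith

/-- Radial projection onto the sphere of radius `R`. -/
def rproj (R : ℝ) (z : Ed d) : Ed d := (R / ‖z‖) • z

lemma measurable_rproj (R : ℝ) : Measurable (rproj (d := d) R) := by
  unfold rproj
  fun_prop

/-- The radial projection to a sphere of a measure with density at most `K`, supported near the
sphere, has an `L²` density there which is controlled by the mean distance to the sphere. -/
lemma exists_projected_density (hd : 2 ≤ d) : ∃ C : ℝ, 0 < C ∧ ∀ (R K : ℝ) (S : Set (Ed d))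
    (ν : Measure (Ed d)), 1 ≤ R → R ≤ 5 / 4 → 0 < K → MeasurableSet S →
    (∀ z ∈ S, 1 / 2 ≤ ‖z‖ ∧ ‖z‖ ≤ 2) → ν ≤ ENNReal.ofReal K • volume.restrict S →
    ∃ ρ : Ed d → ℝ, Measurable ρ ∧ (∀ x, 0 ≤ ρ x) ∧
      ν.map (rproj R) = (sphMeas d R).withDensity (fun x => ENNReal.ofReal (ρ x)) ∧
      (∫⁻ x, ENNReal.ofReal (ρ x ^ 2) ∂(sphMeas d R) ≤
        ENNReal.ofReal (C * K) * ∫⁻ z, ENNReal.ofReal |‖z‖ - R| ∂ν) ∧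
      (∀ δ, 0 ≤ δ → (∀ z ∈ S, |‖z‖ - R| ≤ δ) → ∀ x ∈ sphere (0 : Ed d) R, ρ x ≤ C * K * δ) := by
  set c := 3 ^ d * ubv d with hc
  have hcpos : 0 < c := mul_pos (by positivity) (ubv_pos d)
  refine ⟨c * 4 ^ d * 2 ^ d * 8 + c * 2 ^ d * 2, by positivity, ?_⟩
  intro R K S ν hR1 hR2 hK hS hS2 hν
  have hR0 : 0 < R := by linarith
  obtain ⟨θ, hθm, hθ0, hθc, hθ⟩ := exists_sig_density hd hR0
  have hSfin : volume S < ∞ := by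
    refine (measure_mono (fun z hz => ?_)).trans_lt (measure_closedBall_lt_top (x := (0 : Ed d)) (r := 2))
    simpa using (hS2 z hz).2
  have : IsFiniteMeasure ((volume : Measure (Ed d)).restrict S) := ⟨by simpa using hSfin⟩
  have : IsFiniteMeasure ν := by
    refine ⟨(hν univ).trans_lt ?_⟩
    rw [Measure.smul_apply, smul_eq_mul]
    exact ENNReal.mul_lt_top ENNReal.ofReal_lt_top (measure_lt_top _ _)
  obtain ⟨n', hn'm, hn'0, hn'K, hν'⟩ := exists_bdd_density hK.le hν
  set n : Ed d → ℝ := S.indicator n' with hn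
  have hnm : Measurable n := hn'm.indicator hS
  have hn0 : ∀ z, 0 ≤ n z := fun z => indicator_nonneg (fun _ _ => hn'0 _) z
  have hnK : ∀ z, n z ≤ K := fun z => indicator_apply_le' (fun _ => hn'K z) (fun _ => hK.le)
  have hνn : ν = (volume : Measure (Ed d)).withDensity (fun z => ENNReal.ofReal (n z)) := by
    rw [hν', ← withDensity_indicator hS]
    congr 1
    funext z
    by_cases hz : z ∈ S <;> simp [hn, hz]
  -- the mass on the ray through `x`
  set M : Ed d → ℝ := fun x => ∫ r in Icc (1/2 : ℝ) 2, r ^ (d - 1) * n ((r / R) • x) with hMdef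
  have hMm : Measurable M := by
    have : StronglyMeasurable (Function.uncurry fun (x : Ed d) (r : ℝ) => r ^ (d - 1) * n ((r / R) • x)) := by
      refine Measurable.stronglyMeasurable ?_
      simp only [Function.uncurry_def]
      exact Measurable.mul (by fun_prop) (hnm.comp (by fun_prop))
    exact this.integral_prod_right.measurable
  have hM0 : ∀ x, 0 ≤ M x := fun x => setIntegral_nonneg measurableSet_Icc fun r hr =>
    mul_nonneg (pow_nonneg (by linarith [hr.1]) _) (hn0 _)
  have hline : ∀ x : Ed d, Measurable fun r : ℝ => n ((r / R) • x) := fun x => hnm.comp (by fun_prop)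
  have hbdi : ∀ x : Ed d, IntegrableOn (fun r : ℝ => n ((r / R) • x)) (Icc (1/2 : ℝ) 2) := fun x => by
    refine Measure.integrableOn_of_bounded (M := K) (by simp) (hline x).aestronglyMeasurable ?_
    exact Filter.Eventually.of_forall fun r => by
      rw [Real.norm_eq_abs, abs_of_nonneg (hn0 _)]; exact hnK _
  have hbdi2 : ∀ (x : Ed d) (g : ℝ → ℝ), Continuous g →
      IntegrableOn (fun r : ℝ => g r * n ((r / R) • x)) (Icc (1/2 : ℝ) 2) := fun x g hg =>
    (hbdi x).continuousOn_mul hg.continuousOn isCompact_Icc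
  -- converting a ray integral over `(0,∞)` to one over `[1/2,2]`
  have hray : ∀ (u : sphere (0 : Ed d) 1) (g : ℝ → ℝ), Continuous g → (∀ r, 0 ≤ g r) →
      ∫⁻ r in Ioi (0:ℝ), ENNReal.ofReal (r ^ (d - 1)) * ENNReal.ofReal (n (r • (u : Ed d)) * g r) =
      ENNReal.ofReal (∫ r in Icc (1/2 : ℝ) 2, r ^ (d - 1) * g r * n ((r / R) • (R • (u : Ed d)))) := by
    intro u g hg hg0
    have hun : ‖(u : Ed d)‖ = 1 := by simp
    have e1 : ∀ r : ℝ, (r / R) • (R • (u : Ed d)) = r • (u : Ed d) := fun r => by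
      rw [smul_smul, div_mul_cancel₀ _ hR0.ne']
    rw [ofReal_integral_eq_lintegral_ofReal (hbdi2 _ (fun r => r ^ (d - 1) * g r) (by fun_prop))]
    · rw [← lintegral_indicator measurableSet_Ioi, ← lintegral_indicator measurableSet_Icc]
      refine lintegral_congr fun r => ?_
      by_cases hr : r ∈ Icc (1/2 : ℝ) 2
      · have hr0 : (0:ℝ) < r := lt_of_lt_of_le (by norm_num) hr.1
        rw [indicator_of_mem hr, indicator_of_mem (mem_Ioi.2 hr0), e1,
          ← ENNReal.ofReal_mul (pow_nonneg hr0.le _)]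
        congr 1
        ring
      · rw [indicator_of_notMem hr]
        by_cases hr0 : r ∈ Ioi (0:ℝ)
        · have hz : r • (u : Ed d) ∉ S := fun hz => hr (by
            have := hS2 _ hz
            rwa [norm_smul, hun, mul_one, Real.norm_eq_abs, abs_of_pos hr0] at this)
          rw [indicator_of_mem hr0]
          simp [hn, hz]
        · rw [indicator_of_notMem hr0]
    · filter_upwards [ae_restrict_mem measurableSet_Icc] with r hr
      exact mul_nonneg (mul_nonneg (pow_nonneg (by linarith [hr.1]) _) (hg0 _)) (hn0 _)
  set a := (R ^ (d - 1))⁻¹ with ha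
  have hRd : 0 < R ^ (d - 1) := by positivity
  have ha0 : 0 < a := by positivity
  have ha1 : a ≤ 1 := inv_le_one_of_one_le₀ (one_le_pow₀ hR1)
  have hthl : ∀ f : Ed d → ℝ≥0∞, Measurable f →
      ∫⁻ x, ENNReal.ofReal (θ x) * f x ∂(sphMeas d R) = ∫⁻ x, f x ∂(sig d R) := by
    intro f hf
    rw [hθ, lintegral_withDensity_eq_lintegral_mul _ (by fun_prop) hf]
    rfl
  refine ⟨fun x => θ x * (a * M x), by fun_prop,
    fun x => mul_nonneg (hθ0 x) (mul_nonneg ha0.le (hM0 x)), ?_, ?_, ?_⟩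
  · ext A hA
    have hpm : Measurable fun z : Ed d => A.indicator (1 : Ed d → ℝ≥0∞) (rproj R z) :=
      (measurable_one.indicator hA).comp (measurable_rproj R)
    rw [← lintegral_indicator_one hA, lintegral_map (measurable_one.indicator hA) (measurable_rproj R),
      hνn, lintegral_withDensity_eq_lintegral_mul _ (by fun_prop) hpm,
      lintegral_polar (by omega) (by fun_prop), withDensity_apply _ hA,
      ← lintegral_indicator hA]
    have e2 : ∀ x, A.indicator (fun x => ENNReal.ofReal (θ x * (a * M x))) x =
        ENNReal.ofReal (θ x) * (A.indicator (fun x => ENNReal.ofReal (a * M x)) x) := by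
      intro x
      by_cases hx : x ∈ A
      · simp only [indicator_of_mem hx]
        rw [ENNReal.ofReal_mul (hθ0 x)]
      · simp [hx]
    have haM : Measurable fun x => ENNReal.ofReal (a * M x) := by fun_prop
    rw [lintegral_congr e2, hthl _ (haM.indicator hA), lintegral_sig _ (haM.indicator hA),
      ← lintegral_const_mul' _ _ ENNReal.ofReal_ne_top]
    refine lintegral_congr fun u => ?_
    have hun : ‖(u : Ed d)‖ = 1 := by simp
    by_cases hu : R • (u : Ed d) ∈ A
    · rw [indicator_of_mem hu, ← ENNReal.ofReal_mul hRd.le, ha, mul_inv_cancel_left₀ hRd.ne']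
      have := hray u (fun _ => 1) continuous_const (fun _ => zero_le_one)
      simp only [mul_one] at this
      rw [← this]
      refine setLIntegral_congr_fun measurableSet_Ioi fun r hr => ?_
      have hr0 : (0:ℝ) < r := hr
      have e3 : rproj R (r • (u : Ed d)) = R • (u : Ed d) := by
        rw [rproj, norm_smul, hun, smul_smul, Real.norm_eq_abs, abs_of_pos hr0, mul_one,
          div_mul_cancel₀ _ hr0.ne']
      simp only [Pi.mul_apply, e3, indicator_of_mem hu, Pi.one_apply, mul_one]
    · rw [indicator_of_notMem hu, mul_zero]
      rw [setLIntegral_congr_fun measurableSet_Ioi (g := fun _ => 0), lintegral_zero]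
      intro r hr
      have hr0 : (0:ℝ) < r := hr
      have e3 : rproj R (r • (u : Ed d)) = R • (u : Ed d) := by
        rw [rproj, norm_smul, hun, smul_smul, Real.norm_eq_abs, abs_of_pos hr0, mul_one,
          div_mul_cancel₀ _ hr0.ne']
      simp only [Pi.mul_apply, e3, indicator_of_notMem hu, mul_zero]
  · have hMsq : ∀ u : sphere (0 : Ed d) 1, M (R • (u : Ed d)) ^ 2 ≤ 4 ^ d * 2 ^ d * 8 * K *
        ∫ r in Icc (1/2 : ℝ) 2, r ^ (d - 1) * |r - R| * n ((r / R) • (R • (u : Ed d))) := by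
      intro u
      set x := R • (u : Ed d)
      have hb := sq_integral_le_moment (n := fun r => n ((r / R) • x)) (a := 1/2) (b := 2) (R := R) hK
        (hline x) (fun _ => hn0 _) (fun _ => hnK _)
      have hle : M x ≤ 2 ^ d * ∫ r in Icc (1/2 : ℝ) 2, n ((r / R) • x) := by
        rw [← integral_const_mul]
        refine setIntegral_mono_on (hbdi2 x (fun r => r ^ (d - 1)) (by fun_prop))
          ((hbdi x).const_mul _) measurableSet_Icc fun r hr => ?_
        refine mul_le_mul_of_nonneg_right ?_ (hn0 _)
        calc r ^ (d - 1) ≤ 2 ^ (d - 1) := pow_le_pow_left₀ (by linarith [hr.1]) hr.2 _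
          _ ≤ 2 ^ d := pow_le_pow_right₀ (by norm_num) (by omega)
      have hle2 : ∫ r in Icc (1/2 : ℝ) 2, n ((r / R) • x) * |r - R| ≤
          2 ^ d * ∫ r in Icc (1/2 : ℝ) 2, r ^ (d - 1) * |r - R| * n ((r / R) • x) := by
        rw [← integral_const_mul]
        refine setIntegral_mono_on ?_
          ((hbdi2 x (fun r => r ^ (d - 1) * |r - R|) (by fun_prop)).const_mul _) measurableSet_Icc
          fun r hr => ?_
        · simpa only [mul_comm] using hbdi2 x (fun r => |r - R|) (by fun_prop)
        have h1 : (1:ℝ) ≤ 2 ^ d * r ^ (d - 1) := by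
          have h2 : ((1:ℝ)/2) ^ (d - 1) ≤ r ^ (d - 1) := pow_le_pow_left₀ (by norm_num) hr.1 _
          have h3 : (2:ℝ) ^ (d - 1) ≤ 2 ^ d := pow_le_pow_right₀ (by norm_num) (by omega)
          calc (1:ℝ) = 2 ^ (d - 1) * (1/2) ^ (d - 1) := by rw [← mul_pow]; norm_num
            _ ≤ 2 ^ d * r ^ (d - 1) := by gcongr
        have h4 : 0 ≤ n ((r / R) • x) * |r - R| := mul_nonneg (hn0 _) (abs_nonneg _)
        nlinarith
      have h5 : M x ^ 2 ≤ (2 ^ d * ∫ r in Icc (1/2 : ℝ) 2, n ((r / R) • x)) ^ 2 :=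
        pow_le_pow_left₀ (hM0 x) hle 2
      have h6 : (4:ℝ) ^ d = (2 ^ d) ^ 2 := by rw [← pow_mul, mul_comm, pow_mul]; norm_num
      calc M x ^ 2 ≤ (2 ^ d) ^ 2 * (∫ r in Icc (1/2 : ℝ) 2, n ((r / R) • x)) ^ 2 := by
            rw [← mul_pow]; exact h5
        _ ≤ (2 ^ d) ^ 2 * (8 * K * (2 ^ d * ∫ r in Icc (1/2 : ℝ) 2, r ^ (d - 1) * |r - R| * n ((r / R) • x))) := by
            refine mul_le_mul_of_nonneg_left (hb.trans ?_) (by positivity)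
            exact mul_le_mul_of_nonneg_left hle2 (by positivity)
        _ = _ := by rw [h6]; ring
    have hzm : Measurable fun z : Ed d => ENNReal.ofReal |‖z‖ - R| := by fun_prop
    have hrhs : ∫⁻ z, ENNReal.ofReal |‖z‖ - R| ∂ν = ∫⁻ u, ENNReal.ofReal
        (∫ r in Icc (1/2 : ℝ) 2, r ^ (d - 1) * |r - R| * n ((r / R) • (R • (u : Ed d)))) ∂(om d) := by
      rw [hνn, lintegral_withDensity_eq_lintegral_mul _ (by fun_prop) hzm,
        lintegral_polar (by omega) (by fun_prop)]
      refine lintegral_congr fun u => ?_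
      have hun : ‖(u : Ed d)‖ = 1 := by simp
      rw [← hray u (fun r => |r - R|) (by fun_prop) (fun _ => abs_nonneg _)]
      refine setLIntegral_congr_fun measurableSet_Ioi fun r hr => ?_
      have hr0 : (0:ℝ) < r := hr
      simp only [Pi.mul_apply]
      rw [norm_smul, hun, mul_one, Real.norm_eq_abs, abs_of_pos hr0, ENNReal.ofReal_mul (hn0 _)]
    have h7 : ∀ x, ENNReal.ofReal ((θ x * (a * M x)) ^ 2) ≤
        ENNReal.ofReal (θ x) * ENNReal.ofReal (c * a * M x ^ 2) := by
      intro x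
      rw [← ENNReal.ofReal_mul (hθ0 x)]
      refine ENNReal.ofReal_le_ofReal ?_
      have h8 : θ x * a ≤ c * 1 := mul_le_mul (hθc x) ha1 ha0.le hcpos.le
      have h9 : 0 ≤ θ x * a * M x ^ 2 := mul_nonneg (mul_nonneg (hθ0 x) ha0.le) (sq_nonneg _)
      nlinarith
    refine (lintegral_mono h7).trans ?_
    rw [hthl _ (by fun_prop), lintegral_sig _ (by fun_prop), hrhs,
      ← lintegral_const_mul' _ _ ENNReal.ofReal_ne_top, ← lintegral_const_mul' _ _ ENNReal.ofReal_ne_top]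
    refine lintegral_mono fun u => ?_
    rw [← ENNReal.ofReal_mul hRd.le, ← ENNReal.ofReal_mul (by positivity)]
    refine ENNReal.ofReal_le_ofReal ?_
    have h10 : R ^ (d - 1) * (c * a * M (R • (u : Ed d)) ^ 2) = c * M (R • (u : Ed d)) ^ 2 := by
      rw [ha]; field_simp
    rw [h10]
    have h11 : 0 ≤ ∫ r in Icc (1/2 : ℝ) 2, r ^ (d - 1) * |r - R| * n ((r / R) • (R • (u : Ed d))) :=
      setIntegral_nonneg measurableSet_Icc fun r hr =>
        mul_nonneg (mul_nonneg (pow_nonneg (by linarith [hr.1]) _) (abs_nonneg _)) (hn0 _)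
    have h12 := hMsq u
    set I := ∫ r in Icc (1/2 : ℝ) 2, r ^ (d - 1) * |r - R| * n ((r / R) • (R • (u : Ed d)))
    calc c * M (R • (u : Ed d)) ^ 2 ≤ c * (4 ^ d * 2 ^ d * 8 * K * I) :=
          mul_le_mul_of_nonneg_left h12 hcpos.le
      _ = c * 4 ^ d * 2 ^ d * 8 * K * I := by ring
      _ ≤ _ := by
        refine mul_le_mul_of_nonneg_right ?_ h11
        have : 0 ≤ c * 2 ^ d * 2 * K := by positivity
        linarith
  · intro δ hδ hSδ x hx
    have hxn : ‖x‖ = R := by simpa using hx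
    have h1 : M x ≤ 2 ^ d * K * (2 * δ) := by
      have h2 : ∀ r ∈ Icc (1/2 : ℝ) 2, r ^ (d - 1) * n ((r / R) • x) ≤
          (Icc (R - δ) (R + δ)).indicator (fun _ => 2 ^ d * K) r := by
        intro r hr
        have hr0 : (0:ℝ) < r := lt_of_lt_of_le (by norm_num) hr.1
        by_cases hz : (r / R) • x ∈ S
        · have hr2 : r ∈ Icc (R - δ) (R + δ) := by
            have := hSδ _ hz
            have e5 : ‖(r / R) • x‖ = r := by
              rw [norm_smul, hxn, Real.norm_eq_abs, abs_of_pos (div_pos hr0 hR0),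
                div_mul_cancel₀ _ hR0.ne']
            rw [e5, abs_le] at this
            exact ⟨by linarith, by linarith⟩
          rw [indicator_of_mem hr2]
          refine mul_le_mul ?_ (hnK _) (hn0 _) (by positivity)
          calc r ^ (d - 1) ≤ 2 ^ (d - 1) := pow_le_pow_left₀ hr0.le hr.2 _
            _ ≤ 2 ^ d := pow_le_pow_right₀ (by norm_num) (by omega)
        · have : n ((r / R) • x) = 0 := by simp [hn, hz]
          rw [this, mul_zero]
          exact indicator_nonneg (fun _ _ => by positivity) r
      have hii : Integrable ((Icc (R - δ) (R + δ)).indicator (fun _ : ℝ => 2 ^ d * K)) := by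
        rw [integrable_indicator_iff measurableSet_Icc]
        exact continuous_const.integrableOn_Icc
      refine (setIntegral_mono_on (hbdi2 x (fun r => r ^ (d - 1)) (by fun_prop)) hii.integrableOn
        measurableSet_Icc h2).trans ?_
      refine (setIntegral_le_integral hii (Filter.Eventually.of_forall fun r =>
        indicator_nonneg (fun _ _ => by positivity) r)).trans ?_
      rw [integral_indicator measurableSet_Icc, setIntegral_const, Real.volume_real_Icc_of_le (by linarith),
        smul_eq_mul]
      linarith
    calc θ x * (a * M x) ≤ c * (1 * (2 ^ d * K * (2 * δ))) := by
          refine mul_le_mul (hθc x) (mul_le_mul ha1 h1 (hM0 x) zero_le_one) ?_ hcpos.le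
          exact mul_nonneg ha0.le (hM0 x)
      _ = c * 2 ^ d * 2 * K * δ := by ring
      _ ≤ _ := by
        refine mul_le_mul_of_nonneg_right ?_ hδ
        refine mul_le_mul_of_nonneg_right ?_ hK.le
        have : 0 ≤ c * 4 ^ d * 2 ^ d * 8 := by positivity
        linarith

end Projection

/-! ### Transport between densities on a cube -/

section Cube

/-- Lebesgue measure on the cube `[-R,R]^n`. -/
def cubeM (R : ℝ) (n : ℕ) : Measure (Fin n → ℝ) :=
  Measure.pi fun _ => (volume : Measure ℝ).restrict (Icc (-R) R)

instance (R : ℝ) (n : ℕ) : IsFiniteMeasure (cubeM R n) := by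
  unfold cubeM; infer_instance

variable {n : ℕ} {R : ℝ}

/-- Fubini for one coordinate of the cube. -/
lemma map_insertNth_cubeM (i : Fin (n + 1)) :
    ((cubeM R n).prod (volume.restrict (Icc (-R) R))).map
      (fun z : (Fin n → ℝ) × ℝ => i.insertNth z.2 z.1) = cubeM R (n + 1) := by
  have h := (measurePreserving_piFinSuccAbove
    (fun _ : Fin (n + 1) => (volume : Measure ℝ).restrict (Icc (-R) R)) i).symm.map_eq
  have h2 : (volume.restrict (Icc (-R) R)).prod (cubeM R n) =
      ((cubeM R n).prod (volume.restrict (Icc (-R) R))).map Prod.swap :=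
    (Measure.prod_swap).symm
  have h3 : Measurable ((MeasurableEquiv.piFinSuccAbove (fun _ : Fin (n + 1) => ℝ) i).symm) :=
    MeasurableEquiv.measurable _
  rw [show cubeM R (n + 1) = _ from h.symm]
  change _ = ((volume.restrict (Icc (-R) R)).prod (cubeM R n)).map _
  rw [h2, Measure.map_map h3 measurable_swap]
  rfl

lemma measurable_insertNth (i : Fin (n + 1)) :
    Measurable (fun z : (Fin n → ℝ) × ℝ => (i.insertNth z.2 z.1 : Fin (n + 1) → ℝ)) :=
  (MeasurableEquiv.piFinSuccAbove (fun _ : Fin (n + 1) => ℝ) i).symm.measurable.comp measurable_swap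

lemma lintegral_cubeM (i : Fin (n + 1)) {F : (Fin (n + 1) → ℝ) → ℝ≥0∞} (hF : Measurable F) :
    ∫⁻ x, F x ∂(cubeM R (n + 1)) =
      ∫⁻ y, (∫⁻ t in Icc (-R) R, F (i.insertNth t y)) ∂(cubeM R n) := by
  have hm : Measurable fun z : (Fin n → ℝ) × ℝ => F (i.insertNth z.2 z.1) :=
    hF.comp (measurable_insertNth i)
  rw [← map_insertNth_cubeM i, lintegral_map hF (measurable_insertNth i),
    lintegral_prod _ hm.aemeasurable]

/-- The average over the `i`-th coordinate. -/
def avg (R : ℝ) (i : Fin (n + 1)) (a : (Fin (n + 1) → ℝ) → ℝ) (x : Fin (n + 1) → ℝ) : ℝ :=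
  (2 * R)⁻¹ * ∫ t in Icc (-R) R, a (Function.update x i t)

lemma measurable_update_prod (i : Fin (n + 1)) :
    Measurable fun z : (Fin (n + 1) → ℝ) × ℝ => Function.update z.1 i z.2 := by
  refine measurable_pi_iff.2 fun j => ?_
  by_cases hj : j = i
  · subst hj; simpa using measurable_snd
  · simpa [Function.update_of_ne hj] using! (measurable_pi_apply j).comp measurable_fst

lemma measurable_avg (i : Fin (n + 1)) {a : (Fin (n + 1) → ℝ) → ℝ} (ha : Measurable a) :
    Measurable (avg R i a) := by
  have h : StronglyMeasurable (Function.uncurry fun (x : Fin (n + 1) → ℝ) (t : ℝ) =>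
      a (Function.update x i t)) :=
    (ha.comp (measurable_update_prod i)).stronglyMeasurable
  exact (h.integral_prod_right (ν := volume.restrict (Icc (-R) R))).measurable.const_mul _

lemma integrableOn_line {i : Fin (n + 1)} {a : (Fin (n + 1) → ℝ) → ℝ} (ha : Measurable a) {M : ℝ}
    (hM : ∀ x, |a x| ≤ M) (x : Fin (n + 1) → ℝ) :
    IntegrableOn (fun t => a (Function.update x i t)) (Icc (-R) R) := by
  refine Measure.integrableOn_of_bounded (M := M) (by simp)
    (ha.comp ((measurable_update_prod i).comp measurable_prodMk_left)).aestronglyMeasurable ?_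
  exact Filter.Eventually.of_forall fun t => hM _

lemma abs_avg_le (hR : 0 < R) (i : Fin (n + 1)) {a : (Fin (n + 1) → ℝ) → ℝ} {M : ℝ}
    (hM : ∀ x, |a x| ≤ M) (x : Fin (n + 1) → ℝ) : |avg R i a x| ≤ M := by
  have h : ‖∫ t in Icc (-R) R, a (Function.update x i t)‖ ≤ M * volume.real (Icc (-R) R) :=
    norm_setIntegral_le_of_norm_le_const (by simp) fun t _ => hM _
  rw [Real.volume_real_Icc_of_le (by linarith), Real.norm_eq_abs] at h
  rw [avg, abs_mul, abs_of_pos (by positivity), inv_mul_le_iff₀ (by positivity)]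
  linarith

lemma avg_update_self (i : Fin (n + 1)) (a : (Fin (n + 1) → ℝ) → ℝ) (x : Fin (n + 1) → ℝ) (t : ℝ) :
    avg R i a (Function.update x i t) = avg R i a x := by
  simp [avg]

lemma avg_update {i j : Fin (n + 1)} {a : (Fin (n + 1) → ℝ) → ℝ}
    (h : ∀ x t, a (Function.update x j t) = a x) (x : Fin (n + 1) → ℝ) (t : ℝ) :
    avg R i a (Function.update x j t) = avg R i a x := by
  by_cases hij : i = j
  · subst hij; exact avg_update_self _ _ _ _
  · simp only [avg]
    congr 1
    refine integral_congr_ae (Filter.Eventually.of_forall fun s => ?_)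
    simp only
    rw [Function.update_comm (Ne.symm hij), h]

lemma integral_update_avg_sub (hR : 0 < R) (i : Fin (n + 1)) {a : (Fin (n + 1) → ℝ) → ℝ}
    (ha : Measurable a) {M : ℝ} (hM : ∀ x, |a x| ≤ M) (x : Fin (n + 1) → ℝ) :
    ∫ t in Icc (-R) R, (a (Function.update x i t) - avg R i a (Function.update x i t)) = 0 := by
  simp only [avg_update_self]
  rw [integral_sub (integrableOn_line ha hM x) (by simp), setIntegral_const,
    Real.volume_real_Icc_of_le (by linarith), avg, smul_eq_mul]
  field_simp
  ring

lemma update_insertNth_same (i : Fin (n + 1)) (y : Fin n → ℝ) (r t : ℝ) :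
    Function.update (i.insertNth r y : Fin (n + 1) → ℝ) i t = i.insertNth t y := by
  simp

lemma integrable_cubeM {m : ℕ} {a : (Fin m → ℝ) → ℝ} (ha : Measurable a) {M : ℝ}
    (hM : ∀ x, |a x| ≤ M) : Integrable a (cubeM R m) :=
  Integrable.of_bound ha.aestronglyMeasurable M (Filter.Eventually.of_forall hM)

lemma integral_avg (hR : 0 < R) (i : Fin (n + 1)) {a : (Fin (n + 1) → ℝ) → ℝ}
    (ha : Measurable a) {M : ℝ} (hM : ∀ x, |a x| ≤ M) :
    ∫ x, avg R i a x ∂(cubeM R (n + 1)) = ∫ x, a x ∂(cubeM R (n + 1)) := by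
  have h0 : ∫ x, (a x - avg R i a x) ∂(cubeM R (n + 1)) = 0 := by
    have hb : Measurable fun x => a x - avg R i a x := ha.sub (measurable_avg i ha)
    have hbM : ∀ x, |a x - avg R i a x| ≤ 2 * M := fun x => by
      have := abs_sub (a x) (avg R i a x)
      linarith [hM x, abs_avg_le hR i hM x]
    rw [← map_insertNth_cubeM i, integral_map (measurable_insertNth i).aemeasurable
      hb.aestronglyMeasurable, integral_prod]
    · refine integral_eq_zero_of_ae (Filter.Eventually.of_forall fun y => ?_)
      have := integral_update_avg_sub hR i ha hM (i.insertNth 0 y)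
      simp only [update_insertNth_same] at this
      exact this
    · exact Integrable.of_bound (hb.comp (measurable_insertNth i)).aestronglyMeasurable (2 * M)
        (Filter.Eventually.of_forall fun z => hbM _)
  rw [integral_sub (integrable_cubeM ha hM)
    (integrable_cubeM (measurable_avg i ha) (abs_avg_le hR i hM))] at h0
  linarith

/-- Cauchy–Schwarz on an interval. -/
lemma sq_integral_Icc_le {g : ℝ → ℝ} {a b : ℝ} (hab : a ≤ b) (hg : Measurable g) {M : ℝ} (hM : ∀ t, |g t| ≤ M) :
    (∫ t in Icc a b, g t) ^ 2 ≤ (b - a) * ∫ t in Icc a b, g t ^ 2 := by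
  have hi1 : IntegrableOn g (Icc a b) :=
    Measure.integrableOn_of_bounded (M := M) (by simp) hg.aestronglyMeasurable
      (Filter.Eventually.of_forall hM)
  have hi2 : IntegrableOn (fun t => g t ^ 2) (Icc a b) :=
    Measure.integrableOn_of_bounded (M := M ^ 2) (by simp) (hg.pow_const 2).aestronglyMeasurable
      (Filter.Eventually.of_forall fun t => by
        rw [Real.norm_eq_abs, abs_pow]; exact pow_le_pow_left₀ (abs_nonneg _) (hM t) 2)
  set I := ∫ t in Icc a b, g t
  set J := ∫ t in Icc a b, g t ^ 2
  rcases hab.eq_or_lt with h | h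
  · have : I = 0 := by simp [I, h]
    rw [this]; simp [h]
  have key : 0 ≤ ∫ t in Icc a b, ((b - a) * g t - I) ^ 2 := integral_nonneg fun t => sq_nonneg _
  have e : ∀ t, ((b - a) * g t - I) ^ 2 = ((b - a) ^ 2 * g t ^ 2 - 2 * (b - a) * I * g t) + I ^ 2 :=
    fun t => by ring
  simp only [e] at key
  rw [integral_add, integral_sub, integral_const_mul, integral_const_mul, setIntegral_const,
    Real.volume_real_Icc_of_le hab, smul_eq_mul] at key
  · have hpos : 0 < b - a := by linarith
    have : 0 ≤ (b - a) * ((b - a) * J - I ^ 2) := by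
      have : (b - a) ^ 2 * J - 2 * (b - a) * I * I + (b - a) * I ^ 2 =
        (b - a) * ((b - a) * J - I ^ 2) := by ring
      linarith
    have := nonneg_of_mul_nonneg_right this hpos
    linarith
  · exact hi2.const_mul _
  · exact hi1.const_mul _
  · exact (hi2.const_mul _).sub (hi1.const_mul _)
  · simp

lemma lintegral_sq_avg_le (hR : 0 < R) (i : Fin (n + 1)) {a : (Fin (n + 1) → ℝ) → ℝ}
    (ha : Measurable a) {M : ℝ} (hM : ∀ x, |a x| ≤ M) :
    ∫⁻ x, ENNReal.ofReal (avg R i a x ^ 2) ∂(cubeM R (n + 1)) ≤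
      ∫⁻ x, ENNReal.ofReal (a x ^ 2) ∂(cubeM R (n + 1)) := by
  have hm1 : Measurable fun x => ENNReal.ofReal (avg R i a x ^ 2) :=
    ((measurable_avg i ha).pow_const 2).ennreal_ofReal
  have hm2 : Measurable fun x => ENNReal.ofReal (a x ^ 2) := (ha.pow_const 2).ennreal_ofReal
  rw [lintegral_cubeM i hm1, lintegral_cubeM i hm2]
  refine lintegral_mono fun y => ?_
  have hline : Measurable fun t : ℝ => a (i.insertNth t y) :=
    ha.comp ((measurable_insertNth i).comp measurable_prodMk_left)
  have e : ∀ t, avg R i a (i.insertNth t y) = (2 * R)⁻¹ * ∫ s in Icc (-R) R, a (i.insertNth s y) := by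
    intro t
    simp only [avg, update_insertNth_same]
  have hcs := sq_integral_Icc_le (a := -R) (b := R) (by linarith) hline (fun t => hM _)
  simp only [e]
  rw [setLIntegral_const, Real.volume_Icc, ← ofReal_integral_eq_lintegral_ofReal,
    ← ENNReal.ofReal_mul (sq_nonneg _)]
  · refine ENNReal.ofReal_le_ofReal ?_
    rw [mul_pow]
    have : ((2 * R)⁻¹) ^ 2 * (∫ s in Icc (-R) R, a (i.insertNth s y)) ^ 2 * (R - -R) ≤
        ((2 * R)⁻¹) ^ 2 * ((R - -R) * ∫ s in Icc (-R) R, a (i.insertNth s y) ^ 2) * (R - -R) := by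
      refine mul_le_mul_of_nonneg_right (mul_le_mul_of_nonneg_left hcs (by positivity)) (by linarith)
    refine this.trans (le_of_eq ?_)
    field_simp
    ring
  · refine Measure.integrableOn_of_bounded (M := M ^ 2) (by simp) (hline.pow_const 2).aestronglyMeasurable
      (Filter.Eventually.of_forall fun t => by
        rw [Real.norm_eq_abs, abs_pow]; exact pow_le_pow_left₀ (abs_nonneg _) (hM _) 2)
  · exact Filter.Eventually.of_forall fun t => sq_nonneg _

lemma eq_of_forall_update {m : ℕ} {h : (Fin m → ℝ) → ℝ}
    (hh : ∀ i x t, h (Function.update x i t) = h x) (x y : Fin m → ℝ) : h x = h y := by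
  have key : ∀ s : Finset (Fin m), h (fun i => if i ∈ s then y i else x i) = h x := by
    intro s
    induction s using Finset.induction_on with
    | empty => simp
    | insert i s his ih =>
      rw [← ih, ← hh i (fun i => if i ∈ s then y i else x i) (y i)]
      congr 1
      funext j
      by_cases hj : j = i
      · subst hj; simp
      · simp [hj]
  have := key Finset.univ
  simpa using this.symm

/-- A mean-zero function on the cube is a sum of functions with mean zero along the lines in one
coordinate direction each: average out the coordinates successively. -/
lemma exists_cube_decomposition (hR : 0 < R) (s : Finset (Fin (n + 1))) :
    ∀ (M : ℝ) (h : (Fin (n + 1) → ℝ) → ℝ), Measurable h → (∀ x, |h x| ≤ M) →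
      (∀ i ∉ s, ∀ x t, h (Function.update x i t) = h x) → ∫ x, h x ∂(cubeM R (n + 1)) = 0 →
      ∃ H : Fin (n + 1) → (Fin (n + 1) → ℝ) → ℝ,
        (∀ i, Measurable (H i)) ∧ (∀ i x, |H i x| ≤ 2 * M) ∧
        (∀ i x, ∫ t in Icc (-R) R, H i (Function.update x i t) = 0) ∧
        (∀ i, ∫⁻ x, ENNReal.ofReal (H i x ^ 2) ∂(cubeM R (n + 1)) ≤
          4 * ∫⁻ x, ENNReal.ofReal (h x ^ 2) ∂(cubeM R (n + 1))) ∧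
        (∀ i ∉ s, ∀ x, H i x = 0) ∧ (∀ x, ∑ i, H i x = h x) := by
  induction s using Finset.induction_on with
  | empty =>
    intro M h hm hM hinv hInt
    have hconst : ∀ x, h x = h 0 := fun x =>
      eq_of_forall_update (fun i x t => hinv i (Finset.notMem_empty i) x t) x 0
    have hM0 : 0 ≤ M := (abs_nonneg _).trans (hM 0)
    have h0 : h 0 = 0 := by
      rw [integral_congr_ae (Filter.Eventually.of_forall hconst), integral_const, smul_eq_mul] at hInt
      rcases mul_eq_zero.1 hInt with h1 | h1
      · exfalso
        have : cubeM R (n + 1) univ = ∏ _i : Fin (n + 1), ENNReal.ofReal (R - -R) := by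
          rw [cubeM, Measure.pi_univ]; simp
        rw [Measure.real, this, Finset.prod_const, ENNReal.toReal_pow, ENNReal.toReal_ofReal (by linarith)] at h1
        have : 0 < (R - -R) ^ (Finset.univ : Finset (Fin (n+1))).card := pow_pos (by linarith) _
        exact this.ne' h1
      · exact h1
    refine ⟨fun _ _ => 0, fun _ => measurable_const, fun _ _ => by simpa using hM0, by simp, by simp,
      by simp, fun x => ?_⟩
    simp [hconst x, h0]
  | insert i s his ih =>
    intro M h hm hM hinv hInt
    obtain ⟨H, H1, H2, H3, H4, H5, H6⟩ := ih M (avg R i h) (measurable_avg i hm) (abs_avg_le hR i hM)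
      (fun j hj x t => by
        by_cases hji : j = i
        · subst hji; exact avg_update_self _ _ _ _
        · exact avg_update (hinv j (by simp [hji, hj])) x t)
      (by rw [integral_avg hR i hm hM, hInt])
    have hM0 : 0 ≤ M := (abs_nonneg _).trans (hM 0)
    refine ⟨Function.update H i (fun x => h x - avg R i h x), ?_, ?_, ?_, ?_, ?_, ?_⟩
    · intro j
      by_cases hj : j = i
      · subst hj; simpa using! hm.sub (measurable_avg j hm)
      · simpa [Function.update_of_ne hj] using H1 j
    · intro j x
      by_cases hj : j = i
      · subst hj
        simp only [Function.update_self]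
        have := abs_sub (h x) (avg R j h x)
        linarith [hM x, abs_avg_le hR j hM x]
      · simpa [Function.update_of_ne hj] using H2 j x
    · intro j x
      by_cases hj : j = i
      · subst hj
        simpa only [Function.update_self] using integral_update_avg_sub hR j hm hM x
      · simpa [Function.update_of_ne hj] using H3 j x
    · intro j
      by_cases hj : j = i
      · subst hj
        simp only [Function.update_self]
        have hle : ∀ x, ENNReal.ofReal ((h x - avg R j h x) ^ 2) ≤
            2 * ENNReal.ofReal (h x ^ 2) + 2 * ENNReal.ofReal (avg R j h x ^ 2) := by
          intro x
          rw [← ENNReal.ofReal_ofNat 2, ← ENNReal.ofReal_mul (by norm_num),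
            ← ENNReal.ofReal_mul (by norm_num), ← ENNReal.ofReal_add (by positivity) (by positivity)]
          refine ENNReal.ofReal_le_ofReal ?_
          nlinarith [sq_nonneg (h x + avg R j h x)]
        refine (lintegral_mono hle).trans ?_
        rw [lintegral_add_left (((hm.pow_const 2).ennreal_ofReal).const_mul _),
          lintegral_const_mul' _ _ (by simp), lintegral_const_mul' _ _ (by simp)]
        refine (add_le_add le_rfl (mul_le_mul_right (lintegral_sq_avg_le hR j hm hM) _)).trans ?_
        rw [← add_mul]
        norm_num
      · simp only [Function.update_of_ne hj]
        exact (H4 j).trans (mul_le_mul_right (lintegral_sq_avg_le hR i hm hM) _)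
    · intro j hj x
      have hji : j ≠ i := fun h => hj (by simp [h])
      rw [Function.update_of_ne hji]
      exact H5 j (fun h => hj (by simp [h])) x
    · intro x
      have e : ∀ j, (Function.update H i (fun x => h x - avg R i h x)) j x =
          H j x + if j = i then h x - avg R i h x else 0 := by
        intro j
        by_cases hj : j = i
        · subst hj; simp [H5 j his x]
        · simp [Function.update_of_ne hj, hj]
      simp only [e]
      rw [Finset.sum_add_distrib, H6]
      simp

end Cube

section LineTransport

variable {d : ℕ}

/-- Transport along a family of curves: the cost is controlled by the squared `L¹` distance of the
densities on each curve. -/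
lemma W2sq_line_le {Y : Type*} [MeasurableSpace Y] (ν : Measure Y) [SFinite ν] {a b c K L : ℝ}
    (hab : a ≤ b) (hc : 0 < c) {p q : Y → ℝ → ℝ} (hp : Measurable (Function.uncurry p))
    (hq : Measurable (Function.uncurry q)) (hpK : ∀ y s, |p y s| ≤ K) (hqK : ∀ y s, |q y s| ≤ K)
    (hp0 : ∀ y s, 0 ≤ p y s) (hqc : ∀ y s, c ≤ q y s)
    (hmass : ∀ y, ∫ s in Icc a b, p y s = ∫ s in Icc a b, q y s) {F : Y × ℝ → Ed d}
    (hF : Measurable F)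
    (hFL : ∀ y, ∀ r ∈ Icc a b, ∀ s ∈ Icc a b, ‖F (y, r) - F (y, s)‖ ≤ L * |r - s|) :
    W2sq (((ν.prod (volume.restrict (Icc a b))).withDensity
        (fun z => ENNReal.ofReal (p z.1 z.2))).map F)
      (((ν.prod (volume.restrict (Icc a b))).withDensity
        (fun z => ENNReal.ofReal (q z.1 z.2))).map F) ≤
      ENNReal.ofReal (K * (L * c⁻¹) ^ 2 * (b - a)) *
        ∫⁻ y, ENNReal.ofReal ((∫ s in Icc a b, |p y s - q y s|) ^ 2) ∂ν := by
  obtain ⟨S, hSm, hS, hS2⟩ := exists_rearrangement ν hab hc hp hq hpK hqK hp0 hqc hmass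
  have hG : Measurable fun z : Y × ℝ => (z.1, S z) := measurable_fst.prodMk hSm
  rw [← hS, Measure.map_map hF hG]
  refine (W2sq_map_map _ hF (hF.comp hG)).trans ?_
  have hpm : Measurable fun z : Y × ℝ => ENNReal.ofReal (p z.1 z.2) := hp.ennreal_ofReal
  have hcm : Measurable fun z : Y × ℝ => ENNReal.ofReal (‖F z - (F ∘ fun z => (z.1, S z)) z‖ ^ 2) :=
    ((hF.sub (hF.comp hG)).norm.pow_const 2).ennreal_ofReal
  rw [lintegral_withDensity_eq_lintegral_mul _ hpm hcm,
    lintegral_prod _ (hpm.mul hcm).aemeasurable, ← lintegral_const_mul' _ _ ENNReal.ofReal_ne_top]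
  refine lintegral_mono fun y => ?_
  set I := ∫ s in Icc a b, |p y s - q y s| with hI
  have hK : 0 ≤ K := (abs_nonneg _).trans (hpK y 0)
  have hle : ∀ r ∈ Icc a b, ((fun z : Y × ℝ => ENNReal.ofReal (p z.1 z.2)) * fun z =>
      ENNReal.ofReal (‖F z - (F ∘ fun z => (z.1, S z)) z‖ ^ 2)) (y, r) ≤
      ENNReal.ofReal (K * (L * c⁻¹) ^ 2 * I ^ 2) := by
    intro r hr
    simp only [Pi.mul_apply, Function.comp]
    rw [← ENNReal.ofReal_mul (hp0 y r)]
    refine ENNReal.ofReal_le_ofReal ?_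
    have h1 := hFL y r hr _ (hS2 y r hr).1
    have h2 := (hS2 y r hr).2
    have h3 : ‖F (y, r) - F (y, S (y, r))‖ ^ 2 ≤ (L * |r - S (y, r)|) ^ 2 :=
      pow_le_pow_left₀ (norm_nonneg _) h1 2
    have h4 : |r - S (y, r)| ^ 2 ≤ (c⁻¹ * I) ^ 2 := by
      rw [abs_sub_comm]
      exact pow_le_pow_left₀ (abs_nonneg _) h2 2
    calc p y r * ‖F (y, r) - F (y, S (y, r))‖ ^ 2 ≤ K * (L ^ 2 * (c⁻¹ * I) ^ 2) := by
          refine mul_le_mul ((le_abs_self _).trans (hpK y r)) (h3.trans ?_) (by positivity) hK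
          rw [mul_pow]
          exact mul_le_mul_of_nonneg_left h4 (sq_nonneg _)
      _ = _ := by ring
  refine (setLIntegral_mono' measurableSet_Icc hle).trans ?_
  rw [setLIntegral_const, Real.volume_Icc, ← ENNReal.ofReal_mul (by positivity),
    ← ENNReal.ofReal_mul (mul_nonneg (by positivity) (by linarith))]
  exact ENNReal.ofReal_le_ofReal (le_of_eq (by ring))

/-- Transport on the cube when the densities have equal mass on all lines in one direction. -/
lemma W2sq_cube_line_le {n : ℕ} {R c K L : ℝ} (hR : 0 < R) (hc : 0 < c) (i : Fin (n + 1))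
    {q h : (Fin (n + 1) → ℝ) → ℝ} (hq : Measurable q) (hh : Measurable h) (hqc : ∀ x, c ≤ q x)
    (hqK : ∀ x, q x ≤ K) (hhc : ∀ x, |h x| ≤ c)
    (hh0 : ∀ x, ∫ t in Icc (-R) R, h (Function.update x i t) = 0)
    {f : (Fin (n + 1) → ℝ) → Ed d} (hf : Measurable f)
    (hfL : ∀ y : Fin n → ℝ, ∀ r s : ℝ, ‖f (i.insertNth r y) - f (i.insertNth s y)‖ ≤ L * |r - s|) :
    W2sq (((cubeM R (n + 1)).withDensity (fun x => ENNReal.ofReal (q x + h x))).map f)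
      (((cubeM R (n + 1)).withDensity (fun x => ENNReal.ofReal (q x))).map f) ≤
      ENNReal.ofReal ((K + c) * (L * c⁻¹) ^ 2 * (2 * R) ^ 2) *
        ∫⁻ x, ENNReal.ofReal (h x ^ 2) ∂(cubeM R (n + 1)) := by
  have hins := measurable_insertNth (n := n) i
  have hpush : ∀ g : (Fin (n + 1) → ℝ) → ℝ, Measurable g →
      ((cubeM R (n + 1)).withDensity (fun x => ENNReal.ofReal (g x))).map f =
      (((cubeM R n).prod (volume.restrict (Icc (-R) R))).withDensity
        (fun z : (Fin n → ℝ) × ℝ => ENNReal.ofReal (g (i.insertNth z.2 z.1)))).map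
          (fun z => f (i.insertNth z.2 z.1)) := by
    intro g hg
    ext A hA
    have hind : Measurable (A.indicator (1 : Ed d → ℝ≥0∞)) := measurable_one.indicator hA
    have hfi : Measurable fun z : (Fin n → ℝ) × ℝ => f (i.insertNth z.2 z.1) := hf.comp hins
    have hgi : Measurable fun z : (Fin n → ℝ) × ℝ => ENNReal.ofReal (g (i.insertNth z.2 z.1)) :=
      (hg.comp hins).ennreal_ofReal
    have hif : Measurable fun x => A.indicator (1 : Ed d → ℝ≥0∞) (f x) := hind.comp hf
    have hifi : Measurable fun z : (Fin n → ℝ) × ℝ =>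
      A.indicator (1 : Ed d → ℝ≥0∞) (f (i.insertNth z.2 z.1)) := hind.comp hfi
    rw [← lintegral_indicator_one hA, ← lintegral_indicator_one hA, lintegral_map hind hf,
      lintegral_map hind hfi, lintegral_withDensity_eq_lintegral_mul _ hg.ennreal_ofReal hif,
      lintegral_withDensity_eq_lintegral_mul _ hgi hifi, ← map_insertNth_cubeM i,
      lintegral_map (hg.ennreal_ofReal.mul hif) hins]
    rfl
  have hlq : ∀ y, Measurable fun s : ℝ => q (i.insertNth s y) := fun y =>
    hq.comp (hins.comp measurable_prodMk_left)
  have hlh : ∀ y, Measurable fun s : ℝ => h (i.insertNth s y) := fun y =>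
    hh.comp (hins.comp measurable_prodMk_left)
  have hiq : ∀ y, IntegrableOn (fun s : ℝ => q (i.insertNth s y)) (Icc (-R) R) := fun y =>
    Measure.integrableOn_of_bounded (M := K) (by simp) (hlq y).aestronglyMeasurable
      (Filter.Eventually.of_forall fun s => by
        rw [Real.norm_eq_abs, abs_of_nonneg (hc.le.trans (hqc _))]; exact hqK _)
  have hih : ∀ y, IntegrableOn (fun s : ℝ => h (i.insertNth s y)) (Icc (-R) R) := fun y =>
    Measure.integrableOn_of_bounded (M := c) (by simp) (hlh y).aestronglyMeasurable
      (Filter.Eventually.of_forall fun s => hhc _)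
  rw [hpush (fun x => q x + h x) (hq.add hh), hpush q hq]
  refine (W2sq_line_le (cubeM R n) (a := -R) (b := R) (c := c) (K := K + c) (L := L) (by linarith) hc
    (p := fun y s => q (i.insertNth s y) + h (i.insertNth s y)) (q := fun y s => q (i.insertNth s y))
    ((hq.add hh).comp hins) (hq.comp hins) ?_ ?_ ?_ ?_ ?_ (hf.comp hins) ?_).trans ?_
  · intro y s
    refine (abs_add_le _ _).trans (add_le_add ?_ (hhc _))
    rw [abs_of_nonneg (hc.le.trans (hqc _))]; exact hqK _
  · intro y s
    rw [abs_of_nonneg (hc.le.trans (hqc _))]; linarith [hqK (i.insertNth s y)]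
  · intro y s
    have := hhc (i.insertNth s y)
    rw [abs_le] at this
    linarith [hqc (i.insertNth s y)]
  · exact fun y s => hqc _
  · intro y
    have := hh0 (i.insertNth 0 y)
    simp only [update_insertNth_same] at this
    rw [integral_add (hiq y) (hih y), this, add_zero]
  · exact fun y r _ s _ => hfL y r s
  · rw [lintegral_cubeM i (hh.pow_const 2).ennreal_ofReal]
    have h1 : ∀ y : Fin n → ℝ, ENNReal.ofReal ((∫ s in Icc (-R) R, |q (i.insertNth s y) +
        h (i.insertNth s y) - q (i.insertNth s y)|) ^ 2) ≤ ENNReal.ofReal (2 * R) *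
        ∫⁻ t in Icc (-R) R, ENNReal.ofReal (h (i.insertNth t y) ^ 2) := by
      intro y
      simp only [add_sub_cancel_left]
      rw [← ofReal_integral_eq_lintegral_ofReal, ← ENNReal.ofReal_mul (by positivity)]
      · refine ENNReal.ofReal_le_ofReal ?_
        have := sq_integral_Icc_le (g := fun s => |h (i.insertNth s y)|) (a := -R) (b := R)
          (by linarith) (hlh y).abs (M := c) (fun t => by rw [abs_abs]; exact hhc _)
        simp only [sq_abs] at this
        calc _ ≤ _ := this
          _ = _ := by ring
      · exact Measure.integrableOn_of_bounded (M := c ^ 2) (by simp)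
          ((hlh y).pow_const 2).aestronglyMeasurable (Filter.Eventually.of_forall fun t => by
            rw [Real.norm_eq_abs, abs_pow]; exact pow_le_pow_left₀ (abs_nonneg _) (hhc _) 2)
      · exact Filter.Eventually.of_forall fun t => sq_nonneg _
    have hK : c ≤ K := (hqc 0).trans (hqK 0)
    refine (mul_le_mul_right (lintegral_mono h1) _).trans ?_
    rw [lintegral_const_mul' _ _ ENNReal.ofReal_ne_top, ← mul_assoc, ← ENNReal.ofReal_mul
      (mul_nonneg (mul_nonneg (by linarith) (sq_nonneg _)) (by linarith))]
    refine mul_le_mul_left (ENNReal.ofReal_le_ofReal (le_of_eq ?_)) _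
    ring

/-- Two densities on the cube that differ by a small mean-zero function, both pushed to `ℝ^d` by a
Lipschitz map, are at squared distance controlled by the squared `L²` norm of the difference. -/
lemma W2sq_cube_le {n : ℕ} {R c K L : ℝ} (hR : 0 < R) (hc : 0 < c)
    {q h : (Fin (n + 1) → ℝ) → ℝ} (hq : Measurable q) (hh : Measurable h) (hqc : ∀ x, c ≤ q x)
    (hqK : ∀ x, q x ≤ K) (hhc : ∀ x, |h x| ≤ c / (2 * (n + 1)))
    (hh0 : ∫ x, h x ∂(cubeM R (n + 1)) = 0)
    {f : (Fin (n + 1) → ℝ) → Ed d} (hf : Measurable f)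
    (hfL : ∀ (i : Fin (n + 1)) (y : Fin n → ℝ) (r s : ℝ),
      ‖f (i.insertNth r y) - f (i.insertNth s y)‖ ≤ L * |r - s|) :
    W2sq (((cubeM R (n + 1)).withDensity (fun x => ENNReal.ofReal (q x + h x))).map f)
      (((cubeM R (n + 1)).withDensity (fun x => ENNReal.ofReal (q x))).map f) ≤
      ENNReal.ofReal ((K + c) * (L * (c / (n + 1))⁻¹) ^ 2 * (2 * R) ^ 2 * 4 * (n + 1)) *
        ∫⁻ x, ENNReal.ofReal (h x ^ 2) ∂(cubeM R (n + 1)) := by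
  obtain ⟨H, H1, H2, H3, H4, -, H6⟩ := exists_cube_decomposition hR Finset.univ _ h hh hhc
    (by simp) hh0
  have hn : (0:ℝ) < n + 1 := by positivity
  have hc' : 0 < c / (n + 1) := by positivity
  have hHc : ∀ i x, |H i x| ≤ c / (n + 1) := fun i x => (H2 i x).trans (le_of_eq (by field_simp))
  have hsum : ∀ g : Fin (n + 1) → (Fin (n + 1) → ℝ) → ℝ, (∀ i, Measurable (g i)) → (∀ i x, 0 ≤ g i x) →
      ((cubeM R (n + 1)).withDensity (fun x => ENNReal.ofReal (∑ i, g i x))).map f =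
      ∑ i, ((cubeM R (n + 1)).withDensity (fun x => ENNReal.ofReal (g i x))).map f := by
    intro g hg hg0
    ext A hA
    rw [Measure.finsetSum_apply, Measure.map_apply hf hA, withDensity_apply _ (hf hA)]
    simp only [Measure.map_apply hf hA, withDensity_apply _ (hf hA)]
    rw [← lintegral_finsetSum _ fun i _ => (hg i).ennreal_ofReal]
    refine lintegral_congr fun x => ?_
    exact ENNReal.ofReal_sum_of_nonneg fun i _ => hg0 i x
  have hq0 : ∀ x, c / (n + 1) ≤ q x / (n + 1) := fun x => div_le_div_of_nonneg_right (hqc x) hn.le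
  have e1 : (fun x => ENNReal.ofReal (q x + h x)) =
      fun x => ENNReal.ofReal (∑ i, (q x / (n + 1) + H i x)) := by
    funext x
    rw [Finset.sum_add_distrib, H6, Finset.sum_const, Finset.card_univ, Fintype.card_fin, nsmul_eq_mul]
    push_cast
    rw [mul_div_cancel₀ _ hn.ne']
  have e2 : (fun x => ENNReal.ofReal (q x)) =
      fun x => ENNReal.ofReal (∑ _i : Fin (n + 1), q x / (n + 1)) := by
    funext x
    rw [Finset.sum_const, Finset.card_univ, Fintype.card_fin, nsmul_eq_mul]
    push_cast
    rw [mul_div_cancel₀ _ hn.ne']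
  rw [e1, e2, hsum (fun i x => q x / (n + 1) + H i x) (fun i => (hq.div_const _).add (H1 i)) (fun i x => by
      have := hHc i x
      rw [abs_le] at this
      linarith [hq0 x]),
    hsum (fun _ x => q x / (n + 1)) (fun i => hq.div_const _) (fun i x => hc'.le.trans (hq0 x))]
  refine (W2sq_finset_sum _ _ _).trans ?_
  have hone : ∀ i ∈ (Finset.univ : Finset (Fin (n + 1))),
      W2sq (((cubeM R (n + 1)).withDensity (fun x => ENNReal.ofReal (q x / (n + 1) + H i x))).map f)
      (((cubeM R (n + 1)).withDensity (fun x => ENNReal.ofReal (q x / (n + 1)))).map f) ≤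
      ENNReal.ofReal ((K + c) * (L * (c / (n + 1))⁻¹) ^ 2 * (2 * R) ^ 2) *
        (4 * ∫⁻ x, ENNReal.ofReal (h x ^ 2) ∂(cubeM R (n + 1))) := by
    intro i _
    refine (W2sq_cube_line_le hR hc' i (K := K) (hq.div_const _) (H1 i) hq0 ?_ (hHc i) (H3 i) hf (hfL i)).trans ?_
    · intro x
      refine le_trans ?_ (hqK x)
      exact div_le_self (hc.le.trans (hqc x)) (by linarith [(Nat.cast_nonneg n : (0:ℝ) ≤ n)])
    · refine mul_le_mul' (ENNReal.ofReal_le_ofReal ?_) (H4 i)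
      have : c / (n + 1) ≤ c := div_le_self hc.le (by linarith [(Nat.cast_nonneg n : (0:ℝ) ≤ n)])
      gcongr
  refine (Finset.sum_le_sum hone).trans ?_
  have hK : c ≤ K := (hqc 0).trans (hqK 0)
  have hA : 0 ≤ (K + c) * (L * (c / (n + 1))⁻¹) ^ 2 * (2 * R) ^ 2 :=
    mul_nonneg (mul_nonneg (by linarith) (sq_nonneg _)) (sq_nonneg _)
  rw [Finset.sum_const, Finset.card_univ, Fintype.card_fin, nsmul_eq_mul,
    ENNReal.ofReal_mul (mul_nonneg hA (by norm_num)), ENNReal.ofReal_mul hA]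
  refine le_of_eq ?_
  have e3 : ENNReal.ofReal ((n:ℝ) + 1) = ((n + 1 : ℕ) : ℝ≥0∞) := by
    rw [← ENNReal.ofReal_natCast]; push_cast; rfl
  rw [e3, ENNReal.ofReal_ofNat]
  ring

end LineTransport

/-! ### Folding a cube onto a ball -/

section Fold

variable {d : ℕ}

lemma map_withDensity_comp {α β : Type*} [MeasurableSpace α] [MeasurableSpace β] (μ : Measure α)
    {f : α → β} (hf : Measurable f) {g : β → ℝ≥0∞} (hg : Measurable g) :
    (μ.withDensity fun x => g (f x)).map f = (μ.map f).withDensity g := by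
  ext A hA
  rw [Measure.map_apply hf hA, withDensity_apply _ (hf hA), withDensity_apply _ hA,
    setLIntegral_map hA hg hf]

/-- The map of `ℝ^d` onto the closed ball of radius `R` which is the identity inside the ball and
the inversion in its boundary sphere outside. -/
def fold (R : ℝ) (y : Ed d) : Ed d := if ‖y‖ < R then y else (R / ‖y‖) ^ 2 • y

lemma measurable_fold (R : ℝ) : Measurable (fold (d := d) R) := by
  unfold fold
  exact Measurable.ite (measurableSet_lt measurable_norm measurable_const) measurable_id
    (by fun_prop)

lemma fold_of_lt {R : ℝ} {y : Ed d} (h : ‖y‖ < R) : fold R y = y := by simp [fold, h]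

lemma fold_of_le {R : ℝ} {y : Ed d} (h : R ≤ ‖y‖) : fold R y = (R / ‖y‖) ^ 2 • y := by
  simp [fold, not_lt.2 h]

lemma fold_eq_inversion {R : ℝ} {y : Ed d} (h : R ≤ ‖y‖) :
    fold R y = EuclideanGeometry.inversion 0 R y := by
  rw [fold_of_le h]; simp [EuclideanGeometry.inversion]

lemma norm_fold_of_le {R : ℝ} (hR : 0 < R) {y : Ed d} (h : R ≤ ‖y‖) :
    ‖fold R y‖ = R ^ 2 / ‖y‖ := by
  have : 0 < ‖y‖ := hR.trans_le h
  rw [fold_of_le h, norm_smul, Real.norm_of_nonneg (by positivity)]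
  field_simp

lemma norm_fold_le {R : ℝ} (hR : 0 < R) (y : Ed d) : ‖fold R y‖ ≤ R := by
  rcases lt_or_ge ‖y‖ R with h | h
  · rw [fold_of_lt h]; exact h.le
  · rw [norm_fold_of_le hR h, div_le_iff₀ (hR.trans_le h)]
    nlinarith

lemma norm_sub_fold_le {R : ℝ} (hR : 0 < R) {y : Ed d} (h : R ≤ ‖y‖) :
    ‖y - fold R y‖ ≤ 2 * (‖y‖ - R) := by
  have hy : 0 < ‖y‖ := hR.trans_le h
  have e : y - fold R y = (1 - (R / ‖y‖) ^ 2) • y := by rw [fold_of_le h, sub_smul, one_smul]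
  have h1 : (R / ‖y‖) ^ 2 ≤ 1 := by
    refine pow_le_one₀ (by positivity) ?_
    rw [div_le_one hy]; exact h
  rw [e, norm_smul, Real.norm_of_nonneg (by linarith)]
  have h2 : (1 - (R / ‖y‖) ^ 2) * ‖y‖ = (‖y‖ - R) * (1 + R / ‖y‖) := by field_simp; ring
  rw [h2]
  have h3 : R / ‖y‖ ≤ 1 := by rw [div_le_one hy]; exact h
  nlinarith

lemma dist_fold_fold {R : ℝ} (hR : 0 < R) {x y : Ed d} (hx : R ≤ ‖x‖) (hy : R ≤ ‖y‖) :
    dist (fold R x) (fold R y) = R ^ 2 / (‖x‖ * ‖y‖) * dist x y := by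
  have hx0 : x ≠ 0 := by rintro rfl; simp at hx; linarith
  have hy0 : y ≠ 0 := by rintro rfl; simp at hy; linarith
  rw [fold_eq_inversion hx, fold_eq_inversion hy, EuclideanGeometry.dist_inversion_inversion hx0 hy0]
  simp

lemma norm_fold_sub_fold_le {R : ℝ} (hR : 0 < R) (x y : Ed d) :
    ‖fold R x - fold R y‖ ≤ 3 * ‖x - y‖ := by
  have mixed : ∀ x y : Ed d, ‖x‖ < R → R ≤ ‖y‖ → ‖fold R x - fold R y‖ ≤ 3 * ‖x - y‖ := by
    intro x y hx hy
    rw [fold_of_lt hx]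
    have h1 : ‖x - fold R y‖ ≤ ‖x - y‖ + ‖y - fold R y‖ := norm_sub_le_norm_sub_add_norm_sub _ _ _
    have h2 := norm_sub_fold_le hR hy
    have h3 : ‖y‖ - ‖x‖ ≤ ‖x - y‖ := by rw [norm_sub_rev]; exact norm_sub_norm_le _ _
    linarith
  rcases lt_or_ge ‖x‖ R with hx | hx <;> rcases lt_or_ge ‖y‖ R with hy | hy
  · rw [fold_of_lt hx, fold_of_lt hy]; linarith [norm_nonneg (x - y)]
  · exact mixed x y hx hy
  · rw [norm_sub_rev, norm_sub_rev x]; exact mixed y x hy hx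
  · rw [← dist_eq_norm, ← dist_eq_norm, dist_fold_fold hR hx hy]
    refine mul_le_mul_of_nonneg_right ?_ dist_nonneg
    have hx' := hR.trans_le hx
    have hy' := hR.trans_le hy
    rw [div_le_iff₀ (by positivity)]
    nlinarith [mul_le_mul hx hy hR.le hx'.le]

lemma restrict_ball_eq_closedBall {R : ℝ} (hR : 0 < R) :
    volume.restrict (ball (0 : Ed d) R) = volume.restrict (closedBall (0 : Ed d) R) := by
  refine Measure.restrict_congr_set ?_
  refine (ae_eq_of_subset_of_measure_ge ball_subset_closedBall ?_
    measurableSet_ball.nullMeasurableSet measure_closedBall_lt_top.ne)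
  rw [Measure.addHaar_closedBall _ _ hR.le, Measure.addHaar_ball_of_pos _ _ hR]

/-- The part of Lebesgue measure folded from outside the ball has bounded density. -/
lemma map_fold_le {R M : ℝ} (hR : 0 < R) (hM : 0 < M) {S : Set (Ed d)} (hS : MeasurableSet S)
    (hS1 : ∀ y ∈ S, R ≤ ‖y‖) (hS2 : ∀ y ∈ S, ‖y‖ ≤ M) :
    (volume.restrict S).map (fold R) ≤
      ENNReal.ofReal (((M / R) ^ 2) ^ d) • volume.restrict (ball (0 : Ed d) R) := by
  rw [restrict_ball_eq_closedBall hR]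
  refine Measure.le_intro fun A hA _ => ?_
  have hK : ∀ x ∈ S, ∀ y ∈ S, dist x y ≤ (((M / R) ^ 2).toNNReal : ℝ) * dist (fold R x) (fold R y) := by
    intro x hx y hy
    rw [dist_fold_fold hR (hS1 x hx) (hS1 y hy), Real.coe_toNNReal _ (by positivity), ← mul_assoc]
    have hx' := hR.trans_le (hS1 x hx)
    have hy' := hR.trans_le (hS1 y hy)
    refine le_mul_of_one_le_left dist_nonneg ?_
    have e : (M / R) ^ 2 * (R ^ 2 / (‖x‖ * ‖y‖)) = M ^ 2 / (‖x‖ * ‖y‖) := by field_simp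
    rw [e, one_le_div (by positivity), sq]
    exact mul_le_mul (hS2 x hx) (hS2 y hy) hy'.le hM.le
  have h := volume_inter_preimage_le hK (A ∩ closedBall (0 : Ed d) R)
  rw [Measure.map_apply (measurable_fold R) hA, Measure.restrict_apply (measurable_fold R hA),
    Measure.smul_apply, Measure.restrict_apply hA, smul_eq_mul,
    ENNReal.ofReal_pow (by positivity)]
  refine le_trans (measure_mono ?_) h
  rintro y ⟨hy, hyS⟩
  exact ⟨hyS, hy, by simpa using norm_fold_le hR y⟩

end Fold

/-! ### Nearly constant densities on a ball -/

section BallFlat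

variable {d : ℕ}

lemma norm_toLp_insertNth_sub {n : ℕ} (i : Fin (n + 1)) (r s : ℝ) (y : Fin n → ℝ) :
    ‖(WithLp.toLp 2 (i.insertNth r y : Fin (n + 1) → ℝ) : Ed (n + 1)) -
      WithLp.toLp 2 (i.insertNth s y : Fin (n + 1) → ℝ)‖ = |r - s| := by
  rw [EuclideanSpace.norm_eq, Fin.sum_univ_succAbove _ i]
  simp [Real.sqrt_sq_eq_abs]

lemma cubeM_eq_restrict (R : ℝ) (n : ℕ) :
    cubeM R n = volume.restrict (univ.pi fun _ : Fin n => Icc (-R) R) := by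
  rw [cubeM, volume_pi, Measure.restrict_pi_pi]

lemma map_toLp_cubeM (R : ℝ) (n : ℕ) :
    (cubeM R n).map (WithLp.toLp 2) =
      volume.restrict {x : Ed n | ∀ i, x i ∈ Icc (-R) R} := by
  have hp := PiLp.volume_preserving_toLp (Fin n)
  have hS : MeasurableSet {x : Ed n | ∀ i, x i ∈ Icc (-R) R} := by
    have : {x : Ed n | ∀ i, x i ∈ Icc (-R) R} = ⋂ i, (fun x : Ed n => x i) ⁻¹' Icc (-R) R := by
      ext x; simp
    rw [this]
    exact MeasurableSet.iInter fun i => (by fun_prop : Measurable fun x : Ed n => x i) measurableSet_Icc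
  have := (hp.restrict_preimage hS).map_eq
  rw [← this, cubeM_eq_restrict]
  congr 2
  ext x
  simp only [mem_univ_pi, mem_preimage]
  rfl

/-- Folding the cube gives Lebesgue measure on the ball times a weight between two constants. -/
lemma exists_fold_weight (d : ℕ) (hd : 1 ≤ d) {R : ℝ} (hR : 0 < R) :
    ∃ w : Ed d → ℝ, Measurable w ∧ (∀ x, 1 ≤ w x) ∧ (∀ x, w x ≤ 1 + (d : ℝ) ^ d) ∧
      (cubeM R d).map (fun y => fold R (WithLp.toLp 2 y)) =
        (volume.restrict (ball (0 : Ed d) R)).withDensity (fun x => ENNReal.ofReal (w x)) := by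
  set Q := {x : Ed d | ∀ i, x i ∈ Icc (-R) R} with hQ
  have hQm : MeasurableSet Q := by
    have : Q = ⋂ i, (fun x : Ed d => x i) ⁻¹' Icc (-R) R := by
      ext x; simp [hQ]
    rw [this]
    exact MeasurableSet.iInter fun i => (by fun_prop : Measurable fun x : Ed d => x i) measurableSet_Icc
  have hd0 : (0:ℝ) < d := by exact_mod_cast hd
  have hnorm : ∀ x ∈ Q, ‖x‖ ≤ √d * R := by
    intro x hx
    rw [EuclideanSpace.norm_eq, Real.sqrt_le_left (by positivity), mul_pow, Real.sq_sqrt hd0.le]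
    calc ∑ i, ‖x i‖ ^ 2 ≤ ∑ _i : Fin d, R ^ 2 := Finset.sum_le_sum fun i _ => by
            rw [Real.norm_eq_abs]
            exact pow_le_pow_left₀ (abs_nonneg _) (abs_le.2 (hx i)) 2
      _ = d * R ^ 2 := by simp
  have hball : ball (0 : Ed d) R ⊆ Q := by
    intro x hx i
    have : ‖x‖ < R := by simpa using hx
    exact abs_le.1 (((Real.norm_eq_abs _).symm.le.trans (PiLp.norm_apply_le x i)).trans this.le)
  have hmap : (cubeM R d).map (fun y => fold R (WithLp.toLp 2 y)) = (volume.restrict Q).map (fold R) := by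
    rw [hQ, ← map_toLp_cubeM, Measure.map_map (measurable_fold R) (by fun_prop)]
    rfl
  have hsplit : volume.restrict Q = volume.restrict (ball (0 : Ed d) R) +
      volume.restrict (Q \ ball (0 : Ed d) R) := by
    have := Measure.restrict_inter_add_sdiff (μ := (volume : Measure (Ed d))) Q (measurableSet_ball (x := (0 : Ed d)) (ε := R))
    rw [← this, inter_eq_self_of_subset_right hball]
  have hid : (volume.restrict (ball (0 : Ed d) R)).map (fold R) = volume.restrict (ball (0 : Ed d) R) := by
    conv_rhs => rw [← Measure.map_id (μ := volume.restrict (ball (0 : Ed d) R))]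
    refine Measure.map_congr ?_
    filter_upwards [ae_restrict_mem measurableSet_ball] with x hx
    exact fold_of_lt (by simpa using hx)
  have hout : ∀ y ∈ Q \ ball (0 : Ed d) R, R ≤ ‖y‖ := fun y hy => by
    have h2 := hy.2
    rw [mem_ball_zero_iff, not_lt] at h2
    exact h2
  have hMpos : 0 < √(d:ℝ) * R := mul_pos (Real.sqrt_pos.2 hd0) hR
  have hle := map_fold_le (d := d) hR hMpos (hQm.diff measurableSet_ball) hout
    (fun y hy => hnorm y hy.1)
  have e : ((√d * R / R) ^ 2) ^ d = (d : ℝ) ^ d := by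
    rw [mul_div_cancel_right₀ _ hR.ne', Real.sq_sqrt hd0.le]
  rw [e] at hle
  have hfin : IsFiniteMeasure (volume.restrict (Q \ ball (0 : Ed d) R)) := by
    refine ⟨?_⟩
    rw [Measure.restrict_apply_univ]
    refine (measure_mono (fun x hx => ?_ : _ ⊆ closedBall (0 : Ed d) (√d * R))).trans_lt
      measure_closedBall_lt_top
    simpa using hnorm x hx.1
  have : IsFiniteMeasure ((volume.restrict (Q \ ball (0 : Ed d) R)).map (fold R)) :=
    Measure.isFiniteMeasure_map _ _
  obtain ⟨w, w1, w2, w3, w4⟩ := exists_bdd_density (by positivity) hle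
  refine ⟨fun x => 1 + w x, by fun_prop, fun x => by linarith [w2 x], fun x => by linarith [w3 x], ?_⟩
  rw [hmap, hsplit, Measure.map_add _ _ (measurable_fold R), hid, w4]
  have : (fun x => ENNReal.ofReal (1 + w x)) = (1 : Ed d → ℝ≥0∞) + fun x => ENNReal.ofReal (w x) := by
    funext x
    rw [ENNReal.ofReal_add zero_le_one (w2 x)]
    simp
  rw [this, withDensity_add_left measurable_one, withDensity_one]

/-- A density on the ball which is uniformly close to its mean is at squared distance to that mean
bounded by its squared `L²` deviation. -/
lemma W2sq_ball_flat_le (d : ℕ) (hd : 1 ≤ d) {m₀ K : ℝ} (hm₀ : 0 < m₀) (hK : m₀ ≤ K) :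
    ∃ η C : ℝ, 0 < η ∧ 0 < C ∧ ∀ (R m : ℝ) (v : Ed d → ℝ), 1 ≤ R → R ≤ 5 / 4 → m₀ ≤ m → m ≤ K →
      Measurable v → (∀ x, |v x - m| ≤ η) →
      (∫ x in ball (0 : Ed d) R, (v x - m)) = 0 →
      W2sq ((volume.restrict (ball (0 : Ed d) R)).withDensity (fun x => ENNReal.ofReal (v x)))
        ((volume.restrict (ball (0 : Ed d) R)).withDensity (fun _ => ENNReal.ofReal m)) ≤
      ENNReal.ofReal C * ∫⁻ x in ball (0 : Ed d) R, ENNReal.ofReal ((v x - m) ^ 2) := by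
  obtain ⟨n, rfl⟩ : ∃ n, d = n + 1 := ⟨d - 1, by omega⟩
  set W : ℝ := 1 + ((n + 1 : ℕ) : ℝ) ^ (n + 1) with hW
  have hW1 : 1 ≤ W := by rw [hW]; linarith [(by positivity : (0:ℝ) ≤ ((n + 1 : ℕ) : ℝ) ^ (n + 1))]
  set c : ℝ := m₀ / W with hc
  have hcpos : 0 < c := by positivity
  refine ⟨c / (2 * (n + 1)), (K + c) * (3 * (c / (n + 1))⁻¹) ^ 2 * (2 * (5 / 4)) ^ 2 * 4 * (n + 1),
    by positivity, by have : 0 < K := by linarith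
                      positivity, ?_⟩
  intro R m v hR1 hR2 hm hmK hv hvm hmean
  have hR : 0 < R := by linarith
  obtain ⟨w, w1, w2, w3, w4⟩ := exists_fold_weight (n + 1) (by omega) hR
  set F : (Fin (n + 1) → ℝ) → Ed (n + 1) := fun y => fold R (WithLp.toLp 2 y) with hF
  have hFm : Measurable F := (measurable_fold R).comp (by fun_prop)
  set B := volume.restrict (ball (0 : Ed (n + 1)) R) with hB
  have hw0 : ∀ x, 0 < w x := fun x => by linarith [w2 x]
  have hpush : ∀ g : Ed (n + 1) → ℝ, Measurable g → (∀ x, 0 ≤ g x) →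
      ((cubeM R (n + 1)).withDensity (fun y => ENNReal.ofReal (g (F y) / w (F y)))).map F =
      B.withDensity (fun x => ENNReal.ofReal (g x)) := by
    intro g hg hg0
    rw [map_withDensity_comp _ hFm (g := fun x => ENNReal.ofReal (g x / w x)) (by fun_prop), w4,
      ← withDensity_mul _ (by fun_prop) (by fun_prop)]
    congr 1
    funext x
    rw [Pi.mul_apply, ← ENNReal.ofReal_mul (hw0 x).le, mul_div_cancel₀ _ (hw0 x).ne']
  have hηc : c / (2 * (n + 1)) ≤ c := div_le_self hcpos.le (by
    linarith [(Nat.cast_nonneg n : (0:ℝ) ≤ n)])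
  have hcm : c ≤ m₀ := div_le_self hm₀.le hW1
  have hv0 : ∀ x, 0 ≤ v x := fun x => by linarith [(abs_le.1 (hvm x)).1]
  have hdiv : ∀ (a : ℝ) x, |a / w x| ≤ |a| := fun a x => by
    rw [abs_div, abs_of_pos (hw0 x)]
    exact div_le_self (abs_nonneg _) (w2 x)
  have key := W2sq_cube_le (n := n) (R := R) (c := c) (K := K) (L := 3) hR hcpos
    (q := fun y => m / w (F y)) (h := fun y => (v (F y) - m) / w (F y)) (f := F)
    (measurable_const.div (w1.comp hFm)) (((hv.comp hFm).sub_const m).div (w1.comp hFm)) ?_ ?_ ?_ ?_ hFm ?_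
  · have e1 : (fun y => ENNReal.ofReal (m / w (F y) + (v (F y) - m) / w (F y))) =
        fun y => ENNReal.ofReal (v (F y) / w (F y)) := by
      funext y
      rw [← add_div, add_sub_cancel]
    rw [e1, hpush v hv hv0, hpush (fun _ => m) measurable_const (fun _ => by linarith)] at key
    refine key.trans (mul_le_mul' (ENNReal.ofReal_le_ofReal ?_) ?_)
    · have : 0 < K := by linarith
      gcongr
    · have hm2 : Measurable fun x => ENNReal.ofReal (((v x - m) / w x) ^ 2) := by fun_prop
      rw [← lintegral_map hm2 hFm, w4, lintegral_withDensity_eq_lintegral_mul _ (by fun_prop) hm2]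
      refine lintegral_mono fun x => ?_
      rw [Pi.mul_apply, ← ENNReal.ofReal_mul (hw0 x).le]
      refine ENNReal.ofReal_le_ofReal ?_
      have : w x * ((v x - m) / w x) ^ 2 = (v x - m) ^ 2 / w x := by
        have := (hw0 x).ne'
        field_simp
      rw [this]
      exact div_le_self (sq_nonneg _) (w2 x)
  · intro y
    exact div_le_div₀ (by linarith) hm (hw0 _) (w3 _)
  · intro y
    exact (div_le_self (by linarith) (w2 _)).trans hmK
  · exact fun y => (hdiv _ _).trans (hvm _)
  · have hm2 : Measurable fun x => (v x - m) / w x := by fun_prop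
    rw [← integral_map hFm.aemeasurable (f := fun x => (v x - m) / w x) hm2.aestronglyMeasurable, w4,
      integral_withDensity_eq_integral_toReal_smul (by fun_prop) (by simp), ← hmean]
    refine integral_congr_ae (Filter.Eventually.of_forall fun x => ?_)
    simp only [smul_eq_mul]
    rw [ENNReal.toReal_ofReal (hw0 x).le, mul_div_cancel₀ _ (hw0 x).ne']
  · intro i y r s
    refine (norm_fold_sub_fold_le hR _ _).trans ?_
    rw [norm_toLp_insertNth_sub]

end BallFlat

/-! ### Averaging along rays -/

section Rays

variable {d : ℕ}

/-- Polar coordinates as a push-forward, on an annulus. -/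
lemma map_polar (hd : 1 ≤ d) {a b : ℝ} (ha : 0 < a) {g : Ed d → ℝ} (hg : Measurable g)
    {j : ℝ → ℝ} (hj : Measurable j) (hj0 : ∀ r, 0 ≤ j r) (hjr : ∀ r ∈ Icc a b, j r = r ^ (d - 1)) :
    (((om d).prod (volume.restrict (Icc a b))).withDensity
        (fun z => ENNReal.ofReal (g (z.2 • (z.1 : Ed d)) * j z.2))).map
          (fun z : sphere (0 : Ed d) 1 × ℝ => z.2 • (z.1 : Ed d)) =
      (volume.restrict {z : Ed d | a ≤ ‖z‖ ∧ ‖z‖ ≤ b}).withDensity (fun z => ENNReal.ofReal (g z)) := by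
  have hF : Measurable fun z : sphere (0 : Ed d) 1 × ℝ => z.2 • (z.1 : Ed d) := by fun_prop
  have hS : MeasurableSet {z : Ed d | a ≤ ‖z‖ ∧ ‖z‖ ≤ b} :=
    (measurableSet_le measurable_const measurable_norm).inter
      (measurableSet_le measurable_norm measurable_const)
  ext A hA
  have hi : Measurable (A.indicator (1 : Ed d → ℝ≥0∞)) := measurable_one.indicator hA
  have hiF : Measurable fun z : sphere (0 : Ed d) 1 × ℝ =>
      A.indicator (1 : Ed d → ℝ≥0∞) (z.2 • (z.1 : Ed d)) := hi.comp hF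
  have hgF : Measurable fun z : sphere (0 : Ed d) 1 × ℝ =>
      ENNReal.ofReal (g (z.2 • (z.1 : Ed d)) * j z.2) :=
    ((hg.comp hF).mul (hj.comp measurable_snd)).ennreal_ofReal
  rw [← lintegral_indicator_one hA, lintegral_map hi hF,
    lintegral_withDensity_eq_lintegral_mul _ hgF hiF, lintegral_prod _ (hgF.mul hiF).aemeasurable,
    withDensity_apply _ hA, ← lintegral_indicator hA, ← lintegral_indicator hS,
    lintegral_polar hd ((hg.ennreal_ofReal.indicator hA).indicator hS)]
  refine lintegral_congr fun u => ?_
  have hu : ‖(u : Ed d)‖ = 1 := by simpa using u.2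
  rw [← lintegral_indicator measurableSet_Icc, ← lintegral_indicator measurableSet_Ioi]
  refine lintegral_congr fun r => ?_
  by_cases hr : r ∈ Icc a b
  · have hr0 : 0 < r := ha.trans_le hr.1
    have hrS : r • (u : Ed d) ∈ {z : Ed d | a ≤ ‖z‖ ∧ ‖z‖ ≤ b} := by
      simp only [Set.mem_ofPred_eq, norm_smul, hu, mul_one, Real.norm_eq_abs, abs_of_pos hr0]
      exact hr
    rw [indicator_of_mem hr, indicator_of_mem (mem_Ioi.2 hr0), indicator_of_mem hrS]
    by_cases hrA : r • (u : Ed d) ∈ A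
    · rw [Pi.mul_apply, indicator_of_mem hrA, indicator_of_mem hrA, hjr r hr,
        ENNReal.ofReal_mul' (by positivity), Pi.one_apply, mul_one, mul_comm]
    · rw [Pi.mul_apply, indicator_of_notMem hrA, indicator_of_notMem hrA, mul_zero, mul_zero]
  · rw [indicator_of_notMem hr]
    by_cases hr0 : 0 < r
    · have hrS : r • (u : Ed d) ∉ {z : Ed d | a ≤ ‖z‖ ∧ ‖z‖ ≤ b} := by
        simp only [Set.mem_ofPred_eq, norm_smul, hu, mul_one, Real.norm_eq_abs, abs_of_pos hr0]
        exact hr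
      rw [indicator_of_mem (mem_Ioi.2 hr0), indicator_of_notMem hrS, mul_zero]
    · rw [indicator_of_notMem (by simpa using hr0)]

/-- The integral of a nonnegative defect along a ray, near the boundary of the ball of radius `R`. -/
def rayInt (R : ℝ) (g : Ed d → ℝ) (x : Ed d) : ℝ := ∫ s in Icc (R / 2) R, g (s • x)

lemma measurable_rayInt (R : ℝ) {g : Ed d → ℝ} (hg : Measurable g) : Measurable (rayInt R g) := by
  have h : Measurable fun z : Ed d × ℝ => g (z.2 • z.1) := hg.comp (by fun_prop)
  exact (h.stronglyMeasurable.integral_prod_right' (ν := volume.restrict (Icc (R / 2) R))).measurable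

lemma integrableOn_ray {R K : ℝ} {g : Ed d → ℝ} (hg : Measurable g) (hK : ∀ z, |g z| ≤ K) (x : Ed d) :
    IntegrableOn (fun s : ℝ => g (s • x)) (Icc (R / 2) R) :=
  Measure.integrableOn_of_bounded (M := K) (by simp) (hg.comp (by fun_prop)).aestronglyMeasurable
    (Filter.Eventually.of_forall fun _ => hK _)

/-- The square of the ray integral is controlled by the defect weighted with the distance to the
sphere (for the part `n₁`) and without weight (for the part `n₂`). -/
lemma lintegral_rayInt_sq_le (hd : 1 ≤ d) {R K : ℝ} (hR1 : 1 ≤ R) (hR2 : R ≤ 5 / 4) (hK : 0 < K)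
    {n₁ n₂ : Ed d → ℝ} (h1 : Measurable n₁) (h2 : Measurable n₂) (h10 : ∀ z, 0 ≤ n₁ z)
    (h20 : ∀ z, 0 ≤ n₂ z) (h1K : ∀ z, n₁ z ≤ K) (h2K : ∀ z, n₂ z ≤ K) :
    ∫⁻ u : sphere (0 : Ed d) 1, ENNReal.ofReal ((rayInt R (fun z => n₁ z + n₂ z) u) ^ 2) ∂(om d) ≤
      ENNReal.ofReal (16 * K * 2 ^ d) *
        ∫⁻ z in ball (0 : Ed d) R, ENNReal.ofReal ((R - ‖z‖) * n₁ z + n₂ z) := by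
  have hR : 0 < R := by linarith
  have habs1 : ∀ z, |n₁ z| ≤ K := fun z => by rw [abs_of_nonneg (h10 z)]; exact h1K z
  have habs2 : ∀ z, |n₂ z| ≤ K := fun z => by rw [abs_of_nonneg (h20 z)]; exact h2K z
  set G : Ed d → ℝ≥0∞ := (closedBall (0 : Ed d) R).indicator
    fun z => ENNReal.ofReal ((R - ‖z‖) * n₁ z + n₂ z) with hG
  have hGm : Measurable G := Measurable.indicator (by fun_prop) measurableSet_closedBall
  rw [restrict_ball_eq_closedBall hR, ← lintegral_indicator measurableSet_closedBall,
    lintegral_polar hd hGm, ← lintegral_const_mul' _ _ ENNReal.ofReal_ne_top]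
  refine lintegral_mono fun u => ?_
  have hu : ‖(u : Ed d)‖ = 1 := by simpa using u.2
  have hm1 : Measurable fun s : ℝ => n₁ (s • (u : Ed d)) := h1.comp (by fun_prop)
  have hm2 : Measurable fun s : ℝ => n₂ (s • (u : Ed d)) := h2.comp (by fun_prop)
  have hi1 := integrableOn_ray (R := R) h1 habs1 (u : Ed d)
  have hi2 := integrableOn_ray (R := R) h2 habs2 (u : Ed d)
  have hi3 : IntegrableOn (fun s : ℝ => n₁ (s • (u : Ed d)) * |s - R|) (Icc (R / 2) R) := by
    have hc : ContinuousOn (fun r => |r - R|) (Icc (R / 2) R) := by fun_prop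
    exact (IntegrableOn.mul_continuousOn hi1 hc isCompact_Icc)
  have hA : rayInt R n₁ u ^ 2 ≤ 8 * K * ∫ s in Icc (R / 2) R, n₁ (s • (u : Ed d)) * |s - R| :=
    sq_integral_le_moment hK hm1 (fun _ => h10 _) (fun _ => h1K _)
  have hB : rayInt R n₂ u ^ 2 ≤ K * ∫ s in Icc (R / 2) R, n₂ (s • (u : Ed d)) := by
    have hle : ∫ s in Icc (R / 2) R, n₂ (s • (u : Ed d)) ≤ K := by
      calc ∫ s in Icc (R / 2) R, n₂ (s • (u : Ed d)) ≤ ∫ _s in Icc (R / 2) R, K :=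
            integral_mono hi2 (integrableOn_const (by simp)) fun _ => h2K _
        _ = (R - R / 2) * K := by
            rw [setIntegral_const]
            simp [Measure.real, hR.le, max_eq_left (by linarith : 0 ≤ R - R / 2)]
        _ ≤ K := by nlinarith
    have h0 : 0 ≤ ∫ s in Icc (R / 2) R, n₂ (s • (u : Ed d)) := integral_nonneg fun _ => h20 _
    rw [sq]
    exact mul_le_mul_of_nonneg_right hle h0
  have hsum : rayInt R (fun z => n₁ z + n₂ z) u = rayInt R n₁ u + rayInt R n₂ u :=
    integral_add hi1 hi2
  set I := ∫ s in Icc (R / 2) R, (n₁ (s • (u : Ed d)) * |s - R| + n₂ (s • (u : Ed d))) with hI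
  have hIeq : I = (∫ s in Icc (R / 2) R, n₁ (s • (u : Ed d)) * |s - R|) +
      ∫ s in Icc (R / 2) R, n₂ (s • (u : Ed d)) := integral_add hi3 hi2
  have h0 : 0 ≤ ∫ s in Icc (R / 2) R, n₂ (s • (u : Ed d)) := integral_nonneg fun _ => h20 _
  have hreal : rayInt R (fun z => n₁ z + n₂ z) u ^ 2 ≤ 16 * K * I := by
    rw [hsum, hIeq]
    nlinarith [sq_nonneg (rayInt R n₁ u - rayInt R n₂ u)]
  refine (ENNReal.ofReal_le_ofReal hreal).trans ?_
  rw [ENNReal.ofReal_mul (by positivity), ENNReal.ofReal_mul (q := 2 ^ d) (by positivity), mul_assoc]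
  refine mul_le_mul_right ?_ _
  have hi4 : IntegrableOn (fun s : ℝ => n₁ (s • (u : Ed d)) * |s - R| + n₂ (s • (u : Ed d)))
    (Icc (R / 2) R) := hi3.add hi2
  rw [hI, ofReal_integral_eq_lintegral_ofReal hi4
    (Filter.Eventually.of_forall fun s => add_nonneg (mul_nonneg (h10 _) (abs_nonneg _)) (h20 _)),
    ← lintegral_const_mul' _ _ ENNReal.ofReal_ne_top]
  have hsub : Icc (R / 2) R ⊆ Ioi (0:ℝ) := fun s hs => lt_of_lt_of_le (by linarith) hs.1
  refine le_trans ?_ (lintegral_mono_set hsub)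
  refine setLIntegral_mono' measurableSet_Icc fun s hs => ?_
  have hs0 : 0 < s := hsub hs
  have hns : ‖s • (u : Ed d)‖ = s := by rw [norm_smul, hu, mul_one, Real.norm_eq_abs, abs_of_pos hs0]
  have hmem : s • (u : Ed d) ∈ closedBall (0 : Ed d) R := by rw [mem_closedBall_zero_iff, hns]; exact hs.2
  rw [hG, indicator_of_mem hmem, hns, ← mul_assoc, ← ENNReal.ofReal_mul (by positivity)]
  have e : |s - R| = R - s := by rw [abs_of_nonpos (by linarith [hs.2])]; ring
  rw [e, mul_comm (R - s)]
  refine le_mul_of_one_le_left zero_le ?_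
  rw [← ENNReal.ofReal_one]
  refine ENNReal.ofReal_le_ofReal ?_
  have h3 : (1 / 2 : ℝ) ^ (d - 1) ≤ s ^ (d - 1) :=
    pow_le_pow_left₀ (by norm_num) (by linarith [hs.1]) _
  calc (1:ℝ) ≤ 2 := by norm_num
    _ = 2 ^ d * (1 / 2) ^ (d - 1) := by
        obtain ⟨n, rfl⟩ : ∃ n, d = n + 1 := ⟨d - 1, by omega⟩
        rw [Nat.add_sub_cancel, pow_succ, mul_right_comm, ← mul_pow]
        norm_num
    _ ≤ _ := by gcongr

/-- The mean of a function minimises the squared `L²` deviation from constants. -/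
lemma lintegral_sq_sub_mean_le {α : Type*} [MeasurableSpace α] (μ : Measure α) [IsFiniteMeasure μ]
    {v : α → ℝ} (hv : Measurable v) {M m : ℝ} (hM : ∀ x, |v x| ≤ M) (hm : ∫ x, (v x - m) ∂μ = 0) (k : ℝ) :
    ∫⁻ x, ENNReal.ofReal ((v x - m) ^ 2) ∂μ ≤ ∫⁻ x, ENNReal.ofReal ((v x - k) ^ 2) ∂μ := by
  have hb : ∀ c x, |v x - c| ≤ M + |c| := fun c x => by
    rw [sub_eq_add_neg]
    exact (abs_add_le _ _).trans (by rw [abs_neg]; exact add_le_add_left (hM x) _)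
  have hi : ∀ c, Integrable (fun x => (v x - c)) μ := fun c =>
    Integrable.of_bound (hv.sub_const c).aestronglyMeasurable (M + |c|)
      (Filter.Eventually.of_forall fun x => hb c x)
  have hi2 : ∀ c, Integrable (fun x => (v x - c) ^ 2) μ := fun c =>
    Integrable.of_bound ((hv.sub_const c).pow_const 2).aestronglyMeasurable ((M + |c|) ^ 2)
      (Filter.Eventually.of_forall fun x => by
        rw [Real.norm_eq_abs, abs_pow]; exact pow_le_pow_left₀ (abs_nonneg _) (hb c x) 2)
  rw [← ofReal_integral_eq_lintegral_ofReal (hi2 m) (Filter.Eventually.of_forall fun _ => sq_nonneg _),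
    ← ofReal_integral_eq_lintegral_ofReal (hi2 k) (Filter.Eventually.of_forall fun _ => sq_nonneg _)]
  refine ENNReal.ofReal_le_ofReal ?_
  have h1 : 0 ≤ ∫ x, ((v x - k) ^ 2 - (v x - m) ^ 2 - 2 * (m - k) * (v x - m)) ∂μ := by
    refine integral_nonneg fun x => ?_
    have : (v x - k) ^ 2 - (v x - m) ^ 2 - 2 * (m - k) * (v x - m) = (m - k) ^ 2 := by ring
    simp only [Pi.zero_apply]
    rw [this]; positivity
  have hi3 : Integrable (fun x => (v x - k) ^ 2 - (v x - m) ^ 2) μ := (hi2 k).sub (hi2 m)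
  rw [integral_sub hi3 ((hi m).const_mul _), integral_sub (hi2 k) (hi2 m),
    integral_const_mul, hm, mul_zero, sub_zero] at h1
  linarith

end Rays

/-! ### Densities close to a constant up to a boundary defect -/

section BallDefect

variable {d : ℕ}

lemma measure_univ_eq_of_W2sq_ne_top {μ ν : Measure (Ed d)} (h : W2sq μ ν ≠ ∞) : μ univ = ν univ := by
  have : W2sq μ ν < ∞ := lt_top_iff_ne_top.2 h
  rw [W2sq, sInf_lt_iff] at this
  obtain ⟨_, ⟨π, h1, h2, rfl⟩, -⟩ := this
  rw [← measure_univ_of_map measurable_fst h1, ← measure_univ_of_map measurable_snd h2]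

/-- The radial weight `r^(d-1)` on `[R/2, R]`, continued by constants. -/
def radW (d : ℕ) (R s : ℝ) : ℝ := (max (R / 2) (min s R)) ^ (d - 1)

lemma measurable_radW (R : ℝ) : Measurable (radW d R) := by unfold radW; fun_prop

lemma radW_eq {R s : ℝ} (hs : s ∈ Icc (R / 2) R) : radW d R s = s ^ (d - 1) := by
  rw [radW, min_eq_left hs.2, max_eq_right hs.1]

lemma le_radW {R : ℝ} (hR : 1 ≤ R) (s : ℝ) : (1 / 2 : ℝ) ^ d ≤ radW d R s := by
  refine (pow_le_pow_of_le_one (by norm_num) (by norm_num) (Nat.sub_le d 1)).trans ?_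
  exact pow_le_pow_left₀ (by norm_num) (le_max_of_le_left (by linarith)) _

lemma radW_le {R : ℝ} (hR : 1 ≤ R) (hR2 : R ≤ 5 / 4) (s : ℝ) : radW d R s ≤ 2 ^ d := by
  refine le_trans ?_ (pow_le_pow_right₀ (by norm_num) (Nat.sub_le d 1))
  refine pow_le_pow_left₀ (le_max_of_le_left (by linarith)) ?_ _
  exact max_le (by linarith) ((min_le_right _ _).trans (by linarith))

lemma radW_pos {R : ℝ} (hR : 1 ≤ R) (s : ℝ) : 0 < radW d R s :=
  lt_of_lt_of_le (by positivity) (le_radW hR s)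

/-- The mean of a function over the ray segment in direction `x`, with the radial weight. -/
def rayAvg (R : ℝ) (u : Ed d → ℝ) (x : Ed d) : ℝ :=
  (∫ s in Icc (R / 2) R, radW d R s)⁻¹ * ∫ s in Icc (R / 2) R, u (s • x) * radW d R s

lemma integrableOn_radW {R : ℝ} (hR : 1 ≤ R) (hR2 : R ≤ 5 / 4) :
    IntegrableOn (radW d R) (Icc (R / 2) R) :=
  Measure.integrableOn_of_bounded (M := 2 ^ d) (by simp) (measurable_radW R).aestronglyMeasurable
    (Filter.Eventually.of_forall fun s => by
      rw [Real.norm_eq_abs, abs_of_pos (radW_pos hR s)]; exact radW_le hR hR2 s)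

lemma integrableOn_ray_radW {R K : ℝ} (hR : 1 ≤ R) (hR2 : R ≤ 5 / 4) {u : Ed d → ℝ}
    (hu : Measurable u) (hK : ∀ z, |u z| ≤ K) (x : Ed d) :
    IntegrableOn (fun s : ℝ => u (s • x) * radW d R s) (Icc (R / 2) R) :=
  Measure.integrableOn_of_bounded (M := K * 2 ^ d) (by simp)
    (((hu.comp (by fun_prop)).mul (measurable_radW R)).aestronglyMeasurable)
    (Filter.Eventually.of_forall fun s => by
      rw [norm_mul, Real.norm_eq_abs, Real.norm_eq_abs, abs_of_pos (radW_pos hR s)]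
      exact mul_le_mul (hK _) (radW_le hR hR2 s) (radW_pos hR s).le ((abs_nonneg _).trans (hK 0)))

lemma le_integral_radW {R : ℝ} (hR : 1 ≤ R) (hR2 : R ≤ 5 / 4) :
    (1 / 2 : ℝ) ^ (d + 1) ≤ ∫ s in Icc (R / 2) R, radW d R s := by
  calc (1 / 2 : ℝ) ^ (d + 1) ≤ (R - R / 2) * (1 / 2) ^ d := by
        rw [pow_succ, mul_comm]; gcongr; linarith
    _ = ∫ _s in Icc (R / 2) R, (1 / 2 : ℝ) ^ d := by
        rw [setIntegral_const, smul_eq_mul, Measure.real, Real.volume_Icc,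
          ENNReal.toReal_ofReal (by linarith)]
    _ ≤ _ := integral_mono (integrableOn_const (by simp)) (integrableOn_radW hR hR2) fun s => le_radW hR s

lemma measurable_rayAvg (R : ℝ) {u : Ed d → ℝ} (hu : Measurable u) : Measurable (rayAvg R u) := by
  have h : Measurable fun z : Ed d × ℝ => u (z.2 • z.1) * radW d R z.2 :=
    (hu.comp (by fun_prop)).mul ((measurable_radW R).comp measurable_snd)
  exact ((h.stronglyMeasurable.integral_prod_right'
    (ν := volume.restrict (Icc (R / 2) R))).measurable).const_mul _

lemma rayAvg_mul {R : ℝ} (hR : 1 ≤ R) (hR2 : R ≤ 5 / 4) (u : Ed d → ℝ) (x : Ed d) :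
    rayAvg R u x * (∫ s in Icc (R / 2) R, radW d R s) =
      ∫ s in Icc (R / 2) R, u (s • x) * radW d R s := by
  have : (0:ℝ) < ∫ s in Icc (R / 2) R, radW d R s :=
    lt_of_lt_of_le (by positivity) (le_integral_radW hR hR2)
  rw [rayAvg]
  field_simp

lemma rayAvg_mem {R K : ℝ} (hR : 1 ≤ R) (hR2 : R ≤ 5 / 4) {u : Ed d → ℝ} (hu : Measurable u)
    (h0 : ∀ z, 0 ≤ u z) (hK : ∀ z, u z ≤ K) (x : Ed d) : 0 ≤ rayAvg R u x ∧ rayAvg R u x ≤ K := by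
  have hZ : (0:ℝ) < ∫ s in Icc (R / 2) R, radW d R s :=
    lt_of_lt_of_le (by positivity) (le_integral_radW hR hR2)
  have hi := integrableOn_ray_radW hR hR2 hu (fun z => by rw [abs_of_nonneg (h0 z)]; exact hK z) x
  constructor
  · exact mul_nonneg (inv_nonneg.2 hZ.le) (integral_nonneg fun s => mul_nonneg (h0 _) (radW_pos hR s).le)
  · rw [← mul_le_mul_iff_left₀ hZ, rayAvg_mul hR hR2, ← integral_const_mul]
    exact integral_mono hi ((integrableOn_radW hR hR2).const_mul K) fun s =>
      mul_le_mul_of_nonneg_right (hK _) (radW_pos hR s).le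

/-- The ray average deviates from `κ` by at most a multiple of the integrated defect. -/
lemma abs_rayAvg_sub_le {R K κ : ℝ} (hR : 1 ≤ R) (hR2 : R ≤ 5 / 4) {u n : Ed d → ℝ} (hu : Measurable u)
    (hn : Measurable n) (huK : ∀ z, |u z| ≤ K) (hnK : ∀ z, |n z| ≤ 2 * K) (hun : ∀ z, |u z - κ| ≤ n z)
    (x : Ed d) : |rayAvg R u x - κ| ≤ 2 ^ (2 * d + 1) * rayInt R n x := by
  have hZ1 := le_integral_radW (d := d) hR hR2
  set Z := ∫ s in Icc (R / 2) R, radW d R s with hZd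
  have hZ : 0 < Z := lt_of_lt_of_le (by positivity) hZ1
  have hi := integrableOn_ray_radW hR hR2 hu huK x
  have e : rayAvg R u x - κ = Z⁻¹ * ∫ s in Icc (R / 2) R, (u (s • x) - κ) * radW d R s := by
    have : (fun s => (u (s • x) - κ) * radW d R s) =
        fun s => u (s • x) * radW d R s - κ * radW d R s := by funext s; ring
    rw [this, integral_sub hi ((integrableOn_radW hR hR2).const_mul κ), integral_const_mul,
      ← rayAvg_mul hR hR2, ← hZd]
    field_simp
  have h1 : |∫ s in Icc (R / 2) R, (u (s • x) - κ) * radW d R s| ≤ 2 ^ d * rayInt R n x := by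
    rw [rayInt, ← integral_const_mul]
    refine abs_integral_le_integral_abs.trans ?_
    refine integral_mono_of_nonneg (Filter.Eventually.of_forall fun _ => abs_nonneg _)
      ((integrableOn_ray hn hnK x).const_mul _) (Filter.Eventually.of_forall fun s => ?_)
    simp only
    rw [abs_mul, abs_of_pos (radW_pos hR s), mul_comm]
    exact mul_le_mul (radW_le hR hR2 s) (hun _) (abs_nonneg _) (by positivity)
  rw [e, abs_mul, abs_of_pos (inv_pos.2 hZ)]
  have h2 : Z⁻¹ ≤ 2 ^ (d + 1) := by
    rw [inv_le_comm₀ hZ (by positivity)]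
    simpa using hZ1
  calc Z⁻¹ * |∫ s in Icc (R / 2) R, (u (s • x) - κ) * radW d R s|
      ≤ 2 ^ (d + 1) * (2 ^ d * rayInt R n x) := mul_le_mul h2 h1 (abs_nonneg _) (by positivity)
    _ = _ := by ring

end BallDefect

section BallDefectMain

variable {d : ℕ}

/-- Replacing a density by its averages along rays in an annulus near the boundary. -/
def rayFlat (R a m : ℝ) (u : Ed d → ℝ) (z : Ed d) : ℝ :=
  if ‖z‖ < R / 2 then a * u z + (1 - a) * m else a * rayAvg R u (‖z‖⁻¹ • z) + (1 - a) * m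

lemma measurable_rayFlat (R a m : ℝ) {u : Ed d → ℝ} (hu : Measurable u) :
    Measurable (rayFlat R a m u) := by
  unfold rayFlat
  refine Measurable.ite (measurableSet_lt measurable_norm measurable_const) (by fun_prop) ?_
  have : Measurable fun z : Ed d => rayAvg R u (‖z‖⁻¹ • z) := (measurable_rayAvg R hu).comp (by fun_prop)
  exact (this.const_mul a).add_const _

lemma rayFlat_polar {R a m : ℝ} (hR : 1 ≤ R) (u : Ed d → ℝ) (w : sphere (0 : Ed d) 1) {r : ℝ}
    (hr : r ∈ Icc (R / 2) R) :
    rayFlat R a m u (r • (w : Ed d)) = a * rayAvg R u w + (1 - a) * m := by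
  have hw : ‖(w : Ed d)‖ = 1 := by simpa using w.2
  have hr0 : 0 < r := lt_of_lt_of_le (by linarith) hr.1
  have hn : ‖r • (w : Ed d)‖ = r := by rw [norm_smul, hw, mul_one, Real.norm_eq_abs, abs_of_pos hr0]
  rw [rayFlat, hn, if_neg (not_lt.2 hr.1), smul_smul, inv_mul_cancel₀ hr0.ne', one_smul]

lemma restrict_ball_split {R : ℝ} (hR : 0 < R) :
    volume.restrict (ball (0 : Ed d) R) = volume.restrict (ball (0 : Ed d) (R / 2)) +
      volume.restrict {z : Ed d | R / 2 ≤ ‖z‖ ∧ ‖z‖ ≤ R} := by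
  rw [restrict_ball_eq_closedBall hR]
  have := Measure.restrict_inter_add_sdiff (μ := (volume : Measure (Ed d))) (closedBall 0 R)
    (measurableSet_ball (x := (0 : Ed d)) (ε := R / 2))
  rw [← this, inter_eq_self_of_subset_right]
  · congr 2
    ext z
    simp [and_comm]
  · exact ball_subset_closedBall.trans (closedBall_subset_closedBall (by linarith))

/-- Averaging along rays moves the density by a distance controlled by the ray integrals of the
defect. -/
lemma W2sq_rayFlat_le (hd : 1 ≤ d) {m₀ K : ℝ} (hm₀ : 0 < m₀) (hK : m₀ ≤ K) :
    ∃ C : ℝ, 0 < C ∧ ∀ (R m κ a : ℝ) (u n : Ed d → ℝ), 1 ≤ R → R ≤ 5 / 4 → m₀ ≤ m → m ≤ K →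
      0 < a → a ≤ 1 / 2 → Measurable u → Measurable n → (∀ z, 0 ≤ u z) → (∀ z, u z ≤ K) →
      (∀ z, |n z| ≤ 2 * K) → (∀ z, |u z - κ| ≤ n z) →
      W2sq ((volume.restrict (ball (0 : Ed d) R)).withDensity
          (fun z => ENNReal.ofReal (a * u z + (1 - a) * m)))
        ((volume.restrict (ball (0 : Ed d) R)).withDensity (fun z => ENNReal.ofReal (rayFlat R a m u z)))
      ≤ ENNReal.ofReal C *
        ∫⁻ w : sphere (0 : Ed d) 1, ENNReal.ofReal ((rayInt R n w) ^ 2) ∂(om d) := by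
  have hKpos : 0 < K := by linarith
  set c : ℝ := m₀ / 2 * (1 / 2) ^ d with hc
  have hcpos : 0 < c := by positivity
  set C₀ : ℝ := 2 ^ d * (1 + 2 ^ (2 * d + 1)) with hC₀
  refine ⟨K * 2 ^ d * (1 * c⁻¹) ^ 2 * 1 * C₀ ^ 2, by positivity, ?_⟩
  intro R m κ a u n hR1 hR2 hm hmK ha ha2 hu hn hu0 huK hnK hun
  have hR : 0 < R := by linarith
  have huabs : ∀ z, |u z| ≤ K := fun z => by rw [abs_of_nonneg (hu0 z)]; exact huK z
  set g : Ed d → ℝ := fun z => a * u z + (1 - a) * m with hg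
  have hgm : Measurable g := by fun_prop
  have hfm := measurable_rayFlat R a m hu
  have hg1 : ∀ z, m₀ / 2 ≤ g z := fun z => by
    have := mul_nonneg ha.le (hu0 z)
    simp only [hg]; nlinarith
  have hgK : ∀ z, g z ≤ K := fun z => by
    simp only [hg]; nlinarith [huK z]
  have hA := fun x => rayAvg_mem hR1 hR2 hu hu0 huK x
  set A : Ed d → ℝ := fun x => a * rayAvg R u x + (1 - a) * m with hAd
  have hAm : Measurable A := ((measurable_rayAvg R hu).const_mul a).add_const _
  have hA1 : ∀ z, m₀ / 2 ≤ A z := fun z => by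
    have := mul_nonneg ha.le (hA z).1
    simp only [hAd]; nlinarith
  have hAK : ∀ z, A z ≤ K := fun z => by
    simp only [hAd]; nlinarith [(hA z).2]
  rw [restrict_ball_split hR, withDensity_add_measure, withDensity_add_measure]
  refine (W2sq_add _ _ _ _).trans ?_
  have hinner : (volume.restrict (ball (0 : Ed d) (R / 2))).withDensity
        (fun z => ENNReal.ofReal (rayFlat R a m u z)) =
      (volume.restrict (ball (0 : Ed d) (R / 2))).withDensity (fun z => ENNReal.ofReal (g z)) := by
    refine withDensity_congr_ae ?_
    filter_upwards [ae_restrict_mem measurableSet_ball] with z hz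
    rw [rayFlat, if_pos (by simpa using hz)]
  rw [hinner, W2sq_self, zero_add, ← map_polar hd (half_pos hR) hgm (measurable_radW R)
    (fun r => (radW_pos hR1 r).le) (fun r hr => radW_eq hr), ← map_polar hd (half_pos hR) hfm
    (measurable_radW R) (fun r => (radW_pos hR1 r).le) (fun r hr => radW_eq hr)]
  have hcongr : ((om d).prod (volume.restrict (Icc (R / 2) R))).withDensity
        (fun z => ENNReal.ofReal (rayFlat R a m u (z.2 • (z.1 : Ed d)) * radW d R z.2)) =
      ((om d).prod (volume.restrict (Icc (R / 2) R))).withDensity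
        (fun z => ENNReal.ofReal (A (z.1 : Ed d) * radW d R z.2)) := by
    refine withDensity_congr_ae ?_
    have := (Measure.quasiMeasurePreserving_snd (μ := om d) (ν := volume.restrict (Icc (R / 2) R))).ae
      (ae_restrict_mem measurableSet_Icc)
    filter_upwards [this] with z hz
    rw [rayFlat_polar hR1 u z.1 hz]
  rw [hcongr]
  have hj0 := fun s => (radW_pos (d := d) hR1 s)
  have hmulK : ∀ t s : ℝ, m₀ / 2 ≤ t → t ≤ K → |t * radW d R s| ≤ K * 2 ^ d := by
    intro t s h1 h2
    rw [abs_mul, abs_of_pos (hj0 s), abs_of_nonneg (by linarith)]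
    exact mul_le_mul h2 (radW_le hR1 hR2 s) (hj0 s).le hKpos.le
  have hgs : Measurable fun z : sphere (0 : Ed d) 1 × ℝ => g (z.2 • (z.1 : Ed d)) := hgm.comp (by fun_prop)
  have hAs : Measurable fun z : sphere (0 : Ed d) 1 × ℝ => A (z.1 : Ed d) := hAm.comp (by fun_prop)
  have hgabs : ∀ z, |g z| ≤ K := fun z => by
    rw [abs_of_nonneg (by linarith [hg1 z])]; exact hgK z
  refine (W2sq_line_le (om d) (a := R / 2) (b := R) (c := c) (K := K * 2 ^ d) (L := 1) (by linarith) hcpos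
    (p := fun w s => g (s • (w : Ed d)) * radW d R s) (q := fun w s => A (w : Ed d) * radW d R s)
    (hgs.mul ((measurable_radW R).comp measurable_snd)) (hAs.mul ((measurable_radW R).comp measurable_snd))
    (fun w s => hmulK _ s (hg1 _) (hgK _)) (fun w s => hmulK _ s (hA1 _) (hAK _))
    (fun w s => mul_nonneg (by linarith [hg1 (s • (w : Ed d))]) (hj0 s).le)
    (fun w s => mul_le_mul (hA1 _) (le_radW hR1 s) (by positivity) (by linarith [hA1 w])) ?_
    (F := fun z => z.2 • (z.1 : Ed d)) (by fun_prop) ?_).trans ?_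
  · intro w
    have e1 : (fun s => g (s • (w : Ed d)) * radW d R s) = fun s =>
        a * (u (s • (w : Ed d)) * radW d R s) + (1 - a) * m * radW d R s := by
      funext s; simp only [hg]; ring
    rw [e1, integral_add ((integrableOn_ray_radW hR1 hR2 hu huabs _).const_mul a)
      ((integrableOn_radW hR1 hR2).const_mul _), integral_const_mul, integral_const_mul,
      ← rayAvg_mul hR1 hR2, integral_const_mul]
    simp only [hAd]; ring
  · intro w r _ s _
    have hw : ‖(w : Ed d)‖ = 1 := by simpa using w.2
    simp only [← sub_smul, norm_smul, hw, Real.norm_eq_abs, mul_one, one_mul, le_refl]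
  · have hpt : ∀ w : sphere (0 : Ed d) 1, ENNReal.ofReal ((∫ s in Icc (R / 2) R,
        |g (s • (w : Ed d)) * radW d R s - A (w : Ed d) * radW d R s|) ^ 2) ≤
        ENNReal.ofReal (C₀ ^ 2) * ENNReal.ofReal ((rayInt R n w) ^ 2) := by
      intro w
      rw [← ENNReal.ofReal_mul (by positivity), ← mul_pow]
      refine ENNReal.ofReal_le_ofReal (pow_le_pow_left₀ (integral_nonneg fun _ => abs_nonneg _) ?_ 2)
      have hN0 : 0 ≤ rayInt R n w := integral_nonneg fun s => (abs_nonneg _).trans (hun _)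
      have hdev := abs_rayAvg_sub_le hR1 hR2 hu hn huabs hnK hun (w : Ed d)
      have hIn := integrableOn_ray (R := R) hn hnK (w : Ed d)
      have hcst : IntegrableOn (fun _ : ℝ => 2 ^ (2 * d + 1) * rayInt R n w) (Icc (R / 2) R) :=
        integrableOn_const (by simp)
      calc ∫ s in Icc (R / 2) R, |g (s • (w : Ed d)) * radW d R s - A (w : Ed d) * radW d R s|
          ≤ ∫ s in Icc (R / 2) R, 2 ^ d * (n (s • (w : Ed d)) + 2 ^ (2 * d + 1) * rayInt R n w) := by
            refine integral_mono_of_nonneg (Filter.Eventually.of_forall fun _ => abs_nonneg _)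
              ((hIn.add hcst).const_mul _) (Filter.Eventually.of_forall fun s => ?_)
            have e2 : g (s • (w : Ed d)) * radW d R s - A (w : Ed d) * radW d R s =
                radW d R s * (a * ((u (s • (w : Ed d)) - κ) - (rayAvg R u w - κ))) := by
              simp only [hg, hAd]; ring
            simp only
            rw [e2, abs_mul, abs_of_pos (hj0 s)]
            refine mul_le_mul (radW_le hR1 hR2 s) ?_ (abs_nonneg _) (by positivity)
            rw [abs_mul, abs_of_pos ha]
            refine (mul_le_of_le_one_left (abs_nonneg _) (by linarith)).trans ?_
            exact (abs_sub _ _).trans (add_le_add (hun _) hdev)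
        _ = 2 ^ d * (rayInt R n w + (R - R / 2) * (2 ^ (2 * d + 1) * rayInt R n w)) := by
            rw [integral_const_mul, integral_add hIn hcst, setIntegral_const, smul_eq_mul, Measure.real,
              Real.volume_Icc, ENNReal.toReal_ofReal (by linarith)]
            rfl
        _ ≤ C₀ * rayInt R n w := by
            have : (R - R / 2) * (2 ^ (2 * d + 1) * rayInt R n w) ≤ 2 ^ (2 * d + 1) * rayInt R n w :=
              mul_le_of_le_one_left (by positivity) (by linarith)
            rw [hC₀, mul_assoc]
            refine mul_le_mul_of_nonneg_left ?_ (by positivity)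
            linarith
    refine (mul_le_mul_right (lintegral_mono hpt) _).trans ?_
    rw [lintegral_const_mul' _ _ ENNReal.ofReal_ne_top, ← mul_assoc, ← ENNReal.ofReal_mul
      (mul_nonneg (by positivity) (by linarith))]
    refine mul_le_mul_left (ENNReal.ofReal_le_ofReal ?_) _
    have : R - R / 2 ≤ 1 := by linarith
    gcongr

end BallDefectMain

section BallDefectFinal

variable {d : ℕ}

lemma lintegral_rayFlat_sub_sq_le (hd : 1 ≤ d) {R K κ a m : ℝ} (hR1 : 1 ≤ R) (hR2 : R ≤ 5 / 4)
    (hK : 0 < K) (ha : 0 < a) (ha2 : a ≤ 1 / 2) {u n₁ n₂ : Ed d → ℝ} (hu : Measurable u)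
    (h1 : Measurable n₁) (h2 : Measurable n₂) (hu0 : ∀ z, 0 ≤ u z) (huK : ∀ z, u z ≤ K)
    (h10 : ∀ z, 0 ≤ n₁ z) (h20 : ∀ z, 0 ≤ n₂ z) (h1K : ∀ z, n₁ z ≤ K) (h2K : ∀ z, n₂ z ≤ K)
    (hun : ∀ z, |u z - κ| ≤ n₁ z + n₂ z) :
    ∫⁻ z in ball (0 : Ed d) R, ENNReal.ofReal ((rayFlat R a m u z - (a * κ + (1 - a) * m)) ^ 2) ≤
      ENNReal.ofReal (4 * K + 2 ^ d * (2 ^ (2 * d + 1)) ^ 2 * (16 * K * 2 ^ d)) *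
        ∫⁻ z in ball (0 : Ed d) R, ENNReal.ofReal ((R - ‖z‖) * n₁ z + n₂ z) := by
  have hR : 0 < R := by linarith
  have huabs : ∀ z, |u z| ≤ K := fun z => by rw [abs_of_nonneg (hu0 z)]; exact huK z
  set n : Ed d → ℝ := fun z => n₁ z + n₂ z with hn
  have hnm : Measurable n := h1.add h2
  have hnK : ∀ z, |n z| ≤ 2 * K := fun z => by
    rw [abs_of_nonneg (add_nonneg (h10 z) (h20 z))]; linarith [h1K z, h2K z]
  set k := a * κ + (1 - a) * m with hk
  set h : Ed d → ℝ := fun z => (rayFlat R a m u z - k) ^ 2 with hh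
  have hhm : Measurable h := ((measurable_rayFlat R a m hu).sub_const k).pow_const 2
  have hray := lintegral_rayInt_sq_le hd hR1 hR2 hK h1 h2 h10 h20 h1K h2K
  have hin : ∫⁻ z in ball (0 : Ed d) (R / 2), ENNReal.ofReal (h z) ≤ ENNReal.ofReal (4 * K) *
      ∫⁻ z in ball (0 : Ed d) R, ENNReal.ofReal ((R - ‖z‖) * n₁ z + n₂ z) := by
    calc ∫⁻ z in ball (0 : Ed d) (R / 2), ENNReal.ofReal (h z)
        ≤ ∫⁻ z in ball (0 : Ed d) (R / 2), ENNReal.ofReal (4 * K) *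
            ENNReal.ofReal ((R - ‖z‖) * n₁ z + n₂ z) := by
          refine setLIntegral_mono (by fun_prop) fun z hz => ?_
          have hz' : ‖z‖ < R / 2 := by simpa using hz
          rw [← ENNReal.ofReal_mul (by positivity)]
          refine ENNReal.ofReal_le_ofReal ?_
          have e : rayFlat R a m u z - k = a * (u z - κ) := by
            rw [rayFlat, if_pos hz', hk]; ring
          simp only [hh, e, mul_pow]
          have hx := hun z
          have hx0 := abs_nonneg (u z - κ)
          have hs : (u z - κ) ^ 2 ≤ (n₁ z + n₂ z) * (2 * K) := by
            rw [← sq_abs, sq]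
            exact mul_le_mul hx (hx.trans (by linarith [h1K z, h2K z])) hx0 (by linarith [h10 z, h20 z])
          have ha1 : a ^ 2 ≤ 1 := by nlinarith
          have h3 : n₁ z ≤ 2 * ((R - ‖z‖) * n₁ z) := by nlinarith [h10 z]
          have h4 : a ^ 2 * (u z - κ) ^ 2 ≤ (u z - κ) ^ 2 := mul_le_of_le_one_left (sq_nonneg _) ha1
          nlinarith [h20 z]
      _ = ENNReal.ofReal (4 * K) * ∫⁻ z in ball (0 : Ed d) (R / 2),
            ENNReal.ofReal ((R - ‖z‖) * n₁ z + n₂ z) := lintegral_const_mul' _ _ ENNReal.ofReal_ne_top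
      _ ≤ _ := by
          gcongr
          linarith
  have hout : ∫⁻ z in {z : Ed d | R / 2 ≤ ‖z‖ ∧ ‖z‖ ≤ R}, ENNReal.ofReal (h z) ≤
      ENNReal.ofReal (2 ^ d * (2 ^ (2 * d + 1)) ^ 2 * (16 * K * 2 ^ d)) *
      ∫⁻ z in ball (0 : Ed d) R, ENNReal.ofReal ((R - ‖z‖) * n₁ z + n₂ z) := by
    have hmp := map_polar hd (half_pos hR) hhm (measurable_radW (d := d) R)
      (fun r => (radW_pos hR1 r).le) (fun r hr => radW_eq hr)
    have e1 := congrArg (fun ν : Measure (Ed d) => ν univ) hmp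
    simp only [withDensity_apply _ MeasurableSet.univ, Measure.restrict_univ] at e1
    rw [← e1, Measure.map_apply (by fun_prop) MeasurableSet.univ, preimage_univ,
      withDensity_apply _ MeasurableSet.univ, Measure.restrict_univ]
    have hri : Measurable fun w : sphere (0 : Ed d) 1 => (rayInt R n w) ^ 2 :=
      ((measurable_rayInt R hnm).comp measurable_subtype_coe).pow_const 2
    calc ∫⁻ z, ENNReal.ofReal (h (z.2 • (z.1 : Ed d)) * radW d R z.2)
          ∂((om d).prod (volume.restrict (Icc (R / 2) R)))
        ≤ ∫⁻ z, ENNReal.ofReal (2 ^ d * (2 ^ (2 * d + 1)) ^ 2) *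
            ENNReal.ofReal ((rayInt R n (z.1 : Ed d)) ^ 2)
            ∂((om d).prod (volume.restrict (Icc (R / 2) R))) := by
          refine lintegral_mono_ae ?_
          have := (Measure.quasiMeasurePreserving_snd (μ := om d)
            (ν := volume.restrict (Icc (R / 2) R))).ae (ae_restrict_mem measurableSet_Icc)
          filter_upwards [this] with z hz
          rw [← ENNReal.ofReal_mul (by positivity)]
          refine ENNReal.ofReal_le_ofReal ?_
          have e2 : rayFlat R a m u (z.2 • (z.1 : Ed d)) - k = a * (rayAvg R u z.1 - κ) := by
            rw [rayFlat_polar hR1 u z.1 hz, hk]; ring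
          have hdev := abs_rayAvg_sub_le hR1 hR2 hu hnm huabs hnK hun (z.1 : Ed d)
          simp only [hh, e2]
          rw [mul_comm, mul_assoc, ← mul_pow]
          refine mul_le_mul (radW_le hR1 hR2 _) ?_ (sq_nonneg _) (by positivity)
          rw [← sq_abs (a * _), abs_mul, abs_of_pos ha]
          refine pow_le_pow_left₀ (by positivity) ?_ 2
          exact (mul_le_of_le_one_left (abs_nonneg _) (by linarith)).trans hdev
      _ = ENNReal.ofReal (R - R / 2) * (ENNReal.ofReal (2 ^ d * (2 ^ (2 * d + 1)) ^ 2) *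
            ∫⁻ w : sphere (0 : Ed d) 1, ENNReal.ofReal ((rayInt R n w) ^ 2) ∂(om d)) := by
          rw [lintegral_const_mul' _ _ ENNReal.ofReal_ne_top, lintegral_prod _
            (by exact (hri.comp measurable_fst).ennreal_ofReal.aemeasurable)]
          simp only [lintegral_const, Measure.restrict_apply_univ, Real.volume_Icc]
          rw [lintegral_mul_const' _ _ ENNReal.ofReal_ne_top]
          ring
      _ ≤ 1 * (ENNReal.ofReal (2 ^ d * (2 ^ (2 * d + 1)) ^ 2) * (ENNReal.ofReal (16 * K * 2 ^ d) *
            ∫⁻ z in ball (0 : Ed d) R, ENNReal.ofReal ((R - ‖z‖) * n₁ z + n₂ z))) := by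
          gcongr
          rw [ENNReal.ofReal_le_one]; linarith
      _ = _ := by
          rw [one_mul, ← mul_assoc, ← ENNReal.ofReal_mul (by positivity)]
  conv_lhs => rw [restrict_ball_split hR]
  rw [lintegral_add_measure, ENNReal.ofReal_add (by positivity) (by positivity), add_mul]
  exact add_le_add hin hout

/-- A bounded density on a ball whose deviation from a constant `κ` is bounded by `n₁ + n₂` is
close to the uniform density of the same mass; the part `n₁` of the deviation is only counted with
the distance to the boundary as a weight. -/
lemma W2sq_ball_le (d : ℕ) (hd : 1 ≤ d) {m₀ K : ℝ} (hm₀ : 0 < m₀) (hK : m₀ ≤ K) :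
    ∃ C : ℝ, 0 < C ∧ ∀ (R m κ : ℝ) (u n₁ n₂ : Ed d → ℝ), 1 ≤ R → R ≤ 5 / 4 → m₀ ≤ m → m ≤ K →
      Measurable u → Measurable n₁ → Measurable n₂ → (∀ z, 0 ≤ u z) → (∀ z, u z ≤ K) →
      (∀ z, 0 ≤ n₁ z) → (∀ z, 0 ≤ n₂ z) → (∀ z, n₁ z ≤ K) → (∀ z, n₂ z ≤ K) →
      (∀ z, |u z - κ| ≤ n₁ z + n₂ z) → (∫ z in ball (0 : Ed d) R, (u z - m)) = 0 →
      W2sq ((volume.restrict (ball (0 : Ed d) R)).withDensity (fun z => ENNReal.ofReal (u z)))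
        ((volume.restrict (ball (0 : Ed d) R)).withDensity (fun _ => ENNReal.ofReal m)) ≤
      ENNReal.ofReal C * ∫⁻ z in ball (0 : Ed d) R, ENNReal.ofReal ((R - ‖z‖) * n₁ z + n₂ z) := by
  have hKpos : 0 < K := by linarith
  obtain ⟨η, C₁, hη, hC₁, hflat⟩ := W2sq_ball_flat_le d hd hm₀ hK
  obtain ⟨C₂, hC₂, hrf⟩ := W2sq_rayFlat_le hd hm₀ hK
  set a : ℝ := min (1 / 2) (η / K) with had
  have ha : 0 < a := lt_min (by norm_num) (by positivity)
  have ha2 : a ≤ 1 / 2 := min_le_left _ _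
  have haη : a * K ≤ η := (le_div_iff₀ hKpos).1 (min_le_right _ _)
  set C₃ : ℝ := 4 * K + 2 ^ d * (2 ^ (2 * d + 1)) ^ 2 * (16 * K * 2 ^ d) with hC₃
  refine ⟨2 / a ^ 3 * (2 * (C₂ * (16 * K * 2 ^ d)) + 2 * (C₁ * C₃)), by positivity, ?_⟩
  intro R m κ u n₁ n₂ hR1 hR2 hm hmK hu h1 h2 hu0 huK h10 h20 h1K h2K hun hmean
  have hR : 0 < R := by linarith
  set B := volume.restrict (ball (0 : Ed d) R) with hB
  have hBf : IsFiniteMeasure B := ⟨by rw [hB]; simp [measure_ball_lt_top]⟩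
  set I := ∫⁻ z in ball (0 : Ed d) R, ENNReal.ofReal ((R - ‖z‖) * n₁ z + n₂ z) with hI
  have hfin : ∀ (v : Ed d → ℝ) (M : ℝ), (∀ z, v z ≤ M) →
      IsFiniteMeasure (B.withDensity fun z => ENNReal.ofReal (v z)) := fun v M hv =>
    ⟨by
      rw [withDensity_apply _ MeasurableSet.univ, Measure.restrict_univ]
      refine (lintegral_mono fun z => ENNReal.ofReal_le_ofReal (hv z)).trans_lt ?_
      rw [lintegral_const]
      exact ENNReal.mul_lt_top ENNReal.ofReal_lt_top (measure_lt_top _ _)⟩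
  have hmass : ∀ v : Ed d → ℝ, (∀ z, 0 ≤ v z) → (∀ z, v z ≤ K) → Measurable v →
      (B.withDensity fun z => ENNReal.ofReal (v z)) univ = ENNReal.ofReal (∫ z, v z ∂B) := by
    intro v hv0 hvK hv
    rw [withDensity_apply _ MeasurableSet.univ, Measure.restrict_univ,
      ofReal_integral_eq_lintegral_ofReal _ (Filter.Eventually.of_forall hv0)]
    exact Integrable.of_bound hv.aestronglyMeasurable K (Filter.Eventually.of_forall fun z => by
      rw [Real.norm_eq_abs, abs_of_nonneg (hv0 z)]; exact hvK z)
  have hm0 : 0 ≤ m := by linarith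
  have hInt : ∀ v : Ed d → ℝ, (∀ z, 0 ≤ v z) → (∀ z, v z ≤ K) → Measurable v → Integrable v B :=
    fun v hv0 hvK hv => Integrable.of_bound hv.aestronglyMeasurable K
      (Filter.Eventually.of_forall fun z => by
        rw [Real.norm_eq_abs, abs_of_nonneg (hv0 z)]; exact hvK z)
  set α := B.withDensity fun z => ENNReal.ofReal (u z) with hα
  set β := B.withDensity fun _ => ENNReal.ofReal m with hβ
  have hαf : IsFiniteMeasure α := hfin u K huK
  have hβf : IsFiniteMeasure β := hfin (fun _ => m) K fun _ => hmK
  have hint_u : ∫ z, u z ∂B = ∫ _z, m ∂B := by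
    have := hmean
    rw [integral_sub (hInt u hu0 huK hu) (integrable_const m)] at this
    linarith
  have hαβ : α univ = β univ := by
    rw [hα, hβ, hmass u hu0 huK hu, hmass (fun _ => m) (fun _ => hm0) (fun _ => hmK) measurable_const,
      hint_u]
  have haeB : ∀ᵐ z ∂B, ‖z‖ ≤ R := by
    filter_upwards [ae_restrict_mem measurableSet_ball] with z hz
    exact (by simpa using hz : ‖z‖ < R).le
  have hW : W2sq α β ≠ ∞ := by
    refine ne_top_of_le_ne_top ?_ (W2sq_le_mass (r := R) α β hαβ
      ((withDensity_absolutelyContinuous _ _).ae_le haeB)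
      ((withDensity_absolutelyContinuous _ _).ae_le haeB))
    exact ENNReal.mul_ne_top ENNReal.ofReal_ne_top (measure_ne_top _ _)
  have hmix : ENNReal.ofReal a • α + ENNReal.ofReal (1 - a) • β =
      B.withDensity fun z => ENNReal.ofReal (a * u z + (1 - a) * m) := by
    rw [hα, hβ, ← withDensity_smul _ (by fun_prop), ← withDensity_smul _ (by fun_prop),
      ← withDensity_add_left (by fun_prop)]
    congr 1
    funext z
    simp only [Pi.add_apply, Pi.smul_apply, smul_eq_mul]
    rw [← ENNReal.ofReal_mul ha.le, ← ENNReal.ofReal_mul (by linarith),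
      ← ENNReal.ofReal_add (mul_nonneg ha.le (hu0 z)) (mul_nonneg (by linarith) hm0)]
  set F := rayFlat R a m u with hF
  have hFm : Measurable F := measurable_rayFlat R a m hu
  have hAv := fun x => rayAvg_mem hR1 hR2 hu hu0 huK x
  have hFmem : ∀ z, ∃ t, 0 ≤ t ∧ t ≤ K ∧ F z = a * t + (1 - a) * m := by
    intro z
    by_cases hz : ‖z‖ < R / 2
    · exact ⟨u z, hu0 z, huK z, by rw [hF, rayFlat, if_pos hz]⟩
    · exact ⟨_, (hAv (‖z‖⁻¹ • z)).1, (hAv _).2, by rw [hF, rayFlat, if_neg hz]⟩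
  have hF0 : ∀ z, 0 ≤ F z := fun z => by
    obtain ⟨t, ht, _, e⟩ := hFmem z
    rw [e]; exact add_nonneg (mul_nonneg ha.le ht) (mul_nonneg (by linarith) hm0)
  have hFK : ∀ z, F z ≤ K := fun z => by
    obtain ⟨t, ht, htK, e⟩ := hFmem z
    rw [e]; nlinarith
  have hFη : ∀ z, |F z - m| ≤ η := fun z => by
    obtain ⟨t, ht, htK, e⟩ := hFmem z
    have : F z - m = a * (t - m) := by rw [e]; ring
    rw [this, abs_mul, abs_of_pos ha]
    refine (mul_le_mul_of_nonneg_left ?_ ha.le).trans haη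
    rw [abs_le]; constructor <;> linarith
  have hFf : IsFiniteMeasure (B.withDensity fun z => ENNReal.ofReal (F z)) := hfin F K hFK
  set n : Ed d → ℝ := fun z => n₁ z + n₂ z with hn
  have hfirst := hrf R m κ a u n hR1 hR2 hm hmK ha ha2 hu (h1.add h2) hu0 huK
    (fun z => by
      rw [abs_of_nonneg (add_nonneg (h10 z) (h20 z))]
      linarith [h1K z, h2K z]) hun
  have hfirst' : W2sq (B.withDensity fun z => ENNReal.ofReal (a * u z + (1 - a) * m))
      (B.withDensity fun z => ENNReal.ofReal (F z)) ≤ ENNReal.ofReal (C₂ * (16 * K * 2 ^ d)) * I := by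
    refine hfirst.trans ?_
    rw [ENNReal.ofReal_mul hC₂.le, mul_assoc]
    gcongr
    exact lintegral_rayInt_sq_le hd hR1 hR2 hKpos h1 h2 h10 h20 h1K h2K
  have hIfin : I ≠ ∞ := by
    refine ne_top_of_le_ne_top ?_ (setLIntegral_mono (g := fun _ => ENNReal.ofReal (3 * K))
      measurable_const fun z hz => ENNReal.ofReal_le_ofReal ?_)
    · rw [lintegral_const]
      exact ENNReal.mul_ne_top ENNReal.ofReal_ne_top (measure_ne_top B _)
    · have : ‖z‖ < R := by simpa using hz
      nlinarith [h1K z, h2K z, h10 z, norm_nonneg z]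
  have hFmass : ∫ z, (F z - m) ∂B = 0 := by
    have e := measure_univ_eq_of_W2sq_ne_top
      (ne_top_of_le_ne_top (ENNReal.mul_ne_top ENNReal.ofReal_ne_top hIfin) hfirst')
    have hg0 : ∀ z, 0 ≤ a * u z + (1 - a) * m := fun z =>
      add_nonneg (mul_nonneg ha.le (hu0 z)) (mul_nonneg (by linarith) hm0)
    have hgK : ∀ z, a * u z + (1 - a) * m ≤ K := fun z => by nlinarith [huK z]
    rw [hmass _ hg0 hgK (by fun_prop), hmass F hF0 hFK hFm, ENNReal.ofReal_eq_ofReal_iff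
      (integral_nonneg hg0) (integral_nonneg hF0), integral_add ((hInt u hu0 huK hu).const_mul a)
      (integrable_const _), integral_const_mul, hint_u, ← integral_const_mul] at e
    rw [integral_sub (hInt F hF0 hFK hFm) (integrable_const m), ← e]
    simp only [integral_const, smul_eq_mul]
    ring
  have hsecond : W2sq (B.withDensity fun z => ENNReal.ofReal (F z)) β ≤
      ENNReal.ofReal (C₁ * C₃) * I := by
    refine (hflat R m F hR1 hR2 hm hmK hFm hFη hFmass).trans ?_
    rw [ENNReal.ofReal_mul hC₁.le, mul_assoc]
    gcongr
    refine (lintegral_sq_sub_mean_le B hFm (M := K)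
      (fun z => by rw [abs_of_nonneg (hF0 z)]; exact hFK z) hFmass (a * κ + (1 - a) * m)).trans ?_
    exact lintegral_rayFlat_sub_sq_le hd hR1 hR2 hKpos ha ha2 hu h1 h2 hu0 huK h10 h20 h1K h2K hun
  refine (W2sq_le_of_mix ha (by linarith) α β hW).trans ?_
  rw [ENNReal.ofReal_mul (p := 2 / a ^ 3) (by positivity), mul_assoc]
  refine mul_le_mul_right ?_ _
  rw [hmix]
  refine (W2sq_triangle _ (B.withDensity fun z => ENNReal.ofReal (F z)) β).trans ?_
  rw [ENNReal.ofReal_add (by positivity) (by positivity),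
    ENNReal.ofReal_mul (p := 2) (q := C₂ * (16 * K * 2 ^ d)) (by norm_num),
    ENNReal.ofReal_mul (p := 2) (q := C₁ * C₃) (by norm_num), ENNReal.ofReal_ofNat, add_mul,
    mul_assoc 2, mul_assoc 2]
  exact add_le_add (mul_le_mul_right hfirst' _) (mul_le_mul_right hsecond _)

end BallDefectFinal

/-! ### Data distance for a general plan -/

section DataDistance

variable {d : ℕ}

lemma map_restrict_le {Z X : Type*} [MeasurableSpace Z] [MeasurableSpace X] {γ : Measure Z}
    {f : Z → X} (hf : Measurable f) {c : ℝ≥0∞} {m : Measure X} (h : γ.map f ≤ c • m) {S : Set Z}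
    {Y : Set X} (hY : MeasurableSet Y) (hSY : ∀ z ∈ S, f z ∈ Y) :
    (γ.restrict S).map f ≤ c • m.restrict Y := by
  refine Measure.le_iff.2 fun A hA => ?_
  rw [Measure.map_apply hf hA, Measure.restrict_apply (hf hA), Measure.smul_apply,
    Measure.restrict_apply hA]
  calc γ (f ⁻¹' A ∩ S) ≤ γ (f ⁻¹' (A ∩ Y)) := measure_mono fun z hz => ⟨hz.1, hSY z hz.2⟩
    _ = γ.map f (A ∩ Y) := (Measure.map_apply hf (hA.inter hY)).symm
    _ ≤ _ := h (A ∩ Y)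

lemma lintegral_mul_density_eq {Z : Type*} [MeasurableSpace Z] {γ : Measure Z} {f : Z → Ed d}
    (hf : Measurable f) {B : Measure (Ed d)} {θ w : Ed d → ℝ} (hθ : Measurable θ) (hw : Measurable w)
    (hθ0 : ∀ z, 0 ≤ θ z) (h : γ.map f = B.withDensity fun z => ENNReal.ofReal (θ z)) :
    ∫⁻ z, ENNReal.ofReal (w z * θ z) ∂B = ∫⁻ p, ENNReal.ofReal (w (f p)) ∂γ := by
  have hw' : Measurable fun z => ENNReal.ofReal (w z) := hw.ennreal_ofReal
  rw [← lintegral_map (f := fun z => ENNReal.ofReal (w z)) hw' hf, h,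
    lintegral_withDensity_eq_lintegral_mul _ hθ.ennreal_ofReal hw']
  refine lintegral_congr fun z => ?_
  rw [Pi.mul_apply, mul_comm, ENNReal.ofReal_mul (hθ0 z)]

lemma map_quarter_le {S : Set (Ed d)} (hS : S ⊆ ball 0 2) {R : ℝ} (hR : 1 ≤ R) :
    (volume.restrict S).map (fun x : Ed d => (1 / 4 : ℝ) • x) ≤
      ENNReal.ofReal (4 ^ d) • volume.restrict (ball (0 : Ed d) R) := by
  have hm : Measurable fun x : Ed d => (1 / 4 : ℝ) • x := by fun_prop
  refine Measure.le_iff.2 fun A hA => ?_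
  rw [Measure.map_apply hm hA, Measure.restrict_apply (hm hA), Measure.smul_apply,
    Measure.restrict_apply hA]
  have := volume_inter_preimage_le (S := S) (f := fun x : Ed d => (1 / 4 : ℝ) • x) (K := 4)
    (fun x _ y _ => by
      rw [dist_smul₀, Real.norm_of_nonneg (by norm_num), NNReal.coe_ofNat]; linarith) (A ∩ ball 0 R)
  calc volume ((fun x : Ed d => (1 / 4 : ℝ) • x) ⁻¹' A ∩ S)
      ≤ volume (S ∩ (fun x : Ed d => (1 / 4 : ℝ) • x) ⁻¹' (A ∩ ball 0 R)) := by
        refine measure_mono fun x hx => ⟨hx.2, hx.1, ?_⟩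
        have h2 : ‖x‖ < 2 := by simpa using hS hx.2
        rw [mem_ball_zero_iff, norm_smul, Real.norm_of_nonneg (by norm_num)]
        linarith
    _ ≤ _ := this
    _ = _ := by
        rw [smul_eq_mul, ENNReal.ofReal_pow (by norm_num), ENNReal.ofReal_ofNat]; rfl

/-- **Data distance.** Let `γ` couple a part of Lebesgue measure (first marginal) with a multiple of
Lebesgue measure near `B_R` (second marginal). The image of `G` under `src` is close to uniform
on `B_R`, provided `src x` is close to `y` and lies in `B_R` for `x ∈ G`, and pairs with `x ∉ G`
and `y ∈ B_R` have `y` close to the boundary. -/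
lemma data_distance (d : ℕ) (hd : 1 ≤ d) {m₀ κ₁ : ℝ} (hm₀ : 0 < m₀) (hκ₁ : 0 < κ₁) :
    ∃ C : ℝ, 0 < C ∧ ∀ (R κ : ℝ) (γ : Measure (Ed d × Ed d)) (ℓ : Ed d × Ed d → ℝ) (G : Set (Ed d))
      (src : Ed d → Ed d), 1 ≤ R → R ≤ 5 / 4 → 0 ≤ κ → κ ≤ κ₁ → IsFiniteMeasure γ →
      γ.map Prod.snd ≤ ENNReal.ofReal κ • volume →
      (γ.map Prod.snd).restrict (ball 0 R) = ENNReal.ofReal κ • volume.restrict (ball 0 R) →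
      MeasurableSet G → G ⊆ ball 0 2 → (γ.map Prod.fst).restrict G = volume.restrict G →
      Measurable ℓ → (∀ p, 0 ≤ ℓ p) → Measurable src →
      (∀ p : Ed d × Ed d, p.1 ∈ G → ‖src p.1‖ ≤ R ∧ ‖src p.1 - p.2‖ ≤ ℓ p) →
      (∀ᵐ p ∂γ, p.1 ∉ G → ‖p.2‖ < R → R - ‖p.2‖ ≤ ℓ p) →
      ENNReal.ofReal m₀ * volume (ball (0 : Ed d) R) ≤ volume G →
      W2sq ((volume.restrict G).map src)
        ((volume G / volume (ball (0 : Ed d) R)) • volume.restrict (ball 0 R)) ≤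
      ENNReal.ofReal C * (∫⁻ p, ENNReal.ofReal (ℓ p ^ 2) ∂γ +
        ∫⁻ p in {p | |‖p.2‖ - R| ≤ ℓ p}, ENNReal.ofReal (ℓ p) ∂γ) := by
  set K : ℝ := κ₁ * (1 + ((5 / 4) ^ 2) ^ d) + 4 ^ d + 2 ^ d + m₀ with hK
  have hmK : m₀ ≤ K := by
    have : 0 ≤ κ₁ * (1 + ((5 / 4) ^ 2) ^ d) + 4 ^ d + 2 ^ d := by positivity
    linarith
  obtain ⟨C, hC, hball⟩ := W2sq_ball_le d hd hm₀ hmK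
  refine ⟨2 * 64 + 2 * (C * 16), by positivity, ?_⟩
  intro R κ γ ℓ G src hR1 hR2 hκ0 hκ hγf hγ2 hγB hG hG2 hγ1 hℓ hℓ0 hsrc hin hout hmass
  have hR : 0 < R := by linarith
  set B := volume.restrict (ball (0 : Ed d) R) with hB
  have hBf : IsFiniteMeasure B := ⟨by rw [hB]; simp [measure_ball_lt_top]⟩
  have hBB : B = volume.restrict (closedBall (0 : Ed d) R) := restrict_ball_eq_closedBall hR
  have hf1 : Measurable (Prod.fst : Ed d × Ed d → Ed d) := measurable_fst
  have hf2 : Measurable (Prod.snd : Ed d × Ed d → Ed d) := measurable_snd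
  have hnm : Measurable fun p : Ed d × Ed d => ‖p.2‖ := by fun_prop
  -- the four pieces of the coupling
  set Gs : Set (Ed d × Ed d) := Prod.fst ⁻¹' G with hGs
  have hGsm : MeasurableSet Gs := hf1 hG
  set N : Set (Ed d × Ed d) := {p | ‖p.2‖ < R} with hN
  have hNm : MeasurableSet N := measurableSet_lt hnm measurable_const
  set M : Set (Ed d × Ed d) := {p | ‖p.2‖ < 5 / 4 * R} with hM
  have hMm : MeasurableSet M := measurableSet_lt hnm measurable_const
  set S1 := Gs ∩ N with hS1
  set S2 := (Gs \ N) ∩ M with hS2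
  set S3 := (Gs \ N) \ M with hS3
  set Sin := N \ Gs with hSin
  have hS1m : MeasurableSet S1 := hGsm.inter hNm
  have hS2m : MeasurableSet S2 := (hGsm.diff hNm).inter hMm
  have hS3m : MeasurableSet S3 := (hGsm.diff hNm).diff hMm
  have hSinm : MeasurableSet Sin := hNm.diff hGsm
  have hsplit : γ.restrict Gs = γ.restrict S1 + (γ.restrict S2 + γ.restrict S3) := by
    rw [hS2, hS3, Measure.restrict_inter_add_sdiff _ hMm, hS1, Measure.restrict_inter_add_sdiff _ hNm]
  have hsplitN : γ.restrict N = γ.restrict S1 + γ.restrict Sin := by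
    rw [hS1, inter_comm, hSin, Measure.restrict_inter_add_sdiff _ hGsm]
  -- the rearranged endpoint
  set P : Ed d × Ed d → Ed d := fun p => if ‖p.2‖ < 5 / 4 * R then fold R p.2 else (1 / 4 : ℝ) • p.1
    with hP
  have hfold : Measurable fun p : Ed d × Ed d => fold R p.2 := (measurable_fold R).comp hf2
  have hPm : Measurable P := Measurable.ite hMm hfold (by fun_prop)
  have hP1 : (γ.restrict S1).map P = (γ.restrict S1).map Prod.snd := by
    refine Measure.map_congr ?_
    filter_upwards [ae_restrict_mem hS1m] with p hp
    have h1 : ‖p.2‖ < R := hp.2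
    simp only [hP]
    rw [if_pos (by linarith), fold_of_lt h1]
  have hP2 : (γ.restrict S2).map P = (γ.restrict S2).map (fun p => fold R p.2) := by
    refine Measure.map_congr ?_
    filter_upwards [ae_restrict_mem hS2m] with p hp
    simp only [hP]
    exact if_pos hp.2
  have hP3 : (γ.restrict S3).map P = (γ.restrict S3).map (fun p => (1 / 4 : ℝ) • p.1) := by
    refine Measure.map_congr ?_
    filter_upwards [ae_restrict_mem hS3m] with p hp
    simp only [hP]
    exact if_neg hp.2
  -- densities of the pieces
  have hsum : (γ.restrict S1).map Prod.snd + (γ.restrict Sin).map Prod.snd = ENNReal.ofReal κ • B := by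
    rw [← Measure.map_add _ _ hf2, ← hsplitN, ← hγB, Measure.restrict_map hf2 measurableSet_ball]
    congr 2
    ext p; simp [hN]
  obtain ⟨θi, hθim, hθi0, hθiκ, hθi⟩ := exists_bdd_density (m := B)
    (ν := (γ.restrict Sin).map Prod.snd) hκ0 (by rw [← hsum]; exact Measure.le_add_left le_rfl)
  have hle2 : (γ.restrict S2).map (fun p => fold R p.2) ≤
      ENNReal.ofReal (κ * ((5 / 4) ^ 2) ^ d) • B := by
    set Y : Set (Ed d) := {y | R ≤ ‖y‖ ∧ ‖y‖ ≤ 5 / 4 * R} with hY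
    have hYm : MeasurableSet Y := (measurableSet_le measurable_const measurable_norm).inter
      (measurableSet_le measurable_norm measurable_const)
    have h1 := map_restrict_le hf2 hγ2 (S := S2) hYm (fun p hp => ⟨not_lt.1 hp.1.2, le_of_lt hp.2⟩)
    have h2 := map_fold_le hR (M := 5 / 4 * R) (by linarith) hYm (fun y hy => hy.1) (fun y hy => hy.2)
    have e : (γ.restrict S2).map (fun p => fold R p.2) = ((γ.restrict S2).map Prod.snd).map (fold R) :=
      (Measure.map_map (measurable_fold R) hf2).symm
    rw [e]
    refine (Measure.map_mono h1 (measurable_fold R)).trans ?_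
    rw [Measure.map_smul, ENNReal.ofReal_mul hκ0, ← smul_smul]
    have e2 : (5 / 4 * R / R : ℝ) = 5 / 4 := by field_simp
    rw [e2] at h2
    exact Measure.le_iff.2 fun A hA => by
      rw [Measure.smul_apply, Measure.smul_apply]
      exact mul_le_mul_right (h2 A) _
  obtain ⟨θ2, hθ2m, hθ20, hθ2κ, hθ2⟩ := exists_bdd_density (m := B) (by positivity) hle2
  have hle3 : (γ.restrict S3).map (fun p => (1 / 4 : ℝ) • p.1) ≤ ENNReal.ofReal (4 ^ d) • B := by
    have e : (γ.restrict S3).map (fun p => (1 / 4 : ℝ) • p.1) =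
        ((γ.restrict S3).map Prod.fst).map (fun x : Ed d => (1 / 4 : ℝ) • x) :=
      (Measure.map_map (by fun_prop) hf1).symm
    rw [e]
    refine (Measure.map_mono ?_ (by fun_prop)).trans (map_quarter_le hG2 hR1)
    rw [← hγ1, Measure.restrict_map hf1 hG]
    exact Measure.map_mono (Measure.restrict_mono (fun p hp => hp.1.1) le_rfl) hf1
  obtain ⟨θ3, hθ3m, hθ30, hθ3κ, hθ3⟩ := exists_bdd_density (m := B) (by positivity) hle3
  -- the density of the rearranged measure
  set u : Ed d → ℝ := fun z => (κ - θi z) + (θ2 z + θ3 z) with hu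
  have hum : Measurable u := by fun_prop
  have hd1 : (γ.restrict S1).map Prod.snd = B.withDensity fun z => ENNReal.ofReal (κ - θi z) := by
    have hfin : IsFiniteMeasure ((γ.restrict Sin).map Prod.snd) := inferInstance
    rw [← Measure.add_left_inj ((γ.restrict Sin).map Prod.snd), hsum, hθi,
      ← withDensity_add_left (by fun_prop), ← withDensity_const]
    congr 1
    funext z
    rw [Pi.add_apply, ← ENNReal.ofReal_add (by linarith [hθiκ z]) (hθi0 z)]
    simp
  have hlam : (γ.restrict Gs).map P = B.withDensity fun z => ENNReal.ofReal (u z) := by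
    rw [hsplit, Measure.map_add _ _ hPm, Measure.map_add _ _ hPm, hP1, hP2, hP3, hd1, hθ2, hθ3,
      ← withDensity_add_left (by fun_prop), ← withDensity_add_left (by fun_prop)]
    congr 1
    funext z
    simp only [Pi.add_apply, hu]
    rw [← ENNReal.ofReal_add (hθ20 z) (hθ30 z),
      ← ENNReal.ofReal_add (by linarith [hθiκ z]) (add_nonneg (hθ20 z) (hθ30 z))]
  -- masses
  have hVB0 : volume (ball (0 : Ed d) R) ≠ 0 := (measure_ball_pos _ _ hR).ne'
  have hVBt : volume (ball (0 : Ed d) R) ≠ ∞ := measure_ball_lt_top.ne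
  have hVGt : volume G ≠ ∞ := ne_top_of_le_ne_top measure_ball_lt_top.ne (measure_mono hG2)
  set m : ℝ := (volume G / volume (ball (0 : Ed d) R)).toReal with hm
  have hmt : volume G / volume (ball (0 : Ed d) R) ≠ ∞ := ENNReal.div_ne_top hVGt hVB0
  have hmE : ENNReal.ofReal m = volume G / volume (ball (0 : Ed d) R) := ENNReal.ofReal_toReal hmt
  have hm1 : m₀ ≤ m := by
    rw [← ENNReal.ofReal_le_iff_le_toReal hmt, ENNReal.le_div_iff_mul_le (Or.inl hVB0) (Or.inl hVBt)]
    exact hmass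
  have hm2 : m ≤ 2 ^ d := by
    refine ENNReal.toReal_le_of_le_ofReal (by positivity) ?_
    refine ENNReal.div_le_of_le_mul ((measure_mono hG2).trans ?_)
    rw [volume_ball_eq (by norm_num), volume_ball_eq hR, ← ENNReal.ofReal_mul (by positivity)]
    refine ENNReal.ofReal_le_ofReal ?_
    have : 1 ≤ R ^ d := one_le_pow₀ hR1
    have h0 := ubv_pos d
    have h3 : (0:ℝ) < 2 ^ d := by positivity
    nlinarith [mul_pos h0 h3]
  have hK4 : (0:ℝ) < 4 ^ d := by positivity
  have hK2 : (0:ℝ) < 2 ^ d := by positivity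
  have hKq : (0:ℝ) < ((5 / 4) ^ 2) ^ d := by positivity
  have hκq : κ * ((5 / 4) ^ 2) ^ d ≤ κ₁ * ((5 / 4) ^ 2) ^ d := mul_le_mul_of_nonneg_right hκ hKq.le
  have hKe : K = κ₁ + κ₁ * ((5 / 4) ^ 2) ^ d + 4 ^ d + 2 ^ d + m₀ := by rw [hK]; ring
  have hKq0 : 0 ≤ κ₁ * ((5 / 4) ^ 2) ^ d := by positivity
  have hu0 : ∀ z, 0 ≤ u z := fun z => by
    simp only [hu]; linarith [hθiκ z, hθ20 z, hθ30 z]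
  have huK : ∀ z, u z ≤ K := fun z => by
    simp only [hu]; linarith [hθi0 z, hθ2κ z, hθ3κ z]
  have hmeas_lam : ((γ.restrict Gs).map P) univ = volume G := by
    rw [Measure.map_apply hPm MeasurableSet.univ, preimage_univ, Measure.restrict_apply_univ, hGs,
      ← Measure.map_apply hf1 hG, ← Measure.restrict_apply_univ, hγ1, Measure.restrict_apply_univ]
  have hui : Integrable u B := Integrable.of_bound hum.aestronglyMeasurable K
    (Filter.Eventually.of_forall fun z => by
      rw [Real.norm_eq_abs, abs_of_nonneg (hu0 z)]; exact huK z)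
  have hmean : ∫ z in ball (0 : Ed d) R, (u z - m) = 0 := by
    rw [integral_sub hui (integrable_const m), sub_eq_zero]
    have e : ENNReal.ofReal (∫ z, u z ∂B) = volume G := by
      rw [← hmeas_lam, hlam, withDensity_apply _ MeasurableSet.univ, Measure.restrict_univ,
        ofReal_integral_eq_lintegral_ofReal hui (Filter.Eventually.of_forall hu0)]
    have e' : ∫ z, u z ∂B = (volume G).toReal := by
      rw [← e, ENNReal.toReal_ofReal (integral_nonneg hu0)]
    rw [e', integral_const, smul_eq_mul, Measure.real, Measure.restrict_apply_univ, hm,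
      ENNReal.toReal_div]
    have : (volume (ball (0 : Ed d) R)).toReal ≠ 0 := ENNReal.toReal_ne_zero.2 ⟨hVB0, hVBt⟩
    field_simp
  have hkey := hball R m κ u (fun z => θi z + θ2 z) θ3 hR1 hR2 hm1
    (by linarith) hum (hθim.add hθ2m) hθ3m hu0 huK
    (fun z => add_nonneg (hθi0 z) (hθ20 z)) hθ30 (fun z => by linarith [hθiκ z, hθ2κ z])
    (fun z => by linarith [hθ3κ z]) (fun z => by
      have e : u z - κ = (θ2 z + θ3 z) - θi z := by simp only [hu]; ring
      rw [e, abs_le]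
      constructor <;> linarith [hθi0 z, hθ20 z, hθ30 z]) hmean
  set L2 := ∫⁻ p, ENNReal.ofReal (ℓ p ^ 2) ∂γ with hL2
  set L1 := ∫⁻ p in {p | |‖p.2‖ - R| ≤ ℓ p}, ENNReal.ofReal (ℓ p) ∂γ with hL1
  have hLm : MeasurableSet {p : Ed d × Ed d | |‖p.2‖ - R| ≤ ℓ p} :=
    measurableSet_le (by fun_prop) hℓ
  have hnear : ∀ S : Set (Ed d × Ed d), MeasurableSet S → ∀ w : Ed d × Ed d → ℝ,
      (∀ᵐ p ∂γ, p ∈ S → |‖p.2‖ - R| ≤ ℓ p ∧ w p ≤ ℓ p) →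
      ∫⁻ p in S, ENNReal.ofReal (w p) ∂γ ≤ L1 := by
    intro S hS w hw
    rw [hL1, ← lintegral_indicator hLm, ← lintegral_indicator hS]
    refine lintegral_mono_ae ?_
    filter_upwards [hw] with p hp
    by_cases hpS : p ∈ S
    · rw [indicator_of_mem hpS, indicator_of_mem (show p ∈ {p | |‖p.2‖ - R| ≤ ℓ p} from (hp hpS).1)]
      exact ENNReal.ofReal_le_ofReal (hp hpS).2
    · rw [indicator_of_notMem hpS]; exact zero_le
  have hGy : ∀ p ∈ Gs, ‖p.2‖ - R ≤ ℓ p := fun p hp => by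
    have h1 := hin p hp
    have h2 := norm_sub_norm_le p.2 (src p.1)
    rw [norm_sub_rev] at h2
    linarith
  have hI : ∫⁻ z in ball (0 : Ed d) R, ENNReal.ofReal ((R - ‖z‖) * (θi z + θ2 z) + θ3 z) ≤
      16 * (L2 + L1) := by
    have hRn : Measurable fun z : Ed d => R - ‖z‖ := by fun_prop
    calc ∫⁻ z in ball (0 : Ed d) R, ENNReal.ofReal ((R - ‖z‖) * (θi z + θ2 z) + θ3 z)
        ≤ ∫⁻ z, (ENNReal.ofReal ((R - ‖z‖) * θi z) + ENNReal.ofReal ((R - ‖z‖) * θ2 z) +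
            ENNReal.ofReal (1 * θ3 z)) ∂B := by
          refine lintegral_mono fun z => ?_
          rw [mul_add, one_mul]
          exact ENNReal.ofReal_add_le.trans (add_le_add ENNReal.ofReal_add_le le_rfl)
      _ = ∫⁻ p in Sin, ENNReal.ofReal (R - ‖p.2‖) ∂γ + ∫⁻ p in S2, ENNReal.ofReal (R - ‖fold R p.2‖) ∂γ +
            ∫⁻ _p in S3, ENNReal.ofReal 1 ∂γ := by
          rw [lintegral_add_left (by fun_prop), lintegral_add_left (by fun_prop),
            lintegral_mul_density_eq hf2 hθim hRn hθi0 hθi,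
            lintegral_mul_density_eq hfold hθ2m hRn hθ20 hθ2,
            lintegral_mul_density_eq (w := fun _ => 1) (by fun_prop) hθ3m measurable_const hθ30 hθ3]
      _ ≤ L1 + L1 + 16 * L2 := by
          refine add_le_add (add_le_add ?_ ?_) ?_
          · refine hnear Sin hSinm (fun p => R - ‖p.2‖) ?_
            filter_upwards [hout] with p hp hpS
            have h1 : ‖p.2‖ < R := hpS.1
            have h2 := hp hpS.2 h1
            exact ⟨by rw [abs_of_nonpos (by linarith)]; linarith, h2⟩
          · refine hnear S2 hS2m (fun p => R - ‖fold R p.2‖) (Filter.Eventually.of_forall fun p hpS => ?_)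
            have h1 : R ≤ ‖p.2‖ := not_lt.1 hpS.1.2
            have h2 := hGy p hpS.1.1
            refine ⟨by rw [abs_of_nonneg (by linarith)]; linarith, ?_⟩
            rw [norm_fold_of_le hR h1]
            refine le_trans ?_ h2
            have hy : 0 < ‖p.2‖ := hR.trans_le h1
            have : 2 * R - ‖p.2‖ ≤ R ^ 2 / ‖p.2‖ := by
              rw [le_div_iff₀ hy]; nlinarith [sq_nonneg (R - ‖p.2‖)]
            linarith
          · rw [hL2, ← lintegral_const_mul' _ _ (by norm_num)]
            refine le_trans ?_ (setLIntegral_le_lintegral S3 _)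
            refine setLIntegral_mono (by fun_prop) fun p hpS => ?_
            have h1 : 5 / 4 * R ≤ ‖p.2‖ := not_lt.1 hpS.2
            have h2 := hGy p hpS.1.1
            have h3 : 1 / 4 ≤ ℓ p := by linarith
            rw [show (16 : ℝ≥0∞) = ENNReal.ofReal 16 by simp, ← ENNReal.ofReal_mul (by norm_num)]
            exact ENNReal.ofReal_le_ofReal (by nlinarith)
      _ ≤ 16 * (L2 + L1) := by
          rw [mul_add, add_comm, ← two_mul]
          gcongr
          norm_num
  -- cost of the rearrangement
  have hcost : W2sq ((volume.restrict G).map src) ((γ.restrict Gs).map P) ≤ 64 * L2 := by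
    have e : (volume.restrict G).map src = (γ.restrict Gs).map (fun p => src p.1) := by
      rw [← hγ1, Measure.restrict_map hf1 hG, Measure.map_map hsrc hf1]; rfl
    rw [e]
    refine (W2sq_map_map (γ.restrict Gs) (hsrc.comp hf1) hPm).trans ?_
    rw [hL2, ← lintegral_const_mul' _ _ (by norm_num)]
    refine le_trans ?_ (setLIntegral_le_lintegral Gs _)
    refine setLIntegral_mono (by fun_prop) fun p hpS => ?_
    rw [show (64 : ℝ≥0∞) = ENNReal.ofReal (8 ^ 2) by norm_num, ← ENNReal.ofReal_mul (by norm_num),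
      ← mul_pow]
    refine ENNReal.ofReal_le_ofReal (pow_le_pow_left₀ (norm_nonneg _) ?_ 2)
    obtain ⟨h1, h2⟩ := hin p hpS
    have h3 := hGy p hpS
    have h0 := hℓ0 p
    simp only [Function.comp, hP]
    split_ifs with hif
    · rcases lt_or_ge ‖p.2‖ R with hlt | hge
      · rw [fold_of_lt hlt]; linarith
      · have h4 := norm_sub_fold_le hR hge
        have h5 := norm_sub_le_norm_sub_add_norm_sub (src p.1) p.2 (fold R p.2)
        linarith
    · have h4 : 5 / 4 * R ≤ ‖p.2‖ := not_lt.1 hif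
      have h5 : ‖p.1‖ < 2 := by simpa using hG2 hpS
      have h6 := norm_sub_le (src p.1) ((1 / 4 : ℝ) • p.1)
      rw [norm_smul, Real.norm_of_nonneg (by norm_num)] at h6
      linarith
  have hlamf : IsFiniteMeasure ((γ.restrict Gs).map P) := inferInstance
  refine (W2sq_triangle _ ((γ.restrict Gs).map P) _).trans ?_
  have hkey' : W2sq ((γ.restrict Gs).map P) ((volume G / volume (ball (0 : Ed d) R)) • B) ≤
      ENNReal.ofReal C * (16 * (L2 + L1)) := by
    rw [hlam, ← hmE, ← withDensity_const]
    exact hkey.trans (mul_le_mul_right hI _)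
  refine (add_le_add (mul_le_mul_right hcost 2) (mul_le_mul_right hkey' 2)).trans ?_
  rw [ENNReal.ofReal_add (by positivity) (by positivity), ENNReal.ofReal_mul (p := 2) (by norm_num),
    ENNReal.ofReal_mul (p := 2) (q := C * 16) (by norm_num), ENNReal.ofReal_mul hC.le]
  simp only [ENNReal.ofReal_ofNat]
  rw [add_mul]
  refine add_le_add ?_ (le_of_eq (by ring))
  rw [mul_assoc]
  gcongr
  exact le_self_add

end DataDistance

/-! ### Trajectories, entrance and exit times -/

section HittingTimes

variable {d : ℕ}

lemma continuous_Tt (T : Ed d → Ed d) (x : Ed d) : Continuous fun t => Tt T t x := by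
  unfold Tt; fun_prop

lemma measurable_Tt {T : Ed d → Ed d} (hT : Measurable T) :
    Measurable fun p : ℝ × Ed d => Tt T p.1 p.2 := by
  unfold Tt
  have : Measurable fun p : ℝ × Ed d => T p.2 := hT.comp measurable_snd
  fun_prop

lemma Tt_sub_Tt (T : Ed d → Ed d) (s t : ℝ) (x : Ed d) : Tt T t x - Tt T s x = (t - s) • (T x - x) := by
  unfold Tt; module

lemma Tt_zero' (T : Ed d → Ed d) (x : Ed d) : Tt T 0 x = x := by simp [Tt]

lemma Tt_one' (T : Ed d → Ed d) (x : Ed d) : Tt T 1 x = T x := by simp [Tt]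

lemma abs_norm_Tt_sub_le (T : Ed d → Ed d) (s t : ℝ) (x : Ed d) :
    |‖Tt T t x‖ - ‖Tt T s x‖| ≤ |t - s| * ‖T x - x‖ := by
  refine (abs_norm_sub_norm_le _ _).trans ?_
  rw [Tt_sub_Tt, norm_smul, Real.norm_eq_abs]

lemma norm_Tt_le_of_between {T : Ed d → Ed d} {x : Ed d} {R a b t : ℝ} (ha : ‖Tt T a x‖ ≤ R)
    (hb : ‖Tt T b x‖ ≤ R) (hat : a ≤ t) (htb : t ≤ b) : ‖Tt T t x‖ ≤ R := by
  rcases eq_or_lt_of_le (hat.trans htb) with h | h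
  · have : t = a := by linarith
    rwa [this]
  · have hba : 0 < b - a := by linarith
    have e : Tt T t x = ((b - t) / (b - a)) • Tt T a x + ((t - a) / (b - a)) • Tt T b x := by
      have h1 : (b - t) / (b - a) = 1 - (t - a) / (b - a) := by field_simp; ring
      have h2 : t = a + (t - a) / (b - a) * (b - a) := by field_simp; ring
      rw [h1]
      set c := (t - a) / (b - a)
      conv_lhs => rw [h2]
      unfold Tt
      module
    rw [e]
    refine (norm_add_le _ _).trans ?_
    rw [norm_smul, norm_smul, Real.norm_of_nonneg (div_nonneg (by linarith) hba.le),
      Real.norm_of_nonneg (div_nonneg (by linarith) hba.le)]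
    calc (b - t) / (b - a) * ‖Tt T a x‖ + (t - a) / (b - a) * ‖Tt T b x‖
        ≤ (b - t) / (b - a) * R + (t - a) / (b - a) * R := by
          refine add_le_add (mul_le_mul_of_nonneg_left ha (div_nonneg (by linarith) hba.le))
            (mul_le_mul_of_nonneg_left hb (div_nonneg (by linarith) hba.le))
      _ = R := by field_simp; ring

/-- The set of times at which the trajectory through `x` is in the closed ball of radius `R`. -/
def hit (T : Ed d → Ed d) (R : ℝ) (x : Ed d) : Set ℝ :=
  {t ∈ Icc (0:ℝ) 1 | Tt T t x ∈ closedBall (0 : Ed d) R}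

lemma mem_hit {T : Ed d → Ed d} {R : ℝ} {x : Ed d} {t : ℝ} :
    t ∈ hit T R x ↔ t ∈ Icc (0:ℝ) 1 ∧ ‖Tt T t x‖ ≤ R := by
  simp [hit]

lemma isCompact_hit (T : Ed d → Ed d) (R : ℝ) (x : Ed d) : IsCompact (hit T R x) := by
  have : hit T R x = Icc (0:ℝ) 1 ∩ (fun t => Tt T t x) ⁻¹' closedBall 0 R := rfl
  rw [this]
  exact isCompact_Icc.inter_right (isClosed_closedBall.preimage (continuous_Tt T x))

lemma tmin_mem_union (T : Ed d → Ed d) (R : ℝ) (x : Ed d) : tmin T R x ∈ hit T R x ∪ {1} :=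
  ((isCompact_hit T R x).union isCompact_singleton).sInf_mem ⟨1, Or.inr rfl⟩

lemma tmax_mem_union (T : Ed d → Ed d) (R : ℝ) (x : Ed d) : tmax T R x ∈ hit T R x ∪ {0} :=
  ((isCompact_hit T R x).union isCompact_singleton).sSup_mem ⟨0, Or.inr rfl⟩

lemma tmin_le {T : Ed d → Ed d} {R : ℝ} {x : Ed d} {t : ℝ} (h : t ∈ hit T R x) : tmin T R x ≤ t :=
  csInf_le ((isCompact_hit T R x).union isCompact_singleton).bddBelow (Or.inl h)

lemma le_tmax {T : Ed d → Ed d} {R : ℝ} {x : Ed d} {t : ℝ} (h : t ∈ hit T R x) : t ≤ tmax T R x :=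
  le_csSup ((isCompact_hit T R x).union isCompact_singleton).bddAbove (Or.inl h)

lemma tmin_mem_Icc (T : Ed d → Ed d) (R : ℝ) (x : Ed d) : tmin T R x ∈ Icc (0:ℝ) 1 := by
  rcases tmin_mem_union T R x with h | h
  · exact h.1
  · rw [mem_singleton_iff.1 h]; simp

lemma tmax_mem_Icc (T : Ed d → Ed d) (R : ℝ) (x : Ed d) : tmax T R x ∈ Icc (0:ℝ) 1 := by
  rcases tmax_mem_union T R x with h | h
  · exact h.1
  · rw [mem_singleton_iff.1 h]; simp

lemma tmin_mem_hit {T : Ed d → Ed d} {R : ℝ} {x : Ed d} (h : tmin T R x < 1) :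
    tmin T R x ∈ hit T R x := by
  rcases tmin_mem_union T R x with h' | h'
  · exact h'
  · exact absurd (mem_singleton_iff.1 h') h.ne

lemma tmax_mem_hit {T : Ed d → Ed d} {R : ℝ} {x : Ed d} (h : 0 < tmax T R x) :
    tmax T R x ∈ hit T R x := by
  rcases tmax_mem_union T R x with h' | h'
  · exact h'
  · exact absurd (mem_singleton_iff.1 h') h.ne'

/-- A trajectory leaving the closed ball before time `1` leaves it through the sphere, and stays
outside afterwards. -/
lemma exit_spec {T : Ed d → Ed d} {R : ℝ} {x : Ed d} (h0 : 0 < tmax T R x) (h1 : tmax T R x < 1) :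
    ‖Tt T (tmax T R x) x‖ = R ∧ R < ‖T x‖ := by
  have hm := mem_hit.1 (tmax_mem_hit h0)
  have hT1 : R < ‖T x‖ := by
    by_contra hcon
    have := le_tmax (T := T) (R := R) (x := x) (mem_hit.2 ⟨⟨zero_le_one, le_rfl⟩, by
      rw [Tt_one']; exact not_lt.1 hcon⟩)
    linarith
  refine ⟨le_antisymm hm.2 ?_, hT1⟩
  by_contra hcon
  push Not at hcon
  have hcont : ContinuousOn (fun t => ‖Tt T t x‖) (Icc (tmax T R x) 1) :=
    (continuous_Tt T x).norm.continuousOn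
  obtain ⟨t, ht, hte⟩ := intermediate_value_Icc h1.le hcont
    (show R ∈ Icc ‖Tt T (tmax T R x) x‖ ‖Tt T 1 x‖ from ⟨hcon.le, by rw [Tt_one']; exact hT1.le⟩)
  have h3 := le_tmax (T := T) (R := R) (x := x) (mem_hit.2 ⟨⟨hm.1.1.trans ht.1, ht.2⟩, le_of_eq hte⟩)
  have : t = tmax T R x := le_antisymm h3 ht.1
  rw [this] at hte
  simp only at hte
  linarith

/-- A trajectory entering the closed ball after time `0` enters it through the sphere. -/
lemma enter_spec {T : Ed d → Ed d} {R : ℝ} {x : Ed d} (h0 : 0 < tmin T R x) (h1 : tmin T R x < 1) :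
    ‖Tt T (tmin T R x) x‖ = R ∧ R < ‖x‖ := by
  have hm := mem_hit.1 (tmin_mem_hit h1)
  have hT1 : R < ‖x‖ := by
    by_contra hcon
    have := tmin_le (T := T) (R := R) (x := x) (mem_hit.2 ⟨⟨le_rfl, zero_le_one⟩, by
      rw [Tt_zero']; exact not_lt.1 hcon⟩)
    linarith
  refine ⟨le_antisymm hm.2 ?_, hT1⟩
  by_contra hcon
  push Not at hcon
  have hcont : ContinuousOn (fun t => ‖Tt T t x‖) (Icc 0 (tmin T R x)) :=
    (continuous_Tt T x).norm.continuousOn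
  obtain ⟨t, ht, hte⟩ := intermediate_value_Icc' h0.le hcont
    (show R ∈ Icc ‖Tt T (tmin T R x) x‖ ‖Tt T 0 x‖ from ⟨hcon.le, by rw [Tt_zero']; exact hT1.le⟩)
  have h3 := tmin_le (T := T) (R := R) (x := x) (mem_hit.2 ⟨⟨ht.1, ht.2.trans hm.1.2⟩, le_of_eq hte⟩)
  have : t = tmin T R x := le_antisymm ht.2 h3
  rw [this] at hte
  simp only at hte
  linarith

lemma le_tmax_iff {T : Ed d → Ed d} {R : ℝ} {x : Ed d} {s : ℝ} (hs : 0 < s) :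
    s ≤ tmax T R x ↔ ∃ t ∈ Icc s 1, ‖Tt T t x‖ ≤ R := by
  constructor
  · intro h
    have hm := mem_hit.1 (tmax_mem_hit (hs.trans_le h))
    exact ⟨_, ⟨h, hm.1.2⟩, hm.2⟩
  · rintro ⟨t, ht, h⟩
    exact ht.1.trans (le_tmax (mem_hit.2 ⟨⟨hs.le.trans ht.1, ht.2⟩, h⟩))

lemma tmin_le_iff {T : Ed d → Ed d} {R : ℝ} {x : Ed d} {s : ℝ} (hs : s < 1) :
    tmin T R x ≤ s ↔ ∃ t ∈ Icc 0 s, ‖Tt T t x‖ ≤ R := by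
  constructor
  · intro h
    have hm := mem_hit.1 (tmin_mem_hit (h.trans_lt hs))
    exact ⟨_, ⟨hm.1.1, h⟩, hm.2⟩
  · rintro ⟨t, ht, h⟩
    exact (tmin_le (mem_hit.2 ⟨⟨ht.1, ht.2.trans hs.le⟩, h⟩)).trans ht.2

/-- The time in `[a, b]` at which the trajectory through `x` is closest to the origin. -/
def nearTime (T : Ed d → Ed d) (a b : ℝ) (x : Ed d) : ℝ :=
  max a (min (-⟪x, T x - x⟫ / ‖T x - x‖ ^ 2) b)

lemma norm_Tt_nearTime_le (T : Ed d → Ed d) {a b t : ℝ} (x : Ed d) (ht : t ∈ Icc a b) :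
    nearTime T a b x ∈ Icc a b ∧ ‖Tt T (nearTime T a b x) x‖ ≤ ‖Tt T t x‖ := by
  have hab : a ≤ b := ht.1.trans ht.2
  refine ⟨⟨le_max_left _ _, max_le hab (min_le_right _ _)⟩, ?_⟩
  rcases eq_or_ne (T x - x) 0 with hv | hv
  · have h : Tt T t x - Tt T (nearTime T a b x) x = 0 := by rw [Tt_sub_Tt, hv, smul_zero]
    rw [sub_eq_zero.1 h]
  have hc : 0 < ‖T x - x‖ ^ 2 := by positivity
  have hsq : ∀ s, ‖Tt T s x‖ ^ 2 = ‖x‖ ^ 2 + 2 * (s * ⟪x, T x - x⟫) + s ^ 2 * ‖T x - x‖ ^ 2 := by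
    intro s
    have e : Tt T s x = x + s • (T x - x) := by unfold Tt; module
    rw [e, norm_add_sq_real, inner_smul_right, norm_smul, mul_pow, Real.norm_eq_abs, sq_abs]
  refine (pow_le_pow_iff_left₀ (norm_nonneg _) (norm_nonneg _) two_ne_zero).1 ?_
  rw [hsq, hsq]
  unfold nearTime
  set t0 := -⟪x, T x - x⟫ / ‖T x - x‖ ^ 2 with ht0
  have hb : ⟪x, T x - x⟫ = -(t0 * ‖T x - x‖ ^ 2) := by rw [ht0]; field_simp
  rw [hb]
  set c := ‖T x - x‖ ^ 2
  set t1 := max a (min t0 b) with ht1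
  have key : 0 ≤ (t - t1) * (t + t1 - 2 * t0) := by
    rcases le_total t0 a with h | h
    · have : t1 = a := by rw [ht1, min_eq_left (h.trans hab), max_eq_left h]
      rw [this]
      exact mul_nonneg (by linarith [ht.1]) (by linarith [ht.1])
    · rcases le_total t0 b with h' | h'
      · have : t1 = t0 := by rw [ht1, min_eq_left h', max_eq_right h]
        rw [this]
        nlinarith [sq_nonneg (t - t0)]
      · have : t1 = b := by rw [ht1, min_eq_right h', max_eq_right hab]
        rw [this]
        exact mul_nonneg_of_nonpos_of_nonpos (by linarith [ht.2]) (by linarith [ht.2])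
  nlinarith [mul_nonneg hc.le key]

lemma exists_norm_Tt_le_iff (T : Ed d → Ed d) {a b R : ℝ} (hab : a ≤ b) (x : Ed d) :
    (∃ t ∈ Icc a b, ‖Tt T t x‖ ≤ R) ↔ ‖Tt T (nearTime T a b x) x‖ ≤ R :=
  ⟨fun ⟨_, ht, h⟩ => (norm_Tt_nearTime_le T x ht).2.trans h,
    fun h => ⟨_, (norm_Tt_nearTime_le T x (left_mem_Icc.2 hab)).1, h⟩⟩

lemma measurable_nearTime {T : Ed d → Ed d} (hT : Measurable T) (a b : ℝ) :
    Measurable (nearTime T a b) := by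
  unfold nearTime; fun_prop

lemma measurableSet_near {T : Ed d → Ed d} (hT : Measurable T) (a b : ℝ) :
    MeasurableSet {p : ℝ × Ed d | ‖Tt T (nearTime T a b p.2) p.2‖ ≤ p.1} := by
  have h1 : Measurable fun p : ℝ × Ed d => (nearTime T a b p.2, p.2) :=
    ((measurable_nearTime hT a b).comp measurable_snd).prodMk measurable_snd
  exact measurableSet_le ((measurable_Tt hT).comp h1).norm measurable_fst

lemma measurable_tmax_uncurry {T : Ed d → Ed d} (hT : Measurable T) :
    Measurable fun p : ℝ × Ed d => tmax T p.1 p.2 := by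
  refine measurable_of_Ici fun s => ?_
  rcases le_or_gt s 0 with hs | hs
  · convert MeasurableSet.univ
    ext p; simp only [mem_preimage, mem_Ici, mem_univ, iff_true]
    exact hs.trans (tmax_mem_Icc T p.1 p.2).1
  rcases le_or_gt s 1 with h1 | h1
  · convert measurableSet_near hT s 1 using 1
    ext p
    rw [mem_preimage, mem_Ici, le_tmax_iff hs, exists_norm_Tt_le_iff T h1]
    rfl
  · convert MeasurableSet.empty
    ext p; simp only [mem_preimage, mem_Ici, mem_empty_iff_false, iff_false, not_le]
    exact (tmax_mem_Icc T p.1 p.2).2.trans_lt h1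

lemma measurable_tmin_uncurry {T : Ed d → Ed d} (hT : Measurable T) :
    Measurable fun p : ℝ × Ed d => tmin T p.1 p.2 := by
  refine measurable_of_Iic fun s => ?_
  rcases le_or_gt 1 s with hs | hs
  · convert MeasurableSet.univ
    ext p; simp only [mem_preimage, mem_Iic, mem_univ, iff_true]
    exact (tmin_mem_Icc T p.1 p.2).2.trans hs
  rcases le_or_gt 0 s with h1 | h1
  · convert measurableSet_near hT 0 s using 1
    ext p
    rw [mem_preimage, mem_Iic, tmin_le_iff hs, exists_norm_Tt_le_iff T h1]
    rfl
  · convert MeasurableSet.empty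
    ext p; simp only [mem_preimage, mem_Iic, mem_empty_iff_false, iff_false, not_le]
    exact h1.trans_le (tmin_mem_Icc T p.1 p.2).1

lemma measurable_tmax {T : Ed d → Ed d} (hT : Measurable T) (R : ℝ) : Measurable (tmax T R) := by
  have h : Measurable fun x : Ed d => (R, x) := measurable_prodMk_left
  have := (measurable_tmax_uncurry hT).comp h
  exact this

lemma measurable_tmin {T : Ed d → Ed d} (hT : Measurable T) (R : ℝ) : Measurable (tmin T R) := by
  have h : Measurable fun x : Ed d => (R, x) := measurable_prodMk_left
  have := (measurable_tmin_uncurry hT).comp h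
  exact this

lemma measurable_Tt_comp {Z : Type*} [MeasurableSpace Z] {T : Ed d → Ed d} (hT : Measurable T)
    {s : Z → ℝ} (hs : Measurable s) {f : Z → Ed d} (hf : Measurable f) :
    Measurable fun z => Tt T (s z) (f z) :=
  (measurable_Tt hT).comp (hs.prodMk hf)

/-- Contraction along the interpolation is at most linear in the remaining time. -/
lemma volume_inter_Tt_preimage_le {T : Ed d → Ed d} {G : Set (Ed d)}
    (hmono : ∀ x ∈ G, ∀ y ∈ G, 0 ≤ ⟪T x - T y, x - y⟫) {t : ℝ} (ht0 : 0 ≤ t) (ht1 : t < 1)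
    (A : Set (Ed d)) :
    volume (G ∩ Tt T t ⁻¹' A) ≤ ENNReal.ofReal (((1 - t)⁻¹) ^ d) * volume A := by
  have h1 : 0 < 1 - t := by linarith
  have := volume_inter_preimage_le (S := G) (f := Tt T t) (K := Real.toNNReal ((1 - t)⁻¹)) ?_ A
  · refine this.trans (le_of_eq ?_)
    rw [ENNReal.ofReal_pow (by positivity)]
    rfl
  intro x hx y hy
  rw [Real.coe_toNNReal _ (by positivity), inv_mul_eq_div, le_div_iff₀ h1, dist_eq_norm, dist_eq_norm]
  have e : Tt T t x - Tt T t y = (1 - t) • (x - y) + t • (T x - T y) := by unfold Tt; module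
  rcases eq_or_ne (x - y) 0 with h0 | h0
  · rw [h0]; simp
  have hpos : 0 < ‖x - y‖ := norm_pos_iff.2 h0
  have h2 : (1 - t) * ‖x - y‖ ^ 2 ≤ ⟪Tt T t x - Tt T t y, x - y⟫ := by
    rw [e, inner_add_left, inner_smul_left, inner_smul_left, real_inner_self_eq_norm_sq]
    have := mul_nonneg ht0 (hmono x hx y hy)
    simp only [RCLike.conj_to_real]
    linarith
  have h3 := h2.trans (real_inner_le_norm _ _)
  have h4 : ((1 - t) * ‖x - y‖) * ‖x - y‖ ≤ ‖Tt T t x - Tt T t y‖ * ‖x - y‖ := by nlinarith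
  have := le_of_mul_le_mul_right h4 hpos
  linarith

end HittingTimes

/-! ### The flux bound tested against a function -/

section Flux

variable {d : ℕ}

/-- Change of variables along a right inverse `σ` of a Lipschitz function of one variable: the
image measure under `σ` is at most the Lipschitz constant times Lebesgue measure. -/
lemma lintegral_section_le {φ σ : ℝ → ℝ} {L : ℝ≥0} (hφ : LipschitzWith L φ) (hσ : Measurable σ)
    {Q : Set ℝ} (hQ : MeasurableSet Q) (hσQ : ∀ R ∈ Q, σ R ∈ Icc (0:ℝ) 1 ∧ φ (σ R) = R)
    {h : ℝ → ℝ≥0∞} (hh : Measurable h) :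
    ∫⁻ R in Q, h (σ R) ≤ L * ∫⁻ t in Icc (0:ℝ) 1, h t := by
  have hle : (volume.restrict Q).map σ ≤ (L : ℝ≥0∞) • volume.restrict (Icc (0:ℝ) 1) := by
    refine Measure.le_iff.2 fun A hA => ?_
    rw [Measure.map_apply hσ hA, Measure.restrict_apply (hσ hA), Measure.smul_apply,
      Measure.restrict_apply hA, smul_eq_mul]
    have hsub : σ ⁻¹' A ∩ Q ⊆ φ '' (A ∩ Icc 0 1) := fun R hR =>
      ⟨σ R, ⟨hR.1, (hσQ R hR.2).1⟩, (hσQ R hR.2).2⟩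
    have h2 := hφ.hausdorffMeasure_image_le (d := 1) zero_le_one (A ∩ Icc 0 1)
    rw [hausdorffMeasure_real, ENNReal.rpow_one] at h2
    exact (measure_mono hsub).trans h2
  calc ∫⁻ R in Q, h (σ R) = ∫⁻ t, h t ∂((volume.restrict Q).map σ) := (lintegral_map hh hσ).symm
    _ ≤ ∫⁻ t, h t ∂((L : ℝ≥0∞) • volume.restrict (Icc (0:ℝ) 1)) := lintegral_mono' hle le_rfl
    _ = L * ∫⁻ t in Icc (0:ℝ) 1, h t := by rw [lintegral_smul_measure, smul_eq_mul]

lemma lipschitzWith_norm_Tt (T : Ed d → Ed d) (x : Ed d) :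
    LipschitzWith (Real.toNNReal ‖T x - x‖) fun t => ‖Tt T t x‖ := by
  refine LipschitzWith.of_dist_le_mul fun t s => ?_
  rw [Real.dist_eq, Real.dist_eq, Real.coe_toNNReal _ (norm_nonneg _), mul_comm]
  exact abs_norm_Tt_sub_le T s t x

lemma two_mul_le_sq_add_sq (a b : ℝ≥0∞) : 2 * (a * b) ≤ a ^ 2 + b ^ 2 := by
  rcases eq_or_ne a ∞ with rfl | ha
  · simp
  rcases eq_or_ne b ∞ with rfl | hb
  · simp
  lift a to ℝ≥0 using ha
  lift b to ℝ≥0 using hb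
  norm_cast
  have := two_mul_le_add_sq (a : ℝ) b
  rw [← NNReal.coe_le_coe]; push_cast; linarith

/-- Weighted Young inequality in the form used for the flux: `2 * a * b ≤ k * a² + k⁻¹ * b²`. -/
lemma two_mul_le_weighted {k : ℝ} (hk : 0 < k) (a b : ℝ≥0∞) :
    2 * (a * b) ≤ ENNReal.ofReal k * a ^ 2 + ENNReal.ofReal k⁻¹ * b ^ 2 := by
  have h := two_mul_le_sq_add_sq (ENNReal.ofReal (Real.sqrt k) * a) (ENNReal.ofReal (Real.sqrt k)⁻¹ * b)
  have hs : 0 < Real.sqrt k := Real.sqrt_pos.2 hk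
  have e1 : ENNReal.ofReal (Real.sqrt k) * a * (ENNReal.ofReal (Real.sqrt k)⁻¹ * b) = a * b := by
    rw [mul_mul_mul_comm, ← ENNReal.ofReal_mul hs.le, mul_inv_cancel₀ hs.ne']; simp
  rw [e1, mul_pow, mul_pow, ← ENNReal.ofReal_pow hs.le, ← ENNReal.ofReal_pow (by positivity),
    Real.sq_sqrt hk.le, inv_pow, Real.sq_sqrt hk.le] at h
  exact h

/-- Disintegrated area bound: integrals of a function of the position at time `t < 1` are
controlled by integrals over spheres. -/
lemma lintegral_Tt_le {T : Ed d → Ed d} (hd : 1 ≤ d) (hT : Measurable T) {G : Set (Ed d)}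
    (hG : MeasurableSet G)
    (hmono : ∀ x ∈ G, ∀ y ∈ G, 0 ≤ ⟪T x - T y, x - y⟫) {t k : ℝ} (ht0 : 0 ≤ t) (ht1 : t < 1)
    (hk : ((1 - t)⁻¹) ^ d ≤ k) {f : Ed d → ℝ≥0∞} (hf : Measurable f) :
    ∫⁻ x in G, f (Tt T t x) ≤ ENNReal.ofReal k * ∫⁻ R in Ioi (0:ℝ), (∫⁻ z, f z ∂(sig d R)) := by
  have hm : Measurable (Tt T t) := measurable_Tt_comp hT measurable_const measurable_id
  have hle : (volume.restrict G).map (Tt T t) ≤ ENNReal.ofReal k • volume := by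
    refine Measure.le_iff.2 fun A hA => ?_
    rw [Measure.map_apply hm hA, Measure.restrict_apply (hm hA), Measure.smul_apply, smul_eq_mul,
      inter_comm]
    exact (volume_inter_Tt_preimage_le hmono ht0 ht1 A).trans
      (mul_le_mul_left (ENNReal.ofReal_le_ofReal hk) _)
  rw [← lintegral_polar_sig hd hf, ← lintegral_map hf hm]
  refine (lintegral_mono' hle le_rfl).trans (le_of_eq ?_)
  rw [lintegral_smul_measure, smul_eq_mul]

set_option maxHeartbeats 800000 in
/-- The quadratic-type bound on the flux tested against `ζ`. -/
lemma flux_key {T : Ed d → Ed d} (hd : 1 ≤ d) (hT : Measurable T) {G : Set (Ed d)}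
    (hG : MeasurableSet G) (hmono : ∀ x ∈ G, ∀ y ∈ G, 0 ≤ ⟪T x - T y, x - y⟫)
    {s : ℝ × Ed d → ℝ} (hs : Measurable s) {P : Set (ℝ × Ed d)} (hP : MeasurableSet P)
    (hPG : ∀ p ∈ P, p.2 ∈ G) (hPs : ∀ p ∈ P, s p ∈ Icc (0:ℝ) 1 ∧ ‖Tt T (s p) p.2‖ = p.1)
    {τ : ℝ} (hτ0 : 0 < τ) {ζ : ℝ × (Ed d × ℝ) → ℝ≥0∞} (hζ : Measurable ζ)
    (hζτ : ∀ R z t, 1 - τ < t → ζ (R, z, t) = 0) :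
    2 * (∫⁻ R, ∫⁻ x, P.indicator (fun p => ζ (p.1, Tt T (s p) p.2, s p)) (R, x)) ≤
      ENNReal.ofReal ((τ⁻¹) ^ d) * (∫⁻ x in G, ENNReal.ofReal (‖T x - x‖ ^ 2)) +
      ∫⁻ R in Ioi (0:ℝ), (∫⁻ z, (∫⁻ t in Icc (0:ℝ) 1, ζ (R, z, t) ^ 2) ∂(sig d R)) := by
  have hkpos : 0 < (τ⁻¹) ^ d := by positivity
  have hX : Measurable fun p : ℝ × Ed d => Tt T (s p) p.2 := measurable_Tt_comp hT hs measurable_snd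
  have hXt : Measurable fun p : Ed d × ℝ => Tt T p.2 p.1 :=
    measurable_Tt_comp hT measurable_snd measurable_fst
  set V := ∫⁻ x in G, ENNReal.ofReal (‖T x - x‖ ^ 2) with hV
  have hζX : Measurable fun p : Ed d × ℝ => ζ (‖Tt T p.2 p.1‖, Tt T p.2 p.1, p.2) :=
    hζ.comp (hXt.norm.prodMk (hXt.prodMk measurable_snd))
  have hind : Measurable (P.indicator (fun p => ζ (p.1, Tt T (s p) p.2, s p))) := by
    refine Measurable.indicator ?_ hP
    exact hζ.comp (measurable_fst.prodMk (hX.prodMk hs))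
  have hζx : ∀ x, Measurable fun t => ζ (‖Tt T t x‖, Tt T t x, t) := fun x => by
    have h1 : Measurable fun t => Tt T t x := (continuous_Tt T x).measurable
    exact hζ.comp (h1.norm.prodMk (h1.prodMk measurable_id))
  -- for a fixed starting point, change variables from the radius to the crossing time
  have hpt : ∀ x, (∫⁻ R, P.indicator (fun p => ζ (p.1, Tt T (s p) p.2, s p)) (R, x)) ≤
      G.indicator (fun x => ENNReal.ofReal ‖T x - x‖ *
        ∫⁻ t in Icc (0:ℝ) 1, ζ (‖Tt T t x‖, Tt T t x, t)) x := by
    intro x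
    have hmk : Measurable fun R : ℝ => (R, x) := measurable_prodMk_right
    by_cases hx : x ∈ G
    · rw [indicator_of_mem hx]
      have hQ : MeasurableSet {R : ℝ | (R, x) ∈ P} := hmk hP
      have hσ : Measurable fun R => s (R, x) := hs.comp hmk
      have hh : Measurable fun t => ζ (‖Tt T t x‖, Tt T t x, t) := hζx x
      have := lintegral_section_le (lipschitzWith_norm_Tt T x) hσ hQ
        (fun R hR => hPs (R, x) hR) hh
      refine le_trans (le_of_eq ?_) this
      rw [← lintegral_indicator hQ]
      refine lintegral_congr fun R => ?_
      by_cases hR : (R, x) ∈ P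
      · rw [indicator_of_mem hR, indicator_of_mem (show R ∈ {R : ℝ | (R, x) ∈ P} from hR)]
        simp only [(hPs _ hR).2]
      · rw [indicator_of_notMem hR, indicator_of_notMem (show R ∉ {R : ℝ | (R, x) ∈ P} from hR)]
    · rw [indicator_of_notMem hx]
      refine le_of_eq ?_
      have : ∀ R, P.indicator (fun p => ζ (p.1, Tt T (s p) p.2, s p)) (R, x) = 0 := fun R =>
        indicator_of_notMem (fun h => hx (hPG _ h)) _
      simp [this]
  have hswap := lintegral_lintegral_swap (μ := (volume : Measure ℝ)) (ν := (volume : Measure (Ed d)))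
    (f := fun R x => P.indicator (fun p => ζ (p.1, Tt T (s p) p.2, s p)) (R, x)) hind.aemeasurable
  rw [hswap]
  have hcm : Measurable fun x => ENNReal.ofReal ‖T x - x‖ := by fun_prop
  have hcm2 : Measurable fun x => ENNReal.ofReal (‖T x - x‖ ^ 2) := by fun_prop
  have hζX2 : Measurable fun p : Ed d × ℝ => ζ (‖Tt T p.2 p.1‖, Tt T p.2 p.1, p.2) ^ 2 :=
    hζX.pow_const 2
  have hζx2 : ∀ x, Measurable fun t => ζ (‖Tt T t x‖, Tt T t x, t) ^ 2 := fun x => (hζx x).pow_const 2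
  have hin : Measurable fun x => ∫⁻ t in Icc (0:ℝ) 1, ζ (‖Tt T t x‖, Tt T t x, t) ^ 2 :=
    hζX2.lintegral_prod_right'
  calc 2 * (∫⁻ x, ∫⁻ R, P.indicator (fun p => ζ (p.1, Tt T (s p) p.2, s p)) (R, x))
      ≤ 2 * (∫⁻ x in G, ENNReal.ofReal ‖T x - x‖ *
        ∫⁻ t in Icc (0:ℝ) 1, ζ (‖Tt T t x‖, Tt T t x, t)) := by
        rw [← lintegral_indicator hG]
        exact mul_le_mul_right (lintegral_mono hpt) _
    _ = ∫⁻ x in G, (2 * (ENNReal.ofReal ‖T x - x‖ *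
        ∫⁻ t in Icc (0:ℝ) 1, ζ (‖Tt T t x‖, Tt T t x, t))) := by
        rw [lintegral_const_mul' _ _ (by simp)]
    _ ≤ ∫⁻ x in G, (ENNReal.ofReal ((τ⁻¹) ^ d) * ENNReal.ofReal (‖T x - x‖ ^ 2) +
        ENNReal.ofReal ((τ⁻¹) ^ d)⁻¹ * ∫⁻ t in Icc (0:ℝ) 1, ζ (‖Tt T t x‖, Tt T t x, t) ^ 2) := by
        refine lintegral_mono fun x => ?_
        rw [← lintegral_const_mul' _ _ ENNReal.ofReal_ne_top,
          ← lintegral_const_mul' _ _ (by simp),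
          ← lintegral_const_mul' _ _ ENNReal.ofReal_ne_top]
        have hone : ENNReal.ofReal ((τ⁻¹) ^ d) * ENNReal.ofReal (‖T x - x‖ ^ 2) =
            ∫⁻ t in Icc (0:ℝ) 1, ENNReal.ofReal ((τ⁻¹) ^ d) * ENNReal.ofReal (‖T x - x‖ ^ 2) := by
          rw [setLIntegral_const, Real.volume_Icc]; simp
        rw [hone, ← lintegral_add_left measurable_const]
        refine lintegral_mono fun t => ?_
        have := two_mul_le_weighted hkpos (ENNReal.ofReal ‖T x - x‖) (ζ (‖Tt T t x‖, Tt T t x, t))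
        rwa [← ENNReal.ofReal_pow (norm_nonneg _)] at this
    _ = ENNReal.ofReal ((τ⁻¹) ^ d) * V + ENNReal.ofReal ((τ⁻¹) ^ d)⁻¹ *
        ∫⁻ x in G, ∫⁻ t in Icc (0:ℝ) 1, ζ (‖Tt T t x‖, Tt T t x, t) ^ 2 := by
        rw [lintegral_add_left (by fun_prop), lintegral_const_mul' _ _ ENNReal.ofReal_ne_top,
          lintegral_const_mul' _ _ ENNReal.ofReal_ne_top]
    _ ≤ _ := by
        refine add_le_add le_rfl ?_
        rw [lintegral_lintegral_swap hζX2.aemeasurable]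
        have hslice : ∀ t ∈ Icc (0:ℝ) 1, (∫⁻ x in G, ζ (‖Tt T t x‖, Tt T t x, t) ^ 2) ≤
            ENNReal.ofReal ((τ⁻¹) ^ d) * ∫⁻ R in Ioi (0:ℝ), (∫⁻ z, ζ (R, z, t) ^ 2 ∂(sig d R)) := by
          intro t ht
          rcases lt_or_ge (1 - τ) t with h | h
          · have : ∀ x, ζ (‖Tt T t x‖, Tt T t x, t) ^ 2 = 0 := fun x => by rw [hζτ _ _ _ h]; simp
            simp [this]
          · have h1 : τ ≤ 1 - t := by linarith
            have hf : Measurable fun z : Ed d => ζ (‖z‖, z, t) ^ 2 :=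
              (hζ.comp (measurable_norm.prodMk (measurable_id.prodMk measurable_const))).pow_const 2
            refine (lintegral_Tt_le hd hT hG hmono ht.1 (by linarith)
              (pow_le_pow_left₀ (inv_nonneg.2 (by linarith)) (inv_anti₀ hτ0 h1) d) hf).trans ?_
            refine mul_le_mul_right (setLIntegral_mono' measurableSet_Ioi fun R hR => ?_) _
            refine le_of_eq (lintegral_congr_ae ?_)
            have := sig_compl_sphere (d := d) (R := R) (le_of_lt hR)
            filter_upwards [this] with z hz
            have hz' : ‖z‖ = R := by simpa using hz
            rw [hz']
        have hζt : Measurable (Function.uncurry fun (t : ℝ) (R : ℝ) => ∫⁻ z, ζ (R, z, t) ^ 2 ∂(sig d R)) := by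
          have : (Function.uncurry fun (t : ℝ) (R : ℝ) => ∫⁻ z, ζ (R, z, t) ^ 2 ∂(sig d R)) =
              fun p : ℝ × ℝ => ENNReal.ofReal (p.2 ^ (d - 1)) *
                ∫⁻ u, ζ (p.2, p.2 • (u : Ed d), p.1) ^ 2 ∂(om d) := by
            funext p
            exact lintegral_sig p.2 ((hζ.comp (by fun_prop)).pow_const 2)
          rw [this]
          refine Measurable.mul (by fun_prop) ?_
          refine Measurable.lintegral_prod_right' (f := fun q : (ℝ × ℝ) × sphere (0 : Ed d) 1 =>
            ζ (q.1.2, q.1.2 • (q.2 : Ed d), q.1.1) ^ 2) ?_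
          exact (hζ.comp (by fun_prop)).pow_const 2
        calc ENNReal.ofReal ((τ⁻¹) ^ d)⁻¹ *
              ∫⁻ t in Icc (0:ℝ) 1, ∫⁻ x in G, ζ (‖Tt T t x‖, Tt T t x, t) ^ 2
            ≤ ENNReal.ofReal ((τ⁻¹) ^ d)⁻¹ * ∫⁻ t in Icc (0:ℝ) 1, (ENNReal.ofReal ((τ⁻¹) ^ d) *
              ∫⁻ R in Ioi (0:ℝ), (∫⁻ z, ζ (R, z, t) ^ 2 ∂(sig d R))) :=
              mul_le_mul_right (setLIntegral_mono' measurableSet_Icc hslice) _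
          _ = ∫⁻ t in Icc (0:ℝ) 1, ∫⁻ R in Ioi (0:ℝ), (∫⁻ z, ζ (R, z, t) ^ 2 ∂(sig d R)) := by
              rw [lintegral_const_mul' _ _ ENNReal.ofReal_ne_top, ← mul_assoc,
                ← ENNReal.ofReal_mul (by positivity), inv_mul_cancel₀ hkpos.ne']
              simp
          _ = ∫⁻ R in Ioi (0:ℝ), ∫⁻ t in Icc (0:ℝ) 1, (∫⁻ z, ζ (R, z, t) ^ 2 ∂(sig d R)) :=
              lintegral_lintegral_swap hζt.aemeasurable
          _ ≤ _ := by
              refine le_of_eq (lintegral_congr fun R => ?_)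
              refine lintegral_lintegral_swap ?_
              refine Measurable.aemeasurable ?_
              exact (hζ.comp (by fun_prop)).pow_const 2

end Flux

/-! ### Disintegration of the flux over the radius -/

section FluxDensity

open ProbabilityTheory

variable {d : ℕ}

/-- The space-time flux through the sphere of radius `R` of the particles in the slice `P_R`, a
particle `x` crossing at time `s (R, x)`. -/
def fluxM (T : Ed d → Ed d) (s : ℝ × Ed d → ℝ) (P : Set (ℝ × Ed d)) (R : ℝ) : Measure (Ed d × ℝ) :=
  (volume.restrict {x | (R, x) ∈ P}).map (fun x => (Tt T (s (R, x)) x, s (R, x)))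

/-- The surface-time measure on `∂B_R × [0,1]`. -/
def lateral (d : ℕ) (R : ℝ) : Measure (Ed d × ℝ) := (sig d R).prod (volume.restrict (Icc (0:ℝ) 1))

instance (R : ℝ) : IsFiniteMeasure (lateral d R) := by unfold lateral; infer_instance

lemma measurable_cross {T : Ed d → Ed d} (hT : Measurable T) {s : ℝ × Ed d → ℝ} (hs : Measurable s)
    (R : ℝ) : Measurable fun x : Ed d => (Tt T (s (R, x)) x, s (R, x)) := by
  have h : Measurable fun x : Ed d => (R, x) := measurable_prodMk_left
  have h1 : Measurable fun x : Ed d => s (R, x) := hs.comp h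
  exact (measurable_Tt_comp hT h1 measurable_id).prodMk h1

lemma measurableSet_slice {P : Set (ℝ × Ed d)} (hP : MeasurableSet P) (R : ℝ) :
    MeasurableSet {x : Ed d | (R, x) ∈ P} := by
  have h : Measurable fun x : Ed d => (R, x) := measurable_prodMk_left
  exact h hP

lemma measurable_cross_uncurry {T : Ed d → Ed d} (hT : Measurable T) {s : ℝ × Ed d → ℝ}
    (hs : Measurable s) : Measurable fun p : ℝ × Ed d => (Tt T (s p) p.2, s p) :=
  (measurable_Tt_comp hT hs measurable_snd).prodMk hs

lemma lintegral_fluxM {T : Ed d → Ed d} (hT : Measurable T) {s : ℝ × Ed d → ℝ} (hs : Measurable s)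
    {P : Set (ℝ × Ed d)} (hP : MeasurableSet P) (R : ℝ) {f : Ed d × ℝ → ℝ≥0∞} (hf : Measurable f) :
    ∫⁻ y, f y ∂(fluxM T s P R) =
      ∫⁻ x, P.indicator (fun p => f (Tt T (s p) p.2, s p)) (R, x) := by
  rw [fluxM, lintegral_map hf (measurable_cross hT hs R),
    ← lintegral_indicator (measurableSet_slice hP R)]
  rfl

/-- `R ↦ fluxM R` as a kernel. -/
def fluxK {T : Ed d → Ed d} (hT : Measurable T) {s : ℝ × Ed d → ℝ} (hs : Measurable s)
    {P : Set (ℝ × Ed d)} (hP : MeasurableSet P) : Kernel ℝ (Ed d × ℝ) where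
  toFun := fluxM T s P
  measurable' := by
    refine Measure.measurable_of_measurable_coe _ fun A hA => ?_
    have h : ∀ R, fluxM T s P R A =
        ∫⁻ x, P.indicator (fun p => A.indicator (fun _ => (1 : ℝ≥0∞)) (Tt T (s p) p.2, s p)) (R, x) := by
      intro R
      rw [← lintegral_fluxM hT hs hP R (measurable_const.indicator hA), lintegral_indicator_const hA,
        one_mul]
    simp_rw [h]
    refine Measurable.lintegral_prod_right' (f := P.indicator (fun p =>
      A.indicator (fun _ => (1 : ℝ≥0∞)) (Tt T (s p) p.2, s p))) ?_
    exact (((measurable_const.indicator hA).comp (measurable_cross_uncurry hT hs))).indicator hP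

/-- `R ↦ lateral R` as a kernel, with the radius clamped to `[1, 2]` so that masses are bounded. -/
def lateralK (d : ℕ) : Kernel ℝ (Ed d × ℝ) where
  toFun R := lateral d (max 1 (min R 2))
  measurable' := by
    refine Measure.measurable_of_measurable_coe _ fun A hA => ?_
    have h : Measurable fun R => lateral d R A := by
      have : ∀ R, lateral d R A = ∫⁻ z, volume.restrict (Icc (0:ℝ) 1) (Prod.mk z ⁻¹' A) ∂(sig d R) :=
        fun R => Measure.prod_apply hA
      simp_rw [this]
      refine measurable_lintegral_sig (f := fun _ z => volume.restrict (Icc (0:ℝ) 1) (Prod.mk z ⁻¹' A)) ?_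
      exact (measurable_measure_prodMk_left hA).comp measurable_snd
    exact h.comp (by fun_prop)

lemma isFiniteKernel_fluxK {T : Ed d → Ed d} (hT : Measurable T) {s : ℝ × Ed d → ℝ} (hs : Measurable s)
    {P : Set (ℝ × Ed d)} (hP : MeasurableSet P) {G : Set (Ed d)} (hG : volume G ≠ ∞)
    (hPG : ∀ p ∈ P, p.2 ∈ G) : IsFiniteKernel (fluxK hT hs hP) := by
  refine ⟨volume G, hG.lt_top, fun R => ?_⟩
  change fluxM T s P R univ ≤ _
  rw [fluxM, Measure.map_apply (measurable_cross hT hs R) MeasurableSet.univ, preimage_univ,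
    Measure.restrict_apply_univ]
  exact measure_mono fun x hx => hPG _ hx

lemma lateral_univ_le {R : ℝ} (h0 : 0 ≤ R) (h2 : R ≤ 2) :
    lateral d R univ ≤ ENNReal.ofReal (2 ^ (d - 1)) * om d univ := by
  rw [lateral, ← univ_prod_univ, Measure.prod_prod, Measure.restrict_apply_univ, Real.volume_Icc, sig,
    Measure.smul_apply, Measure.map_apply (by fun_prop) MeasurableSet.univ, preimage_univ, smul_eq_mul]
  simp only [sub_zero, ENNReal.ofReal_one, mul_one]
  gcongr

instance (d : ℕ) : IsFiniteKernel (lateralK d) :=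
  ⟨ENNReal.ofReal (2 ^ (d - 1)) * om d univ,
    ENNReal.mul_lt_top ENNReal.ofReal_lt_top (measure_lt_top _ _), fun R =>
    lateral_univ_le (zero_le_one.trans (le_max_left _ _)) (max_le one_le_two (min_le_right _ _))⟩

/-- The interval of radii among which a good one is selected. -/
abbrev radii : Set ℝ := Ioo (1:ℝ) (5/4)

lemma lateralK_eq {R : ℝ} (hR : R ∈ radii) : lateralK d R = lateral d R := by
  change lateral d (max 1 (min R 2)) = _
  rw [min_eq_left (by linarith [hR.2]), max_eq_right hR.1.le]

lemma lintegral_lateral {R : ℝ} {f : Ed d × ℝ → ℝ≥0∞} (hf : Measurable f) :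
    ∫⁻ y, f y ∂(lateral d R) = ∫⁻ z, (∫⁻ t in Icc (0:ℝ) 1, f (z, t)) ∂(sig d R) := by
  rw [lateral, lintegral_prod _ hf.aemeasurable]

lemma flux_key' {T : Ed d → Ed d} (hd : 1 ≤ d) (hT : Measurable T) {G : Set (Ed d)}
    (hG : MeasurableSet G) (hmono : ∀ x ∈ G, ∀ y ∈ G, 0 ≤ ⟪T x - T y, x - y⟫)
    {s : ℝ × Ed d → ℝ} (hs : Measurable s) {P : Set (ℝ × Ed d)} (hP : MeasurableSet P)
    (hPG : ∀ p ∈ P, p.2 ∈ G) (hPs : ∀ p ∈ P, s p ∈ Icc (0:ℝ) 1 ∧ ‖Tt T (s p) p.2‖ = p.1)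
    {τ : ℝ} (hτ0 : 0 < τ) {ζ : ℝ × (Ed d × ℝ) → ℝ≥0∞} (hζ : Measurable ζ)
    (hζτ : ∀ R z t, 1 - τ < t → ζ (R, z, t) = 0) :
    2 * (∫⁻ R in radii, ∫⁻ y, ζ (R, y) ∂(fluxM T s P R)) ≤
      ENNReal.ofReal ((τ⁻¹) ^ d) * (∫⁻ x in G, ENNReal.ofReal (‖T x - x‖ ^ 2)) +
      ∫⁻ R in radii, ∫⁻ y, ζ (R, y) ^ 2 ∂(lateral d R) := by
  have hJm : MeasurableSet radii := measurableSet_Ioo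
  set ξ : ℝ × (Ed d × ℝ) → ℝ≥0∞ := {p : ℝ × (Ed d × ℝ) | p.1 ∈ radii}.indicator ζ with hξ
  have hξm : Measurable ξ := hζ.indicator (measurable_fst hJm)
  have hξJ : ∀ R ∈ radii, ∀ y, ξ (R, y) = ζ (R, y) := fun R hR y =>
    indicator_of_mem (show (R, y) ∈ {p : ℝ × (Ed d × ℝ) | p.1 ∈ radii} from hR) _
  have hξJ' : ∀ R ∉ radii, ∀ y, ξ (R, y) = 0 := fun R hR y =>
    indicator_of_notMem (show (R, y) ∉ {p : ℝ × (Ed d × ℝ) | p.1 ∈ radii} from hR) _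
  have hξτ : ∀ R z t, 1 - τ < t → ξ (R, z, t) = 0 := fun R z t h => by
    by_cases hR : R ∈ radii
    · rw [hξJ R hR, hζτ R z t h]
    · exact hξJ' R hR _
  have key := flux_key hd hT hG hmono hs hP hPG hPs hτ0 hξm hξτ
  refine le_trans ?_ (key.trans (add_le_add le_rfl ?_))
  · refine mul_le_mul_right ?_ _
    rw [← lintegral_indicator hJm]
    refine lintegral_mono fun R => ?_
    by_cases hR : R ∈ radii
    · have hmk : Measurable fun y : Ed d × ℝ => (R, y) := measurable_prodMk_left
      rw [indicator_of_mem hR, lintegral_fluxM hT hs hP R (f := fun y => ζ (R, y)) (hζ.comp hmk)]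
      refine le_of_eq (lintegral_congr fun x => ?_)
      by_cases hx : (R, x) ∈ P
      · rw [indicator_of_mem hx, indicator_of_mem hx]
        exact (hξJ R hR _).symm
      · rw [indicator_of_notMem hx, indicator_of_notMem hx]
    · rw [indicator_of_notMem hR]; exact zero_le
  · rw [← lintegral_indicator hJm, ← lintegral_indicator measurableSet_Ioi]
    refine lintegral_mono fun R => ?_
    by_cases hR : R ∈ radii
    · have hmk : Measurable fun y : Ed d × ℝ => (R, y) := measurable_prodMk_left
      have h0 : R ∈ Ioi (0:ℝ) := zero_lt_one.trans hR.1
      have hm2 : Measurable fun y => ζ (R, y) ^ 2 := (hζ.comp hmk).pow_const 2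
      rw [indicator_of_mem hR, indicator_of_mem h0, lintegral_lateral hm2]
      simp_rw [hξJ R hR]
      exact le_rfl
    · have h : ∀ z t, ξ (R, z, t) ^ 2 = 0 := fun z t => by rw [hξJ' R hR]; simp
      by_cases h0 : R ∈ Ioi (0:ℝ)
      · rw [indicator_of_mem h0]; simp [h]
      · rw [indicator_of_notMem h0]; exact zero_le

/-- For almost every radius the flux measure has a density on `∂B_R × [0,1]`, whose square up to
time `1 - τ` is controlled on average by `τ^{-d}` times the kinetic energy. -/
lemma flux_density {T : Ed d → Ed d} (hd : 1 ≤ d) (hT : Measurable T) {G : Set (Ed d)}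
    (hG : MeasurableSet G) (hGf : volume G ≠ ∞)
    (hmono : ∀ x ∈ G, ∀ y ∈ G, 0 ≤ ⟪T x - T y, x - y⟫)
    (hV : (∫⁻ x in G, ENNReal.ofReal (‖T x - x‖ ^ 2)) ≠ ∞)
    {s : ℝ × Ed d → ℝ} (hs : Measurable s) {P : Set (ℝ × Ed d)} (hP : MeasurableSet P)
    (hPG : ∀ p ∈ P, p.2 ∈ G) (hPs : ∀ p ∈ P, s p ∈ Icc (0:ℝ) 1 ∧ ‖Tt T (s p) p.2‖ = p.1)
    (hP1 : ∀ p ∈ P, s p < 1) :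
    ∃ q : ℝ × (Ed d × ℝ) → ℝ≥0∞, Measurable q ∧
      (∀ᵐ R ∂(volume.restrict radii), fluxM T s P R = (lateral d R).withDensity (fun y => q (R, y))) ∧
      ∀ τ : ℝ, 0 < τ → (∫⁻ R in radii, ∫⁻ y in {y | y.2 ≤ 1 - τ}, q (R, y) ^ 2 ∂(lateral d R)) ≤
        ENNReal.ofReal ((τ⁻¹) ^ d) * ∫⁻ x in G, ENNReal.ofReal (‖T x - x‖ ^ 2) := by
  set V := ∫⁻ x in G, ENNReal.ofReal (‖T x - x‖ ^ 2) with hVdef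
  have hfk := isFiniteKernel_fluxK hT hs hP hGf hPG
  have hJm : MeasurableSet radii := measurableSet_Ioo
  set κ := fluxK hT hs hP with hκ
  have hκR : ∀ R, κ R = fluxM T s P R := fun R => rfl
  have hmk : ∀ R : ℝ, Measurable fun y : Ed d × ℝ => (R, y) := fun R => measurable_prodMk_left
  have hcut : ∀ τ : ℝ, MeasurableSet {p : ℝ × (Ed d × ℝ) | p.2.2 ≤ 1 - τ} := fun τ =>
    measurableSet_le (measurable_snd.comp measurable_snd) measurable_const
  -- absolute continuity of the space-time flux
  have hac : (volume.restrict radii) ⊗ₘ κ ≪ (volume.restrict radii) ⊗ₘ (lateralK d) := by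
    refine Measure.AbsolutelyContinuous.mk fun A hA hA0 => ?_
    have hA0' : ∫⁻ R in radii, lateral d R (Prod.mk R ⁻¹' A) = 0 := by
      rw [Measure.compProd_apply hA] at hA0
      rw [← hA0]
      exact setLIntegral_congr_fun hJm fun R hR => by rw [lateralK_eq hR]
    have hcutn : ∀ n : ℕ, ∫⁻ R in radii, fluxM T s P R
        (Prod.mk R ⁻¹' (A ∩ {p | p.2.2 ≤ 1 - 1 / ((n:ℝ) + 1)})) = 0 := by
      intro n
      have hτ : 0 < 1 / ((n:ℝ) + 1) := by positivity
      set A' := A ∩ {p : ℝ × (Ed d × ℝ) | p.2.2 ≤ 1 - 1 / ((n:ℝ) + 1)} with hA'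
      have hA'm : MeasurableSet A' := hA.inter (hcut _)
      set m := ∫⁻ R in radii, fluxM T s P R (Prod.mk R ⁻¹' A') with hm
      have hbd : ∀ N : ℕ, (N : ℝ≥0∞) * m ≤ ENNReal.ofReal (((1 / ((n:ℝ) + 1))⁻¹) ^ d) * V := by
        intro N
        have hζm : Measurable (A'.indicator fun _ => (N : ℝ≥0∞)) := measurable_const.indicator hA'm
        have key := flux_key' hd hT hG hmono hs hP hPG hPs hτ hζm (fun R z t h =>
          indicator_of_notMem (fun h' => absurd h'.2 (not_le.2 h)) _)
        have e1 : ∀ R, (∫⁻ y, A'.indicator (fun _ => (N : ℝ≥0∞)) (R, y) ∂(fluxM T s P R)) =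
            N * fluxM T s P R (Prod.mk R ⁻¹' A') := fun R => by
          rw [← lintegral_indicator_const (hmk R hA'm)]; rfl
        have e2 : ∫⁻ R in radii, ∫⁻ y, A'.indicator (fun _ => (N : ℝ≥0∞)) (R, y) ^ 2 ∂(lateral d R) = 0 := by
          have : ∀ R, (∫⁻ y, A'.indicator (fun _ => (N : ℝ≥0∞)) (R, y) ^ 2 ∂(lateral d R)) =
              (N:ℝ≥0∞) ^ 2 * lateral d R (Prod.mk R ⁻¹' A') := fun R => by
            rw [← lintegral_indicator_const (hmk R hA'm)]
            refine lintegral_congr fun y => ?_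
            by_cases hy : (R, y) ∈ A'
            · rw [indicator_of_mem hy, indicator_of_mem (show y ∈ Prod.mk R ⁻¹' A' from hy)]
            · rw [indicator_of_notMem hy, indicator_of_notMem (show y ∉ Prod.mk R ⁻¹' A' from hy)]
              simp
          simp_rw [this]
          rw [lintegral_const_mul' _ _ (by simp)]
          refine mul_eq_zero_of_right _ (le_antisymm ?_ zero_le)
          rw [← hA0']
          exact lintegral_mono fun R => measure_mono fun y hy => hy.1
        rw [e2, add_zero] at key
        simp_rw [e1] at key
        rw [lintegral_const_mul' _ _ (by simp)] at key
        refine le_trans ?_ key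
        exact le_mul_of_one_le_left zero_le one_le_two
      by_contra hne
      have hfin : ENNReal.ofReal (((1 / ((n:ℝ) + 1))⁻¹) ^ d) * V ≠ ∞ :=
        ENNReal.mul_ne_top ENNReal.ofReal_ne_top hV
      obtain ⟨N, hN⟩ := ENNReal.exists_nat_mul_gt hne hfin
      exact absurd (hbd N) (not_le.2 hN)
    rw [Measure.compProd_apply hA]
    rw [lintegral_eq_zero_iff (Kernel.measurable_kernel_prodMk_left hA)]
    have hall : ∀ᵐ R ∂(volume.restrict radii), ∀ n : ℕ, fluxM T s P R
        (Prod.mk R ⁻¹' (A ∩ {p | p.2.2 ≤ 1 - 1 / ((n:ℝ) + 1)})) = 0 := by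
      rw [ae_all_iff]
      intro n
      have := hcutn n
      exact (lintegral_eq_zero_iff
        (Kernel.measurable_kernel_prodMk_left (κ := κ) (hA.inter (hcut (1 / ((n:ℝ) + 1)))))).1 this
    filter_upwards [hall] with R hR
    change fluxM T s P R (Prod.mk R ⁻¹' A) = 0
    have hlate : fluxM T s P R {y | ¬ y.2 < 1} = 0 := by
      have hlm : MeasurableSet {y : Ed d × ℝ | ¬ y.2 < 1} :=
        (measurableSet_lt measurable_snd measurable_const).compl
      rw [fluxM, Measure.map_apply (measurable_cross hT hs R) hlm]
      refine (Measure.restrict_apply_eq_zero' (measurableSet_slice hP R)).2 ?_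
      convert measure_empty (μ := volume)
      ext x
      simp only [mem_inter_iff, mem_empty_iff_false, iff_false, not_and]
      exact fun h h' => h (hP1 _ h')
    refine measure_mono_null (t := (⋃ n : ℕ, Prod.mk R ⁻¹' (A ∩ {p | p.2.2 ≤ 1 - 1 / ((n:ℝ) + 1)})) ∪
      {y | ¬ y.2 < 1}) (fun y hy => ?_) (measure_union_null (measure_iUnion_null hR) hlate)
    by_cases h1 : y.2 < 1
    · left
      obtain ⟨n, hn⟩ := exists_nat_one_div_lt (sub_pos.2 h1)
      exact mem_iUnion.2 ⟨n, hy, by simp only [Set.mem_ofPred_eq]; linarith⟩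
    · exact Or.inr h1
  have hac' : ∀ᵐ R ∂(volume.restrict radii), fluxM T s P R =
      (lateral d R).withDensity (fun y => Kernel.rnDeriv κ (lateralK d) R y) := by
    filter_upwards [Measure.absolutelyContinuous_compProd_right_iff.1 hac,
      ae_restrict_mem hJm] with R hR hRJ
    rw [← hκR, ← Kernel.withDensity_rnDeriv_eq hR, Kernel.withDensity_apply _
      (Kernel.measurable_rnDeriv κ (lateralK d)), lateralK_eq hRJ]
  set q : ℝ × (Ed d × ℝ) → ℝ≥0∞ := fun p => Kernel.rnDeriv κ (lateralK d) p.1 p.2 with hq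
  have hqm : Measurable q := Kernel.measurable_rnDeriv κ (lateralK d)
  refine ⟨q, hqm, hac', fun τ hτ => ?_⟩
  set k := ENNReal.ofReal ((τ⁻¹) ^ d) with hk
  -- truncate the density and test the flux with it
  set ζ : ℕ → ℝ × (Ed d × ℝ) → ℝ≥0∞ := fun N => {p : ℝ × (Ed d × ℝ) | p.2.2 ≤ 1 - τ}.indicator
    (fun p => min (q p) N) with hζ
  have hζm : ∀ N, Measurable (ζ N) := fun N => (hqm.min measurable_const).indicator (hcut τ)
  have hζq : ∀ N p, ζ N p ≤ q p := fun N p => by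
    simp only [hζ, indicator]; split_ifs
    · exact min_le_left _ _
    · exact zero_le
  have hζN : ∀ N p, ζ N p ≤ N := fun N p => by
    simp only [hζ, indicator]; split_ifs
    · exact min_le_right _ _
    · exact zero_le
  have hI : ∀ N, (∫⁻ R in radii, ∫⁻ y, ζ N (R, y) ^ 2 ∂(lateral d R)) ≤ k * V := by
    intro N
    set I := ∫⁻ R in radii, ∫⁻ y, ζ N (R, y) ^ 2 ∂(lateral d R) with hIdef
    have hIfin : I ≠ ∞ := by
      have : I ≤ ∫⁻ R in radii, (N:ℝ≥0∞) ^ 2 * (ENNReal.ofReal (2 ^ (d - 1)) * om d univ) := by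
        refine setLIntegral_mono' hJm fun R hR => ?_
        refine (lintegral_mono fun y => pow_le_pow_left' (hζN N (R, y)) 2).trans ?_
        rw [lintegral_const]
        exact mul_le_mul_right (lateral_univ_le (by linarith [hR.1]) (by linarith [hR.2])) _
      refine ne_top_of_le_ne_top ?_ this
      rw [setLIntegral_const, Real.volume_Ioo]
      exact ENNReal.mul_ne_top (ENNReal.mul_ne_top (by simp)
        (ENNReal.mul_ne_top ENNReal.ofReal_ne_top (measure_ne_top _ _))) ENNReal.ofReal_ne_top
    have key := flux_key' hd hT hG hmono hs hP hPG hPs hτ (hζm N) (fun R z t h =>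
          indicator_of_notMem (show (R, z, t) ∉ {p : ℝ × (Ed d × ℝ) | p.2.2 ≤ 1 - τ} from
            not_le.2 h) _)
    have hle : I ≤ ∫⁻ R in radii, ∫⁻ y, ζ N (R, y) ∂(fluxM T s P R) := by
      refine lintegral_mono_ae ?_
      filter_upwards [hac'] with R hR
      have hq1 : Measurable fun y => Kernel.rnDeriv κ (lateralK d) R y := hqm.comp (hmk R)
      have hz1 : Measurable fun y => ζ N (R, y) := (hζm N).comp (hmk R)
      rw [hR, lintegral_withDensity_eq_lintegral_mul _ hq1 hz1]
      refine lintegral_mono fun y => ?_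
      rw [pow_two]
      exact mul_le_mul_left (hζq N (R, y)) _
    have h2 : I + I ≤ k * V + I := by
      calc I + I = 2 * I := (two_mul I).symm
        _ ≤ _ := (mul_le_mul_right hle _).trans key
    exact (ENNReal.add_le_add_iff_right hIfin).1 h2
  have hsup : ∀ R y, ({y : Ed d × ℝ | y.2 ≤ 1 - τ}.indicator (fun y => q (R, y) ^ 2) y) =
      ⨆ N, ζ N (R, y) ^ 2 := by
    intro R y
    by_cases hy : y.2 ≤ 1 - τ
    · have e : ∀ N, ζ N (R, y) = min (q (R, y)) N := fun N =>
        indicator_of_mem (show (R, y) ∈ {p : ℝ × (Ed d × ℝ) | p.2.2 ≤ 1 - τ} from hy) _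
      rw [indicator_of_mem (show y ∈ {y : Ed d × ℝ | y.2 ≤ 1 - τ} from hy)]
      simp_rw [e]
      rw [← ENNReal.iSup_pow_of_ne_zero two_ne_zero]
      have hs : (⨆ N : ℕ, min (q (R, y)) (N : ℝ≥0∞)) = q (R, y) := by
        have := inf_iSup_eq (q (R, y)) (fun N : ℕ => (N : ℝ≥0∞))
        rw [ENNReal.iSup_natCast, inf_top_eq] at this
        exact this.symm
      rw [hs]
    · have e : ∀ N, ζ N (R, y) = 0 := fun N =>
        indicator_of_notMem (show (R, y) ∉ {p : ℝ × (Ed d × ℝ) | p.2.2 ≤ 1 - τ} from hy) _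
      rw [indicator_of_notMem (show y ∉ {y : Ed d × ℝ | y.2 ≤ 1 - τ} from hy)]
      simp [e]
  have hmonoN : ∀ p, Monotone fun N => ζ N p ^ 2 := fun p N M h => by
    refine pow_le_pow_left' ?_ 2
    simp only [hζ, indicator]; split_ifs
    · exact min_le_min le_rfl (by exact_mod_cast h)
    · exact le_rfl
  have hcut2 : MeasurableSet {y : Ed d × ℝ | y.2 ≤ 1 - τ} :=
    measurableSet_le measurable_snd measurable_const
  calc (∫⁻ R in radii, ∫⁻ y in {y | y.2 ≤ 1 - τ}, q (R, y) ^ 2 ∂(lateral d R))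
      = ∫⁻ R in radii, ⨆ N, ∫⁻ y, ζ N (R, y) ^ 2 ∂(lateral d R) := by
        refine lintegral_congr fun R => ?_
        rw [← lintegral_indicator hcut2]
        simp_rw [hsup R]
        exact lintegral_iSup (fun N => ((hζm N).comp (hmk R)).pow_const 2)
          (fun N M h y => hmonoN (R, y) h)
    _ = ⨆ N, ∫⁻ R in radii, ∫⁻ y, ζ N (R, y) ^ 2 ∂(lateral d R) := by
        have e : ∀ N, (∫⁻ R in radii, ∫⁻ y, ζ N (R, y) ^ 2 ∂(lateral d R)) =
            ∫⁻ R in radii, ∫⁻ y, ζ N (R, y) ^ 2 ∂(lateralK d R) := fun N =>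
          setLIntegral_congr_fun hJm fun R hR => by rw [lateralK_eq hR]
        have e' : (∫⁻ R in radii, ⨆ N, ∫⁻ y, ζ N (R, y) ^ 2 ∂(lateral d R)) =
            ∫⁻ R in radii, ⨆ N, ∫⁻ y, ζ N (R, y) ^ 2 ∂(lateralK d R) :=
          setLIntegral_congr_fun hJm fun R hR => by rw [lateralK_eq hR]
        simp_rw [e]
        rw [e']
        refine lintegral_iSup (fun N => ?_) (fun N M h R => lintegral_mono fun y => hmonoN (R, y) h)
        exact Measurable.lintegral_kernel_prod_right' ((hζm N).pow_const 2)
    _ ≤ k * V := iSup_le hI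

end FluxDensity

/-! ### The flux function -/

section FluxAssembly

variable {d : ℕ}

lemma integrable_of_sphere_support {R : ℝ} {F : Measure (Ed d × ℝ)} [IsFiniteMeasure F]
    (hF : ∀ᵐ y ∂F, ‖y.1‖ ≤ R ∧ y.2 ∈ Icc (0:ℝ) 1) {ζ : Ed d × ℝ → ℝ} (hζ : Continuous ζ) :
    Integrable ζ F := by
  have hK : IsCompact (closedBall (0 : Ed d) R ×ˢ Icc (0:ℝ) 1) :=
    (isCompact_closedBall _ _).prod isCompact_Icc
  obtain ⟨M, hM⟩ := hK.exists_bound_of_continuousOn hζ.continuousOn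
  refine Integrable.of_bound hζ.aestronglyMeasurable M ?_
  filter_upwards [hF] with y hy
  exact hM y ⟨by simpa using hy.1, hy.2⟩

/-- From densities with respect to the surface-time measure to the flux function `g`. -/
lemma exists_flux_function (hd : 2 ≤ d) {R τ : ℝ} (hR : 0 < R) {Fp Fm : Measure (Ed d × ℝ)}
    [IsFiniteMeasure Fp] [IsFiniteMeasure Fm] {qp qm : Ed d × ℝ → ℝ≥0∞} (hqp : Measurable qp)
    (hqm : Measurable qm) (hFp : Fp = (lateral d R).withDensity qp)
    (hFm : Fm = (lateral d R).withDensity qm) :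
    ∃ g : Ed d × ℝ → ℝ, (∀ ζ : Ed d × ℝ → ℝ, Continuous ζ →
        (∫ y, ζ y ∂Fp) - (∫ y, ζ y ∂Fm) =
          ∫ p, ζ p * g p ∂((sphMeas d R).prod (volume.restrict (Icc (0:ℝ) 1)))) ∧
      (∫⁻ p in Set.univ ×ˢ Icc (0:ℝ) (1 - τ), ENNReal.ofReal ((g p) ^ 2)
              ∂((sphMeas d R).prod (volume.restrict (Icc (0:ℝ) 1)))) ≤
        ENNReal.ofReal (3 ^ d * ubv d) * ((∫⁻ y in {y | y.2 ≤ 1 - τ}, qp y ^ 2 ∂(lateral d R)) +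
          ∫⁻ y in {y | y.2 ≤ 1 - τ}, qm y ^ 2 ∂(lateral d R)) := by
  have := sphMeas_finite (d := d) (by omega) hR
  obtain ⟨θ, hθm, hθ0, hθc, hsig⟩ := exists_sig_density hd hR
  set c := 3 ^ d * ubv d with hc
  set m := (sphMeas d R).prod (volume.restrict (Icc (0:ℝ) 1)) with hm
  set Θ : Ed d × ℝ → ℝ≥0∞ := fun p => ENNReal.ofReal (θ p.1) with hΘ
  have hΘm : Measurable Θ := (hθm.comp measurable_fst).ennreal_ofReal
  have hlat : lateral d R = m.withDensity Θ := by
    rw [lateral, hsig]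
    exact prod_withDensity_left hθm.ennreal_ofReal
  have hsupp : ∀ᵐ y ∂(lateral d R), ‖y.1‖ ≤ R ∧ y.2 ∈ Icc (0:ℝ) 1 := by
    have h1 : ∀ᵐ y ∂(lateral d R), ‖y.1‖ ≤ R := by
      have h : ∀ᵐ z ∂(sig d R), ‖z‖ ≤ R := by
        filter_upwards [sig_compl_sphere (d := d) hR.le] with z hz
        have : ‖z‖ = R := by simpa using hz
        exact this.le
      exact Measure.quasiMeasurePreserving_fst.ae h
    have h2 : ∀ᵐ y ∂(lateral d R), y.2 ∈ Icc (0:ℝ) 1 :=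
      Measure.quasiMeasurePreserving_snd.ae (ae_restrict_mem measurableSet_Icc)
    filter_upwards [h1, h2] with y a b using ⟨a, b⟩
  have gen : ∀ (F : Measure (Ed d × ℝ)) (q : Ed d × ℝ → ℝ≥0∞), IsFiniteMeasure F → Measurable q →
      F = (lateral d R).withDensity q →
      (∀ᵐ y ∂m, Θ y * q y < ∞) ∧ (∀ ζ : Ed d × ℝ → ℝ, Continuous ζ →
        Integrable (fun y => (Θ y * q y).toReal * ζ y) m ∧
        ∫ y, ζ y ∂F = ∫ y, (Θ y * q y).toReal * ζ y ∂m) ∧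
      (∫⁻ y in {y | y.2 ≤ 1 - τ}, (Θ y * q y) ^ 2 ∂m ≤
        ENNReal.ofReal c * ∫⁻ y in {y | y.2 ≤ 1 - τ}, q y ^ 2 ∂(lateral d R)) := by
    intro F q hFf hq hF
    have hFm' : F = m.withDensity (fun y => Θ y * q y) := by
      rw [hF, hlat, ← withDensity_mul _ hΘm hq]; rfl
    have hmeas : Measurable fun y => Θ y * q y := hΘm.mul hq
    have hlt : ∀ᵐ y ∂m, Θ y * q y < ∞ := by
      refine ae_lt_top hmeas ?_
      have : F univ = ∫⁻ y, Θ y * q y ∂m := by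
        rw [hFm', withDensity_apply _ MeasurableSet.univ, Measure.restrict_univ]
      rw [← this]; exact measure_ne_top _ _
    refine ⟨hlt, fun ζ hζ => ?_, ?_⟩
    · have hFs : ∀ᵐ y ∂F, ‖y.1‖ ≤ R ∧ y.2 ∈ Icc (0:ℝ) 1 := by
        rw [hF]; exact (withDensity_absolutelyContinuous _ _).ae_le hsupp
      have hi := integrable_of_sphere_support hFs hζ
      constructor
      · rw [hFm', integrable_withDensity_iff_integrable_smul' hmeas hlt] at hi
        simpa [smul_eq_mul] using hi
      · rw [hFm', integral_withDensity_eq_integral_toReal_smul hmeas hlt]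
        simp [smul_eq_mul]
    · have hset : MeasurableSet {y : Ed d × ℝ | y.2 ≤ 1 - τ} :=
        measurableSet_le measurable_snd measurable_const
      rw [hlat, restrict_withDensity hset, lintegral_withDensity_eq_lintegral_mul _ hΘm (hq.pow_const 2),
        ← lintegral_const_mul' _ _ ENNReal.ofReal_ne_top]
      refine lintegral_mono fun y => ?_
      simp only [Pi.mul_apply]
      rw [mul_pow, pow_two, mul_assoc]
      exact mul_le_mul_left (ENNReal.ofReal_le_ofReal (hθc _)) _
  obtain ⟨hp1, hp2, hp3⟩ := gen Fp qp inferInstance hqp hFp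
  obtain ⟨hm1, hm2, hm3⟩ := gen Fm qm inferInstance hqm hFm
  refine ⟨fun y => (Θ y * qp y).toReal - (Θ y * qm y).toReal, fun ζ hζ => ?_, ?_⟩
  · rw [(hp2 ζ hζ).2, (hm2 ζ hζ).2, ← integral_sub (hp2 ζ hζ).1 (hm2 ζ hζ).1]
    refine integral_congr_ae (Filter.Eventually.of_forall fun y => ?_)
    simp only; ring
  · have hsub : Set.univ ×ˢ Icc (0:ℝ) (1 - τ) ⊆ {y : Ed d × ℝ | y.2 ≤ 1 - τ} := fun y hy => hy.2.2
    rw [mul_add]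
    refine (lintegral_mono_set hsub).trans (le_trans ?_ (add_le_add hp3 hm3))
    have hsqm : Measurable fun y => (Θ y * qp y) ^ 2 := (hΘm.mul hqp).pow_const 2
    rw [← lintegral_add_left hsqm]
    refine lintegral_mono fun y => ?_
    have h : ENNReal.ofReal (((Θ y * qp y).toReal - (Θ y * qm y).toReal) ^ 2) ≤
        ENNReal.ofReal ((Θ y * qp y).toReal) ^ 2 + ENNReal.ofReal ((Θ y * qm y).toReal) ^ 2 := by
      rw [← ENNReal.ofReal_pow ENNReal.toReal_nonneg, ← ENNReal.ofReal_pow ENNReal.toReal_nonneg,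
        ← ENNReal.ofReal_add (by positivity) (by positivity)]
      refine ENNReal.ofReal_le_ofReal ?_
      nlinarith [mul_nonneg (ENNReal.toReal_nonneg (a := Θ y * qp y))
        (ENNReal.toReal_nonneg (a := Θ y * qm y))]
    refine h.trans (add_le_add ?_ ?_) <;>
      exact pow_le_pow_left' ENNReal.ofReal_toReal_le 2

end FluxAssembly

/-! ### Boundary densities by radial projection -/

section BoundaryDensity

variable {d : ℕ}

lemma geoDist_le {R : ℝ} (hR : 0 < R) {x y : Ed d} (hx : ‖x‖ = R) (hy : ‖y‖ = R) :
    geoDist R x y ≤ 2 * ‖x - y‖ := by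
  set a := ⟪x, y⟫ / R ^ 2 with ha
  have hR2 : 0 < R ^ 2 := by positivity
  have hin : |⟪x, y⟫| ≤ R ^ 2 := by
    have := abs_real_inner_le_norm x y
    rw [hx, hy] at this; nlinarith
  have ha1 : a ≤ 1 := by
    rw [ha, div_le_one hR2]; exact (le_abs_self _).trans hin
  have ha2 : -1 ≤ a := by
    rw [ha, le_div_iff₀ hR2]; linarith [neg_abs_le ⟪x, y⟫]
  set θ := Real.arccos a with hθ
  have hθ0 : 0 ≤ θ := Real.arccos_nonneg _
  have hθπ : θ ≤ Real.pi := Real.arccos_le_pi _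
  have hcos : Real.cos θ = a := Real.cos_arccos ha2 ha1
  have hnorm : ‖x - y‖ ^ 2 = (2 * R * Real.sin (θ / 2)) ^ 2 := by
    rw [norm_sub_sq_real, hx, hy]
    have h1 : ⟪x, y⟫ = R ^ 2 * Real.cos θ := by rw [hcos, ha]; field_simp
    have h2 : Real.cos θ = 1 - 2 * Real.sin (θ / 2) ^ 2 := by
      have := Real.cos_sq_add_sin_sq (θ / 2)
      have h3 : Real.cos θ = 2 * Real.cos (θ / 2) ^ 2 - 1 := by
        rw [← Real.cos_two_mul]; congr 1; ring
      rw [h3]; linarith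
    rw [h1, h2]; ring
  have hsin0 : 0 ≤ Real.sin (θ / 2) := Real.sin_nonneg_of_nonneg_of_le_pi (by linarith) (by linarith)
  have hn : ‖x - y‖ = 2 * R * Real.sin (θ / 2) :=
    (pow_left_inj₀ (norm_nonneg _) (by positivity) two_ne_zero).1 hnorm
  have hms := Real.mul_le_sin (x := θ / 2) (by linarith) (by linarith)
  have hpi := Real.pi_pos
  have h4 : θ ≤ Real.pi * Real.sin (θ / 2) := by
    have : Real.pi * (2 / Real.pi * (θ / 2)) = θ := by field_simp
    exact this.symm.le.trans (mul_le_mul_of_nonneg_left hms hpi.le)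
  have h5 : θ ≤ 4 * Real.sin (θ / 2) :=
    h4.trans (mul_le_mul_of_nonneg_right Real.pi_le_four hsin0)
  change R * θ ≤ _
  rw [hn]
  nlinarith

lemma geoDist_nonneg {R : ℝ} (hR : 0 < R) (x y : Ed d) : 0 ≤ geoDist R x y :=
  mul_nonneg hR.le (Real.arccos_nonneg _)

lemma W2geoSq_map_le {Z : Type*} [MeasurableSpace Z] {γ : Measure Z} {R : ℝ} (hR : 0 < R)
    {f g : Z → Ed d} (hf : Measurable f) (hg : Measurable g) (hfR : ∀ᵐ z ∂γ, ‖f z‖ = R)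
    (hgR : ∀ᵐ z ∂γ, ‖g z‖ = R) :
    W2geoSq R (γ.map f) (γ.map g) ≤ ENNReal.ofReal 4 * ∫⁻ z, ENNReal.ofReal (‖f z - g z‖ ^ 2) ∂γ := by
  have hfg : Measurable fun z => (f z, g z) := hf.prodMk hg
  have hgeo : Measurable fun p : Ed d × Ed d => ENNReal.ofReal ((geoDist R p.1 p.2) ^ 2) := by
    unfold geoDist
    have : Measurable fun p : Ed d × Ed d => ⟪p.1, p.2⟫ := by fun_prop
    have h2 := Real.continuous_arccos.measurable.comp (this.div_const (R ^ 2))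
    exact ((h2.const_mul R).pow_const 2).ennreal_ofReal
  refine le_trans (b := ∫⁻ p, ENNReal.ofReal ((geoDist R p.1 p.2) ^ 2) ∂(γ.map fun z => (f z, g z)))
    ?_ ?_
  · refine sInf_le ⟨γ.map fun z => (f z, g z), ?_, ?_, rfl⟩
    · rw [Measure.map_map measurable_fst hfg]; rfl
    · rw [Measure.map_map measurable_snd hfg]; rfl
  · rw [lintegral_map hgeo hfg, ← lintegral_const_mul' _ _ ENNReal.ofReal_ne_top]
    refine lintegral_mono_ae ?_
    filter_upwards [hfR, hgR] with z h1 h2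
    rw [← ENNReal.ofReal_mul (by norm_num)]
    refine ENNReal.ofReal_le_ofReal ?_
    have h3 := geoDist_le hR h1 h2
    have h4 := geoDist_nonneg hR (f z) (g z)
    nlinarith

lemma norm_rproj {R : ℝ} (hR : 0 < R) {z : Ed d} (hz : z ≠ 0) : ‖rproj R z‖ = R := by
  have : 0 < ‖z‖ := norm_pos_iff.2 hz
  rw [rproj, norm_smul, Real.norm_eq_abs, abs_of_pos (by positivity)]
  field_simp

lemma norm_rproj_sub_le {R : ℝ} {z y : Ed d} (hz : z ≠ 0) (hy : ‖y‖ = R) :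
    ‖rproj R z - y‖ ≤ 2 * ‖z - y‖ := by
  have h0 : 0 < ‖z‖ := norm_pos_iff.2 hz
  have h1 : ‖rproj R z - z‖ ≤ ‖z - y‖ := by
    have : rproj R z - z = ((R - ‖z‖) / ‖z‖) • z := by
      have e : (R - ‖z‖) / ‖z‖ = R / ‖z‖ - 1 := by field_simp
      rw [e, sub_smul, one_smul]; rfl
    rw [this, norm_smul, Real.norm_eq_abs, abs_div, abs_of_pos h0, div_mul_cancel₀ _ h0.ne', ← hy,
      abs_sub_comm]
    exact abs_norm_sub_norm_le z y
  calc ‖rproj R z - y‖ = ‖(rproj R z - z) + (z - y)‖ := by congr 1; abel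
    _ ≤ ‖rproj R z - z‖ + ‖z - y‖ := norm_add_le _ _
    _ ≤ _ := by linarith

/-- Particles whose positions `pos` have bounded density near `∂B_R` and which cross `∂B_R` at `Y`:
the radial projection of the positions is a boundary density close to the crossing measure. -/
lemma exists_boundary_density (d : ℕ) (hd : 2 ≤ d) : ∃ C : ℝ, 0 < C ∧
    ∀ (Z : Type) [MeasurableSpace Z] (γ : Measure Z) (R K : ℝ) (S : Set (Ed d)) (pos Y : Z → Ed d),
      1 ≤ R → R ≤ 5/4 → 0 < K → MeasurableSet S → (∀ z ∈ S, 1/2 ≤ ‖z‖ ∧ ‖z‖ ≤ 2) →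
      Measurable pos → Measurable Y →
      γ.map pos ≤ ENNReal.ofReal K • volume.restrict S → (∀ᵐ z ∂γ, ‖Y z‖ = R) →
      ∃ ρ : Ed d → ℝ, (∀ x, 0 ≤ ρ x) ∧
        (∫⁻ x, ENNReal.ofReal ((ρ x) ^ 2) ∂(sphMeas d R)) ≤
          ENNReal.ofReal (C * K) * ∫⁻ z, ENNReal.ofReal |‖pos z‖ - R| ∂γ ∧
        (∀ δ : ℝ, 0 ≤ δ → (∀ z ∈ S, |‖z‖ - R| ≤ δ) → ∀ x ∈ sphere (0 : Ed d) R, ρ x ≤ C * K * δ) ∧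
        W2geoSq R ((sphMeas d R).withDensity (fun x => ENNReal.ofReal (ρ x))) (γ.map Y) ≤
          ENNReal.ofReal 16 * ∫⁻ z, ENNReal.ofReal (‖pos z - Y z‖ ^ 2) ∂γ := by
  obtain ⟨C, hC, hdens⟩ := exists_projected_density (d := d) hd
  refine ⟨C, hC, fun Z _ γ R K S pos Y hR1 hR2 hK hS hSn hpos hY hle hYR => ?_⟩
  have hR0 : 0 < R := by linarith
  obtain ⟨ρ, hρm, hρ0, hmap, hsq, hsup⟩ := hdens R K S (γ.map pos) hR1 hR2 hK hS hSn hle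
  refine ⟨ρ, hρ0, ?_, hsup, ?_⟩
  · have hm : Measurable fun z : Ed d => ENNReal.ofReal |‖z‖ - R| :=
      ((measurable_norm.sub_const R).abs).ennreal_ofReal
    rwa [lintegral_map hm hpos] at hsq
  · have hne : ∀ᵐ z ∂γ, pos z ≠ 0 := by
      have h1 : ∀ᵐ w ∂(γ.map pos), w ∈ S :=
        (Measure.absolutelyContinuous_of_le hle).ae_le
          (Measure.smul_absolutelyContinuous.ae_le (ae_restrict_mem hS))
      filter_upwards [ae_of_ae_map hpos.aemeasurable h1] with z hz h0
      have := (hSn _ hz).1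
      rw [h0, norm_zero] at this
      linarith
    rw [← hmap, Measure.map_map (measurable_rproj R) hpos]
    refine (W2geoSq_map_le hR0 ((measurable_rproj R).comp hpos) hY ?_ hYR).trans ?_
    · filter_upwards [hne] with z hz using norm_rproj hR0 hz
    · rw [show (16:ℝ) = 4 * 4 by norm_num, ENNReal.ofReal_mul (by norm_num), mul_assoc]
      refine mul_le_mul_right ?_ _
      rw [← lintegral_const_mul' _ _ ENNReal.ofReal_ne_top]
      refine lintegral_mono_ae ?_
      filter_upwards [hne, hYR] with z hz hzY
      rw [← ENNReal.ofReal_mul (by norm_num)]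
      refine ENNReal.ofReal_le_ofReal ?_
      have := norm_rproj_sub_le hz hzY
      have h0 := norm_nonneg (rproj R (pos z) - Y z)
      change ‖rproj R (pos z) - Y z‖ ^ 2 ≤ _
      nlinarith

end BoundaryDensity

/-! ### Averaging over radii -/

section Selection

/-- Averaging over radii: a layer of half-width `ℓ` around `∂B_R` is charged for a set of radii of
length at most `2ℓ`. -/
lemma lintegral_layer_le {Z : Type*} [MeasurableSpace Z] {ν : Measure Z} [SFinite ν] {a ℓ : Z → ℝ}
    (ha : Measurable a) (hℓ : Measurable ℓ) {h : Z → ℝ≥0∞} (hh : Measurable h) (J : Set ℝ) :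
    Measurable (fun R => ∫⁻ z in {z | |a z - R| ≤ ℓ z}, h z ∂ν) ∧
    ∫⁻ R in J, (∫⁻ z in {z | |a z - R| ≤ ℓ z}, h z ∂ν) ≤
      ∫⁻ z, ENNReal.ofReal (2 * ℓ z) * h z ∂ν := by
  have hset : MeasurableSet {p : ℝ × Z | |a p.2 - p.1| ≤ ℓ p.2} := by
    refine measurableSet_le ?_ (hℓ.comp measurable_snd)
    exact ((ha.comp measurable_snd).sub measurable_fst).abs
  have hsetR : ∀ R : ℝ, MeasurableSet {z | |a z - R| ≤ ℓ z} := fun R =>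
    measurableSet_le (ha.sub_const R).abs hℓ
  set f : ℝ × Z → ℝ≥0∞ := {p : ℝ × Z | |a p.2 - p.1| ≤ ℓ p.2}.indicator (fun p => h p.2) with hf
  have hfm : Measurable f := (hh.comp measurable_snd).indicator hset
  have e : ∀ R, (∫⁻ z in {z | |a z - R| ≤ ℓ z}, h z ∂ν) = ∫⁻ z, f (R, z) ∂ν := fun R => by
    rw [← lintegral_indicator (hsetR R)]; rfl
  simp_rw [e]
  refine ⟨hfm.lintegral_prod_right', ?_⟩
  refine (setLIntegral_le_lintegral _ _).trans ?_
  rw [lintegral_lintegral_swap (f := fun R z => f (R, z)) hfm.aemeasurable]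
  refine lintegral_mono fun z => ?_
  have hI : ∀ R, f (R, z) = (Icc (a z - ℓ z) (a z + ℓ z)).indicator (fun _ => h z) R := fun R => by
    simp only [hf, indicator, Set.mem_ofPred_eq, mem_Icc]
    refine if_congr ?_ rfl rfl
    rw [abs_sub_le_iff]
    constructor
    · rintro ⟨h1, h2⟩; constructor <;> linarith
    · rintro ⟨h1, h2⟩; constructor <;> linarith
  simp_rw [hI]
  rw [lintegral_indicator_const measurableSet_Icc, Real.volume_Icc, mul_comm]
  refine mul_le_mul_left (ENNReal.ofReal_le_ofReal (by linarith)) _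

/-- Selection of a radius at which finitely many quantities are all controlled by their averages. -/
lemma exists_radius {n : ℕ} {f : Fin n → ℝ → ℝ≥0∞} {c : Fin n → ℝ≥0∞} (hf : ∀ i, Measurable (f i))
    (hc : ∀ i, c i ≠ ∞) (hfc : ∀ i, ∫⁻ R in radii, f i R ≤ c i) {p : ℝ → Prop}
    (hp : ∀ᵐ R ∂(volume.restrict radii), p R) :
    ∃ R ∈ radii, p R ∧ ∀ i, f i R ≤ ENNReal.ofReal (4 * n) * c i := by
  have hvol : (volume.restrict radii) univ = ENNReal.ofReal (1/4) := by
    rw [Measure.restrict_apply_univ, Real.volume_Ioo]; norm_num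
  have hne : volume.restrict radii ≠ 0 := fun h => by
    have h0 : (0 : ℝ≥0∞) < ENNReal.ofReal (1/4) := ENNReal.ofReal_pos.2 (by norm_num)
    rw [← hvol, h] at h0
    simp at h0
  set F : ℝ → ℝ≥0∞ := fun R => ∑ i, f i R / c i with hF
  have hInt : ∫⁻ R in radii, F R ≤ n := by
    rw [hF, lintegral_finsetSum _ fun i _ => (hf i).div_const _]
    calc ∑ i, ∫⁻ R in radii, f i R / c i ≤ ∑ _i : Fin n, (1 : ℝ≥0∞) := by
          refine Finset.sum_le_sum fun i _ => ?_
          simp_rw [div_eq_mul_inv]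
          rw [lintegral_mul_const _ (hf i), ← div_eq_mul_inv]
          exact (ENNReal.div_le_div_right (hfc i) _).trans ENNReal.div_self_le_one
      _ = n := by simp
  have hall := hp.and (ae_restrict_mem (μ := volume) (s := radii) measurableSet_Ioo)
  obtain ⟨R, hR, hle⟩ := exists_notMem_null_le_laverage (f := F) hne
    (Finset.measurable_sum _ fun i _ => (hf i).div_const _).aemeasurable (ae_iff.1 hall)
  simp only [Set.mem_ofPred_eq, not_not] at hR
  refine ⟨R, hR.2, hR.1, fun i => ?_⟩
  have h1 : F R ≤ ENNReal.ofReal (4 * n) := by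
    refine hle.trans ?_
    rw [laverage_eq, hvol]
    refine (ENNReal.div_le_div_right hInt _).trans ?_
    rw [← ENNReal.ofReal_natCast, ← ENNReal.ofReal_div_of_pos (by norm_num)]
    exact ENNReal.ofReal_le_ofReal (by linarith)
  have h2 : f i R / c i ≤ ENNReal.ofReal (4 * n) :=
    (Finset.single_le_sum (f := fun i => f i R / c i) (fun _ _ => zero_le) (Finset.mem_univ i)).trans h1
  exact (ENNReal.div_le_iff_le_mul (Or.inr ENNReal.ofReal_ne_top) (Or.inl (hc i))).1 h2

end Selection

/-! ### The flux at almost every radius -/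

section SetupSection

variable {d : ℕ}

/-- Standing situation: `Gm` is a subset of full measure of `Ω` on which `T` is monotone, and every
trajectory from `Gm` that meets `B̄_{3/2}` starts in `B_{7/4}` and has length at most `δ ≤ 1/4`. -/
structure Setup (Ω Gm : Set (Ed d)) (T : Ed d → Ed d) (δ : ℝ) : Prop where
  hT : Measurable T
  hG : MeasurableSet Gm
  sub : Gm ⊆ Ω
  null : volume (Ω \ Gm) = 0
  fin : volume Gm ≠ ∞
  mono : ∀ x ∈ Gm, ∀ y ∈ Gm, 0 ≤ ⟪T x - T y, x - y⟫
  ball2 : ball (0 : Ed d) 2 ⊆ Ω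
  hδ0 : 0 ≤ δ
  hδ : δ ≤ 1 / 4
  disp : ∀ x ∈ Gm, (∃ t ∈ Icc (0:ℝ) 1, ‖Tt T t x‖ ≤ 3 / 2) → ‖x‖ < 7 / 4 ∧ ‖T x - x‖ ≤ δ

namespace Setup

variable {Ω Gm : Set (Ed d)} {T : Ed d → Ed d} {δ : ℝ}

lemma restrict_sep (h : Setup Ω Gm T δ) (p : Ed d → Prop) :
    (volume.restrict {x ∈ Ω | p x} : Measure (Ed d)) = volume.restrict {x ∈ Gm | p x} := by
  refine Measure.restrict_congr_set ?_
  have h1 : ∀ᵐ x ∂(volume : Measure (Ed d)), x ∉ Ω \ Gm := measure_eq_zero_iff_ae_notMem.1 h.null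
  refine Filter.eventuallyEq_set.2 ?_
  filter_upwards [h1] with x hx
  constructor
  · rintro ⟨ha, hb⟩
    exact ⟨by_contra fun hc => hx ⟨ha, hc⟩, hb⟩
  · rintro ⟨ha, hb⟩
    exact ⟨h.sub ha, hb⟩

lemma restrict_Ω (h : Setup Ω Gm T δ) :
    (volume.restrict Ω : Measure (Ed d)) = volume.restrict Gm := by
  simpa using h.restrict_sep (fun _ => True)

lemma null_ball (h : Setup Ω Gm T δ) {r : ℝ} (hr : r ≤ 2) :
    volume (ball (0 : Ed d) r \ Gm) = 0 :=
  measure_mono_null (sdiff_subset_sdiff_left ((ball_subset_ball hr).trans h.ball2)) h.null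

lemma disp_of_hit (h : Setup Ω Gm T δ) {R t : ℝ} (hR : R ≤ 3 / 2) {x : Ed d} (hx : x ∈ Gm)
    (ht : t ∈ hit T R x) : ‖x‖ < 7 / 4 ∧ ‖T x - x‖ ≤ δ :=
  h.disp x hx ⟨t, (mem_hit.1 ht).1, (mem_hit.1 ht).2.trans hR⟩

/-- The flux through `∂B_R` has, for almost every radius, an `L²` density up to time `1 - τ`. -/
lemma exists_flux (hd : 2 ≤ d) (h : Setup Ω Gm T δ) (hE : enE T ≠ ∞) {τ : ℝ} (hτ : 0 < τ) :
    ∃ F : ℝ → ℝ≥0∞, Measurable F ∧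
      (∫⁻ R in radii, F R) ≤ ENNReal.ofReal (2 * (3 ^ d * ubv d) / τ ^ d) * enE T ∧
      ∀ᵐ R ∂(volume.restrict radii), ∃ g : Ed d × ℝ → ℝ,
        (∀ ζ : Ed d × ℝ → ℝ, Continuous ζ →
            (∫ x in {x ∈ Ω | 0 ≤ tmin T R x ∧ tmin T R x < tmax T R x ∧ tmax T R x < 1},
                ζ (Tt T (tmax T R x) x, tmax T R x)) -
              (∫ x in {x ∈ Ω | 0 < tmin T R x ∧ tmin T R x < tmax T R x ∧ tmax T R x ≤ 1},
                ζ (Tt T (tmin T R x) x, tmin T R x))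
            = ∫ p, ζ p * g p ∂((sphMeas d R).prod (volume.restrict (Icc (0:ℝ) 1)))) ∧
          (∫⁻ p in Set.univ ×ˢ Icc (0:ℝ) (1 - τ), ENNReal.ofReal ((g p) ^ 2)
              ∂((sphMeas d R).prod (volume.restrict (Icc (0:ℝ) 1)))) ≤ F R := by
  have hT := h.hT
  set G : Set (Ed d) := Gm ∩ ball 0 2 with hGdef
  have hGm : MeasurableSet G := h.hG.inter measurableSet_ball
  have hGf : volume G ≠ ∞ := ne_top_of_le_ne_top h.fin (measure_mono inter_subset_left)
  have hGE : (∫⁻ x in G, ENNReal.ofReal (‖T x - x‖ ^ 2)) ≤ enE T :=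
    lintegral_mono_set inter_subset_right
  have hGV := ne_top_of_le_ne_top hE hGE
  have hmono : ∀ x ∈ G, ∀ y ∈ G, 0 ≤ ⟪T x - T y, x - y⟫ := fun x hx y hy => h.mono x hx.1 y hy.1
  have hmM := measurable_tmax_uncurry hT
  have hmm := measurable_tmin_uncurry hT
  have hGG : MeasurableSet {p : ℝ × Ed d | p.1 ∈ radii ∧ p.2 ∈ G} :=
    (measurable_fst measurableSet_Ioo).inter (measurable_snd hGm)
  set Pp : Set (ℝ × Ed d) := {p | p.1 ∈ radii ∧ p.2 ∈ G} ∩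
    {p | 0 ≤ tmin T p.1 p.2 ∧ tmin T p.1 p.2 < tmax T p.1 p.2 ∧ tmax T p.1 p.2 < 1} with hPp
  set Pm : Set (ℝ × Ed d) := {p | p.1 ∈ radii ∧ p.2 ∈ G} ∩
    {p | 0 < tmin T p.1 p.2 ∧ tmin T p.1 p.2 < tmax T p.1 p.2 ∧ tmax T p.1 p.2 ≤ 1} with hPm
  have hPpm : MeasurableSet Pp := hGG.inter ((measurableSet_le measurable_const hmm).inter
    ((measurableSet_lt hmm hmM).inter (measurableSet_lt hmM measurable_const)))
  have hPmm : MeasurableSet Pm := hGG.inter ((measurableSet_lt measurable_const hmm).inter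
    ((measurableSet_lt hmm hmM).inter (measurableSet_le hmM measurable_const)))
  obtain ⟨qp, hqpm, hqp, hqpE⟩ := flux_density (P := Pp) (by omega) hT hGm hGf hmono hGV hmM hPpm
    (fun p hp => hp.1.2) (fun p hp => ⟨tmax_mem_Icc T p.1 p.2,
      (exit_spec (hp.2.1.trans_lt hp.2.2.1) hp.2.2.2).1⟩) (fun p hp => hp.2.2.2)
  obtain ⟨qm, hqmm, hqm, hqmE⟩ := flux_density (P := Pm) (by omega) hT hGm hGf hmono hGV hmm hPmm
    (fun p hp => hp.1.2) (fun p hp => ⟨tmin_mem_Icc T p.1 p.2,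
      (enter_spec hp.2.1 (hp.2.2.1.trans_le hp.2.2.2)).1⟩) (fun p hp => hp.2.2.1.trans_le hp.2.2.2)
  have hcut : MeasurableSet {y : Ed d × ℝ | y.2 ≤ 1 - τ} :=
    measurableSet_le measurable_snd measurable_const
  have hcut' : MeasurableSet {p : ℝ × (Ed d × ℝ) | p.2.2 ≤ 1 - τ} :=
    measurableSet_le (measurable_snd.comp measurable_snd) measurable_const
  have hmeas : ∀ q : ℝ × (Ed d × ℝ) → ℝ≥0∞, Measurable q →
      Measurable fun R => ∫⁻ y in {y | y.2 ≤ 1 - τ}, q (R, y) ^ 2 ∂(lateralK d R) := fun q hq => by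
    have h1 : Measurable ({p : ℝ × (Ed d × ℝ) | p.2.2 ≤ 1 - τ}.indicator fun p => q p ^ 2) :=
      (hq.pow_const 2).indicator hcut'
    have h2 := Measurable.lintegral_kernel_prod_right' (κ := lateralK d) h1
    have e : (fun R => ∫⁻ y in {y | y.2 ≤ 1 - τ}, q (R, y) ^ 2 ∂(lateralK d R)) = fun R =>
        ∫⁻ y, ({p : ℝ × (Ed d × ℝ) | p.2.2 ≤ 1 - τ}.indicator fun p => q p ^ 2) (R, y)
          ∂(lateralK d R) := by
      funext R
      rw [← lintegral_indicator hcut]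
      rfl
    rw [e]
    exact h2
  set c := ENNReal.ofReal (3 ^ d * ubv d) with hc
  refine ⟨fun R => c * ((∫⁻ y in {y | y.2 ≤ 1 - τ}, qp (R, y) ^ 2 ∂(lateralK d R)) +
    ∫⁻ y in {y | y.2 ≤ 1 - τ}, qm (R, y) ^ 2 ∂(lateralK d R)),
    ((hmeas _ hqpm).add (hmeas _ hqmm)).const_mul _, ?_, ?_⟩
  · simp only []
    rw [lintegral_const_mul' _ _ ENNReal.ofReal_ne_top, lintegral_add_left (hmeas _ hqpm)]
    have e : ∀ q : ℝ × (Ed d × ℝ) → ℝ≥0∞,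
        (∫⁻ R in radii, (∫⁻ y in {y | y.2 ≤ 1 - τ}, q (R, y) ^ 2 ∂(lateralK d R))) =
        ∫⁻ R in radii, (∫⁻ y in {y | y.2 ≤ 1 - τ}, q (R, y) ^ 2 ∂(lateral d R)) := fun q =>
      setLIntegral_congr_fun measurableSet_Ioo fun R hR => by rw [lateralK_eq hR]
    rw [e, e]
    have h1 := add_le_add (hqpE τ hτ) (hqmE τ hτ)
    refine (mul_le_mul_right h1 c).trans ?_
    rw [← two_mul]
    have h2 : c * (2 * (ENNReal.ofReal (τ⁻¹ ^ d) * ∫⁻ x in G, ENNReal.ofReal (‖T x - x‖ ^ 2))) ≤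
        c * (2 * (ENNReal.ofReal (τ⁻¹ ^ d) * enE T)) := by gcongr
    refine h2.trans (le_of_eq ?_)
    have h3 : 2 * (3 ^ d * ubv d) / τ ^ d = (3 ^ d * ubv d) * (2 * τ⁻¹ ^ d) := by
      rw [inv_pow]; field_simp
    have hu := (ubv_pos d).le
    rw [h3, ENNReal.ofReal_mul (p := 3 ^ d * ubv d) (by positivity),
      ENNReal.ofReal_mul (p := 2) (by norm_num)]
    simp only [hc, ENNReal.ofReal_ofNat]
    ring
  · filter_upwards [hqp, hqm, ae_restrict_mem measurableSet_Ioo] with R h1 h2 hR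
    have hfin : ∀ (s : ℝ × Ed d → ℝ) (P : Set (ℝ × Ed d)), Measurable s → (∀ p ∈ P, p.2 ∈ G) →
        IsFiniteMeasure (fluxM T s P R) := fun s P hs hP => by
      refine ⟨?_⟩
      rw [fluxM, Measure.map_apply (measurable_cross hT hs R) MeasurableSet.univ, preimage_univ,
        Measure.restrict_apply_univ]
      have hsub : {x | (R, x) ∈ P} ⊆ G := fun x hx => hP _ hx
      exact (measure_mono hsub).trans_lt hGf.lt_top
    have := hfin _ Pp hmM fun p hp => hp.1.2
    have := hfin _ Pm hmm fun p hp => hp.1.2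
    have hmk : Measurable fun y : Ed d × ℝ => (R, y) := measurable_prodMk_left
    have hqp1 : Measurable fun y : Ed d × ℝ => qp (R, y) := hqpm.comp hmk
    have hqm1 : Measurable fun y : Ed d × ℝ => qm (R, y) := hqmm.comp hmk
    obtain ⟨g, hg1, hg2⟩ := exists_flux_function (τ := τ) hd (by linarith [hR.1]) hqp1 hqm1 h1 h2
    refine ⟨g, fun ζ hζ => ?_, ?_⟩
    · have hR2 : R ≤ 3 / 2 := by linarith [hR.2]
      have hB : ∀ x ∈ Gm, (∃ t, t ∈ hit T R x) → x ∈ G := fun x hx ⟨t, ht⟩ =>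
        ⟨hx, mem_ball_zero_iff.2 (by linarith [(h.disp_of_hit hR2 hx ht).1])⟩
      rw [← hg1 ζ hζ, h.restrict_sep, h.restrict_sep]
      unfold fluxM
      rw [integral_map (measurable_cross hT hmM R).aemeasurable
        hζ.measurable.aestronglyMeasurable, integral_map (measurable_cross hT hmm R).aemeasurable
        hζ.measurable.aestronglyMeasurable]
      have e1 : {x : Ed d | (R, x) ∈ Pp} =
          {x ∈ Gm | 0 ≤ tmin T R x ∧ tmin T R x < tmax T R x ∧ tmax T R x < 1} := by
        ext x
        constructor
        · rintro ⟨ha, hb⟩; exact ⟨ha.2.1, hb⟩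
        · rintro ⟨ha, hb⟩
          exact ⟨⟨hR, hB x ha ⟨_, tmax_mem_hit (hb.1.trans_lt hb.2.1)⟩⟩, hb⟩
      have e2 : {x : Ed d | (R, x) ∈ Pm} =
          {x ∈ Gm | 0 < tmin T R x ∧ tmin T R x < tmax T R x ∧ tmax T R x ≤ 1} := by
        ext x
        constructor
        · rintro ⟨ha, hb⟩; exact ⟨ha.2.1, hb⟩
        · rintro ⟨ha, hb⟩
          exact ⟨⟨hR, hB x ha ⟨_, tmin_mem_hit (hb.2.1.trans_le hb.2.2)⟩⟩, hb⟩
      rw [e1, e2]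
    · rw [lateralK_eq hR]
      exact hg2

end Setup

end SetupSection

/-! ### Boundary densities for the crossing particles -/

section BoundaryData

variable {d : ℕ} {Ω Gm : Set (Ed d)} {T : Ed d → Ed d} {δ : ℝ}

/-- Boundary density for a family of trajectories that cross `∂B_R` at the points `Y x` and whose
starting points are used as the smeared-out crossing positions. -/
lemma boundary_main (d : ℕ) (hd : 2 ≤ d) : ∃ C : ℝ, 0 < C ∧
    ∀ (T : Ed d → Ed d) (δ R : ℝ) (A : Set (Ed d)) (Y : Ed d → Ed d), R ∈ radii → 0 ≤ δ → δ ≤ 1 / 4 →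
      Measurable T → MeasurableSet A → Measurable Y →
      (∀ x ∈ A, ‖x‖ < 7 / 4 ∧ ‖T x - x‖ ≤ δ ∧ ‖Y x‖ = R ∧ ‖x - Y x‖ ≤ ‖T x - x‖) →
      ∃ ρ : Ed d → ℝ, (∀ x, 0 ≤ ρ x) ∧
        (∫⁻ x, ENNReal.ofReal ((ρ x) ^ 2) ∂(sphMeas d R)) ≤ ENNReal.ofReal C *
          (∫⁻ x in {x | |‖x‖ - R| ≤ ‖T x - x‖}, ENNReal.ofReal ‖T x - x‖
            ∂(volume.restrict (ball 0 2 ∩ {x | ‖T x - x‖ ≤ δ}))) ∧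
        (∀ x ∈ sphere (0 : Ed d) R, ρ x ≤ C * δ) ∧
        W2geoSq R ((sphMeas d R).withDensity (fun x => ENNReal.ofReal (ρ x)))
            ((volume.restrict A).map Y) ≤ ENNReal.ofReal C *
          (∫⁻ x in {x | |‖x‖ - R| ≤ ‖T x - x‖}, ENNReal.ofReal (‖T x - x‖ ^ 2)
            ∂(volume.restrict (ball 0 2 ∩ {x | ‖T x - x‖ ≤ δ}))) := by
  obtain ⟨C, hC, H⟩ := exists_boundary_density d hd
  refine ⟨C + 16, by linarith, fun T δ R A Y hR hδ0 hδ hT hA hY hAY => ?_⟩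
  have hcl : ∀ x ∈ A, |‖x‖ - R| ≤ ‖T x - x‖ := fun x hx => by
    obtain ⟨-, -, h3, h4⟩ := hAY x hx
    rw [← h3]
    exact (abs_norm_sub_norm_le _ _).trans h4
  have hnT : Measurable fun x => ‖T x - x‖ := (hT.sub measurable_id).norm
  set S : Set (Ed d) := {z | (1 / 2 ≤ ‖z‖ ∧ ‖z‖ ≤ 2) ∧ |‖z‖ - R| ≤ δ} with hS
  have hSm : MeasurableSet S :=
    ((measurableSet_le measurable_const measurable_norm).inter
      (measurableSet_le measurable_norm measurable_const)).inter
      (measurableSet_le (measurable_norm.sub_const R).abs measurable_const)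
  have hAS : A ⊆ S := fun x hx => by
    obtain ⟨h1, h2, -, -⟩ := hAY x hx
    have h3 := (hcl x hx).trans h2
    have h4 := abs_le.1 h3
    exact ⟨⟨by linarith [hR.1, h4.1], by linarith⟩, h3⟩
  have hle : (volume.restrict A).map id ≤ ENNReal.ofReal 1 • volume.restrict S := by
    rw [Measure.map_id, ENNReal.ofReal_one, one_smul]
    exact Measure.restrict_mono hAS le_rfl
  obtain ⟨ρ, hρ0, hρ1, hρ2, hρ3⟩ := H (Ed d) (volume.restrict A) R 1 S id Y hR.1.le hR.2.le one_pos hSm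
    (fun z hz => hz.1) measurable_id hY hle
    ((ae_restrict_mem hA).mono fun x hx => (hAY x hx).2.2.1)
  have hν : ∀ f : Ed d → ℝ≥0∞, ∫⁻ x in A, f x ≤ ∫⁻ x in {x | |‖x‖ - R| ≤ ‖T x - x‖}, f x
      ∂(volume.restrict (ball 0 2 ∩ {x | ‖T x - x‖ ≤ δ})) := fun f => by
    rw [Measure.restrict_restrict (measurableSet_le (measurable_norm.sub_const R).abs hnT)]
    exact lintegral_mono_set fun x hx => ⟨hcl x hx,
      mem_ball_zero_iff.2 (by linarith [(hAY x hx).1]), (hAY x hx).2.1⟩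
  refine ⟨ρ, hρ0, hρ1.trans ?_, fun x hx => ?_, hρ3.trans ?_⟩
  · refine mul_le_mul' (ENNReal.ofReal_le_ofReal (by linarith)) (le_trans ?_ (hν _))
    exact setLIntegral_mono' hA fun x hx => ENNReal.ofReal_le_ofReal (hcl x hx)
  · have := hρ2 δ hδ0 (fun z hz => hz.2) x hx
    nlinarith
  · refine mul_le_mul' (ENNReal.ofReal_le_ofReal (by linarith)) (le_trans ?_ (hν _))
    refine setLIntegral_mono' hA fun x hx => ENNReal.ofReal_le_ofReal ?_
    exact pow_le_pow_left₀ (norm_nonneg _) (hAY x hx).2.2.2 2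

/-- Transport length in the terminal layer: the distance from the end point `T x` to its
partner `y`, plus the distance travelled by `x` in the last `τ` units of time (counted for `x ∈ B₂` only). -/
def lenL (T : Ed d → Ed d) (τ : ℝ) (p : Ed d × Ed d) : ℝ :=
  ‖p.2 - T p.1‖ + τ * (ball (0 : Ed d) 2).indicator (fun x => ‖T x - x‖) p.1

lemma measurable_lenL (hT : Measurable T) (τ : ℝ) : Measurable (lenL (d := d) T τ) := by
  have h1 : Measurable fun p : Ed d × Ed d => T p.1 := hT.comp measurable_fst
  have h2 : Measurable fun p : Ed d × Ed d => (ball (0 : Ed d) 2).indicator (fun x => ‖T x - x‖) p.1 :=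
    ((hT.sub measurable_id).norm.indicator measurableSet_ball).comp measurable_fst
  exact (measurable_snd.sub h1).norm.add (h2.const_mul τ)

lemma lenL_nonneg {τ : ℝ} (hτ : 0 ≤ τ) (p : Ed d × Ed d) : 0 ≤ lenL T τ p := by
  unfold lenL
  have : 0 ≤ (ball (0 : Ed d) 2).indicator (fun x => ‖T x - x‖) p.1 :=
    indicator_nonneg (fun x _ => norm_nonneg _) _
  positivity

lemma lenL_of_mem {τ : ℝ} {p : Ed d × Ed d} (hp : p.1 ∈ ball (0 : Ed d) 2) :
    lenL T τ p = ‖p.2 - T p.1‖ + τ * ‖T p.1 - p.1‖ := by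
  rw [lenL, indicator_of_mem hp]

/-- Boundary density for the trajectories that exit `B_R` in the terminal layer, smeared out by means
of the plan `γ` that couples the end points to a constant density. -/
lemma boundary_lay (d : ℕ) (hd : 2 ≤ d) {κ₁ : ℝ} (hκ₁ : 0 < κ₁) : ∃ C : ℝ, 0 < C ∧
    ∀ (T : Ed d → Ed d) (δ R τ : ℝ) (A : Set (Ed d)) (Y : Ed d → Ed d) (γ : Measure (Ed d × Ed d)),
      R ∈ radii → δ ≤ 1 / 4 → 0 < τ → τ < 1 →
      Measurable T → MeasurableSet A → Measurable Y →
      (∀ x ∈ A, ‖x‖ < 7 / 4 ∧ ‖T x - x‖ ≤ δ ∧ ‖Y x‖ = R ∧ ‖T x - Y x‖ ≤ τ * ‖T x - x‖) →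
      γ.map Prod.snd ≤ ENNReal.ofReal κ₁ • volume →
      (γ.map Prod.fst).restrict A = volume.restrict A →
      ∃ ρ : Ed d → ℝ, (∀ x, 0 ≤ ρ x) ∧
        (∫⁻ x, ENNReal.ofReal ((ρ x) ^ 2) ∂(sphMeas d R)) ≤ ENNReal.ofReal C *
          (∫⁻ p in {p | |‖p.2‖ - R| ≤ lenL T τ p}, ENNReal.ofReal (lenL T τ p) ∂γ) ∧
        W2geoSq R ((sphMeas d R).withDensity (fun x => ENNReal.ofReal (ρ x)))
            ((volume.restrict A).map Y) ≤ ENNReal.ofReal C *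
          (∫⁻ p in {p | |‖T p.1‖ - R| ≤ τ * ‖T p.1 - p.1‖}, ENNReal.ofReal (lenL T τ p ^ 2)
            ∂(γ.restrict {p | p.1 ∈ ball 0 2 ∧ ‖T p.1 - p.1‖ ≤ δ})) := by
  obtain ⟨C, hC, H⟩ := exists_boundary_density d hd
  refine ⟨C * (κ₁ + 1) * 2 + 64, by positivity, fun T δ R τ A Y γ hR hδ hτ0 hτ1 hT hA hY hAY hγ2 hγ1 => ?_⟩
  have hT1 : Measurable fun p : Ed d × Ed d => T p.1 := hT.comp measurable_fst
  have hL := measurable_lenL hT τ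
  have hAB : ∀ x ∈ A, x ∈ ball (0 : Ed d) 2 := fun x hx =>
    mem_ball_zero_iff.2 (by linarith [(hAY x hx).1])
  have hcl : ∀ x ∈ A, |‖T x‖ - R| ≤ τ * ‖T x - x‖ := fun x hx => by
    obtain ⟨-, -, h3, h4⟩ := hAY x hx
    rw [← h3]
    exact (abs_norm_sub_norm_le _ _).trans h4
  have hcy : ∀ p : Ed d × Ed d, p.1 ∈ A → |‖p.2‖ - R| ≤ lenL T τ p := fun p hp => by
    rw [lenL_of_mem (hAB _ hp)]
    have h1 := abs_norm_sub_norm_le p.2 (T p.1)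
    have h2 := abs_sub_le ‖p.2‖ ‖T p.1‖ R
    linarith [hcl _ hp]
  have hsm : ∀ x ∈ A, τ * ‖T x - x‖ ≤ 1 / 4 := fun x hx => by
    have := (hAY x hx).2.1
    nlinarith [norm_nonneg (T x - x)]
  set A' : Set (Ed d × Ed d) := Prod.fst ⁻¹' A with hA'
  have hA'm : MeasurableSet A' := measurable_fst hA
  set N : Set (Ed d × Ed d) := {p | |‖p.2‖ - R| < 1 / 4} with hN
  have hNm : MeasurableSet N :=
    measurableSet_lt ((measurable_norm.comp measurable_snd).sub_const R).abs measurable_const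
  classical
  set pos : Ed d × Ed d → Ed d := N.piecewise Prod.snd Prod.fst with hpos
  have hposm : Measurable pos := Measurable.piecewise hNm measurable_snd measurable_fst
  set S : Set (Ed d) := {z | 1 / 2 ≤ ‖z‖ ∧ ‖z‖ ≤ 2} with hS
  have hSm : MeasurableSet S := (measurableSet_le measurable_const measurable_norm).inter
      (measurableSet_le measurable_norm measurable_const)
  have hfst : (γ.restrict A').map Prod.fst = volume.restrict A := by
    rw [← hγ1, Measure.restrict_map measurable_fst hA]
  have hposS : ∀ p ∈ A', pos p ∈ S := fun p hp => by
    by_cases hpN : p ∈ N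
    · rw [hpos, piecewise_eq_of_mem _ _ _ hpN]
      have := abs_lt.1 (show |‖p.2‖ - R| < 1 / 4 from hpN)
      exact ⟨by linarith [hR.1, this.1], by linarith [hR.2, this.2]⟩
    · rw [hpos, piecewise_eq_of_notMem _ _ _ hpN]
      have h1 := abs_le.1 ((hcl _ hp).trans (hsm _ hp))
      have h2 := norm_sub_norm_le (T p.1) p.1
      have h3 := hAY _ hp
      exact ⟨by linarith [hR.1, h1.1, h3.2.1], by linarith [h3.1]⟩
  have hle : (γ.restrict A').map pos ≤ ENNReal.ofReal (κ₁ + 1) • volume.restrict S := by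
    refine Measure.le_iff.2 fun B hB => ?_
    rw [Measure.map_apply hposm hB, Measure.restrict_apply (hposm hB), Measure.smul_apply,
      Measure.restrict_apply hB, smul_eq_mul, ENNReal.ofReal_add hκ₁.le zero_le_one, add_mul]
    have hsub : pos ⁻¹' B ∩ A' ⊆ (Prod.snd ⁻¹' (B ∩ S)) ∪ (A' ∩ Prod.fst ⁻¹' (B ∩ S)) := by
      rintro p ⟨hpB, hpA⟩
      have hpS := hposS p hpA
      by_cases hpN : p ∈ N
      · left
        have e : pos p = p.2 := piecewise_eq_of_mem _ _ _ hpN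
        rw [mem_preimage, e] at hpB
        rw [e] at hpS
        exact ⟨hpB, hpS⟩
      · right
        have e : pos p = p.1 := piecewise_eq_of_notMem _ _ _ hpN
        rw [mem_preimage, e] at hpB
        rw [e] at hpS
        exact ⟨hpA, hpB, hpS⟩
    refine (measure_mono hsub).trans ((measure_union_le _ _).trans (add_le_add ?_ ?_))
    · rw [← Measure.map_apply measurable_snd (hB.inter hSm)]
      exact hγ2 _
    · rw [inter_comm, ← Measure.restrict_apply (measurable_fst (hB.inter hSm)),
        ← Measure.map_apply measurable_fst (hB.inter hSm), hfst, ENNReal.ofReal_one, one_mul]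
      exact Measure.restrict_apply_le _ _
  have hYf : Measurable fun p : Ed d × Ed d => Y p.1 := hY.comp measurable_fst
  obtain ⟨ρ, hρ0, hρ1, -, hρ3⟩ := H (Ed d × Ed d) (γ.restrict A') R (κ₁ + 1) S pos (fun p => Y p.1)
    hR.1.le hR.2.le (by linarith) hSm (fun z hz => hz) hposm hYf hle
    ((ae_restrict_mem hA'm).mono fun p hp => (hAY _ hp).2.2.1)
  have hmapY : (γ.restrict A').map (fun p => Y p.1) = (volume.restrict A).map Y := by
    rw [← hfst, Measure.map_map hY measurable_fst]; rfl
  rw [hmapY] at hρ3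
  have hb : ∀ p ∈ A', |‖pos p‖ - R| ≤ 2 * lenL T τ p ∧ ‖pos p - Y p.1‖ ≤ 2 * lenL T τ p := by
    intro p hp
    have h0 := hcy p hp
    have hl := lenL_nonneg (T := T) hτ0.le p
    obtain ⟨h1, h2, h3, h4⟩ := hAY _ hp
    by_cases hpN : p ∈ N
    · rw [hpos, piecewise_eq_of_mem _ _ _ hpN]
      refine ⟨by linarith, ?_⟩
      have h5 := norm_sub_le_norm_sub_add_norm_sub p.2 (T p.1) (Y p.1)
      have h6 : lenL T τ p = _ := lenL_of_mem (hAB _ hp)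
      linarith
    · rw [hpos, piecewise_eq_of_notMem _ _ _ hpN]
      have h5 : 1 / 4 ≤ lenL T τ p := (not_lt.1 hpN).trans h0
      have h6 := norm_sub_le_norm_sub_add_norm_sub p.1 (T p.1) (Y p.1)
      rw [norm_sub_rev p.1 (T p.1)] at h6
      have h7 := hsm _ hp
      have h8 : ‖p.1 - Y p.1‖ ≤ 1 / 2 := by linarith
      have h9 := abs_norm_sub_norm_le p.1 (Y p.1)
      rw [h3] at h9
      exact ⟨by linarith, by linarith⟩
  refine ⟨ρ, hρ0, hρ1.trans ?_, hρ3.trans ?_⟩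
  · calc ENNReal.ofReal (C * (κ₁ + 1)) * ∫⁻ p in A', ENNReal.ofReal |‖pos p‖ - R| ∂γ
        ≤ ENNReal.ofReal (C * (κ₁ + 1)) * ∫⁻ p in A', ENNReal.ofReal 2 * ENNReal.ofReal (lenL T τ p) ∂γ := by
          refine mul_le_mul_right (setLIntegral_mono' hA'm fun p hp => ?_) _
          rw [← ENNReal.ofReal_mul zero_le_two]
          exact ENNReal.ofReal_le_ofReal (hb p hp).1
      _ = ENNReal.ofReal (C * (κ₁ + 1) * 2) * ∫⁻ p in A', ENNReal.ofReal (lenL T τ p) ∂γ := by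
          rw [lintegral_const_mul' _ _ ENNReal.ofReal_ne_top, ← mul_assoc,
            ← ENNReal.ofReal_mul (by positivity)]
      _ ≤ _ := by
          refine mul_le_mul' (ENNReal.ofReal_le_ofReal (by linarith)) ?_
          exact lintegral_mono_set fun p hp => hcy p hp
  · calc ENNReal.ofReal 16 * ∫⁻ p in A', ENNReal.ofReal (‖pos p - Y p.1‖ ^ 2) ∂γ
        ≤ ENNReal.ofReal 16 * ∫⁻ p in A', ENNReal.ofReal 4 * ENNReal.ofReal (lenL T τ p ^ 2) ∂γ := by
          refine mul_le_mul_right (setLIntegral_mono' hA'm fun p hp => ?_) _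
          rw [← ENNReal.ofReal_mul (by norm_num)]
          refine ENNReal.ofReal_le_ofReal ?_
          have := pow_le_pow_left₀ (norm_nonneg _) (hb p hp).2 2
          linarith
      _ = ENNReal.ofReal 64 * ∫⁻ p in A', ENNReal.ofReal (lenL T τ p ^ 2) ∂γ := by
          rw [lintegral_const_mul' _ _ ENNReal.ofReal_ne_top, ← mul_assoc,
            ← ENNReal.ofReal_mul (by norm_num)]
          norm_num
      _ ≤ _ := by
          refine mul_le_mul' (ENNReal.ofReal_le_ofReal (by
            have : 0 < C * (κ₁ + 1) * 2 := by positivity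
            linarith)) ?_
          have hm : MeasurableSet {p : Ed d × Ed d | |‖T p.1‖ - R| ≤ τ * ‖T p.1 - p.1‖} :=
            measurableSet_le (hT1.norm.sub_const R).abs ((hT1.sub measurable_fst).norm.const_mul τ)
          rw [Measure.restrict_restrict hm]
          exact lintegral_mono_set fun p hp => ⟨hcl _ hp, hAB _ hp, (hAY _ hp).2.1⟩

end BoundaryData

/-! ### Data distance for the two terminal measures -/

section DataPart

variable {d : ℕ} {Ω Gm : Set (Ed d)} {T : Ed d → Ed d} {δ : ℝ}

/-- A plan whose first marginal is Lebesgue measure on a set `A ⊆ Gm` that contains all starting points in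
`Gm` of trajectories meeting `B̄_{3/2}`, and whose second marginal has density at most `κ`, with equality
on `B_{3/2}`. -/
structure IsPlan (Gm : Set (Ed d)) (T : Ed d → Ed d) (κ : ℝ) (γ : Measure (Ed d × Ed d))
    (A : Set (Ed d)) : Prop where
  meas : MeasurableSet A
  sub : A ⊆ Gm
  hits : ∀ x ∈ Gm, (∃ t ∈ Icc (0:ℝ) 1, ‖Tt T t x‖ ≤ 3 / 2) → x ∈ A
  fst : γ.map Prod.fst = volume.restrict A
  snd_le : γ.map Prod.snd ≤ ENNReal.ofReal κ • volume
  snd_eq : (γ.map Prod.snd).restrict (ball 0 (3 / 2)) =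
    ENNReal.ofReal κ • volume.restrict (ball 0 (3 / 2))
  nonneg : 0 ≤ κ

lemma IsPlan.finite {κ : ℝ} {γ : Measure (Ed d × Ed d)} {A : Set (Ed d)} (h : Setup Ω Gm T δ)
    (hγ : IsPlan Gm T κ γ A) : IsFiniteMeasure γ := by
  refine ⟨?_⟩
  have e : γ univ = (γ.map Prod.fst) univ := by
    rw [Measure.map_apply measurable_fst MeasurableSet.univ, preimage_univ]
  rw [e, hγ.fst, Measure.restrict_apply_univ]
  exact (measure_mono hγ.sub).trans_lt h.fin.lt_top

lemma IsPlan.fst_restrict {κ : ℝ} {γ : Measure (Ed d × Ed d)} {A B : Set (Ed d)}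
    (hγ : IsPlan Gm T κ γ A) (hB : MeasurableSet B) (hBA : B ⊆ A) :
    (γ.map Prod.fst).restrict B = volume.restrict B := by
  rw [hγ.fst, Measure.restrict_restrict hB, inter_eq_left.2 hBA]

/-- If a trajectory is outside `B_R` at time `1 - τ` or at time `1`, its partner `y` is at depth at most
the transport length inside `B_R`. -/
lemma depth_le_lenL (h : Setup Ω Gm T δ) {R τ : ℝ} (hR : R ≤ 3 / 2) (hτ0 : 0 < τ)
    {p : Ed d × Ed d} (hp : p.1 ∈ Gm) (hout : R ≤ ‖Tt T (1 - τ) p.1‖ ∨ R ≤ ‖T p.1‖) :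
    R - ‖p.2‖ ≤ lenL T τ p := by
  have hT1 : R ≤ ‖T p.1‖ → R - ‖p.2‖ ≤ lenL T τ p := fun h1 => by
    have h2 := norm_sub_norm_le (T p.1) p.2
    have h3 : 0 ≤ (ball (0 : Ed d) 2).indicator (fun x => ‖T x - x‖) p.1 :=
      indicator_nonneg (fun x _ => norm_nonneg _) _
    rw [norm_sub_rev] at h2
    unfold lenL
    nlinarith
  rcases hout with h1 | h1
  · by_cases hB : p.1 ∈ ball (0 : Ed d) 2
    · rw [lenL_of_mem hB]
      have h2 := norm_sub_norm_le (Tt T (1 - τ) p.1) p.2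
      have h3 := norm_sub_le_norm_sub_add_norm_sub (Tt T (1 - τ) p.1) (T p.1) p.2
      have h4 : ‖Tt T (1 - τ) p.1 - T p.1‖ = τ * ‖T p.1 - p.1‖ := by
        rw [← Tt_one' T p.1, norm_sub_rev, Tt_sub_Tt, norm_smul, Tt_one', Real.norm_eq_abs,
          abs_of_pos (by linarith)]
        ring
      rw [norm_sub_rev (T p.1) p.2] at h3
      linarith
    · refine hT1 (le_of_not_gt fun h2 => hB ?_)
      have := h.disp p.1 hp ⟨1, by simp, by rw [Tt_one']; linarith⟩
      exact mem_ball_zero_iff.2 (by linarith [this.1])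
  · exact hT1 h1

set_option maxHeartbeats 800000 in
/-- The two data-distance estimates in terms of the layer functionals of the plan. -/
lemma data_part (d : ℕ) (hd : 2 ≤ d) {κ₁ : ℝ} (hκ₁ : 0 < κ₁) : ∃ C : ℝ, 0 < C ∧
    ∀ (Ω Gm : Set (Ed d)) (T : Ed d → Ed d) (δ R τ κ : ℝ) (γ : Measure (Ed d × Ed d)) (A : Set (Ed d)),
      Setup Ω Gm T δ → IsPlan Gm T κ γ A → κ ≤ κ₁ → R ∈ radii → 0 < τ → τ < 1 →
      volume (Gm ∩ {x | ‖T x‖ = R}) = 0 →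
      (W2sq ((Measure.map (Tt T (1 - τ)) (volume.restrict Ω)).restrict (ball (0 : Ed d) R))
            (((Measure.map (Tt T (1 - τ)) (volume.restrict Ω)) (ball (0 : Ed d) R) /
                volume (ball (0 : Ed d) R)) • volume.restrict (ball (0 : Ed d) R)) +
          W2sq (muPrime Ω T R τ)
            ((muPrime Ω T R τ (ball (0 : Ed d) R) / volume (ball (0 : Ed d) R)) •
              volume.restrict (ball (0 : Ed d) R))) ≤
        ENNReal.ofReal C * ((∫⁻ p, ENNReal.ofReal (lenL T τ p ^ 2) ∂γ) +
          ∫⁻ p in {p | |‖p.2‖ - R| ≤ lenL T τ p}, ENNReal.ofReal (lenL T τ p) ∂γ) := by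
  obtain ⟨C, hC, H⟩ := data_distance d (by omega) (m₀ := (1 / 4) ^ d) (by positivity) hκ₁
  refine ⟨2 * C, by linarith, fun Ω Gm T δ R τ κ γ A h hγ hκ hR hτ0 hτ1 hnull => ?_⟩
  have hT := h.hT
  have hfin := hγ.finite h
  have hL := measurable_lenL hT τ
  have hR2 : R ≤ 3 / 2 := by linarith [hR.2]
  have hR0 : 0 < R := by linarith [hR.1]
  have hTtm : Measurable (Tt T (1 - τ)) := measurable_Tt_comp hT measurable_const measurable_id
  have hsndR : (γ.map Prod.snd).restrict (ball 0 R) = ENNReal.ofReal κ • volume.restrict (ball 0 R) := by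
    have e := congrArg (fun m : Measure (Ed d) => m.restrict (ball 0 R)) hγ.snd_eq
    simp only [Measure.restrict_smul] at e
    rwa [Measure.restrict_restrict measurableSet_ball, Measure.restrict_restrict measurableSet_ball,
      inter_eq_left.2 (ball_subset_ball hR2)] at e
  have haeA : ∀ᵐ p ∂γ, p.1 ∈ A := by
    have : ∀ᵐ x ∂(γ.map Prod.fst), x ∈ A := by rw [hγ.fst]; exact ae_restrict_mem hγ.meas
    exact ae_of_ae_map measurable_fst.aemeasurable this
  have hTtT : ∀ x, ‖Tt T (1 - τ) x - T x‖ = τ * ‖T x - x‖ := fun x => by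
    rw [← Tt_one' T x, norm_sub_rev, Tt_sub_Tt, norm_smul, Tt_one', Real.norm_eq_abs,
      abs_of_pos (by linarith)]
    ring
  -- a common form of both estimates
  have key : ∀ (G : Set (Ed d)) (src : Ed d → Ed d), MeasurableSet G → Measurable src → G ⊆ Gm →
      (∀ x ∈ G, ∃ t ∈ Icc (0:ℝ) 1, ‖Tt T t x‖ ≤ R) →
      (∀ x ∈ G, ‖src x‖ ≤ R ∧ ‖src x - T x‖ ≤ τ * ‖T x - x‖) →
      (∀ x ∈ Gm, x ∉ G → R ≤ ‖Tt T (1 - τ) x‖ ∨ R ≤ ‖T x‖) →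
      W2sq ((volume.restrict G).map src)
        ((volume G / volume (ball (0 : Ed d) R)) • volume.restrict (ball (0 : Ed d) R)) ≤
        ENNReal.ofReal C * ((∫⁻ p, ENNReal.ofReal (lenL T τ p ^ 2) ∂γ) +
          ∫⁻ p in {p | |‖p.2‖ - R| ≤ lenL T τ p}, ENNReal.ofReal (lenL T τ p) ∂γ) := by
    intro G src hG hsrc hGG hGh hGs hGo
    have hGh' : ∀ x ∈ G, ∃ t ∈ Icc (0:ℝ) 1, ‖Tt T t x‖ ≤ 3 / 2 := fun x hx => by
      obtain ⟨t, ht, h1⟩ := hGh x hx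
      exact ⟨t, ht, h1.trans hR2⟩
    have hGA : G ⊆ A := fun x hx => hγ.hits x (hGG hx) (hGh' x hx)
    have hGB : G ⊆ ball 0 2 := fun x hx =>
      mem_ball_zero_iff.2 (by linarith [(h.disp x (hGG hx) (hGh' x hx)).1])
    refine H R κ γ (lenL T τ) G src hR.1.le hR.2.le hγ.nonneg hκ hfin hγ.snd_le hsndR hG hGB
      (hγ.fst_restrict hG hGA) hL (lenL_nonneg hτ0.le) hsrc (fun p hp => ⟨(hGs _ hp).1, ?_⟩) ?_ ?_
    · rw [lenL_of_mem (hGB hp)]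
      have h1 := norm_sub_le_norm_sub_add_norm_sub (src p.1) (T p.1) p.2
      rw [norm_sub_rev (T p.1) p.2] at h1
      linarith [(hGs _ hp).2]
    · filter_upwards [haeA] with p hp hpG _
      exact depth_le_lenL h hR2 hτ0 (hγ.sub hp) (hGo _ (hγ.sub hp) hpG)
    · -- points of `Gm` in `B_{1/2}` stay in `B_R`
      have hin : Gm ∩ ball 0 (1 / 2) ⊆ G := fun x hx => by
        by_contra hcon
        have hxn : ‖x‖ < 1 / 2 := mem_ball_zero_iff.1 hx.2
        have h1 := (h.disp x hx.1 ⟨0, by simp, by rw [Tt_zero']; linarith⟩).2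
        have h2 : ∀ t ∈ Icc (0:ℝ) 1, ‖Tt T t x‖ < R := fun t ht => by
          have h3 := (abs_le.1 (abs_norm_Tt_sub_le T 0 t x)).2
          rw [Tt_zero', sub_zero, abs_of_nonneg ht.1] at h3
          have h4 : t * ‖T x - x‖ ≤ 1 * (1 / 4) :=
            mul_le_mul ht.2 (h1.trans h.hδ) (norm_nonneg _) zero_le_one
          linarith [hR.1]
        rcases hGo x hx.1 hcon with h3 | h3
        · linarith [h2 (1 - τ) ⟨by linarith, by linarith⟩]
        · have := h2 1 (by simp)
          rw [Tt_one'] at this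
          linarith
      have hb : volume (ball (0 : Ed d) (1 / 2)) ≤ volume G := by
        refine le_trans ?_ (measure_mono hin)
        have := measure_le_inter_add_sdiff volume (ball (0 : Ed d) (1 / 2)) Gm
        rw [h.null_ball (by norm_num), add_zero, inter_comm] at this
        exact this
      refine le_trans ?_ hb
      have hu := ubv_pos d
      rw [volume_ball_eq hR0, volume_ball_eq (by norm_num), ← ENNReal.ofReal_mul (by positivity)]
      refine ENNReal.ofReal_le_ofReal ?_
      rw [← mul_assoc, ← mul_pow]
      gcongr
      linarith
  -- the density at time `1 - τ`
  have e1 : (Measure.map (Tt T (1 - τ)) (volume.restrict Ω)).restrict (ball (0 : Ed d) R) =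
      (volume.restrict (Tt T (1 - τ) ⁻¹' ball 0 R ∩ Gm)).map (Tt T (1 - τ)) := by
    rw [h.restrict_Ω, Measure.restrict_map hTtm measurableSet_ball,
      Measure.restrict_restrict (hTtm measurableSet_ball)]
  have e1' : Measure.map (Tt T (1 - τ)) (volume.restrict Ω) (ball (0 : Ed d) R) =
      volume (Tt T (1 - τ) ⁻¹' ball 0 R ∩ Gm) := by
    rw [h.restrict_Ω, Measure.map_apply hTtm measurableSet_ball,
      Measure.restrict_apply (hTtm measurableSet_ball)]
  -- the part of the terminal measure that is inside before time `1 - τ`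
  set G2 : Set (Ed d) := {x ∈ Gm | tmin T R x ≤ 1 - τ ∧ tmax T R x = 1} with hG2
  have hG2m : MeasurableSet G2 := h.hG.inter ((measurableSet_le (measurable_tmin hT R) measurable_const).inter
    (measurableSet_eq_fun (measurable_tmax hT R) measurable_const))
  have hG2T : ∀ x ∈ G2, ‖T x‖ ≤ R := fun x hx => by
    have h1 := mem_hit.1 (tmax_mem_hit (T := T) (R := R) (x := x) (by rw [hx.2.2]; exact one_pos))
    rw [hx.2.2, Tt_one'] at h1
    exact h1.2
  have e2 : muPrime Ω T R τ = (volume.restrict G2).map T := by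
    rw [muPrime, h.restrict_sep]
  have e2' : muPrime Ω T R τ (ball (0 : Ed d) R) = volume G2 := by
    rw [e2, Measure.map_apply hT measurableSet_ball, Measure.restrict_apply (hT measurableSet_ball)]
    refine le_antisymm (measure_mono inter_subset_right) ?_
    have hsub : G2 ⊆ (T ⁻¹' ball 0 R ∩ G2) ∪ (Gm ∩ {x | ‖T x‖ = R}) := fun x hx => by
      rcases (hG2T x hx).lt_or_eq with h1 | h1
      · exact Or.inl ⟨mem_ball_zero_iff.2 h1, hx⟩
      · exact Or.inr ⟨hx.1, h1⟩
    refine (measure_mono hsub).trans ((measure_union_le _ _).trans ?_)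
    rw [hnull, add_zero]
  rw [e1, e1', e2', e2, mul_comm 2 C, mul_two, ENNReal.ofReal_add hC.le hC.le, add_mul]
  refine add_le_add ?_ ?_
  · refine key _ _ ((hTtm measurableSet_ball).inter h.hG) hTtm inter_subset_right
      (fun x hx => ⟨1 - τ, ⟨by linarith, by linarith⟩, (mem_ball_zero_iff.1 hx.1).le⟩)
      (fun x hx => ⟨(mem_ball_zero_iff.1 hx.1).le, (hTtT x).le⟩) fun x hx hxn => Or.inl ?_
    exact le_of_not_gt fun hcon => hxn ⟨mem_ball_zero_iff.2 hcon, hx⟩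
  · refine key _ _ hG2m hT (fun x hx => hx.1)
      (fun x hx => ⟨1, by simp, by rw [Tt_one']; exact hG2T x hx⟩)
      (fun x hx => ⟨hG2T x hx, by simp; positivity⟩) fun x hx hxn => ?_
    by_contra hcon
    push Not at hcon
    refine hxn ⟨hx, tmin_le (mem_hit.2 ⟨⟨by linarith, by linarith⟩, hcon.1.le⟩),
      le_antisymm (tmax_mem_Icc T R x).2 (le_tmax (mem_hit.2 ⟨by simp, ?_⟩))⟩
    rw [Tt_one']
    exact hcon.2.le

end DataPart

/-! ### All estimates at a good radius -/

section Combine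

variable {d : ℕ} {Ω Gm : Set (Ed d)} {T : Ed d → Ed d} {δ : ℝ}

lemma two_mul_ofReal (a : ℝ) : 2 * ENNReal.ofReal a = ENNReal.ofReal (2 * a) := by
  rw [ENNReal.ofReal_mul zero_le_two, ENNReal.ofReal_ofNat]

/-- For almost every radius, only a null set of trajectories ends on `∂B_R`. -/
lemma ae_null_level (h : Setup Ω Gm T δ) :
    ∀ᵐ R ∂(volume.restrict radii), volume (Gm ∩ {x | ‖T x‖ = R}) = 0 := by
  have hn := h.hT.norm
  have := h.fin
  obtain ⟨hm, hle⟩ := lintegral_layer_le (ν := volume.restrict Gm) hn (measurable_const (a := (0:ℝ)))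
    (measurable_const (a := (1 : ℝ≥0∞))) radii
  have h0 : ∫⁻ R in radii, (∫⁻ _x in {x | |‖T x‖ - R| ≤ 0}, 1 ∂(volume.restrict Gm)) = 0 := by
    refine le_antisymm (hle.trans ?_) zero_le
    simp
  rw [lintegral_eq_zero_iff hm] at h0
  filter_upwards [h0] with R hR
  have hms : MeasurableSet {x | |‖T x‖ - R| ≤ 0} :=
    measurableSet_le (hn.sub_const R).abs measurable_const
  simp only [lintegral_const, one_mul, Measure.restrict_apply_univ, Pi.zero_apply] at hR
  rw [Measure.restrict_apply hms, inter_comm] at hR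
  refine measure_mono_null (inter_subset_inter_right _ fun x hx => ?_) hR
  have : ‖T x‖ = R := hx
  simp [this]

lemma lintegral_lenL_sq_le {κ τ : ℝ} {γ : Measure (Ed d × Ed d)} {A : Set (Ed d)}
    (h : Setup Ω Gm T δ) (hγ : IsPlan Gm T κ γ A) {D' : ℝ≥0∞}
    (hD : (∫⁻ p, ENNReal.ofReal (‖p.2 - T p.1‖ ^ 2) ∂γ) ≤ D') :
    (∫⁻ p, ENNReal.ofReal (lenL T τ p ^ 2) ∂γ) ≤
      2 * (ENNReal.ofReal (τ ^ 2) * enE T + D') := by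
  have hT := h.hT
  have hT1 : Measurable fun p : Ed d × Ed d => T p.1 := hT.comp measurable_fst
  have hm1 : Measurable fun p : Ed d × Ed d => ENNReal.ofReal (‖p.2 - T p.1‖ ^ 2) :=
    ((measurable_snd.sub hT1).norm.pow_const 2).ennreal_ofReal
  set k : Ed d → ℝ≥0∞ := (ball (0 : Ed d) 2).indicator (fun x => ENNReal.ofReal (‖T x - x‖ ^ 2)) with hk
  have hkm : Measurable k :=
    ((hT.sub measurable_id).norm.pow_const 2).ennreal_ofReal.indicator measurableSet_ball
  have hkm1 : Measurable fun p : Ed d × Ed d => k p.1 := hkm.comp measurable_fst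
  have hpt : ∀ p : Ed d × Ed d, ENNReal.ofReal (lenL T τ p ^ 2) ≤
      2 * (ENNReal.ofReal (τ ^ 2) * k p.1 + ENNReal.ofReal (‖p.2 - T p.1‖ ^ 2)) := fun p => by
    by_cases hp : p.1 ∈ ball (0 : Ed d) 2
    · rw [lenL_of_mem hp, hk, indicator_of_mem hp, ← ENNReal.ofReal_mul (by positivity),
        ← ENNReal.ofReal_add (by positivity) (by positivity), two_mul_ofReal]
      refine ENNReal.ofReal_le_ofReal ?_
      nlinarith [sq_nonneg (‖p.2 - T p.1‖ - τ * ‖T p.1 - p.1‖)]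
    · rw [lenL, indicator_of_notMem hp, hk, indicator_of_notMem hp, mul_zero, mul_zero, add_zero, zero_add]
      exact le_mul_of_one_le_left zero_le (by norm_num)
  refine (lintegral_mono hpt).trans ?_
  rw [lintegral_const_mul' _ _ (by norm_num), lintegral_add_right _ hm1,
    lintegral_const_mul' _ _ ENNReal.ofReal_ne_top]
  have h1 : ∫⁻ p, k p.1 ∂γ ≤ enE T := by
    rw [← lintegral_map (g := Prod.fst) hkm measurable_fst, hγ.fst]
    refine (setLIntegral_le_lintegral _ _).trans (le_of_eq ?_)
    rw [hk, lintegral_indicator measurableSet_ball]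
    rfl
  gcongr

/-- All estimates at one good radius, for a given plan `γ` of cost at most `D'`. -/
lemma main_with_plan (d : ℕ) (hd : 2 ≤ d) {κ₁ : ℝ} (hκ₁ : 0 < κ₁) : ∃ C : ℝ, 0 < C ∧
    ∀ (Ω Gm : Set (Ed d)) (T : Ed d → Ed d) (δ τ κ : ℝ) (γ : Measure (Ed d × Ed d)) (A : Set (Ed d))
      (D' : ℝ≥0∞),
      Setup Ω Gm T δ → IsPlan Gm T κ γ A → κ ≤ κ₁ → 0 < τ → τ < 1 → enE T ≠ ∞ → D' ≠ ∞ →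
      (∫⁻ p, ENNReal.ofReal (‖p.2 - T p.1‖ ^ 2) ∂γ) ≤ D' →
      ∃ R, R ∈ radii ∧
        (∃ g : Ed d × ℝ → ℝ,
          (∀ ζ : Ed d × ℝ → ℝ, Continuous ζ →
            (∫ x in {x ∈ Ω | 0 ≤ tmin T R x ∧ tmin T R x < tmax T R x ∧ tmax T R x < 1},
                ζ (Tt T (tmax T R x) x, tmax T R x)) -
              (∫ x in {x ∈ Ω | 0 < tmin T R x ∧ tmin T R x < tmax T R x ∧ tmax T R x ≤ 1},
                ζ (Tt T (tmin T R x) x, tmin T R x))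
            = ∫ p, ζ p * g p ∂((sphMeas d R).prod (volume.restrict (Icc (0:ℝ) 1)))) ∧
          (∫⁻ p in Set.univ ×ˢ Icc (0:ℝ) (1 - τ), ENNReal.ofReal ((g p) ^ 2)
              ∂((sphMeas d R).prod (volume.restrict (Icc (0:ℝ) 1))))
            ≤ ENNReal.ofReal (C / τ ^ d) * enE T) ∧
        (∃ ρp ρm ρlay : Ed d → ℝ,
          (∀ x, 0 ≤ ρp x ∧ 0 ≤ ρm x ∧ 0 ≤ ρlay x) ∧
          (∫⁻ x, ENNReal.ofReal ((ρp x) ^ 2) ∂(sphMeas d R)) ≤ ENNReal.ofReal C * enE T ∧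
          (∫⁻ x, ENNReal.ofReal ((ρm x) ^ 2) ∂(sphMeas d R)) ≤ ENNReal.ofReal C * enE T ∧
          W2geoSq R ((sphMeas d R).withDensity (fun x => ENNReal.ofReal (ρp x)))
              (Fbarplus Ω T R τ) ≤ ENNReal.ofReal C * (ENNReal.ofReal δ * enE T) ∧
          W2geoSq R ((sphMeas d R).withDensity (fun x => ENNReal.ofReal (ρm x)))
              (Fbarminus Ω T R τ) ≤ ENNReal.ofReal C * (ENNReal.ofReal δ * enE T) ∧
          (∫⁻ x, ENNReal.ofReal ((ρlay x) ^ 2) ∂(sphMeas d R))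
            ≤ ENNReal.ofReal C * (ENNReal.ofReal (τ ^ 2) * enE T + D') ∧
          W2geoSq R ((sphMeas d R).withDensity (fun x => ENNReal.ofReal (ρlay x)))
              (Fbarlay Ω T R τ) ≤ ENNReal.ofReal C *
                (ENNReal.ofReal (τ * δ) * (ENNReal.ofReal (τ ^ 2) * enE T + D')) ∧
          (∀ x ∈ sphere (0 : Ed d) R, ρp x ≤ C * δ ∧ ρm x ≤ C * δ)) ∧
        (W2sq ((Measure.map (Tt T (1 - τ)) (volume.restrict Ω)).restrict (ball (0 : Ed d) R))
            (((Measure.map (Tt T (1 - τ)) (volume.restrict Ω)) (ball (0 : Ed d) R) /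
                volume (ball (0 : Ed d) R)) • volume.restrict (ball (0 : Ed d) R)) +
          W2sq (muPrime Ω T R τ)
            ((muPrime Ω T R τ (ball (0 : Ed d) R) / volume (ball (0 : Ed d) R)) •
              volume.restrict (ball (0 : Ed d) R)))
          ≤ ENNReal.ofReal C * (ENNReal.ofReal (τ ^ 2) * enE T + D') := by
  obtain ⟨C1, hC1, H1⟩ := boundary_main d hd
  obtain ⟨C2, hC2, H2⟩ := boundary_lay d hd hκ₁
  obtain ⟨C3, hC3, H3⟩ := data_part d hd hκ₁
  have hu := ubv_pos d
  set C0 : ℝ := 2 * (3 ^ d * ubv d) with hC0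
  have hC0p : 0 < C0 := by positivity
  refine ⟨20 * C0 + 40 * C1 + 80 * C2 + 82 * C3, by positivity,
    fun Ω Gm T δ τ κ γ A D' h hγ hκ hτ0 hτ1 hE hD' hD => ?_⟩
  set C : ℝ := 20 * C0 + 40 * C1 + 80 * C2 + 82 * C3 with hC
  have hT := h.hT
  have hfin := hγ.finite h
  have hδ0 := h.hδ0
  have hnT : Measurable fun x => ‖T x - x‖ := (hT.sub measurable_id).norm
  have hT1 : Measurable fun p : Ed d × Ed d => T p.1 := hT.comp measurable_fst
  have hnT1 : Measurable fun p : Ed d × Ed d => ‖T p.1 - p.1‖ := (hT1.sub measurable_fst).norm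
  have hL := measurable_lenL hT τ
  set E := enE T with hEdef
  set L := ENNReal.ofReal (τ ^ 2) * E + D' with hLdef
  have hLtop : L ≠ ∞ := ENNReal.add_ne_top.2 ⟨ENNReal.mul_ne_top ENNReal.ofReal_ne_top hE, hD'⟩
  have hLL : (∫⁻ p, ENNReal.ofReal (lenL T τ p ^ 2) ∂γ) ≤ 2 * L := lintegral_lenL_sq_le h hγ hD
  obtain ⟨F, hFm, hF, hFae⟩ := h.exists_flux hd hE hτ0
  set ν : Measure (Ed d) := volume.restrict (ball 0 2 ∩ {x | ‖T x - x‖ ≤ δ}) with hν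
  set γδ : Measure (Ed d × Ed d) := γ.restrict {p | p.1 ∈ ball 0 2 ∧ ‖T p.1 - p.1‖ ≤ δ} with hγδ
  have hsm : MeasurableSet (ball (0 : Ed d) 2 ∩ {x | ‖T x - x‖ ≤ δ}) :=
    measurableSet_ball.inter (measurableSet_le hnT measurable_const)
  have hsm2 : MeasurableSet {p : Ed d × Ed d | p.1 ∈ ball 0 2 ∧ ‖T p.1 - p.1‖ ≤ δ} :=
    (measurable_fst measurableSet_ball).inter (measurableSet_le hnT1 measurable_const)
  have hνE : (∫⁻ x, ENNReal.ofReal (‖T x - x‖ ^ 2) ∂ν) ≤ E := lintegral_mono_set inter_subset_left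
  obtain ⟨m1, b1⟩ := lintegral_layer_le (ν := ν) measurable_norm hnT hnT.ennreal_ofReal radii
  obtain ⟨m2, b2⟩ := lintegral_layer_le (ν := ν) measurable_norm hnT
    (hnT.pow_const 2).ennreal_ofReal radii
  have hns : Measurable fun p : Ed d × Ed d => ‖p.2‖ := measurable_norm.comp measurable_snd
  obtain ⟨m3, b3⟩ := lintegral_layer_le (ν := γ) hns hL hL.ennreal_ofReal radii
  obtain ⟨m4, b4⟩ := lintegral_layer_le (ν := γδ) hT1.norm (hnT1.const_mul τ)
    (hL.pow_const 2).ennreal_ofReal radii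
  have c1 : (∫⁻ x, ENNReal.ofReal (2 * ‖T x - x‖) * ENNReal.ofReal ‖T x - x‖ ∂ν) ≤ 2 * E := by
    calc _ = ∫⁻ x, 2 * ENNReal.ofReal (‖T x - x‖ ^ 2) ∂ν := by
          refine lintegral_congr fun x => ?_
          rw [← ENNReal.ofReal_mul (by positivity), two_mul_ofReal]
          congr 1; ring
      _ ≤ 2 * E := by
          rw [lintegral_const_mul' _ _ (by norm_num)]
          gcongr
  have c2 : (∫⁻ x, ENNReal.ofReal (2 * ‖T x - x‖) * ENNReal.ofReal (‖T x - x‖ ^ 2) ∂ν) ≤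
      ENNReal.ofReal (2 * δ) * E := by
    calc _ ≤ ∫⁻ x, ENNReal.ofReal (2 * δ) * ENNReal.ofReal (‖T x - x‖ ^ 2) ∂ν := by
          refine setLIntegral_mono' hsm fun x hx => ?_
          have : ‖T x - x‖ ≤ δ := hx.2
          gcongr
      _ ≤ _ := by
          rw [lintegral_const_mul' _ _ ENNReal.ofReal_ne_top]
          gcongr
  have c3 : (∫⁻ p, ENNReal.ofReal (2 * lenL T τ p) * ENNReal.ofReal (lenL T τ p) ∂γ) ≤ 4 * L := by
    calc _ = ∫⁻ p, 2 * ENNReal.ofReal (lenL T τ p ^ 2) ∂γ := by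
          refine lintegral_congr fun p => ?_
          have := lenL_nonneg (T := T) hτ0.le p
          rw [← ENNReal.ofReal_mul (by positivity), two_mul_ofReal]
          congr 1; ring
      _ ≤ 2 * (2 * L) := by
          rw [lintegral_const_mul' _ _ (by norm_num)]
          gcongr
      _ = 4 * L := by ring
  have c4 : (∫⁻ p, ENNReal.ofReal (2 * (τ * ‖T p.1 - p.1‖)) * ENNReal.ofReal (lenL T τ p ^ 2) ∂γδ) ≤
      4 * (ENNReal.ofReal (τ * δ) * L) := by
    calc _ ≤ ∫⁻ p, ENNReal.ofReal (2 * (τ * δ)) * ENNReal.ofReal (lenL T τ p ^ 2) ∂γδ := by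
          refine setLIntegral_mono' hsm2 fun p hp => ?_
          have : ‖T p.1 - p.1‖ ≤ δ := hp.2
          gcongr
      _ ≤ ENNReal.ofReal (2 * (τ * δ)) * (2 * L) := by
          rw [lintegral_const_mul' _ _ ENNReal.ofReal_ne_top]
          gcongr
          exact (setLIntegral_le_lintegral _ _).trans hLL
      _ = 4 * (ENNReal.ofReal (τ * δ) * L) := by
          rw [ENNReal.ofReal_mul (by norm_num), ENNReal.ofReal_ofNat]; ring
  obtain ⟨R, hR, ⟨⟨g, hg1, hg2⟩, hnull⟩, hb⟩ := exists_radius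
    (f := ![F, fun R => ∫⁻ x in {x | |‖x‖ - R| ≤ ‖T x - x‖}, ENNReal.ofReal ‖T x - x‖ ∂ν,
      fun R => ∫⁻ x in {x | |‖x‖ - R| ≤ ‖T x - x‖}, ENNReal.ofReal (‖T x - x‖ ^ 2) ∂ν,
      fun R => ∫⁻ p in {p | |‖p.2‖ - R| ≤ lenL T τ p}, ENNReal.ofReal (lenL T τ p) ∂γ,
      fun R => ∫⁻ p in {p | |‖T p.1‖ - R| ≤ τ * ‖T p.1 - p.1‖}, ENNReal.ofReal (lenL T τ p ^ 2) ∂γδ])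
    (c := ![ENNReal.ofReal (C0 / τ ^ d) * E, 2 * E, ENNReal.ofReal (2 * δ) * E, 4 * L,
      4 * (ENNReal.ofReal (τ * δ) * L)])
    (by intro i; fin_cases i; exacts [hFm, m1, m2, m3, m4])
    (by
      intro i; fin_cases i
      exacts [ENNReal.mul_ne_top ENNReal.ofReal_ne_top hE, ENNReal.mul_ne_top (by norm_num) hE,
        ENNReal.mul_ne_top ENNReal.ofReal_ne_top hE, ENNReal.mul_ne_top (by norm_num) hLtop,
        ENNReal.mul_ne_top (by norm_num) (ENNReal.mul_ne_top ENNReal.ofReal_ne_top hLtop)])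
    (by intro i; fin_cases i; exacts [hF, b1.trans c1, b2.trans c2, b3.trans c3, b4.trans c4])
    (hFae.and (ae_null_level h))
  have h20 : ENNReal.ofReal (4 * (5 : ℕ)) = ENNReal.ofReal 20 := by norm_num
  have B0 : F R ≤ ENNReal.ofReal 20 * (ENNReal.ofReal (C0 / τ ^ d) * E) := h20 ▸ hb 0
  have B1 : (∫⁻ x in {x | |‖x‖ - R| ≤ ‖T x - x‖}, ENNReal.ofReal ‖T x - x‖ ∂ν) ≤
    ENNReal.ofReal 20 * (2 * E) := h20 ▸ hb 1
  have B2 : (∫⁻ x in {x | |‖x‖ - R| ≤ ‖T x - x‖}, ENNReal.ofReal (‖T x - x‖ ^ 2) ∂ν) ≤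
    ENNReal.ofReal 20 * (ENNReal.ofReal (2 * δ) * E) := h20 ▸ hb 2
  have B3 : (∫⁻ p in {p | |‖p.2‖ - R| ≤ lenL T τ p}, ENNReal.ofReal (lenL T τ p) ∂γ) ≤
    ENNReal.ofReal 20 * (4 * L) := h20 ▸ hb 3
  have B4 : (∫⁻ p in {p | |‖T p.1‖ - R| ≤ τ * ‖T p.1 - p.1‖}, ENNReal.ofReal (lenL T τ p ^ 2) ∂γδ) ≤
    ENNReal.ofReal 20 * (4 * (ENNReal.ofReal (τ * δ) * L)) := h20 ▸ hb 4
  have hR2 : R ≤ 3 / 2 := by linarith [hR.2]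
  have hmM := measurable_tmax hT R
  have hmm := measurable_tmin hT R
  have hYp : Measurable fun x => Tt T (tmax T R x) x := measurable_Tt_comp hT hmM measurable_id
  have hYm : Measurable fun x => Tt T (tmin T R x) x := measurable_Tt_comp hT hmm measurable_id
  have hdist0 : ∀ x t, t ∈ Icc (0:ℝ) 1 → ‖x - Tt T t x‖ ≤ ‖T x - x‖ := fun x t ht => by
    have e : x - Tt T t x = (0 - t) • (T x - x) := by rw [← Tt_sub_Tt, Tt_zero']
    rw [e, norm_smul, zero_sub, norm_neg, Real.norm_eq_abs, abs_of_nonneg ht.1]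
    exact mul_le_of_le_one_left (norm_nonneg _) ht.2
  -- outgoing flux
  obtain ⟨ρp, p0, p1, p2, p3⟩ := H1 T δ R
    {x ∈ Gm | 0 ≤ tmin T R x ∧ tmin T R x < tmax T R x ∧ tmax T R x < 1 - τ}
    (fun x => Tt T (tmax T R x) x) hR hδ0 h.hδ hT
    (h.hG.inter ((measurableSet_le measurable_const hmm).inter
      ((measurableSet_lt hmm hmM).inter (measurableSet_lt hmM measurable_const)))) hYp
    (fun x hx => by
      have h0 : 0 < tmax T R x := hx.2.1.trans_lt hx.2.2.1
      have hh := h.disp_of_hit hR2 hx.1 (tmax_mem_hit h0)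
      exact ⟨hh.1, hh.2, (exit_spec h0 (by linarith [hx.2.2.2])).1,
        hdist0 x _ (tmax_mem_Icc T R x)⟩)
  -- incoming flux
  obtain ⟨ρm, q0, q1, q2, q3⟩ := H1 T δ R
    {x ∈ Gm | tmin T R x < tmax T R x ∧ 0 < tmin T R x ∧ tmin T R x < 1 - τ}
    (fun x => Tt T (tmin T R x) x) hR hδ0 h.hδ hT
    (h.hG.inter ((measurableSet_lt hmm hmM).inter
      ((measurableSet_lt measurable_const hmm).inter (measurableSet_lt hmm measurable_const)))) hYm
    (fun x hx => by
      have h1 : tmin T R x < 1 := by linarith [hx.2.2.2]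
      have hh := h.disp_of_hit hR2 hx.1 (tmin_mem_hit h1)
      exact ⟨hh.1, hh.2, (enter_spec hx.2.2.1 h1).1, hdist0 x _ (tmin_mem_Icc T R x)⟩)
  -- terminal layer
  have hAl : MeasurableSet {x ∈ Gm | tmin T R x < 1 - τ ∧ 1 - τ < tmax T R x ∧ tmax T R x < 1} :=
    h.hG.inter ((measurableSet_lt hmm measurable_const).inter
      ((measurableSet_lt measurable_const hmM).inter (measurableSet_lt hmM measurable_const)))
  have hsnd : γ.map Prod.snd ≤ ENNReal.ofReal κ₁ • volume := by
    refine hγ.snd_le.trans (Measure.le_iff.2 fun s _ => ?_)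
    simp only [Measure.smul_apply, smul_eq_mul]
    exact mul_le_mul_left (ENNReal.ofReal_le_ofReal hκ) _
  obtain ⟨ρl, l0, l1, l3⟩ := H2 T δ R τ
    {x ∈ Gm | tmin T R x < 1 - τ ∧ 1 - τ < tmax T R x ∧ tmax T R x < 1}
    (fun x => Tt T (tmax T R x) x) γ hR h.hδ hτ0 hτ1 hT hAl hYp
    (fun x hx => by
      have h0 : 0 < tmax T R x := by linarith [hx.2.2.1]
      have hh := h.disp_of_hit hR2 hx.1 (tmax_mem_hit h0)
      refine ⟨hh.1, hh.2, (exit_spec h0 hx.2.2.2).1, ?_⟩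
      have e : T x - Tt T (tmax T R x) x = (1 - tmax T R x) • (T x - x) := by
        rw [← Tt_sub_Tt, Tt_one']
      rw [e, norm_smul, Real.norm_eq_abs, abs_of_pos (by linarith [hx.2.2.2])]
      exact mul_le_mul_of_nonneg_right (by linarith [hx.2.2.1]) (norm_nonneg _))
    hsnd
    (hγ.fst_restrict hAl fun x hx => hγ.hits x hx.1 (by
      have h0 : 0 < tmax T R x := by linarith [hx.2.2.1]
      have := mem_hit.1 (tmax_mem_hit h0)
      exact ⟨_, this.1, this.2.trans hR2⟩))
  have eqp : Fbarplus Ω T R τ = (volume.restrict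
      {x ∈ Gm | 0 ≤ tmin T R x ∧ tmin T R x < tmax T R x ∧ tmax T R x < 1 - τ}).map
      (fun x => Tt T (tmax T R x) x) := by rw [Fbarplus, h.restrict_sep]
  have eqm : Fbarminus Ω T R τ = (volume.restrict
      {x ∈ Gm | tmin T R x < tmax T R x ∧ 0 < tmin T R x ∧ tmin T R x < 1 - τ}).map
      (fun x => Tt T (tmin T R x) x) := by rw [Fbarminus, h.restrict_sep]
  have eql : Fbarlay Ω T R τ = (volume.restrict
      {x ∈ Gm | tmin T R x < 1 - τ ∧ 1 - τ < tmax T R x ∧ tmax T R x < 1}).map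
      (fun x => Tt T (tmax T R x) x) := by rw [Fbarlay, h.restrict_sep]
  -- bookkeeping of constants
  have hcst : ∀ {a b : ℝ} {X Y : ℝ≥0∞}, 0 ≤ a → a * b ≤ C → X ≤ ENNReal.ofReal a * (ENNReal.ofReal b * Y) →
      X ≤ ENNReal.ofReal C * Y := fun {a b X Y} ha hab hX => by
    rw [← mul_assoc, ← ENNReal.ofReal_mul ha] at hX
    exact hX.trans (mul_le_mul_left (ENNReal.ofReal_le_ofReal hab) _)
  have h40 : ∀ Y : ℝ≥0∞, ENNReal.ofReal 20 * (2 * Y) = ENNReal.ofReal 40 * Y := fun Y => by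
    rw [← mul_assoc]; congr 1
    rw [← ENNReal.ofReal_ofNat 2, ← ENNReal.ofReal_mul (by norm_num)]; norm_num
  have h80 : ∀ Y : ℝ≥0∞, ENNReal.ofReal 20 * (4 * Y) = ENNReal.ofReal 80 * Y := fun Y => by
    rw [← mul_assoc]; congr 1
    rw [← ENNReal.ofReal_ofNat 4, ← ENNReal.ofReal_mul (by norm_num)]; norm_num
  rw [h40] at B1
  rw [← two_mul_ofReal, mul_assoc, h40] at B2
  rw [h80] at B3 B4
  refine ⟨R, hR, ⟨g, hg1, hg2.trans (B0.trans ?_)⟩, ⟨ρp, ρm, ρl, fun x => ⟨p0 x, q0 x, l0 x⟩,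
    ?_, ?_, ?_, ?_, ?_, ?_, fun x hx => ⟨(p2 x hx).trans ?_, (q2 x hx).trans ?_⟩⟩, ?_⟩
  · rw [← mul_assoc, ← ENNReal.ofReal_mul (by norm_num)]
    refine mul_le_mul_left (ENNReal.ofReal_le_ofReal ?_) _
    rw [← mul_div_assoc]
    gcongr
    rw [hC]; linarith
  · exact hcst hC1.le (by rw [hC]; linarith) (p1.trans (mul_le_mul_right B1 _))
  · exact hcst hC1.le (by rw [hC]; linarith) (q1.trans (mul_le_mul_right B1 _))
  · rw [eqp]
    exact hcst hC1.le (by rw [hC]; linarith) (p3.trans (mul_le_mul_right B2 _))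
  · rw [eqm]
    exact hcst hC1.le (by rw [hC]; linarith) (q3.trans (mul_le_mul_right B2 _))
  · exact hcst hC2.le (by rw [hC]; linarith) (l1.trans (mul_le_mul_right B3 _))
  · rw [eql]
    exact hcst hC2.le (by rw [hC]; linarith) (l3.trans (mul_le_mul_right B4 _))
  · exact mul_le_mul_of_nonneg_right (by rw [hC]; linarith) hδ0
  · exact mul_le_mul_of_nonneg_right (by rw [hC]; linarith) hδ0
  · refine hcst (a := C3) (b := 82) hC3.le (by rw [hC]; linarith)
      ((H3 Ω Gm T δ R τ κ γ A h hγ hκ hR hτ0 hτ1 hnull).trans (mul_le_mul_right ?_ _))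
    refine (add_le_add hLL B3).trans (le_of_eq ?_)
    rw [← add_mul, ← ENNReal.ofReal_ofNat 2, ← ENNReal.ofReal_add (by norm_num) (by norm_num)]
    norm_num

end Combine

/-! ### Construction of the plan and conclusion -/

section Final

variable {d : ℕ} {Ω Gm : Set (Ed d)} {T : Ed d → Ed d} {δ : ℝ}

/-- If `E = 0`, the diagonal plan over `B₂` has zero cost. -/
lemma exists_plan_zero (h : Setup Ω Gm T δ) (hE : enE T = 0) :
    ∃ (γ : Measure (Ed d × Ed d)) (A : Set (Ed d)), IsPlan Gm T 1 γ A ∧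
      (∫⁻ p, ENNReal.ofReal (‖p.2 - T p.1‖ ^ 2) ∂γ) = 0 := by
  have hT := h.hT
  have hA : MeasurableSet (Gm ∩ ball (0 : Ed d) 2) := h.hG.inter measurableSet_ball
  have hm : Measurable fun x : Ed d => (x, x) := by fun_prop
  have es : ((volume.restrict (Gm ∩ ball (0 : Ed d) 2)).map fun x => (x, x)).map Prod.snd =
      volume.restrict (Gm ∩ ball (0 : Ed d) 2) := by
    rw [Measure.map_map measurable_snd hm]; exact Measure.map_id
  refine ⟨(volume.restrict (Gm ∩ ball (0 : Ed d) 2)).map (fun x => (x, x)), Gm ∩ ball 0 2,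
    ⟨hA, inter_subset_left, ?_, ?_, ?_, ?_, zero_le_one⟩, ?_⟩
  · intro x hx ht
    exact ⟨hx, mem_ball_zero_iff.2 (by linarith [(h.disp x hx ht).1])⟩
  · rw [Measure.map_map measurable_fst hm]; exact Measure.map_id
  · rw [es, ENNReal.ofReal_one, one_smul]
    exact Measure.restrict_le_self
  · rw [es, ENNReal.ofReal_one, one_smul, Measure.restrict_restrict measurableSet_ball]
    refine Measure.restrict_congr_set ?_
    have h1 : ∀ᵐ x ∂(volume : Measure (Ed d)), x ∉ ball (0 : Ed d) (3 / 2) \ Gm :=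
      measure_eq_zero_iff_ae_notMem.1 (h.null_ball (by norm_num))
    refine Filter.eventuallyEq_set.2 ?_
    filter_upwards [h1] with x hx
    constructor
    · exact fun hb => hb.1
    · exact fun hb => ⟨hb, by_contra fun hc => hx ⟨hb, fun hg =>
        hc ⟨hg, ball_subset_ball (by norm_num) hb⟩⟩⟩
  · rw [lintegral_map (by fun_prop) hm]
    refine le_antisymm ?_ bot_le
    rw [← hE, enE]
    refine (lintegral_mono_set inter_subset_right).trans (le_of_eq ?_)
    refine lintegral_congr fun x => ?_
    rw [norm_sub_rev]

/-- A coupling of `μ⌞O` with the uniform density is lifted to starting points through `T`. -/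
lemma exists_plan_of_coupling (h : Setup Ω Gm T δ) {μ : Measure (Ed d)} {O : Set (Ed d)}
    (hO : IsOpen O) (hO2 : ball (0 : Ed d) 2 ⊆ O)
    (hμ : Measure.map T (volume.restrict Ω) = μ)
    {π : Measure (Ed d × Ed d)} (h1 : π.map Prod.fst = μ.restrict O)
    (h2 : π.map Prod.snd = (μ O / volume O) • volume.restrict O) :
    ∃ (γ : Measure (Ed d × Ed d)) (A : Set (Ed d)), IsPlan Gm T (μ O / volume O).toReal γ A ∧
      (∫⁻ p, ENNReal.ofReal (‖p.2 - T p.1‖ ^ 2) ∂γ) =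
        ∫⁻ p, ENNReal.ofReal (‖p.1 - p.2‖ ^ 2) ∂π := by
  have hT := h.hT
  have hA : MeasurableSet (T ⁻¹' O ∩ Gm) := (hT hO.measurableSet).inter h.hG
  have hμO : μ.restrict O = (volume.restrict (T ⁻¹' O ∩ Gm)).map T := by
    rw [← hμ, h.restrict_Ω, Measure.restrict_map hT hO.measurableSet,
      Measure.restrict_restrict (hT hO.measurableSet)]
  have hfinA : volume (T ⁻¹' O ∩ Gm) < ∞ := (measure_mono inter_subset_right).trans_lt h.fin.lt_top
  have hμO' : μ O < ∞ := by
    have : μ O = volume (T ⁻¹' O ∩ Gm) := by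
      rw [← Measure.restrict_apply_univ, hμO, Measure.map_apply hT MeasurableSet.univ, preimage_univ,
        Measure.restrict_apply_univ]
    rwa [this]
  have hvO : volume O ≠ 0 :=
    ((measure_ball_pos volume (0 : Ed d) two_pos).trans_le (measure_mono hO2)).ne'
  have hκ : ENNReal.ofReal (μ O / volume O).toReal = μ O / volume O :=
    ENNReal.ofReal_toReal (ENNReal.div_lt_top hμO'.ne hvO).ne
  have hfα : IsFiniteMeasure (volume.restrict (T ⁻¹' O ∩ Gm) : Measure (Ed d)) :=
    ⟨by rwa [Measure.restrict_apply_univ]⟩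
  have hfπ : IsFiniteMeasure π := by
    refine ⟨?_⟩
    have e : π univ = (π.map Prod.fst) univ := by
      rw [Measure.map_apply measurable_fst MeasurableSet.univ, preimage_univ]
    rw [e, h1, Measure.restrict_apply_univ]
    exact hμO'
  obtain ⟨γ, hγ1, hγ2⟩ := exists_glue (volume.restrict (T ⁻¹' O ∩ Gm)) hT π (h1.trans hμO)
  have hm : Measurable fun p : Ed d × Ed d => (T p.1, p.2) := by fun_prop
  have hsnd : γ.map Prod.snd = (μ O / volume O) • volume.restrict O := by
    rw [← h2, ← hγ2, Measure.map_map measurable_snd hm]; rfl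
  refine ⟨γ, T ⁻¹' O ∩ Gm, ⟨hA, inter_subset_right, ?_, hγ1, ?_, ?_, ENNReal.toReal_nonneg⟩, ?_⟩
  · rintro x hx ⟨t, ht, hxt⟩
    refine ⟨hO2 (mem_ball_zero_iff.2 ?_), hx⟩
    have hd := (h.disp x hx ⟨t, ht, hxt⟩).2
    have e : T x = Tt T t x + (1 - t) • (T x - x) := by
      unfold Tt; module
    rw [e]
    refine (norm_add_le _ _).trans_lt ?_
    rw [norm_smul, Real.norm_eq_abs, abs_of_nonneg (by linarith [ht.2])]
    nlinarith [norm_nonneg (T x - x), ht.1, ht.2, h.hδ]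
  · rw [hsnd, hκ]
    refine Measure.le_iff.2 fun s _ => ?_
    simp only [Measure.smul_apply, smul_eq_mul]
    exact mul_le_mul_right (Measure.restrict_le_self s) _
  · rw [hsnd, hκ, Measure.restrict_smul, Measure.restrict_restrict measurableSet_ball,
      inter_eq_left.2 ((ball_subset_ball (by norm_num)).trans hO2)]
  · rw [← hγ2, lintegral_map (by fun_prop) hm]
    refine lintegral_congr fun p => ?_
    rw [norm_sub_rev]

/-- The density `κ` is bounded by a dimensional constant: mass in `B₁` comes either from `B_{7/4}` or
from transport over a distance at least `1/2`. -/
lemma IsPlan.density_le (h : Setup Ω Gm T δ) {κ : ℝ} {γ : Measure (Ed d × Ed d)} {A : Set (Ed d)}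
    (hγ : IsPlan Gm T κ γ A)
    (hc : (∫⁻ p, ENNReal.ofReal (‖p.2 - T p.1‖ ^ 2) ∂γ) ≤ ENNReal.ofReal 3) :
    κ ≤ (12 + (7 / 4) ^ d * ubv d) / ubv d := by
  have hT := h.hT
  have hω := ubv_pos d
  have hm1 : Measurable fun p : Ed d × Ed d => ENNReal.ofReal (‖p.2 - T p.1‖ ^ 2) := by fun_prop
  have e1 : γ (Prod.snd ⁻¹' ball (0 : Ed d) 1) = ENNReal.ofReal (κ * ubv d) := by
    rw [← Measure.map_apply measurable_snd measurableSet_ball,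
      ← Measure.restrict_eq_self (γ.map Prod.snd)
        (ball_subset_ball (by norm_num) : ball (0 : Ed d) 1 ⊆ ball 0 (3 / 2)), hγ.snd_eq,
      Measure.smul_apply, Measure.restrict_eq_self _ (ball_subset_ball (by norm_num)),
      volume_ball_eq one_pos, smul_eq_mul, ← ENNReal.ofReal_mul (p := κ) hγ.nonneg, one_pow, one_mul]
  have e2 : γ (Prod.fst ⁻¹' ball (0 : Ed d) (7 / 4)) ≤ ENNReal.ofReal ((7 / 4) ^ d * ubv d) := by
    rw [← Measure.map_apply measurable_fst measurableSet_ball, hγ.fst,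
      ← volume_ball_eq (c := (0 : Ed d)) (by norm_num : (0:ℝ) < 7 / 4)]
    exact Measure.restrict_apply_le _ _
  have e3 : γ {p | ENNReal.ofReal (1 / 4) ≤ ENNReal.ofReal (‖p.2 - T p.1‖ ^ 2)} ≤
      ENNReal.ofReal 12 := by
    have h0 := (mul_meas_ge_le_lintegral₀ (μ := γ) hm1.aemeasurable
      (ENNReal.ofReal (1 / 4))).trans hc
    have h4 := mul_le_mul_right h0 (ENNReal.ofReal 4)
    rw [← mul_assoc, ← ENNReal.ofReal_mul (p := 4) (by norm_num),
      ← ENNReal.ofReal_mul (p := 4) (by norm_num)] at h4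
    norm_num at h4
    norm_num
    exact h4
  have e4 : γ (Prod.fst ⁻¹' Gmᶜ) = 0 := by
    rw [← Measure.map_apply measurable_fst h.hG.compl, hγ.fst,
      Measure.restrict_apply h.hG.compl]
    refine measure_mono_null (t := ∅) ?_ measure_empty
    rintro x ⟨hx, hxA⟩
    exact hx (hγ.sub hxA)
  have hsub : Prod.snd ⁻¹' ball (0 : Ed d) 1 ⊆
      ({p : Ed d × Ed d | ENNReal.ofReal (1 / 4) ≤ ENNReal.ofReal (‖p.2 - T p.1‖ ^ 2)} ∪
        Prod.fst ⁻¹' ball (0 : Ed d) (7 / 4)) ∪ Prod.fst ⁻¹' Gmᶜ := by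
    intro p hp
    by_cases hG : p.1 ∈ Gm
    swap
    · exact Or.inr hG
    left
    by_cases hd : 1 / 2 ≤ ‖p.2 - T p.1‖
    · left
      exact ENNReal.ofReal_le_ofReal (by nlinarith)
    · right
      have hy : ‖p.2‖ < 1 := mem_ball_zero_iff.1 hp
      have h5 := norm_sub_norm_le (T p.1) p.2
      rw [norm_sub_rev] at h5
      push Not at hd
      exact mem_ball_zero_iff.2 (h.disp p.1 hG ⟨1, by simp, by rw [Tt_one']; linarith⟩).1
  have key : ENNReal.ofReal (κ * ubv d) ≤ ENNReal.ofReal (12 + (7 / 4) ^ d * ubv d) := by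
    rw [← e1, ENNReal.ofReal_add (by norm_num) (by positivity)]
    refine (measure_mono hsub).trans ((measure_union_le _ _).trans ?_)
    rw [e4, add_zero]
    exact (measure_union_le _ _).trans (add_le_add e3 e2)
  rw [le_div_iff₀ hω]
  exact (ENNReal.ofReal_le_ofReal_iff (by positivity)).1 key

/-- A plan of cost at most `2 * D + τ² * E` with density bounded by a dimensional constant. The summand `τ²E`
makes the bound strictly larger than the infimum `D`, so that no optimal coupling is needed. -/
lemma exists_plan (h : Setup Ω Gm T δ) {μ : Measure (Ed d)} {O : Set (Ed d)}
    (hO : IsOpen O) (hO2 : ball (0 : Ed d) 2 ⊆ O)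
    (hμ : Measure.map T (volume.restrict Ω) = μ) {τ : ℝ} (hτ0 : 0 < τ) (hτ1 : τ < 1)
    (hED : enE T + W2sq (μ.restrict O) ((μ O / volume O) • volume.restrict O) ≤ 1) :
    ∃ (κ : ℝ) (γ : Measure (Ed d × Ed d)) (A : Set (Ed d)), IsPlan Gm T κ γ A ∧
      κ ≤ 1 + (12 + (7 / 4) ^ d * ubv d) / ubv d ∧
      (∫⁻ p, ENNReal.ofReal (‖p.2 - T p.1‖ ^ 2) ∂γ) ≤
        2 * W2sq (μ.restrict O) ((μ O / volume O) • volume.restrict O) +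
          ENNReal.ofReal (τ ^ 2) * enE T := by
  have hω := ubv_pos d
  set D := W2sq (μ.restrict O) ((μ O / volume O) • volume.restrict O) with hD
  by_cases hE : enE T = 0
  · obtain ⟨γ, A, h1, h2⟩ := exists_plan_zero h hE
    exact ⟨1, γ, A, h1, le_add_of_nonneg_right (by positivity), h2.le.trans bot_le⟩
  · have hE1 : enE T ≤ 1 := le_self_add.trans hED
    have hD1 : D ≤ 1 := le_add_self.trans hED
    have hlt : D < 2 * D + ENNReal.ofReal (τ ^ 2) * enE T := by
      have h0 : ENNReal.ofReal (τ ^ 2) * enE T ≠ 0 :=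
        mul_ne_zero (ENNReal.ofReal_pos.2 (by positivity)).ne' hE
      rw [two_mul, add_assoc]
      exact ENNReal.lt_add_right (hD1.trans_lt ENNReal.one_lt_top).ne
        fun h00 => h0 (add_eq_zero.1 h00).2
    obtain ⟨c, ⟨π, p1, p2, rfl⟩, hc⟩ := sInf_lt_iff.1 (show sInf _ < _ from hlt)
    obtain ⟨γ, A, g1, g2⟩ := exists_plan_of_coupling h hO hO2 hμ p1 p2
    have hcost := g2.le.trans hc.le
    refine ⟨_, γ, A, g1, (g1.density_le h (hcost.trans ?_)).trans (by linarith), hcost⟩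
    have hτ : ENNReal.ofReal (τ ^ 2) ≤ 1 := by
      rw [← ENNReal.ofReal_one]
      exact ENNReal.ofReal_le_ofReal (by nlinarith)
    calc 2 * D + ENNReal.ofReal (τ ^ 2) * enE T ≤ 2 * 1 + 1 * 1 :=
          add_le_add (mul_le_mul_right hD1 _) (mul_le_mul' hτ hE1)
      _ = ENNReal.ofReal 3 := by norm_num

end Final

/-- `δ E = C₀ E^{(d+3)/(d+2)}` for `δ = C₀ E^{1/(d+2)}`. -/
lemma ofReal_delta_mul {d : ℕ} {E : ℝ≥0∞} (hE : E ≠ ∞) {C₀ : ℝ} (hC₀ : 0 ≤ C₀) :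
    ENNReal.ofReal (C₀ * E.toReal ^ ((1:ℝ) / (d + 2))) =
        ENNReal.ofReal C₀ * E ^ ((1:ℝ) / ((d:ℝ) + 2)) ∧
      ENNReal.ofReal (C₀ * E.toReal ^ ((1:ℝ) / (d + 2))) * E =
        ENNReal.ofReal C₀ * E ^ (((d:ℝ) + 3) / ((d:ℝ) + 2)) := by
  have hd : (0:ℝ) < (d:ℝ) + 2 := by positivity
  have h1 : ENNReal.ofReal (C₀ * E.toReal ^ ((1:ℝ) / (d + 2))) =
      ENNReal.ofReal C₀ * E ^ ((1:ℝ) / ((d:ℝ) + 2)) := by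
    rw [ENNReal.ofReal_mul hC₀, ← ENNReal.ofReal_rpow_of_nonneg ENNReal.toReal_nonneg (by positivity),
      ENNReal.ofReal_toReal hE]
  refine ⟨h1, ?_⟩
  rw [h1, mul_assoc]
  congr 1
  have e : ((d:ℝ) + 3) / ((d:ℝ) + 2) = 1 / ((d:ℝ) + 2) + 1 := by field_simp; ring
  rw [e, ENNReal.rpow_add_of_nonneg _ _ (by positivity) zero_le_one, ENNReal.rpow_one]

/-- **good radius + data distance.** If `E + D ≪ 1`, there is `R ∈ (1/2, 3/2)`
such that the conclusions of the good-radius lemma hold and, in addition,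
`W₂²(ρ_{1−τ}⌞B_R, (ρ_{1−τ}(B_R)/|B_R|)χ_{B_R}) + W₂²(μ'_R, (μ'_R(B_R)/|B_R|)χ_{B_R})
  ≲ τ²E + D`. -/
theorem good_radius_and_data_distance (d : ℕ) (hd : 2 ≤ d) :
    ∃ ε₀ C : ℝ, 0 < ε₀ ∧ 0 < C ∧
    ∀ (Ω O : Set (Ed d)) (μ : Measure (Ed d)) (T : Ed d → Ed d) (τ : ℝ),
      τ ∈ Ioo (0:ℝ) 1 →
      Bornology.IsBounded Ω → MeasurableSet Ω → ball (0 : Ed d) 2 ⊆ Ω →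
      IsOpen O → ball (0 : Ed d) 2 ⊆ O →
      (∃ K : Set (Ed d), IsCompact K ∧ μ Kᶜ = 0) → μ Set.univ = volume Ω →
      IsOptMap Ω μ T →
      (∫⁻ x in ball (0 : Ed d) 2, ENNReal.ofReal (‖T x - x‖ ^ 2)) +
          W2sq (μ.restrict O) ((μ O / volume O) • volume.restrict O)
        ≤ ENNReal.ofReal ε₀ →
      ∃ R, R ∈ Ioo (1/2 : ℝ) (3/2) ∧
        -- (a) an `L²` bound on the flux `f^R` through `∂B_R` up to time `1−τ`:
        (∃ g : Ed d × ℝ → ℝ,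
          (∀ ζ : Ed d × ℝ → ℝ, Continuous ζ →
            (∫ x in {x ∈ Ω | 0 ≤ tmin T R x ∧ tmin T R x < tmax T R x ∧ tmax T R x < 1},
                ζ (Tt T (tmax T R x) x, tmax T R x)) -
              (∫ x in {x ∈ Ω | 0 < tmin T R x ∧ tmin T R x < tmax T R x ∧ tmax T R x ≤ 1},
                ζ (Tt T (tmin T R x) x, tmin T R x))
            = ∫ p, ζ p * g p ∂((sphMeas d R).prod (volume.restrict (Icc (0:ℝ) 1)))) ∧
          (∫⁻ p in Set.univ ×ˢ Icc (0:ℝ) (1 - τ), ENNReal.ofReal ((g p) ^ 2)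
              ∂((sphMeas d R).prod (volume.restrict (Icc (0:ℝ) 1))))
            ≤ ENNReal.ofReal (C / τ ^ d) *
              ∫⁻ x in ball (0 : Ed d) 2, ENNReal.ofReal (‖T x - x‖ ^ 2)) ∧
        -- (b), (c), (d): boundary densities `ρ̄^R_±`, `ρ̄^{R,lay}_+`:
        (∃ ρp ρm ρlay : Ed d → ℝ,
          (∀ x ∈ sphere (0 : Ed d) R, 0 ≤ ρp x ∧ 0 ≤ ρm x ∧ 0 ≤ ρlay x) ∧
          -- (b) `∫ (ρ̄^R_±)² ≲ E` and `W²_{∂B_R}(ρ̄^R_±, f̄^R_±) ≲ E^{(d+3)/(d+2)}`: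
          (∫⁻ x, ENNReal.ofReal ((ρp x) ^ 2) ∂(sphMeas d R))
            ≤ ENNReal.ofReal C *
              (∫⁻ x in ball (0 : Ed d) 2, ENNReal.ofReal (‖T x - x‖ ^ 2)) ∧
          (∫⁻ x, ENNReal.ofReal ((ρm x) ^ 2) ∂(sphMeas d R))
            ≤ ENNReal.ofReal C *
              (∫⁻ x in ball (0 : Ed d) 2, ENNReal.ofReal (‖T x - x‖ ^ 2)) ∧
          W2geoSq R ((sphMeas d R).withDensity (fun x => ENNReal.ofReal (ρp x)))
              (Fbarplus Ω T R τ)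
            ≤ ENNReal.ofReal C *
              (∫⁻ x in ball (0 : Ed d) 2, ENNReal.ofReal (‖T x - x‖ ^ 2))
                ^ (((d:ℝ) + 3) / ((d:ℝ) + 2)) ∧
          W2geoSq R ((sphMeas d R).withDensity (fun x => ENNReal.ofReal (ρm x)))
              (Fbarminus Ω T R τ)
            ≤ ENNReal.ofReal C *
              (∫⁻ x in ball (0 : Ed d) 2, ENNReal.ofReal (‖T x - x‖ ^ 2))
                ^ (((d:ℝ) + 3) / ((d:ℝ) + 2)) ∧
          -- (c) the terminal-layer density:
          (∫⁻ x, ENNReal.ofReal ((ρlay x) ^ 2) ∂(sphMeas d R))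
            ≤ ENNReal.ofReal C *
              (ENNReal.ofReal (τ ^ 2) *
                  (∫⁻ x in ball (0 : Ed d) 2, ENNReal.ofReal (‖T x - x‖ ^ 2)) +
                W2sq (μ.restrict O) ((μ O / volume O) • volume.restrict O)) ∧
          W2geoSq R ((sphMeas d R).withDensity (fun x => ENNReal.ofReal (ρlay x)))
              (Fbarlay Ω T R τ)
            ≤ ENNReal.ofReal C *
              (ENNReal.ofReal (τ ^ 3) *
                  (∫⁻ x in ball (0 : Ed d) 2, ENNReal.ofReal (‖T x - x‖ ^ 2))
                    ^ (((d:ℝ) + 3) / ((d:ℝ) + 2)) +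
                ENNReal.ofReal τ *
                  (∫⁻ x in ball (0 : Ed d) 2, ENNReal.ofReal (‖T x - x‖ ^ 2))
                    ^ ((1:ℝ) / ((d:ℝ) + 2)) *
                  W2sq (μ.restrict O) ((μ O / volume O) • volume.restrict O)) ∧
          -- (d) `sup_{∂B_R} ρ̄^R_± ≲ E^{1/(d+2)}`:
          (∀ x ∈ sphere (0 : Ed d) R,
            ρp x ≤ C * ((∫⁻ y in ball (0 : Ed d) 2,
                ENNReal.ofReal (‖T y - y‖ ^ 2)).toReal ^ ((1:ℝ) / (d + 2))) ∧
            ρm x ≤ C * ((∫⁻ y in ball (0 : Ed d) 2,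
                ENNReal.ofReal (‖T y - y‖ ^ 2)).toReal ^ ((1:ℝ) / (d + 2))))) ∧
        -- the data-distance estimate:
        (W2sq ((Measure.map (Tt T (1 - τ)) (volume.restrict Ω)).restrict (ball (0 : Ed d) R))
            (((Measure.map (Tt T (1 - τ)) (volume.restrict Ω)) (ball (0 : Ed d) R) /
                volume (ball (0 : Ed d) R)) • volume.restrict (ball (0 : Ed d) R)) +
          W2sq (muPrime Ω T R τ)
            ((muPrime Ω T R τ (ball (0 : Ed d) R) / volume (ball (0 : Ed d) R)) •
              volume.restrict (ball (0 : Ed d) R)))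
          ≤ ENNReal.ofReal C *
            (ENNReal.ofReal (τ ^ 2) *
                (∫⁻ x in ball (0 : Ed d) 2, ENNReal.ofReal (‖T x - x‖ ^ 2)) +
              W2sq (μ.restrict O) ((μ O / volume O) • volume.restrict O)) := by
  obtain ⟨ε, C₀, hε, hC₀, hdisp⟩ := displacement_bound d
  have hω := ubv_pos d
  obtain ⟨C, hC, hmain⟩ := main_with_plan d hd
    (κ₁ := 1 + (12 + (7 / 4) ^ d * ubv d) / ubv d) (by positivity)
  -- `ε₀` guarantees the displacement bound, `δ ≤ 1/4` and `E + D ≤ 1`.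
  refine ⟨min (min ε 1) ((1 / (4 * C₀)) ^ (d + 2)), 2 * C * (1 + C₀),
    lt_min (lt_min hε one_pos) (by positivity), by positivity, ?_⟩
  intro Ω O μ T τ hτ hΩ hΩm hΩ2 hO hO2 hK _ hT hED
  change enE T + W2sq (μ.restrict O) ((μ O / volume O) • volume.restrict O) ≤ _ at hED
  set D := W2sq (μ.restrict O) ((μ O / volume O) • volume.restrict O) with hD
  obtain ⟨Gm, hG, hGΩ, hGnull, -, hmono⟩ := exists_monotone_set hΩ hΩm hK hT
  have hEε := (le_self_add.trans hED : enE T ≤ _)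
  have hEt : enE T ≠ ∞ := (hEε.trans_lt ENNReal.ofReal_lt_top).ne
  have hDt : D ≠ ∞ := ((le_add_self.trans hED).trans_lt ENNReal.ofReal_lt_top).ne
  have hED1 : enE T + D ≤ 1 := hED.trans (by
    rw [← ENNReal.ofReal_one]
    exact ENNReal.ofReal_le_ofReal ((min_le_left _ _).trans (min_le_right _ _)))
  set δ : ℝ := C₀ * (enE T).toReal ^ ((1:ℝ) / (d + 2)) with hδ
  have hδ4 : δ ≤ 1 / 4 := by
    have h1 : (enE T).toReal ≤ (1 / (4 * C₀)) ^ (d + 2) :=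
      ENNReal.toReal_le_of_le_ofReal (by positivity)
        (hEε.trans (ENNReal.ofReal_le_ofReal (min_le_right _ _)))
    have h2 : (enE T).toReal ^ ((1:ℝ) / (d + 2)) ≤ 1 / (4 * C₀) := by
      refine (Real.rpow_le_rpow ENNReal.toReal_nonneg h1 (by positivity)).trans (le_of_eq ?_)
      rw [← Real.rpow_natCast, ← Real.rpow_mul (by positivity)]
      have : ((d + 2 : ℕ) : ℝ) * (1 / ((d:ℝ) + 2)) = 1 := by push_cast; field_simp
      rw [this, Real.rpow_one]
    calc δ ≤ C₀ * (1 / (4 * C₀)) := mul_le_mul_of_nonneg_left h2 hC₀.le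
      _ = 1 / 4 := by field_simp
  have hS : Setup Ω Gm T δ := by
    refine ⟨hT.1, hG, hGΩ, hGnull, ?_, hmono, hΩ2, by positivity, hδ4, ?_⟩
    · exact ((measure_mono hGΩ).trans_lt hΩ.measure_lt_top).ne
    · exact hdisp Gm T hT.1 (measure_mono_null (sdiff_subset_sdiff_left hΩ2) hGnull) hmono
        (hEε.trans (ENNReal.ofReal_le_ofReal ((min_le_left _ _).trans (min_le_left _ _))))
  obtain ⟨κ, γ, A, hγ, hκ, hcost⟩ := exists_plan hS hO hO2 hT.2.1 hτ.1 hτ.2 hED1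
  rw [← hD] at hcost
  have hD't : 2 * D + ENNReal.ofReal (τ ^ 2) * enE T ≠ ∞ :=
    ENNReal.add_ne_top.2 ⟨ENNReal.mul_ne_top ENNReal.ofNat_ne_top hDt,
      ENNReal.mul_ne_top ENNReal.ofReal_ne_top hEt⟩
  obtain ⟨R, hR, ⟨g, hg1, hg2⟩, ⟨ρp, ρm, ρl, n0, p1, m1, p2, m2, l1, l2, s⟩, hdata⟩ :=
    hmain Ω Gm T δ τ κ γ A _ hS hγ hκ hτ.1 hτ.2 hEt hD't hcost
  obtain ⟨hδE1, hδE⟩ := ofReal_delta_mul (d := d) hEt hC₀.le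
  rw [← hδ] at hδE1 hδE
  have hCC : C ≤ 2 * C * (1 + C₀) := by nlinarith [mul_pos hC hC₀]
  have hsum : ENNReal.ofReal (τ ^ 2) * enE T + (2 * D + ENNReal.ofReal (τ ^ 2) * enE T) =
      2 * (ENNReal.ofReal (τ ^ 2) * enE T + D) := by ring
  have h2C : ∀ Y : ℝ≥0∞, ENNReal.ofReal C * (2 * Y) ≤ ENNReal.ofReal (2 * C * (1 + C₀)) * Y := by
    intro Y
    rw [← mul_assoc, mul_comm (ENNReal.ofReal C), two_mul_ofReal]
    exact mul_le_mul_left (ENNReal.ofReal_le_ofReal (by nlinarith [mul_pos hC hC₀])) _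
  have hC1 : ∀ Y : ℝ≥0∞, ENNReal.ofReal C * Y ≤ ENNReal.ofReal (2 * C * (1 + C₀)) * Y :=
    fun Y => mul_le_mul_left (ENNReal.ofReal_le_ofReal hCC) _
  have hCδ : ∀ Y : ℝ≥0∞, ENNReal.ofReal C * (ENNReal.ofReal C₀ * Y) ≤
      ENNReal.ofReal (2 * C * (1 + C₀)) * Y := by
    intro Y
    rw [← mul_assoc, ← ENNReal.ofReal_mul (p := C) hC.le]
    exact mul_le_mul_left (ENNReal.ofReal_le_ofReal (by nlinarith [mul_pos hC hC₀])) _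
  rw [hsum] at l1 l2 hdata
  rw [hδE] at p2 m2
  refine ⟨R, ⟨by linarith [hR.1], by linarith [hR.2]⟩, ⟨g, hg1, hg2.trans ?_⟩,
    ⟨ρp, ρm, ρl, fun x _ => n0 x, p1.trans (hC1 _), m1.trans (hC1 _), p2.trans (hCδ _),
      m2.trans (hCδ _), l1.trans (h2C _), l2.trans ?_, fun x hx => ?_⟩, hdata.trans (h2C _)⟩
  · refine mul_le_mul_left (ENNReal.ofReal_le_ofReal ?_) _
    exact div_le_div_of_nonneg_right hCC (pow_pos hτ.1 d).le
  · change _ ≤ ENNReal.ofReal (2 * C * (1 + C₀)) *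
      (ENNReal.ofReal (τ ^ 3) * enE T ^ (((d:ℝ) + 3) / ((d:ℝ) + 2)) +
        ENNReal.ofReal τ * enE T ^ ((1:ℝ) / ((d:ℝ) + 2)) * D)
    have e3 : ENNReal.ofReal (τ ^ 3) = ENNReal.ofReal τ * ENNReal.ofReal (τ ^ 2) := by
      rw [← ENNReal.ofReal_mul (p := τ) hτ.1.le]; congr 1; ring
    have e : ENNReal.ofReal C * (ENNReal.ofReal (τ * δ) *
          (2 * (ENNReal.ofReal (τ ^ 2) * enE T + D))) =
        ENNReal.ofReal C * (2 * (ENNReal.ofReal τ * (ENNReal.ofReal (τ ^ 2) *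
          (ENNReal.ofReal δ * enE T)) + ENNReal.ofReal τ * ENNReal.ofReal δ * D)) := by
      rw [ENNReal.ofReal_mul (p := τ) hτ.1.le]; ring
    rw [e, hδE, hδE1, e3]
    have e' : ∀ a b c k X Y Z : ℝ≥0∞, a * (2 * (b * (c * (k * X)) + b * (k * Y) * Z)) =
        2 * a * k * (b * c * X + b * Y * Z) := fun a b c k X Y Z => by ring
    rw [e', two_mul_ofReal, ← ENNReal.ofReal_mul (p := 2 * C) (by positivity)]
    exact mul_le_mul_left (ENNReal.ofReal_le_ofReal
      (mul_le_mul_of_nonneg_left (by linarith) (by positivity))) _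
  · have hb : C * δ ≤ 2 * C * (1 + C₀) * (enE T).toReal ^ ((1:ℝ) / (d + 2)) := by
      rw [hδ, ← mul_assoc]
      exact mul_le_mul_of_nonneg_right (by nlinarith [mul_pos hC hC₀]) (by positivity)
    exact ⟨(s x hx).1.trans hb, (s x hx).2.trans hb⟩
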